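/- Let P_t = {x ∈ ℝ³ : x₁ + x₂ + x₃ ≤ 1, −x₁ − x₂ + x₃ ≤ 1, −x₁ + x₂ − x₃ ≤ 1, x₁ − x₂ − x₃ ≤ 1} be the regular tetrahedron and let P_trt = (5·P_t) ∩ (−3·P_t) be the truncated tetrahedron. Then the lattice packing density of P_trt equals δ*(P_trt) = 207/304, and it is attained by the packing lattice 2·B·ℤ³ where B is the matrix with columns (2/3, 2, 4/3), (2, −4/3, −2/3), (−4/3, 2/3, −2). -/

import Mathlib

/-!
Write `nrm` for the norm on `ℝ³` whose unit ball is `12 · (octahedron) ∩ 9 · (cube)`, which is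
`3/2` times the difference body of the truncated tetrahedron. A lattice `Bℤ³` packs the truncated
tetrahedron if and only if every nonzero point of `(3/2) B ℤ³` has `nrm`-length at least one
(`isPackingLattice_iff`); such lattices are called admissible. As the truncated tetrahedron has
volume `184/3` (`volume_truncTetra`), the claim is that `304` is the least determinant of an
admissible lattice. The lattice of the statement has determinant `304` after rescaling, and the
lower bound is proved as follows.

Suppose some admissible lattice has determinant less than `304`. Perturb the norm to a strictly
convex one, and let `V` minimize `|det V|`, multiplied by a factor close to one that penalizes long
basis vectors and makes the minimum exist. By Minkowski's argument the minimizer has at least six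
pairs of contacts, i.e. lattice points on the unit sphere (`five_contacts_false`): with only five
pairs, some symmetric `X ≠ 0` would move `V` along `V (1 ± t X)` without violating admissibility to
first order, and `det (1 + t X) det (1 - t X)` is too small. By strict convexity two contacts
congruent modulo two are equal up to sign, so contacts occupy at least six of the seven
nonzero classes modulo two. A trivial density bound shows that contacts which are independent modulo
two form a basis, and a finite search puts six contacts into one of Minkowski's two normal forms
`uᵢ, uᵢ - uⱼ` or `uᵢ, uᵢ + uⱼ` (`Setting.exists_pattern`). Letting the perturbation tend to
zero gives a `nrm`-admissible lattice of determinant less than `304` with six prescribed vectors in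
the unit ball (`limit_false`).

It remains to show that no such lattice exists (`refutedI`, `refutedII`). The nine entries of the
basis matrix satisfy the linear inequalities saying that the six vectors lie in the unit ball.
Admissibility of a further lattice vector is a disjunction over the fourteen facets of the ball.
The certificates are branching trees over such disjunctions. A leaf is closed by a nonnegative
combination of the inequalities with value a negative constant (Farkas), by
an identity that writes `± det V - 304` as a nonnegative combination of products of up to three
nonnegative linear forms and of products of a square with such a form (Handelman), or by a
symmetry carrying the case to one treated earlier. The
checker `checkAll` is evaluated in the kernel, and `checkAll_sound` gives its meaning.
-/

open MeasureTheory Pointwise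

/-- The lattice `Bℤ³`. -/
def latticeOf (B : Matrix (Fin 3) (Fin 3) ℝ) : Set (Fin 3 → ℝ) :=
  {x | ∃ z : Fin 3 → ℤ, x = B.mulVec fun i => (z i : ℝ)}

/-- `Λ` is a packing lattice for `K`. -/
def IsPackingLattice (K Λ : Set (Fin 3 → ℝ)) : Prop :=
  ∀ x ∈ Λ, ∀ y ∈ Λ, x ≠ y →
    Disjoint (interior ((x + ·) '' K)) (interior ((y + ·) '' K))

/-- The lattice packing density `δ*(K)`. -/
noncomputable def packDensity (K : Set (Fin 3 → ℝ)) : ℝ :=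
  sSup {r | ∃ B : Matrix (Fin 3) (Fin 3) ℝ, IsUnit B.det ∧
    IsPackingLattice K (latticeOf B) ∧ r = (volume K).toReal / |B.det|}

/-- The regular tetrahedron. -/
def tetra : Set (Fin 3 → ℝ) :=
  {x | x 0 + x 1 + x 2 ≤ 1 ∧ -x 0 - x 1 + x 2 ≤ 1 ∧
       -x 0 + x 1 - x 2 ≤ 1 ∧ x 0 - x 1 - x 2 ≤ 1}

/-- The truncated tetrahedron `(5·P_t) ∩ (−3·P_t)`. -/
def truncTetra : Set (Fin 3 → ℝ) := ((5 : ℝ) • tetra) ∩ ((-3 : ℝ) • tetra)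

/-- Basis matrix (columns `(2/3, 2, 4/3), (2, −4/3, −2/3), (−4/3, 2/3, −2)`) of the
optimal lattice for the truncated tetrahedron, scaled by `2`. -/
noncomputable def truncTetraB : Matrix (Fin 3) (Fin 3) ℝ :=
  (2 : ℝ) • (Matrix.of
    ![![2/3, 2, 4/3], ![2, -4/3, -2/3], ![-4/3, 2/3, -2]]).transpose

namespace TruncTetra

/-! ### Certificates and their checker -/

/-- Integer vectors of length three. -/
abbrev Z3 := ℤ × ℤ × ℤ

/-- Integer `3 × 3` matrices, stored as a triple of rows. -/
abbrev Z33 := Z3 × Z3 × Z3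

/-- A linear form with integer coefficients, given by its list of coefficients. -/
abbrev Lin := List ℤ

/-- A facet `f · x ≤ b` of a polytope, stored as `(f, b)`. -/
abbrev Facet := Z3 × ℤ

/-- The value `∑ lᵢ yᵢ` of a linear form; coefficients missing on either side count as zero. -/
def evalLin : Lin → List ℝ → ℝ
  | a :: l, y :: ys => a * y + evalLin l ys
  | _, _ => 0

/-- `acc + m • l`. -/
def axpy (m : ℤ) : Lin → Lin → Lin
  | [], acc => acc
  | a :: l, [] => m * a :: axpy m l []
  | a :: l, c :: acc => (c + m * a) :: axpy m l acc

/-- Coefficient lookup with default value zero. -/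
def coeffAt : Lin → ℕ → ℤ
  | [], _ => 0
  | a :: _, 0 => a
  | _ :: l, n + 1 => coeffAt l n

/-- List lookup. -/
def lookup {α : Type} : List α → ℕ → Option α
  | [], _ => none
  | a :: _, 0 => some a
  | _ :: l, n + 1 => lookup l n

/-- The fourteen facets of `12 · (octahedron) ∩ 9 · (cube)`. -/
def facets : List Facet :=
  [((1, 1, 1), 12), ((1, 1, -1), 12), ((1, -1, 1), 12), ((-1, 1, 1), 12),
   ((1, 0, 0), 9), ((0, 1, 0), 9), ((0, 0, 1), 9),
   ((-1, -1, -1), 12), ((-1, -1, 1), 12), ((-1, 1, -1), 12), ((1, -1, -1), 12),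
   ((-1, 0, 0), 9), ((0, -1, 0), 9), ((0, 0, -1), 9)]

/-- The form `f · (V z) - b` in the nine entries of `V` (column by column) and the constant `1`. -/
def geForm (z : Z3) (f : Facet) : Lin :=
  [z.1 * f.1.1, z.1 * f.1.2.1, z.1 * f.1.2.2,
   z.2.1 * f.1.1, z.2.1 * f.1.2.1, z.2.1 * f.1.2.2,
   z.2.2 * f.1.1, z.2.2 * f.1.2.1, z.2.2 * f.1.2.2, -f.2]

/-- The nine entries of `V`, column by column, followed by the constant `1`. -/
def entries (V : Matrix (Fin 3) (Fin 3) ℝ) : List ℝ :=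
  [V 0 0, V 1 0, V 2 0, V 0 1, V 1 1, V 2 1, V 0 2, V 1 2, V 2 2, 1]

/-- Lattices `V ℤ³` that are admissible for the polytope with the given facets, have the images of
the vectors in `C` inside that polytope, and have determinant less than `304`. -/
structure Counterexample (C : List Z3) (V : Matrix (Fin 3) (Fin 3) ℝ) : Prop where
  adm : ∀ z : Z3, z ≠ 0 → ∃ f ∈ facets, 0 ≤ evalLin (geForm z f) (entries V)
  le : ∀ c ∈ C, ∀ f ∈ facets, evalLin (geForm c f) (entries V) ≤ 0
  det : |V.det| < 304

/-- No counterexample satisfies all the inequalities `0 ≤ l` for `l` in `H`. -/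
def Refuted (C : List Z3) (H : List Lin) : Prop :=
  ∀ V, Counterexample C V → ¬ ∀ l ∈ H, 0 ≤ evalLin l (entries V)

/-- Decoding of integers stored as natural numbers. -/
def unzig (n : ℕ) : ℤ := if n % 2 = 0 then (n / 2 : ℕ) else -((n + 1) / 2 : ℕ)

/-- The inequality with number `r`: numbers below `84` are the contact inequalities, the others
point into the list `H` of additional hypotheses. -/
def refLin (C : List Z3) (H : List Lin) (r : ℕ) : Lin :=
  if r < 84 then
    match lookup C (r / 14), lookup facets (r % 14) with
    | some c, some f => axpy (-1) (geForm c f) []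
    | _, _ => []
  else
    match lookup H (r - 84) with
    | some l => l
    | none => []

/-- The form is a negative constant. -/
def isNegConst : Lin → Bool
  | [a, b, c, d, e, f, g, h, i, k] =>
    a == 0 && b == 0 && c == 0 && d == 0 && e == 0 && f == 0 && g == 0 && h == 0 && i == 0 &&
      decide (k < 0)
  | _ => false

/-- Reads `n` pairs (inequality, multiplier) and checks that the combination is absurd. -/
def farkas (C : List Z3) (H : List Lin) : ℕ → Lin → List ℕ → Option (List ℕ)
  | 0, acc, s => if isNegConst acc then some s else none
  | n + 1, acc, r :: m :: s => farkas C H n (axpy m (refLin C H r) acc) s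
  | _, _, _ => none

/-- Runs a sub-check for each of the facets in a list. -/
def branch (z : Z3) (H : List Lin) (rec : List Lin → List ℕ → Option (List ℕ)) :
    List Facet → List ℕ → Option (List ℕ)
  | [], s => some s
  | f :: fs, s => match rec (geForm z f :: H) s with
    | some s' => branch z H rec fs s'
    | none => none

/-- The standard dot product on `ℤ³`. -/
def dotZ (a b : Z3) : ℤ := a.1 * b.1 + a.2.1 * b.2.1 + a.2.2 * b.2.2

/-- A matrix, given by its rows, applied to a vector. -/
def actZ (m : Z33) (z : Z3) : Z3 := (dotZ m.1 z, dotZ m.2.1 z, dotZ m.2.2 z)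

/-- The determinant of a matrix given by its rows. -/
def detZ (m : Z33) : ℤ :=
  m.1.1 * (m.2.1.2.1 * m.2.2.2.2 - m.2.1.2.2 * m.2.2.2.1) -
  m.1.2.1 * (m.2.1.1 * m.2.2.2.2 - m.2.1.2.2 * m.2.2.1) +
  m.1.2.2 * (m.2.1.1 * m.2.2.2.1 - m.2.1.2.1 * m.2.2.1)

/-- The signed permutation matrices. -/
def signedPerms : List Z33 :=
  let e : List Z3 := [(1, 0, 0), (0, 1, 0), (0, 0, 1)]
  let sg : List (ℤ × ℤ × ℤ) := [(1, 1, 1), (-1, 1, 1), (1, -1, 1), (-1, -1, 1),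
    (1, 1, -1), (-1, 1, -1), (1, -1, -1), (-1, -1, -1)]
  [(0, 1, 2), (0, 2, 1), (1, 0, 2), (1, 2, 0), (2, 0, 1), (2, 1, 0)].flatMap
    fun p : ℕ × ℕ × ℕ => sg.map fun s =>
      let r (i : ℕ) : Z3 := (lookup e i).getD 0
      (s.1 • r p.1, s.2.1 • r p.2.1, s.2.2 • r p.2.2)

/-- The matrix with entries in `{-1, 0, 1}` whose ternary code is `m`. -/
def ternary (m : ℕ) : Z33 :=
  let d (i : ℕ) : ℤ := ((m / 3 ^ i % 3 : ℕ) : ℤ) - 1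
  ((d 0, d 1, d 2), (d 3, d 4, d 5), (d 6, d 7, d 8))

/-- Boolean list membership, by structural recursion so that the kernel evaluates it directly. -/
def memB {α : Type} [DecidableEq α] (a : α) : List α → Bool
  | [] => false
  | b :: l => if a = b then true else memB a l

/-- `h` is unimodular and preserves `C` up to sign. -/
def preserves (C : List Z3) (h : Z33) : Bool :=
  (detZ h == 1 || detZ h == -1) && C.all fun c => memB (actZ h c) C || memB (-actZ h c) C

/-- The hypotheses of the earlier lemma `σ`, transformed by `g` and `h`, are among `H`. -/
def symCheck (C : List Z3) (σ : List (Z3 × Facet)) (H : List Lin) (g h : Z33) : Bool :=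
  preserves C h && σ.all fun p => memB (geForm (actZ h p.1) (actZ g p.2.1, p.2.2)) H

/-- Takes `n` numbers off a stream and decodes them as integers. -/
def takeInts : ℕ → List ℕ → Option (Lin × List ℕ)
  | 0, s => some ([], s)
  | n + 1, a :: s => match takeInts n s with
    | some (l, s') => some (unzig a :: l, s')
    | none => none
  | _, _ => none

/-- Reads `n` equations: positions `p` in `H` and numbers `r` of contact inequalities such that
`H[p]` is the contact inequality reversed. -/
def takeEqs (C : List Z3) (H : List Lin) : ℕ → List ℕ → Option (List Lin × List ℕ)
  | 0, s => some ([], s)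
  | n + 1, p :: r :: s =>
    match lookup H p, lookup C (r / 14), lookup facets (r % 14), takeEqs C H n s with
    | some l, some c, some f, some (ls, s') =>
      if l = geForm c f then some (l :: ls, s') else none
    | _, _, _, _ => none
  | _, _ => none

/-- `acc + ∑ mᵢ lᵢ`, up to the shorter length. -/
def combine : Lin → List Lin → Lin → Lin
  | m :: ms, l :: ls, acc => combine ms ls (axpy m l acc)
  | _, _, acc => acc

/-- The form `d • x_k`. -/
def unitLin (d : ℤ) : ℕ → Lin
  | 0 => [d]
  | k + 1 => 0 :: unitLin d k

/-- The form in the variables `xᵢ` (`i ∈ fr`) as a form in all variables. -/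
def unproj : List ℕ → Lin → Lin
  | i :: fr, a :: l => axpy 1 (unitLin a i) (unproj fr l)
  | _, _ => []

/-- All coefficients vanish. -/
def isZeroLin : Lin → Bool
  | [] => true
  | a :: l => a == 0 && isZeroLin l

/-- Equality of forms up to trailing zeros. -/
def sameLin : Lin → Lin → Bool
  | [], m => isZeroLin m
  | a :: l, [] => a == 0 && isZeroLin l
  | a :: l, b :: m => a == b && sameLin l m

/-- Reads, for `k, …, k + n - 1`, the multipliers expressing `D x_k` modulo the equations as a form
in the free variables `fr`. -/
def takeProj (eqs : List Lin) (D : ℤ) (fr : List ℕ) :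
    ℕ → ℕ → List ℕ → Option (List Lin × List ℕ)
  | 0, _, s => some ([], s)
  | n + 1, k, s => match takeInts 6 s with
    | some (ms, s') =>
      let R := axpy (-1) (combine ms eqs []) (unitLin D k)
      let A := fr.map (coeffAt R)
      if sameLin (unproj fr A) R then
        match takeProj eqs D fr n (k + 1) s' with
        | some (As, s'') => some (A :: As, s'')
        | none => none
      else none
    | none => none

/-- Reads `n` numbers off the certificate stream. -/
def takeNats : ℕ → List ℕ → Option (List ℕ × List ℕ)
  | 0, s => some ([], s)
  | n + 1, a :: s => match takeNats n s with
    | some (l, s') => some (a :: l, s')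
    | none => none
  | _, _ => none

/-- A term `c · a(y) · b(y) · d(y)`. -/
abbrev CubicTerm := ℤ × Lin × Lin × Lin

/-- A nonnegative form in the free variables: code `0` is the constant `D`, and `r + 1` is `D`
times the inequality `r`. -/
def factor (C : List Z3) (H : List Lin) (D : ℤ) (As : List Lin) : ℕ → Lin
  | 0 => [D]
  | r + 1 => combine (refLin C H r) As []

/-- Reads `n` products of three nonnegative forms, each entering with coefficient `-c`. -/
def takeTerms (C : List Z3) (H : List Lin) (D : ℤ) (As : List Lin) :
    ℕ → List ℕ → Option (List CubicTerm × List ℕ)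
  | 0, s => some ([], s)
  | n + 1, c :: p :: q :: r :: s => match takeTerms C H D As n s with
    | some (ts, s') =>
      some ((-(c : ℤ), factor C H D As p, factor C H D As q, factor C H D As r) :: ts, s')
    | none => none
  | _, _ => none

/-- Reads `n` terms `-c · l² · f` with `l` an arbitrary form and `f` a nonnegative one. -/
def takeSquares (C : List Z3) (H : List Lin) (D : ℤ) (As : List Lin) (len : ℕ) :
    ℕ → List ℕ → Option (List CubicTerm × List ℕ)
  | 0, s => some ([], s)
  | n + 1, c :: s => match takeInts len s with
    | some (l, r :: s') => match takeSquares C H D As len n s' with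
      | some (ts, s'') => some ((-(c : ℤ), l, l, factor C H D As r) :: ts, s'')
      | none => none
    | _ => none
  | _, _ => none

/-- The coefficient of `yᵢ ⊗ yⱼ ⊗ yₖ`. -/
def tensor : List CubicTerm → ℕ → ℕ → ℕ → ℤ
  | [], _, _, _ => 0
  | (c, a, b, d) :: ts, i, j, k =>
    c * coeffAt a i * coeffAt b j * coeffAt d k + tensor ts i j k

/-- The coefficient tensor symmetrised over the six orderings of `i, j, k`. -/
def symTensor (ts : List CubicTerm) (i j k : ℕ) : ℤ :=
  tensor ts i j k + tensor ts i k j + tensor ts j i k + tensor ts j k i +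
    tensor ts k i j + tensor ts k j i

/-- The cubic polynomial in `m` variables given by `ts` is zero. -/
def vanishes (ts : List CubicTerm) (m : ℕ) : Bool :=
  (List.range m).all fun i => (List.range m).all fun j => (List.range m).all fun k =>
    !(decide (i ≤ j) && decide (j ≤ k)) || symTensor ts i j k == 0

/-- `q · (s · det A - 304 D³)` as a sum of cubic terms. -/
def detTerms (q s D : ℤ) : List Lin → List CubicTerm
  | [a, b, c, d, e, f, g, h, i, _] =>
    [(q * s, a, e, i), (-(q * s), a, f, h), (-(q * s), d, b, i), (q * s, d, c, h),
     (q * s, g, b, f), (-(q * s), g, c, e), (-(304 * q), [D], [D], [D])]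
  | _ => []

/-- Checks a certificate that `|det V| ≥ 304` on the polytope described by the contact inequalities
and `H`. -/
def handelman (C : List Z3) (H : List Lin) (s : List ℕ) : Option (List ℕ) :=
  match s with
  | ne :: s => match takeEqs C H ne s with
    | some (eqs, D :: m :: s) => match takeNats m s with
      | some (fr, s) => match takeProj eqs D fr 9 0 s with
        | some (As', sg :: q :: nt :: s) =>
          let As := As' ++ [[(D : ℤ)]]
          match takeTerms C H D As nt s with
          | some (ts, nq :: s) => match takeSquares C H D As m nq s with
            | some (qs, s) =>
              if 0 < D && 0 < q && (lookup fr 0 == some 9) &&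
                vanishes (detTerms q (if sg = 0 then 1 else -1) D As ++ ts ++ qs) m
              then some s else none
            | none => none
          | _ => none
        | _ => none
      | none => none
    | _ => none
  | [] => none

/-- The certificate checker: `check C env n H s` reads a refutation of `H` from the stream `s` and
returns the rest of the stream. `env` holds the hypotheses of the lemmas already established. -/
def check (C : List Z3) (env : List (List (Z3 × Facet))) :
    ℕ → List Lin → List ℕ → Option (List ℕ)
  | 0, _, _ => none
  | n + 1, H, op :: s =>
    match op with
    | 0 => match s with
      | k :: s => farkas C H k [] s
      | _ => none
    | 1 => match s with
      | a :: b :: c :: s =>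
        let z : Z3 := (unzig a, unzig b, unzig c)
        if z = 0 then none else branch z H (check C env n) facets s
      | _ => none
    | 2 => handelman C H s
    | 3 => match takeInts 10 s with
      | some (l, s) => match check C env n (l :: H) s with
        | some s => check C env n (axpy (-1) l [] :: H) s
        | none => none
      | none => none
    | _ => match s with
      | id :: g :: h :: s => match lookup env id, lookup signedPerms g with
        | some σ, some g => if symCheck C σ H g (ternary h) then some s else none
        | _, _ => none
      | _ => none
  | _, _, [] => none

/-- Decodes pairs (index of a vector in `C`, index of a facet). -/
def decodeHyps (C : List Z3) : List (ℕ × ℕ) → List (Z3 × Facet)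
  | [] => []
  | (i, j) :: l => match lookup C i, lookup facets j with
    | some c, some f => (c, f) :: decodeHyps C l
    | _, _ => decodeHyps C l

/-- Checks a list of lemmas, each with its refutation; the last one has no hypotheses. -/
def checkAll (C : List Z3) :
    List (List (ℕ × ℕ) × List ℕ) → List (List (Z3 × Facet)) → Bool
  | [], [] :: _ => true
  | [], _ => false
  | (p, s) :: ls, env =>
    let σ := decodeHyps C p
    match check C env 30 (σ.map fun q => geForm q.1 q.2) s with
    | some _ => checkAll C ls (σ :: env)
    | none => false

/-- The contact vectors of the first type: `uᵢ` and `uᵢ - uⱼ`. -/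
def contactsI : List Z3 :=
  [(1, 0, 0), (0, 1, 0), (0, 0, 1), (1, -1, 0), (0, 1, -1), (1, 0, -1)]

/-- The contact vectors of the second type: `uᵢ` and `uᵢ + uⱼ`. -/
def contactsII : List Z3 :=
  [(1, 0, 0), (0, 1, 0), (0, 0, 1), (1, 1, 0), (0, 1, 1), (1, 0, 1)]

/-! ### Soundness of the checker -/

theorem evalLin_nil (y : List ℝ) : evalLin [] y = 0 := by cases y <;> rfl

theorem evalLin_nil' (l : Lin) : evalLin l [] = 0 := by cases l <;> rfl

theorem evalLin_axpy (m : ℤ) (l acc : Lin) (y : List ℝ) :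
    evalLin (axpy m l acc) y = evalLin acc y + m * evalLin l y := by
  induction l generalizing acc y with
  | nil => simp [axpy, evalLin_nil]
  | cons a l ih =>
    cases y with
    | nil => simp [evalLin_nil']
    | cons y ys =>
      cases acc with
      | nil => simp [axpy, evalLin, ih]; ring
      | cons c acc => simp [axpy, evalLin, ih]; ring

theorem mem_of_lookup {α : Type} {l : List α} {n : ℕ} {a : α} (h : lookup l n = some a) :
    a ∈ l := by
  induction l generalizing n with
  | nil => simp [lookup] at h
  | cons b l ih =>
    cases n with
    | zero => simp [lookup] at h; simp [h]
    | succ n => exact List.mem_cons_of_mem _ (ih h)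

section Soundness

variable {C : List Z3} {V : Matrix (Fin 3) (Fin 3) ℝ} {H : List Lin}

theorem refLin_nonneg (hV : Counterexample C V) (hH : ∀ l ∈ H, 0 ≤ evalLin l (entries V)) (r : ℕ) :
    0 ≤ evalLin (refLin C H r) (entries V) := by
  unfold refLin
  split_ifs
  · split
    · rename_i c f hc hf
      have := hV.le c (mem_of_lookup hc) f (mem_of_lookup hf)
      rw [evalLin_axpy, evalLin_nil]
      push_cast; linarith
    · rw [evalLin_nil]
  · split
    · rename_i l hl
      exact hH l (mem_of_lookup hl)
    · rw [evalLin_nil]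

theorem isNegConst_sound {l : Lin} (h : isNegConst l = true) : evalLin l (entries V) < 0 := by
  unfold isNegConst at h
  split at h
  · simp only [Bool.and_eq_true, beq_iff_eq, decide_eq_true_eq] at h
    obtain ⟨⟨⟨⟨⟨⟨⟨⟨⟨rfl, rfl⟩, rfl⟩, rfl⟩, rfl⟩, rfl⟩, rfl⟩, rfl⟩, rfl⟩, hk⟩ := h
    simp [evalLin, entries]
    exact_mod_cast hk
  · simp at h

theorem farkas_sound (hV : Counterexample C V) (hH : ∀ l ∈ H, 0 ≤ evalLin l (entries V))
    {n : ℕ} {acc : Lin} {s t : List ℕ} (hacc : 0 ≤ evalLin acc (entries V))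
    (h : farkas C H n acc s = some t) : False := by
  induction n generalizing acc s with
  | zero =>
    unfold farkas at h
    split_ifs at h with h1
    exact absurd (isNegConst_sound (V := V) h1) (not_lt.2 hacc)
  | succ n ih =>
    match s with
    | [] => simp [farkas] at h
    | [_] => simp [farkas] at h
    | r :: m :: s =>
      refine ih (acc := axpy m (refLin C H r) acc) ?_ h
      rw [evalLin_axpy]
      have := refLin_nonneg hV hH r
      positivity

theorem branch_sound {z : Z3} {rec : List Lin → List ℕ → Option (List ℕ)}
    (hrec : ∀ H s t, rec H s = some t → Refuted C H) {fs : List Facet} {s t : List ℕ}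
    (h : branch z H rec fs s = some t) : ∀ f ∈ fs, Refuted C (geForm z f :: H) := by
  induction fs generalizing s with
  | nil => simp
  | cons f fs ih =>
    unfold branch at h
    split at h
    · rename_i s' hs
      intro g hg
      rcases List.mem_cons.1 hg with rfl | hg
      · exact hrec _ _ _ hs
      · exact ih h g hg
    · simp at h

theorem evalLin_geForm (z : Z3) (f : Facet) :
    evalLin (geForm z f) (entries V) =
      (f.1.1 * (V 0 0 * z.1 + V 0 1 * z.2.1 + V 0 2 * z.2.2) +
       f.1.2.1 * (V 1 0 * z.1 + V 1 1 * z.2.1 + V 1 2 * z.2.2) +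
       f.1.2.2 * (V 2 0 * z.1 + V 2 1 * z.2.1 + V 2 2 * z.2.2)) - f.2 := by
  simp [geForm, entries, evalLin]; ring

/-- The real matrix with the given integer entries. -/
def toMat (m : Z33) : Matrix (Fin 3) (Fin 3) ℝ :=
  !![(m.1.1 : ℝ), m.1.2.1, m.1.2.2; m.2.1.1, m.2.1.2.1, m.2.1.2.2; m.2.2.1, m.2.2.2.1, m.2.2.2.2]

theorem det_toMat (m : Z33) : (toMat m).det = detZ m := by
  simp [toMat, Matrix.det_fin_three, detZ]; ring

theorem evalLin_geForm_sym (g h : Z33) (z : Z3) (f : Facet) :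
    evalLin (geForm z f) (entries ((toMat g).transpose * V * toMat h)) =
      evalLin (geForm (actZ h z) (actZ g f.1, f.2)) (entries V) := by
  simp only [evalLin_geForm, actZ, dotZ, toMat, Matrix.mul_apply, Fin.sum_univ_three,
    Matrix.transpose_apply]
  simp
  ring

theorem memB_iff {α : Type} [DecidableEq α] {a : α} {l : List α} : memB a l = true ↔ a ∈ l := by
  induction l with
  | nil => simp [memB]
  | cons b l ih => by_cases h : a = b <;> simp [memB, h, ih]

theorem actZ_eq_zero {h : Z33} (hd : detZ h ≠ 0) {z : Z3} (hz : actZ h z = 0) : z = 0 := by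
  obtain ⟨⟨a, b, c⟩, ⟨d, e, f⟩, ⟨p, q, r⟩⟩ := h
  obtain ⟨x, y, w⟩ := z
  simp only [actZ, dotZ, Prod.mk_eq_zero, detZ] at hz hd ⊢
  obtain ⟨h1, h2, h3⟩ := hz
  refine ⟨?_, ?_, ?_⟩
  · apply (mul_eq_zero.1 (_ : _ * x = 0)).resolve_left hd
    linear_combination (e * r - f * q) * h1 - (b * r - c * q) * h2 + (b * f - c * e) * h3
  · apply (mul_eq_zero.1 (_ : _ * y = 0)).resolve_left hd
    linear_combination -(d * r - f * p) * h1 + (a * r - c * p) * h2 - (a * f - c * d) * h3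
  · apply (mul_eq_zero.1 (_ : _ * w = 0)).resolve_left hd
    linear_combination (d * q - e * p) * h1 - (a * q - b * p) * h2 + (a * e - b * d) * h3

theorem signedPerms_ok : ∀ g ∈ signedPerms, (detZ g = 1 ∨ detZ g = -1) ∧
    (∀ f ∈ facets, (actZ g f.1, f.2) ∈ facets) ∧
    ∀ f ∈ facets, ∃ f' ∈ facets, (actZ g f'.1, f'.2) = f := by
  decide +kernel

theorem neg_mem_facets : ∀ f ∈ facets, (-f.1, f.2) ∈ facets := by decide +kernel

theorem geForm_neg (z : Z3) (f : Facet) : geForm (-z) f = geForm z (-f.1, f.2) := by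
  simp [geForm]

theorem Counterexample.sym (hV : Counterexample C V) {g h : Z33} (hg : g ∈ signedPerms)
    (hh : preserves C h = true) : Counterexample C ((toMat g).transpose * V * toMat h) := by
  obtain ⟨hdg, hg1, hg2⟩ := signedPerms_ok g hg
  simp only [preserves, Bool.and_eq_true, Bool.or_eq_true, beq_iff_eq, List.all_eq_true,
    memB_iff] at hh
  obtain ⟨hdh, hC⟩ := hh
  refine ⟨fun z hz => ?_, fun c hc f hf => ?_, ?_⟩
  · have hz' : actZ h z ≠ 0 := fun h0 => hz (actZ_eq_zero (by rcases hdh with h | h <;> simp [h]) h0)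
    obtain ⟨f, hf, hfz⟩ := hV.adm _ hz'
    obtain ⟨f', hf', rfl⟩ := hg2 f hf
    exact ⟨f', hf', by rwa [evalLin_geForm_sym]⟩
  · rw [evalLin_geForm_sym]
    rcases hC c hc with h1 | h1
    · exact hV.le _ h1 _ (hg1 f hf)
    · have := hV.le _ h1 _ (neg_mem_facets _ (hg1 f hf))
      rwa [geForm_neg, neg_neg] at this
  · rw [Matrix.det_mul, Matrix.det_mul, Matrix.det_transpose, det_toMat, det_toMat]
    have := hV.det
    rcases hdg with h1 | h1 <;> rcases hdh with h2 | h2 <;> simp [h1, h2] <;> exact this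

theorem symCheck_sound {σ : List (Z3 × Facet)} {g h : Z33} (hg : g ∈ signedPerms)
    (hσ : Refuted C (σ.map fun q => geForm q.1 q.2)) (hc : symCheck C σ H g h = true) :
    Refuted C H := by
  intro V hV hH
  simp only [symCheck, Bool.and_eq_true, List.all_eq_true, memB_iff] at hc
  refine hσ _ (hV.sym hg hc.1) fun l hl => ?_
  obtain ⟨p, hp, rfl⟩ := List.mem_map.1 hl
  rw [evalLin_geForm_sym]
  exact hH _ (hc.2 p hp)

theorem evalLin_isZeroLin {l : Lin} (h : isZeroLin l = true) (y : List ℝ) : evalLin l y = 0 := by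
  induction l generalizing y with
  | nil => exact evalLin_nil y
  | cons a l ih =>
    simp only [isZeroLin, Bool.and_eq_true, beq_iff_eq] at h
    cases y with
    | nil => rfl
    | cons b y => simp [evalLin, h.1, ih h.2]

theorem evalLin_sameLin {l l' : Lin} (h : sameLin l l' = true) (y : List ℝ) :
    evalLin l y = evalLin l' y := by
  induction l generalizing l' y with
  | nil => rw [evalLin_nil, evalLin_isZeroLin h]
  | cons a l ih =>
    cases l' with
    | nil =>
      rw [evalLin_nil]
      exact evalLin_isZeroLin (l := a :: l) h y
    | cons b l' =>
      simp only [sameLin, Bool.and_eq_true, beq_iff_eq] at h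
      cases y with
      | nil => rfl
      | cons c y => simp [evalLin, h.1, ih h.2]

theorem evalLin_combine (ms : Lin) (ls : List Lin) (acc : Lin) (y : List ℝ) :
    evalLin (combine ms ls acc) y = evalLin acc y + evalLin ms (ls.map (evalLin · y)) := by
  induction ms generalizing ls acc with
  | nil => simp [combine, evalLin_nil]
  | cons m ms ih =>
    cases ls with
    | nil => simp [combine, evalLin_nil']
    | cons l ls => simp [combine, ih, evalLin, evalLin_axpy]; ring

theorem evalLin_of_forall_zero (ms : Lin) (ys : List ℝ) (h : ∀ y ∈ ys, y = 0) :
    evalLin ms ys = 0 := by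
  induction ms generalizing ys with
  | nil => exact evalLin_nil ys
  | cons m ms ih =>
    cases ys with
    | nil => rfl
    | cons y ys =>
      simp only [List.mem_cons, forall_eq_or_imp] at h
      simp [evalLin, h.1, ih ys h.2]

theorem evalLin_map_mul (l : Lin) (D : ℝ) (ys : List ℝ) :
    evalLin l (ys.map (D * ·)) = D * evalLin l ys := by
  induction l generalizing ys with
  | nil => simp [evalLin_nil]
  | cons a l ih =>
    cases ys with
    | nil => simp [evalLin_nil']
    | cons y ys => simp [evalLin, ih]; ring

theorem evalLin_unitLin (d : ℤ) (k : ℕ) (ys : List ℝ) :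
    evalLin (unitLin d k) ys = d * ys.getD k 0 := by
  induction k generalizing ys with
  | zero => cases ys <;> simp [unitLin, evalLin]
  | succ k ih => cases ys <;> simp [unitLin, evalLin, ih]

theorem evalLin_unproj (fr : List ℕ) (l : Lin) (ys : List ℝ) :
    evalLin (unproj fr l) ys = evalLin l (fr.map (ys.getD · 0)) := by
  induction fr generalizing l with
  | nil => simp [unproj, evalLin_nil, evalLin_nil']
  | cons i fr ih =>
    cases l with
    | nil => simp [unproj, evalLin_nil]
    | cons a l =>
      simp only [unproj, evalLin_axpy, evalLin_unitLin, ih, List.map_cons, evalLin]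
      push_cast; ring

theorem takeEqs_sound (hV : Counterexample C V) (hH : ∀ l ∈ H, 0 ≤ evalLin l (entries V))
    {n : ℕ} {s t : List ℕ} {eqs : List Lin} (h : takeEqs C H n s = some (eqs, t)) :
    ∀ l ∈ eqs, evalLin l (entries V) = 0 := by
  induction n generalizing s t eqs with
  | zero =>
    simp only [takeEqs, Option.some.injEq, Prod.mk.injEq] at h
    simp [← h.1]
  | succ n ih =>
    match s with
    | [] => simp [takeEqs] at h
    | [_] => simp [takeEqs] at h
    | p :: r :: s =>
      unfold takeEqs at h
      split at h
      · rename_i l c f ls s' hl hc hf hls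
        split_ifs at h with h1
        simp only [Option.some.injEq, Prod.mk.injEq] at h
        rw [← h.1]
        intro l' hl'
        rcases List.mem_cons.1 hl' with rfl | hl'
        · apply le_antisymm _ (hH _ (mem_of_lookup hl))
          rw [h1]
          exact hV.le c (mem_of_lookup hc) f (mem_of_lookup hf)
        · exact ih hls l' hl'
      · simp at h

theorem takeProj_sound {eqs : List Lin} {ys : List ℝ} (heqs : ∀ l ∈ eqs, evalLin l ys = 0) {D : ℤ}
    {fr : List ℕ} {n k : ℕ} {s t : List ℕ} {As : List Lin}
    (h : takeProj eqs D fr n k s = some (As, t)) :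
    As.map (evalLin · (fr.map (ys.getD · 0))) = (List.range' k n).map (D * ys.getD · 0) := by
  induction n generalizing k s t As with
  | zero => simp [takeProj] at h; simp [← h.1]
  | succ n ih =>
    unfold takeProj at h
    split at h
    · rename_i ms s' hms
      dsimp only at h
      split_ifs at h with h1
      split at h
      · rename_i As' s'' hAs
        simp only [Option.some.injEq, Prod.mk.injEq] at h
        rw [← h.1, List.map_cons, ih hAs, List.range'_succ, List.map_cons]
        congr 1
        have := evalLin_sameLin h1 ys
        rw [evalLin_unproj] at this
        rw [this, evalLin_axpy, evalLin_combine, evalLin_unitLin, evalLin_nil,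
          evalLin_of_forall_zero]
        · simp
        · simpa using heqs
      · simp at h
    · simp at h

theorem takeNats_length {n : ℕ} {s t l : List ℕ} (h : takeNats n s = some (l, t)) :
    l.length = n := by
  induction n generalizing s t l with
  | zero => simp [takeNats] at h; simp [← h.1]
  | succ n ih =>
    cases s with
    | nil => simp [takeNats] at h
    | cons a s =>
      unfold takeNats at h
      split at h
      · rename_i l' s' hl
        simp only [Option.some.injEq, Prod.mk.injEq] at h
        simp [← h.1, ih hl]
      · simp at h

/-- The value of a sum of cubic terms. -/
def evalCubic (ts : List CubicTerm) (y : List ℝ) : ℝ :=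
  (ts.map fun t => (t.1 : ℝ) * evalLin t.2.1 y * evalLin t.2.2.1 y * evalLin t.2.2.2 y).sum

theorem evalLin_eq_sum (l : Lin) (y : List ℝ) :
    evalLin l y = ∑ i ∈ Finset.range y.length, (coeffAt l i : ℝ) * y.getD i 0 := by
  induction l generalizing y with
  | nil => simp [evalLin_nil, coeffAt]
  | cons a l ih =>
    cases y with
    | nil => simp [evalLin]
    | cons b y => simp [evalLin, ih, Finset.sum_range_succ', coeffAt, add_comm]

theorem evalCubic_eq_sum (ts : List CubicTerm) (y : List ℝ) :
    evalCubic ts y = ∑ i ∈ Finset.range y.length, ∑ j ∈ Finset.range y.length,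
      ∑ k ∈ Finset.range y.length,
        (tensor ts i j k : ℝ) * (y.getD i 0 * y.getD j 0 * y.getD k 0) := by
  induction ts with
  | nil => simp [evalCubic, tensor]
  | cons t ts ih =>
    obtain ⟨c, a, b, d⟩ := t
    have : evalCubic ((c, a, b, d) :: ts) y =
      c * evalLin a y * evalLin b y * evalLin d y + evalCubic ts y := by simp [evalCubic]
    rw [this, ih]
    simp only [tensor, Int.cast_add, Int.cast_mul, add_mul, Finset.sum_add_distrib]
    congr 1
    rw [evalLin_eq_sum a, Finset.mul_sum, Finset.sum_mul, Finset.sum_mul]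
    refine Finset.sum_congr rfl fun i _ => ?_
    rw [evalLin_eq_sum b, Finset.mul_sum, Finset.sum_mul]
    refine Finset.sum_congr rfl fun j _ => ?_
    rw [evalLin_eq_sum d, Finset.mul_sum]
    refine Finset.sum_congr rfl fun k _ => ?_
    ring

/-- A cubic form whose symmetrized coefficients vanish is zero. -/
theorem vanishes_sound {ts : List CubicTerm} {m : ℕ} (h : vanishes ts m = true) {y : List ℝ}
    (hy : y.length = m) : evalCubic ts y = 0 := by
  have hs : ∀ i < m, ∀ j < m, ∀ k < m, symTensor ts i j k = 0 := by
    have h0 : ∀ i < m, ∀ j < m, ∀ k < m, i ≤ j → j ≤ k → symTensor ts i j k = 0 := by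
      intro i hi j hj k hk hij hjk
      simp only [vanishes, List.all_eq_true, List.mem_range] at h
      simpa [hij, hjk] using h i hi j hj k hk
    intro i hi j hj k hk
    rcases le_total i j with h1 | h1 <;> rcases le_total j k with h2 | h2 <;>
      rcases le_total i k with h3 | h3
    · exact h0 i hi j hj k hk h1 h2
    · exact h0 i hi j hj k hk h1 h2
    · rw [← h0 i hi k hk j hj h3 h2]; unfold symTensor; ring
    · rw [← h0 k hk i hi j hj h3 h1]; unfold symTensor; ring
    · rw [← h0 j hj i hi k hk h1 h3]; unfold symTensor; ring
    · rw [← h0 j hj k hk i hi h2 h3]; unfold symTensor; ring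
    · rw [← h0 k hk j hj i hi h2 h1]; unfold symTensor; ring
    · rw [← h0 k hk j hj i hi h2 h1]; unfold symTensor; ring
  let S (f : ℕ → ℕ → ℕ → ℝ) : ℝ :=
    ∑ i ∈ Finset.range m, ∑ j ∈ Finset.range m, ∑ k ∈ Finset.range m, f i j k
  have c1 : ∀ f, S f = S fun i j k => f j i k := fun f => Finset.sum_comm
  have c2 : ∀ f, S f = S fun i j k => f i k j := fun f =>
    Finset.sum_congr rfl fun i _ => Finset.sum_comm
  let T (i j k : ℕ) : ℝ := (tensor ts i j k : ℝ) * (y.getD i 0 * y.getD j 0 * y.getD k 0)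
  have e0 : evalCubic ts y = S T := by rw [evalCubic_eq_sum, hy]
  have e1 : S T = S fun i j k => T i k j := c2 T
  have e2 : S T = S fun i j k => T j i k := c1 T
  have e3 : S T = S fun i j k => T j k i := e1.trans (c1 _)
  have e4 : S T = S fun i j k => T k i j := e2.trans (c2 _)
  have e5 : S T = S fun i j k => T k j i := e4.trans (c1 _)
  have key : S T + S (fun i j k => T i k j) + S (fun i j k => T j i k) +
      S (fun i j k => T j k i) + S (fun i j k => T k i j) + S (fun i j k => T k j i) = 0 := by
    simp only [S, ← Finset.sum_add_distrib]
    refine Finset.sum_eq_zero fun i hi => Finset.sum_eq_zero fun j hj =>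
      Finset.sum_eq_zero fun k hk => ?_
    have := hs i (Finset.mem_range.1 hi) j (Finset.mem_range.1 hj) k (Finset.mem_range.1 hk)
    have h' : ((symTensor ts i j k : ℤ) : ℝ) = 0 := by rw [this]; simp
    simp only [symTensor, Int.cast_add] at h'
    simp only [T]
    linear_combination (y.getD i 0 * y.getD j 0 * y.getD k 0) * h'
  rw [← e1, ← e2, ← e3, ← e4, ← e5] at key
  linarith

theorem evalLin_singleton (D : ℕ) {y : List ℝ} (hy : y.getD 0 0 = 1) :
    evalLin [(D : ℤ)] y = D := by
  cases y with
  | nil => simp at hy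
  | cons a y =>
    simp at hy
    simp [evalLin, hy]

section Handelman

variable {D : ℕ} {As : List Lin} {y : List ℝ}

theorem factor_nonneg (hV : Counterexample C V) (hH : ∀ l ∈ H, 0 ≤ evalLin l (entries V))
    (hy : y.getD 0 0 = 1) (hAs : As.map (evalLin · y) = (entries V).map ((D : ℝ) * ·)) (r : ℕ) :
    0 ≤ evalLin (factor C H D As r) y := by
  cases r with
  | zero =>
    rw [factor, evalLin_singleton D hy]
    exact Nat.cast_nonneg _
  | succ r =>
    rw [factor, evalLin_combine, evalLin_nil, hAs, evalLin_map_mul, zero_add]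
    exact mul_nonneg (Nat.cast_nonneg _) (refLin_nonneg hV hH r)

theorem takeTerms_sound (hf : ∀ r, 0 ≤ evalLin (factor C H D As r) y) {n : ℕ} {s t : List ℕ}
    {ts : List CubicTerm} (h : takeTerms C H D As n s = some (ts, t)) : evalCubic ts y ≤ 0 := by
  induction n generalizing s t ts with
  | zero =>
    simp only [takeTerms, Option.some.injEq, Prod.mk.injEq] at h
    simp [← h.1, evalCubic]
  | succ n ih =>
    match s with
    | [] => simp [takeTerms] at h
    | [_] => simp [takeTerms] at h
    | [_, _] => simp [takeTerms] at h
    | [_, _, _] => simp [takeTerms] at h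
    | c :: p :: q :: r :: s =>
      unfold takeTerms at h
      split at h
      · rename_i ts' s' hts
        simp only [Option.some.injEq, Prod.mk.injEq] at h
        have h1 := ih hts
        have h2 : 0 ≤ (c : ℝ) * evalLin (factor C H D As p) y * evalLin (factor C H D As q) y *
          evalLin (factor C H D As r) y := by
          have := hf p; have := hf q; have := hf r; positivity
        rw [← h.1]
        simp only [evalCubic, List.map_cons, List.sum_cons, Int.cast_neg, Int.cast_natCast] at h1 ⊢
        linarith
      · simp at h

theorem takeSquares_sound (hf : ∀ r, 0 ≤ evalLin (factor C H D As r) y) {len n : ℕ} {s t : List ℕ}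
    {ts : List CubicTerm} (h : takeSquares C H D As len n s = some (ts, t)) :
    evalCubic ts y ≤ 0 := by
  induction n generalizing s t ts with
  | zero =>
    simp only [takeSquares, Option.some.injEq, Prod.mk.injEq] at h
    simp [← h.1, evalCubic]
  | succ n ih =>
    match s with
    | [] => simp [takeSquares] at h
    | c :: s =>
      unfold takeSquares at h
      split at h
      · rename_i l r s' hl
        split at h
        · rename_i ts' s' hts
          simp only [Option.some.injEq, Prod.mk.injEq] at h
          have h1 := ih hts
          have h2 : 0 ≤ (c : ℝ) * (evalLin l y * evalLin l y) *
              evalLin (factor C H D As r) y :=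
            mul_nonneg (mul_nonneg (Nat.cast_nonneg _) (mul_self_nonneg _)) (hf r)
          rw [← h.1]
          simp only [evalCubic, List.map_cons, List.sum_cons, Int.cast_neg,
            Int.cast_natCast] at h1 ⊢
          linarith
        · simp at h
      · simp at h

theorem evalCubic_detTerms (hy : y.getD 0 0 = 1)
    (hAs : As.map (evalLin · y) = (entries V).map ((D : ℝ) * ·)) (q s : ℤ) :
    evalCubic (detTerms q s D As) y = q * D ^ 3 * (s * V.det - 304) := by
  simp only [entries, List.map_cons, List.map_nil, List.map_eq_cons_iff, List.map_eq_nil_iff]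
    at hAs
  obtain ⟨a, _, rfl, ha, b, _, rfl, hb, c, _, rfl, hc, d, _, rfl, hd, e, _, rfl, he,
    f, _, rfl, hf, g, _, rfl, hg, h, _, rfl, hh, i, _, rfl, hi, k, _, rfl, -, rfl⟩ := hAs
  have h1 := evalLin_singleton D hy
  simp only [detTerms, evalCubic, List.map_cons, List.map_nil, List.sum_cons, List.sum_nil,
    ha, hb, hc, hd, he, hf, hg, hh, hi, h1, Matrix.det_fin_three]
  push_cast
  ring

end Handelman

theorem handelman_sound {s t : List ℕ} (h : handelman C H s = some t) : Refuted C H := by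
  intro V hV hH
  unfold handelman at h
  split at h
  case h_2 => simp at h
  split at h
  case h_2 => simp at h
  rename_i eqs D m s heqs
  split at h
  case h_2 => simp at h
  rename_i fr s hfr
  split at h
  case h_2 => simp at h
  rename_i As' sg q nt s hAs'
  dsimp only at h
  split at h
  case h_2 => simp at h
  rename_i ts nq s hts
  split at h
  case h_2 => simp at h
  rename_i qs s hqs
  rw [Option.ite_none_right_eq_some] at h
  obtain ⟨hc, -⟩ := h
  simp only [Bool.and_eq_true, decide_eq_true_eq, beq_iff_eq] at hc
  obtain ⟨⟨⟨hD, hq⟩, h9⟩, hv⟩ := hc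
  set y : List ℝ := fr.map ((entries V).getD · 0) with hydef
  have hy : y.getD 0 0 = 1 := by
    cases fr with
    | nil => simp [lookup] at h9
    | cons i fr =>
      simp only [lookup, Option.some.injEq] at h9
      simp [y, h9, entries]
  have hylen : y.length = m := by rw [hydef, List.length_map, takeNats_length hfr]
  have hAs : (As' ++ [[(D : ℤ)]]).map (evalLin · y) = (entries V).map ((D : ℝ) * ·) := by
    have h1 := evalLin_singleton D hy
    rw [List.map_append, takeProj_sound (takeEqs_sound hV hH heqs) hAs']
    simp [List.range', entries, h1]
  have hf := factor_nonneg hV hH hy hAs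
  have h1 := takeTerms_sound hf hts
  have h2 := takeSquares_sound hf hqs
  have h3 := vanishes_sound hv hylen
  have happ : ∀ l l' : List CubicTerm, evalCubic (l ++ l') y = evalCubic l y + evalCubic l' y := by
    intro l l'; simp [evalCubic]
  rw [happ, happ, evalCubic_detTerms hy hAs] at h3
  have hpos : (0 : ℝ) < q * D ^ 3 := by positivity
  have h4 := abs_lt.1 hV.det
  have : (0 : ℝ) ≤ (((if sg = 0 then 1 else -1 : ℤ) : ℝ) * V.det - 304) := by
    by_contra hneg
    have := mul_neg_of_pos_of_neg hpos (not_le.1 hneg)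
    push_cast at h3 this
    linarith
  split_ifs at this <;> push_cast at this <;> linarith

theorem check_sound {env : List (List (Z3 × Facet))}
    (henv : ∀ σ ∈ env, Refuted C (σ.map fun q => geForm q.1 q.2)) (n : ℕ) (H : List Lin)
    (s t : List ℕ) (h : check C env n H s = some t) : Refuted C H := by
  induction n generalizing H s t with
  | zero => simp [check] at h
  | succ n ih =>
    cases s with
    | nil => simp [check] at h
    | cons op s =>
      unfold check at h
      split at h
      · split at h
        · intro V hV hH
          exact farkas_sound hV hH (by rw [evalLin_nil]) h
        · simp at h
      · split at h
        · dsimp only at h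
          split_ifs at h with hz
          intro V hV hH
          obtain ⟨f, hf, hfz⟩ := hV.adm _ hz
          refine branch_sound (fun H s t => ih H s t) h f hf V hV fun l hl => ?_
          rcases List.mem_cons.1 hl with rfl | hl
          · exact hfz
          · exact hH l hl
        · simp at h
      · exact handelman_sound h
      · split at h
        · rename_i l s hl
          split at h
          · rename_i s' hs'
            intro V hV hH
            rcases le_total 0 (evalLin l (entries V)) with h0 | h0
            · refine ih _ _ _ hs' V hV fun l' hl' => ?_
              rcases List.mem_cons.1 hl' with rfl | hl'
              · exact h0
              · exact hH l' hl'
            · refine ih _ _ _ h V hV fun l' hl' => ?_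
              rcases List.mem_cons.1 hl' with rfl | hl'
              · rw [evalLin_axpy, evalLin_nil]; push_cast; linarith
              · exact hH l' hl'
          · simp at h
        · simp at h
      · split at h
        · split at h
          · rename_i σ g hσ hg
            split_ifs at h with hc
            exact symCheck_sound (mem_of_lookup hg) (henv σ (mem_of_lookup hσ)) hc
          · simp at h
        · simp at h

theorem checkAll_sound {ls : List (List (ℕ × ℕ) × List ℕ)} {env : List (List (Z3 × Facet))}
    (henv : ∀ σ ∈ env, Refuted C (σ.map fun q => geForm q.1 q.2)) (h : checkAll C ls env = true) :
    Refuted C [] := by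
  induction ls generalizing env with
  | nil =>
    match env with
    | [] => simp [checkAll] at h
    | [] :: _ => simpa using henv [] (by simp)
    | (_ :: _) :: _ => simp [checkAll] at h
  | cons p ls ih =>
    obtain ⟨p, s⟩ := p
    unfold checkAll at h
    dsimp only at h
    split at h
    · rename_i t ht
      refine ih (fun σ hσ => ?_) h
      rcases List.mem_cons.1 hσ with rfl | hσ
      · exact check_sound henv _ _ _ _ ht
      · exact henv σ hσ
    · simp at h

end Soundness


/-! ### The two certificates -/

set_option maxRecDepth 100000 in
/-- The certificate for the contacts `uᵢ, uᵢ - uⱼ`: pairs of the hypotheses of a lemma and the stream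
encoding its refutation. -/
def certI : List (List (ℕ × ℕ) × List ℕ) := [
    ([(5, 0), (4, 0), (3, 2), (2, 1), (1, 0), (0, 0)],
     [2, 6, 5, 0, 4, 14, 3, 29, 2, 44, 1, 56, 0, 70, 2, 5, 9, 0, 1, 3, 6, 0, 0, 0, 0, 0, 0, 0, 0,
   0, 0, 0, 0, 4, 0, 0, 0, 0, 0, 0, 0, 0, 0, 0, 0, 1, 2, 0, 2, 0, 0, 2, 2, 0, 1, 0, 0, 0, 0, 0, 0,
   0, 0, 0, 2, 2, 0, 1, 0, 0, 2, 1, 0, 1, 0, 1, 27, 26, 276, 20, 20, 77, 54, 5, 77, 73, 276, 5,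
   20, 20, 168, 5, 5, 77, 276, 20, 77, 77, 54, 5, 20, 16, 168, 5, 5, 20, 108, 5, 20, 73, 27, 5,
   16, 60, 128, 20, 20, 20, 54, 20, 77, 16, 54, 20, 20, 73, 108, 5, 77, 16, 27, 20, 16, 60, 128,
   77, 77, 77, 276, 5, 77, 77, 27, 20, 16, 16, 27, 5, 16, 16, 27, 77, 16, 16, 54, 5, 5, 73, 444,
   5, 20, 77, 54, 20, 77, 73, 27, 77, 16, 60, 20, 5, 5, 5, 54, 5, 5, 16, 54, 77, 77, 16, 0]),
    ([(5, 2), (4, 8), (3, 1), (2, 1), (1, 0), (0, 0)],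
     [2, 6, 5, 0, 4, 14, 3, 29, 2, 43, 1, 64, 0, 72, 2, 4, 9, 0, 3, 7, 0, 0, 0, 0, 0, 0, 2, 0, 2,
   2, 1, 0, 2, 0, 1, 1, 2, 0, 0, 0, 0, 0, 0, 0, 0, 2, 2, 0, 1, 0, 0, 2, 1, 0, 2, 0, 0, 0, 0, 1, 2,
   1, 0, 0, 0, 0, 0, 0, 0, 0, 3, 1, 2, 1, 1, 27, 15, 128, 5, 5, 5, 54, 5, 63, 59, 168, 5, 34, 34,
   444, 5, 34, 63, 54, 5, 5, 59, 276, 5, 5, 34, 54, 34, 63, 59, 276, 34, 63, 63, 168, 34, 34, 63,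
   54, 34, 34, 59, 276, 5, 5, 63, 108, 5, 34, 59, 128, 63, 63, 63, 20, 34, 34, 34, 276, 5, 63, 63,
   0]),
    ([(5, 6), (4, 0), (3, 2), (2, 1), (1, 0), (0, 0)],
     [2, 6, 5, 0, 4, 14, 3, 29, 2, 44, 1, 56, 0, 76, 2, 4, 9, 0, 3, 6, 0, 0, 0, 0, 0, 0, 4, 1, 2,
   0, 2, 3, 0, 2, 1, 0, 1, 4, 0, 0, 0, 0, 0, 0, 2, 0, 2, 2, 2, 3, 1, 4, 1, 1, 1, 4, 0, 0, 0, 0, 0,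
   0, 0, 2, 2, 0, 1, 0, 0, 2, 1, 0, 1, 0, 1, 54, 14, 256, 20, 20, 20, 276, 20, 20, 39, 5, 39, 39,
   39, 111, 16, 39, 60, 384, 20, 20, 73, 192, 20, 73, 73, 276, 20, 39, 73, 27, 16, 39, 39, 42, 39,
   39, 73, 54, 20, 16, 39, 84, 20, 39, 39, 42, 16, 16, 39, 69, 39, 60, 60, 32, 73, 73, 73, 0]),
    ([(4, 0), (3, 2), (2, 1), (1, 0), (0, 0)],
     [1, 2, 0, 1, 4, 2, 7, 3198, 0, 3, 87, 1, 84, 1, 1, 1, 4, 1, 26, 9044, 0, 7, 76, 2, 84, 1, 59,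
   1, 85, 1, 86, 1, 87, 1, 15, 1, 0, 4, 72, 1, 84, 2, 87, 1, 1, 1, 0, 7, 15, 1, 59, 1, 86, 1, 88,
   1, 84, 2, 87, 1, 0, 1, 4, 0, 7, 3198, 0, 4, 89, 1, 85, 1, 84, 1, 14, 1, 0, 5, 76, 2, 89, 1, 85,
   1, 84, 1, 14, 1, 0, 6, 59, 1, 86, 1, 85, 1, 87, 1, 84, 1, 15, 1, 0, 7, 14, 1, 89, 1, 72, 1, 85,
   1, 87, 1, 84, 1, 1, 1, 0, 7, 78, 1, 84, 2, 59, 1, 85, 1, 86, 1, 87, 1, 15, 1, 0, 5, 89, 1, 72,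
   1, 85, 1, 84, 2, 14, 1, 0, 6, 14, 1, 89, 1, 85, 1, 87, 1, 84, 2, 1, 1]),
    ([(5, 2), (4, 2), (3, 1), (2, 1), (1, 0), (0, 0)],
     [2, 6, 5, 0, 4, 14, 3, 29, 2, 43, 1, 58, 0, 72, 2, 4, 9, 0, 1, 7, 0, 0, 0, 0, 0, 0, 0, 0, 0,
   0, 0, 0, 4, 0, 0, 0, 0, 0, 0, 0, 0, 1, 2, 1, 1, 2, 0, 0, 1, 2, 2, 2, 0, 2, 0, 0, 2, 0, 2, 0, 0,
   1, 0, 0, 0, 0, 0, 0, 2, 0, 1, 0, 0, 1, 1, 27, 17, 276, 5, 63, 63, 444, 5, 34, 63, 128, 63, 63,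
   63, 168, 34, 34, 63, 54, 5, 5, 65, 276, 5, 5, 63, 276, 5, 5, 34, 54, 2, 63, 63, 276, 34, 63,
   63, 27, 2, 2, 34, 27, 2, 2, 5, 27, 2, 2, 63, 54, 2, 34, 63, 54, 5, 65, 34, 168, 5, 34, 34, 20,
   34, 34, 34, 128, 5, 5, 5, 0]),
    ([(5, 2), (4, 6), (3, 1), (2, 1), (1, 0), (0, 0)],
     [2, 6, 5, 0, 4, 14, 3, 29, 2, 43, 1, 62, 0, 72, 2, 4, 9, 0, 1, 3, 0, 0, 0, 0, 0, 0, 0, 0, 0,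
   0, 0, 0, 4, 0, 0, 0, 0, 0, 0, 0, 0, 0, 0, 0, 1, 2, 0, 1, 0, 0, 2, 2, 0, 2, 0, 0, 2, 0, 2, 0, 0,
   1, 0, 2, 2, 2, 3, 2, 2, 2, 0, 2, 3, 0, 1, 108, 18, 384, 5, 53, 53, 162, 2, 5, 53, 552, 5, 18,
   59, 54, 2, 2, 18, 10, 18, 18, 18, 108, 2, 2, 5, 27, 2, 53, 59, 27, 2, 18, 53, 138, 18, 53, 53,
   168, 5, 18, 18, 81, 2, 2, 59, 108, 5, 65, 18, 512, 5, 5, 5, 552, 5, 5, 18, 84, 18, 18, 59, 768,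
   5, 5, 59, 64, 53, 53, 59, 216, 5, 5, 65, 0]),
    ([(5, 2), (3, 1), (2, 1), (1, 0), (0, 0)],
     [1, 0, 2, 1, 0, 5, 84, 1, 86, 1, 87, 1, 62, 2, 1, 1, 0, 4, 87, 1, 86, 1, 84, 1, 1, 1, 4, 1,
   42, 394, 0, 7, 85, 1, 52, 1, 84, 1, 86, 1, 0, 1, 62, 2, 88, 1, 0, 5, 84, 2, 58, 1, 86, 1, 87,
   1, 1, 1, 0, 5, 85, 1, 70, 1, 86, 1, 84, 2, 52, 1, 4, 0, 7, 3198, 0, 3, 88, 1, 84, 1, 28, 1, 4,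
   4, 7, 3198, 0, 6, 85, 1, 52, 1, 88, 1, 86, 1, 84, 1, 0, 1, 0, 7, 28, 1, 88, 1, 86, 1, 58, 1,
   87, 1, 84, 1, 1, 1, 0, 7, 85, 1, 52, 1, 64, 1, 86, 1, 88, 1, 84, 2, 0, 1, 0, 4, 28, 1, 84, 2,
   58, 1, 88, 1, 0, 6, 28, 1, 88, 1, 86, 1, 87, 1, 84, 2, 1, 1]),
    ([(5, 3), (4, 7), (3, 6), (2, 4), (1, 1), (0, 0)],
     [2, 6, 5, 0, 4, 15, 3, 32, 2, 48, 1, 63, 0, 73, 2, 4, 9, 0, 3, 7, 0, 0, 0, 0, 0, 0, 2, 2, 3,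
   3, 2, 2, 2, 1, 4, 4, 1, 1, 0, 0, 0, 0, 0, 0, 2, 2, 4, 0, 1, 1, 2, 1, 4, 0, 1, 1, 0, 0, 4, 0, 0,
   0, 0, 0, 0, 0, 0, 0, 4, 0, 4, 0, 0, 3, 1, 4, 10, 1, 43, 43, 30, 72, 46, 0, 0, 80, 0, 0, 0, 1,
   43, 43, 46, 6, 43, 66, 0, 12, 43, 46, 0, 12, 43, 43, 0, 12, 30, 30, 0, 72, 30, 0, 0, 12, 30,
   66, 0, 0]),
    ([(5, 3), (4, 7), (2, 4), (1, 1), (0, 0)],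
     [1, 2, 1, 0, 4, 5, 32, 3212, 0, 3, 88, 1, 84, 1, 1, 1, 0, 7, 48, 2, 84, 1, 65, 1, 88, 1, 29,
   1, 85, 1, 86, 1, 4, 2, 41, 7640, 0, 7, 84, 2, 65, 1, 88, 1, 42, 1, 85, 1, 86, 1, 29, 1, 0, 4,
   84, 2, 88, 1, 1, 1, 45, 1, 4, 0, 7, 3198, 0, 4, 89, 1, 84, 1, 86, 1, 28, 1, 0, 5, 48, 2, 89, 1,
   84, 1, 86, 1, 28, 1, 0, 7, 28, 1, 89, 1, 88, 1, 45, 1, 84, 1, 86, 1, 1, 1, 0, 6, 88, 1, 84, 1,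
   85, 1, 65, 1, 86, 1, 29, 1, 0, 5, 89, 1, 84, 2, 45, 1, 86, 1, 28, 1, 0, 7, 50, 1, 65, 1, 88, 1,
   85, 1, 84, 2, 86, 1, 29, 1, 0, 6, 28, 1, 89, 1, 88, 1, 84, 2, 86, 1, 1, 1]),
    ([(5, 2), (4, 7), (1, 1), (0, 0)],
     [1, 0, 0, 2, 4, 5, 7, 7410, 4, 2, 19, 9022, 0, 3, 85, 1, 84, 1, 2, 1, 0, 7, 85, 1, 44, 1, 87,
   1, 84, 1, 33, 2, 66, 1, 86, 1, 0, 4, 85, 1, 29, 1, 84, 2, 2, 1, 4, 0, 23, 3198, 0, 7, 85, 1,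
   44, 1, 87, 1, 84, 2, 66, 1, 86, 1, 28, 1, 0, 4, 88, 1, 42, 1, 86, 1, 84, 1, 0, 6, 85, 1, 44, 1,
   87, 1, 66, 1, 86, 1, 84, 1, 0, 5, 88, 1, 42, 1, 84, 1, 86, 1, 33, 2, 0, 7, 85, 1, 88, 1, 29, 1,
   42, 1, 84, 1, 86, 1, 2, 1, 0, 5, 88, 1, 42, 1, 31, 1, 86, 1, 84, 2, 0, 6, 88, 1, 85, 1, 42, 1,
   84, 2, 86, 1, 2, 1, 0, 5, 88, 1, 42, 1, 84, 2, 86, 1, 29, 1]),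
    ([(5, 10), (4, 2), (3, 1), (2, 1), (1, 0), (0, 0)],
     [2, 6, 5, 0, 4, 14, 3, 29, 2, 43, 1, 58, 0, 80, 2, 4, 9, 0, 1, 3, 0, 0, 0, 0, 0, 0, 0, 0, 0,
   0, 0, 0, 4, 0, 0, 0, 0, 0, 0, 0, 0, 0, 0, 0, 1, 2, 0, 1, 0, 0, 2, 2, 0, 2, 0, 0, 2, 0, 2, 2, 1,
   0, 2, 0, 2, 0, 0, 2, 4, 0, 0, 2, 1, 2, 1, 12, 10, 1536, 0, 0, 0, 18, 53, 53, 0, 18, 2, 2, 0,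
   216, 29, 0, 0, 18, 29, 29, 0, 1, 2, 2, 2, 432, 2, 0, 0, 1, 53, 53, 53, 1, 29, 29, 29, 72, 5,
   29, 0, 0]),
    ([(5, 3), (4, 5), (3, 2), (2, 2), (1, 1), (0, 0)],
     [2, 6, 5, 0, 4, 15, 3, 30, 2, 44, 1, 61, 0, 73, 2, 4, 9, 0, 1, 4, 0, 0, 0, 0, 0, 0, 0, 0, 0,
   0, 0, 0, 4, 0, 0, 0, 0, 0, 2, 2, 0, 1, 0, 0, 0, 0, 0, 0, 0, 0, 2, 1, 0, 1, 0, 0, 1, 0, 2, 0, 3,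
   2, 0, 0, 0, 0, 3, 0, 2, 0, 2, 0, 0, 1, 1, 108, 18, 512, 49, 49, 49, 1104, 33, 49, 49, 54, 66,
   66, 33, 54, 39, 39, 49, 216, 39, 49, 49, 512, 33, 33, 33, 432, 66, 33, 33, 9, 66, 66, 66, 540,
   66, 33, 49, 432, 66, 49, 49, 54, 51, 51, 49, 54, 51, 51, 33, 9, 39, 39, 39, 54, 66, 66, 49, 9,
   51, 51, 51, 1104, 33, 33, 49, 54, 39, 39, 33, 216, 51, 33, 33, 0]),
    ([(5, 0), (4, 3), (3, 2), (2, 1), (1, 0), (0, 0)],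
     [2, 6, 5, 0, 4, 14, 3, 29, 2, 44, 1, 59, 0, 70, 2, 4, 9, 0, 1, 3, 0, 0, 0, 0, 0, 0, 0, 0, 0,
   0, 0, 0, 4, 0, 0, 0, 0, 0, 0, 0, 0, 0, 0, 0, 1, 2, 0, 2, 0, 0, 2, 2, 0, 1, 0, 0, 2, 1, 0, 0, 2,
   1, 0, 2, 2, 0, 1, 0, 2, 0, 1, 0, 0, 1, 1, 27, 17, 276, 20, 77, 77, 276, 5, 77, 77, 54, 20, 20,
   73, 168, 5, 5, 20, 128, 77, 77, 77, 27, 5, 16, 16, 54, 77, 77, 16, 276, 5, 20, 20, 27, 77, 16,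
   16, 128, 20, 20, 20, 54, 5, 20, 73, 20, 5, 5, 5, 27, 20, 16, 16, 54, 5, 77, 16, 168, 5, 5, 77,
   444, 5, 20, 77, 276, 20, 20, 77, 0]),
    ([(5, 3), (3, 2), (2, 2), (1, 1), (0, 0)],
     [1, 0, 2, 1, 0, 5, 61, 2, 2, 1, 84, 1, 86, 1, 87, 1, 4, 2, 36, 9454, 0, 4, 86, 1, 87, 1, 84,
   1, 2, 1, 4, 2, 17, 394, 0, 10, 84, 4, 50, 1, 85, 1, 0, 1, 88, 1, 24, 1, 57, 1, 56, 1, 87, 1,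
   86, 1, 4, 1, 7, 3198, 0, 5, 14, 1, 88, 1, 84, 2, 87, 1, 38, 1, 0, 10, 87, 2, 50, 1, 86, 1, 65,
   2, 88, 2, 24, 1, 85, 1, 0, 1, 84, 1, 32, 2, 0, 3, 88, 1, 84, 1, 29, 1, 4, 0, 21, 400, 0, 5, 50,
   1, 86, 1, 85, 1, 42, 1, 84, 1, 0, 4, 29, 1, 88, 1, 84, 2, 65, 1, 0, 5, 28, 1, 88, 1, 24, 1, 84,
   2, 87, 1, 0, 9, 65, 2, 50, 1, 85, 1, 84, 2, 88, 1, 24, 1, 0, 1, 87, 1, 86, 1]),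
    ([(5, 9), (4, 8), (3, 1), (2, 1), (1, 0), (0, 0)],
     [2, 6, 5, 0, 4, 14, 3, 29, 2, 43, 1, 64, 0, 79, 2, 4, 9, 0, 3, 7, 0, 0, 0, 0, 0, 0, 2, 0, 2,
   2, 1, 0, 2, 0, 1, 1, 2, 0, 0, 0, 0, 0, 0, 0, 0, 2, 2, 0, 1, 0, 0, 2, 1, 0, 2, 0, 0, 0, 0, 1, 2,
   2, 0, 0, 0, 0, 0, 0, 0, 0, 3, 1, 2, 2, 0, 1, 6, 128, 0, 0, 0, 6, 33, 60, 0, 3, 29, 29, 0, 3,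
   29, 60, 0, 18, 29, 0, 0, 6, 33, 52, 0, 0]),
    ([(5, 4), (4, 0), (3, 2), (2, 8), (1, 0), (0, 0)],
     [2, 6, 5, 0, 4, 14, 3, 36, 2, 44, 1, 56, 0, 74, 2, 4, 9, 0, 1, 3, 0, 0, 0, 0, 0, 0, 0, 0, 0,
   0, 0, 0, 4, 0, 0, 0, 0, 0, 0, 0, 0, 0, 0, 0, 1, 2, 0, 2, 0, 0, 2, 2, 0, 1, 0, 0, 0, 0, 0, 0, 0,
   3, 0, 2, 1, 0, 1, 4, 0, 2, 2, 0, 1, 0, 0, 54, 13, 32, 58, 58, 58, 96, 58, 58, 53, 256, 7, 7, 7,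
   330, 7, 58, 53, 276, 7, 7, 53, 384, 7, 7, 58, 27, 3, 58, 53, 96, 58, 53, 53, 138, 7, 53, 53,
   54, 3, 7, 53, 192, 7, 58, 58, 27, 3, 53, 53, 32, 53, 53, 53, 0]),
    ([(4, 0), (3, 2), (2, 8), (1, 0), (0, 0)],
     [1, 2, 0, 1, 4, 15, 0, 446, 4, 1, 20, 608, 4, 1, 26, 9044, 0, 10, 57, 1, 6, 2, 84, 1, 17, 1,
   86, 1, 85, 1, 89, 2, 30, 1, 87, 2, 70, 2, 4, 0, 7, 3198, 0, 9, 84, 2, 57, 1, 17, 1, 86, 1, 88,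
   2, 56, 1, 30, 1, 87, 1, 0, 1, 0, 5, 84, 2, 6, 2, 89, 1, 87, 1, 70, 1, 0, 4, 89, 1, 85, 1, 84,
   1, 14, 1, 0, 3, 84, 1, 8, 1, 87, 1, 0, 5, 86, 1, 85, 1, 57, 1, 59, 1, 84, 1, 0, 5, 89, 1, 14,
   1, 85, 1, 74, 2, 84, 1, 0, 9, 73, 1, 89, 1, 17, 1, 86, 1, 85, 1, 84, 4, 30, 1, 87, 1, 50, 1, 0,
   10, 50, 1, 89, 1, 80, 1, 17, 1, 86, 1, 85, 1, 72, 1, 84, 4, 87, 1, 2, 1, 0, 5, 57, 1, 86, 1,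
   85, 1, 84, 2, 52, 1]),
    ([(5, 8), (4, 2), (1, 1), (0, 0)],
     [1, 2, 1, 0, 0, 7, 84, 1, 72, 1, 87, 1, 45, 1, 85, 1, 86, 1, 29, 1, 0, 4, 87, 1, 84, 1, 85,
   1, 29, 1, 0, 3, 72, 1, 86, 1, 84, 1, 4, 3, 41, 3266, 0, 6, 84, 2, 72, 1, 87, 1, 85, 1, 86, 1,
   29, 1, 0, 5, 84, 2, 87, 1, 45, 1, 85, 1, 29, 1, 0, 4, 72, 1, 45, 1, 86, 1, 84, 2, 0, 3, 88, 1,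
   84, 1, 14, 1, 4, 0, 36, 3628, 0, 7, 14, 1, 88, 1, 87, 1, 45, 1, 84, 1, 85, 1, 29, 1, 0, 8, 14,
   1, 88, 1, 72, 1, 87, 1, 84, 1, 85, 1, 86, 1, 29, 1, 0, 4, 14, 1, 88, 1, 45, 1, 84, 2, 0, 5, 14,
   1, 88, 1, 72, 1, 86, 1, 84, 2, 0, 6, 14, 1, 88, 1, 87, 1, 84, 2, 85, 1, 29, 1]),
    ([(4, 7), (1, 1), (0, 0)],
     [1, 2, 0, 1, 0, 3, 84, 1, 42, 1, 85, 1, 0, 5, 86, 1, 69, 2, 85, 1, 84, 1, 1, 1, 4, 8, 7,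
   3198, 4, 8, 23, 3198, 0, 6, 84, 2, 66, 1, 44, 1, 86, 1, 1, 1, 85, 1, 0, 6, 45, 1, 65, 1, 86, 1,
   1, 1, 84, 2, 85, 1, 0, 6, 50, 1, 84, 2, 86, 1, 42, 1, 85, 1, 29, 1, 0, 3, 87, 1, 84, 1, 28, 1,
   0, 7, 48, 2, 87, 1, 86, 1, 29, 1, 84, 1, 85, 1, 28, 1, 4, 0, 29, 446, 4, 0, 46, 446, 0, 8, 65,
   1, 87, 1, 29, 1, 86, 1, 45, 1, 84, 2, 85, 1, 28, 1, 0, 8, 84, 2, 87, 1, 44, 1, 86, 1, 29, 1,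
   66, 1, 85, 1, 28, 1, 0, 7, 28, 1, 87, 1, 86, 1, 69, 2, 85, 1, 84, 2, 1, 1]),
    ([(4, 0), (0, 0)],
     [1, 0, 0, 2, 0, 3, 85, 1, 84, 1, 14, 1, 4, 0, 7, 7410, 4, 0, 15, 7410, 4, 0, 39, 7410, 0, 4,
   14, 1, 85, 1, 84, 2, 38, 1, 0, 4, 14, 1, 85, 1, 84, 2, 37, 1, 0, 4, 85, 1, 36, 1, 84, 2, 14, 1,
   0, 3, 86, 1, 70, 1, 84, 1, 4, 0, 0, 400, 4, 0, 8, 400, 4, 0, 32, 400, 0, 4, 86, 1, 31, 1, 70,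
   1, 84, 2, 0, 4, 86, 1, 30, 1, 70, 1, 84, 2, 0, 4, 86, 1, 70, 1, 29, 1, 84, 2]),
    ([(5, 1), (4, 2), (3, 1), (2, 0), (1, 0), (0, 0)],
     [2, 6, 5, 0, 4, 14, 3, 28, 2, 43, 1, 58, 0, 71, 2, 4, 9, 0, 1, 3, 0, 0, 0, 0, 0, 0, 0, 0, 0,
   0, 0, 0, 4, 0, 0, 0, 0, 0, 0, 0, 0, 0, 0, 0, 1, 2, 0, 1, 0, 0, 2, 2, 0, 2, 0, 0, 0, 0, 0, 2, 1,
   1, 1, 0, 2, 1, 2, 0, 2, 0, 2, 0, 0, 2, 1, 1, 1, 128, 0, 0, 0, 0]),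
    ([(5, 2), (4, 2), (3, 1), (2, 0), (1, 0), (0, 0)],
     [2, 6, 5, 0, 4, 14, 3, 28, 2, 43, 1, 58, 0, 72, 2, 4, 9, 0, 1, 6, 0, 0, 0, 0, 0, 0, 0, 0, 0,
   0, 0, 0, 4, 0, 0, 0, 0, 0, 0, 0, 0, 1, 2, 1, 1, 2, 0, 0, 1, 2, 2, 2, 0, 2, 0, 0, 0, 0, 0, 0, 0,
   0, 1, 0, 2, 0, 0, 2, 2, 0, 2, 0, 0, 1, 1, 27, 10, 768, 5, 34, 21, 384, 34, 34, 21, 128, 5, 5,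
   5, 384, 5, 5, 21, 384, 5, 5, 34, 128, 21, 21, 21, 384, 34, 21, 21, 128, 34, 34, 34, 384, 5, 21,
   21, 384, 5, 34, 34, 0]),
    ([(5, 10), (4, 2), (3, 1), (2, 0), (1, 0), (0, 0)],
     [3, 4, 0, 0, 3, 0, 0, 0, 0, 0, 7, 2, 6, 6, 0, 5, 14, 4, 28, 3, 43, 2, 58, 1, 80, 2, 4, 9, 0,
   1, 3, 0, 0, 0, 0, 0, 0, 0, 0, 0, 0, 0, 0, 4, 0, 0, 0, 0, 0, 0, 0, 0, 0, 0, 0, 1, 2, 0, 1, 0, 0,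
   2, 2, 0, 2, 0, 0, 1, 0, 2, 0, 0, 1, 1, 0, 2, 1, 2, 0, 4, 0, 0, 2, 1, 2, 1, 16, 3, 4, 85, 85,
   85, 1, 53, 53, 53, 3, 53, 85, 85, 0, 2, 6, 6, 0, 5, 14, 4, 28, 3, 43, 2, 58, 1, 80, 2, 4, 9, 0,
   1, 3, 0, 0, 0, 0, 0, 0, 0, 0, 0, 0, 0, 0, 4, 0, 0, 0, 0, 0, 0, 0, 0, 0, 0, 0, 1, 2, 0, 1, 0, 0,
   2, 2, 0, 2, 0, 0, 1, 0, 2, 0, 0, 1, 1, 0, 2, 1, 2, 0, 4, 0, 0, 2, 1, 2, 1, 4, 20, 6, 32, 32,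
   17, 12, 2, 32, 17, 15, 32, 85, 85, 9, 17, 17, 85, 6, 32, 17, 17, 8, 85, 85, 85, 6, 2, 32, 32,
   6, 2, 2, 32, 6, 2, 2, 17, 9, 32, 32, 85, 9, 2, 2, 85, 6, 2, 17, 17, 2, 2, 2, 2, 2, 17, 17, 17,
   15, 17, 85, 85, 15, 2, 85, 85, 18, 2, 17, 85, 18, 32, 17, 85, 2, 32, 32, 32, 18, 2, 32, 85,
   0]),
    ([(4, 2), (3, 1), (2, 0), (1, 0), (0, 0)],
     [1, 2, 0, 1, 0, 3, 84, 1, 87, 1, 0, 1, 4, 2, 7, 3198, 4, 1, 7, 3198, 0, 7, 51, 1, 85, 1, 64,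
   1, 86, 1, 84, 1, 87, 1, 0, 1, 0, 4, 0, 1, 84, 2, 87, 1, 80, 1, 0, 5, 51, 1, 85, 1, 84, 2, 87,
   1, 0, 1, 0, 5, 84, 2, 64, 1, 86, 1, 87, 1, 0, 1, 0, 3, 89, 1, 84, 1, 28, 1, 0, 3, 86, 1, 84, 1,
   64, 1, 0, 3, 85, 1, 84, 1, 51, 1, 4, 0, 7, 3198, 0, 5, 84, 2, 64, 1, 86, 1, 51, 1, 85, 1, 0, 4,
   89, 1, 72, 1, 84, 2, 28, 1, 0, 6, 89, 1, 31, 1, 16, 1, 85, 1, 84, 2, 1, 1]),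
    ([(4, 2), (3, 1), (2, 1), (1, 0), (0, 0)],
     [1, 2, 0, 1, 0, 7, 84, 1, 1, 1, 88, 1, 86, 1, 87, 1, 62, 2, 0, 1, 0, 3, 87, 1, 84, 1, 1, 1,
   4, 19, 42, 394, 0, 7, 0, 1, 51, 1, 85, 1, 86, 1, 84, 1, 62, 2, 88, 1, 0, 4, 84, 2, 72, 1, 87,
   1, 1, 1, 0, 4, 73, 1, 84, 2, 87, 1, 1, 1, 0, 5, 0, 1, 84, 2, 86, 1, 62, 2, 88, 1, 0, 3, 89, 1,
   84, 1, 28, 1, 0, 3, 64, 1, 86, 1, 84, 1, 0, 3, 85, 1, 84, 1, 51, 1, 4, 13, 7, 3198, 0, 5, 51,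
   1, 64, 1, 86, 1, 84, 2, 85, 1, 0, 4, 84, 2, 28, 1, 89, 1, 72, 1, 0, 5, 28, 1, 89, 1, 87, 1, 84,
   2, 1, 1]),
    ([(5, 2), (4, 3), (3, 2), (2, 1), (1, 0), (0, 0)],
     [3, 4, 0, 0, 0, 0, 0, 0, 0, 0, 23, 2, 6, 6, 0, 5, 14, 4, 29, 3, 44, 2, 59, 1, 72, 2, 4, 9, 0,
   1, 3, 0, 0, 0, 0, 0, 0, 0, 0, 0, 0, 0, 0, 4, 0, 0, 0, 0, 0, 0, 0, 0, 0, 0, 0, 1, 2, 0, 2, 0, 0,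
   2, 2, 0, 1, 0, 0, 2, 0, 2, 0, 0, 1, 0, 2, 2, 0, 1, 0, 2, 2, 0, 0, 1, 1, 1, 87966000, 2,
   27771390, 3, 3, 85, 16211610, 85, 53, 53, 15, 9016515, 8, 4, 7, 7, 16, 5596870, 23, 8, 3, 7,
   53, 1953850, 71, 8, 4, 8, 53, 4333770, 23, 8, 7, 3, 3, 1671840, 55, 8, 3, 8, 3, 1639472, 23, 8,
   7, 3, 53, 6255360, 47, 4, 4, 8, 16, 9383040, 55, 4, 8, 8, 85, 1960605, 55, 4, 8, 8, 3, 2029590,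
   71, 8, 8, 4, 3, 2125845, 55, 4, 8, 8, 16, 3964275, 23, 4, 8, 7, 3, 523271, 23, 4, 7, 8, 53,
   7045089, 55, 4, 8, 8, 53, 7475088, 55, 8, 8, 3, 53, 3, 0, 4, 0, 4, 0, 0, 0, 0, 0, 3, 1, 2, 1,
   2, 0, 6, 29, 1, 88, 1, 0, 2, 85, 1, 84, 1, 87, 1, 2, 6, 8, 0, 7, 14, 6, 29, 5, 44, 4, 59, 3,
   72, 2, 4, 9, 0, 1, 3, 0, 0, 0, 0, 0, 0, 0, 0, 0, 0, 0, 0, 4, 0, 0, 0, 0, 0, 0, 0, 0, 0, 0, 0,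
   1, 2, 0, 2, 0, 0, 2, 2, 0, 1, 0, 0, 2, 0, 2, 0, 0, 1, 0, 2, 2, 0, 1, 0, 2, 2, 0, 0, 1, 1, 1,
   16, 19, 30, 20, 86, 86, 120, 20, 86, 85, 39, 18, 18, 86, 204, 87, 20, 20, 110, 20, 85, 85, 108,
   20, 20, 86, 57, 87, 85, 85, 17, 87, 87, 87, 136, 20, 20, 20, 20, 85, 85, 85, 212, 87, 20, 85,
   108, 87, 20, 86, 24, 86, 86, 85, 5, 86, 86, 86, 12, 87, 18, 86, 102, 87, 87, 20, 15, 87, 86,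
   86, 54, 87, 87, 85, 208, 20, 20, 85, 0, 2, 6, 8, 0, 7, 14, 6, 29, 5, 44, 4, 59, 3, 72, 2, 4, 9,
   0, 1, 3, 0, 0, 0, 0, 0, 0, 0, 0, 0, 0, 0, 0, 4, 0, 0, 0, 0, 0, 0, 0, 0, 0, 0, 0, 1, 2, 0, 2, 0,
   0, 2, 2, 0, 1, 0, 0, 2, 0, 2, 0, 0, 1, 0, 2, 2, 0, 1, 0, 2, 2, 0, 0, 1, 1, 1, 16, 18, 27, 87,
   87, 86, 30, 86, 86, 77, 39, 85, 85, 86, 66, 87, 85, 86, 102, 79, 79, 77, 15, 87, 86, 86, 208,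
   85, 77, 77, 24, 85, 86, 86, 108, 87, 86, 77, 204, 87, 77, 77, 8, 87, 85, 77, 17, 87, 79, 79,
   136, 77, 77, 77, 120, 85, 86, 77, 5, 86, 86, 86, 8, 85, 85, 77, 108, 86, 77, 77, 20, 85, 79,
   79, 0, 0, 3, 88, 1, 84, 1, 3, 1, 2, 6, 8, 0, 7, 14, 6, 29, 5, 44, 4, 59, 3, 72, 2, 4, 9, 0, 1,
   3, 0, 0, 0, 0, 0, 0, 0, 0, 0, 0, 0, 0, 4, 0, 0, 0, 0, 0, 0, 0, 0, 0, 0, 0, 1, 2, 0, 2, 0, 0, 2,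
   2, 0, 1, 0, 0, 2, 0, 2, 0, 0, 1, 0, 2, 2, 0, 1, 0, 2, 2, 0, 0, 1, 1, 1, 96, 18, 612, 87, 86,
   85, 3, 86, 86, 86, 143, 87, 87, 87, 56, 79, 79, 85, 106, 87, 87, 18, 56, 18, 18, 85, 296, 79,
   85, 85, 28, 87, 18, 18, 112, 79, 18, 85, 456, 85, 85, 85, 32, 87, 79, 18, 1388, 87, 85, 85, 8,
   79, 79, 79, 296, 18, 85, 85, 106, 87, 87, 79, 28, 87, 79, 79, 490, 87, 87, 85, 8, 18, 18, 18,
   0, 0, 7, 17, 1, 29, 1, 0, 1, 91, 1, 89, 1, 84, 2, 88, 1, 0, 7, 78, 1, 44, 1, 0, 1, 88, 1, 90,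
   1, 84, 2, 87, 1, 0, 7, 59, 1, 92, 1, 89, 1, 84, 1, 72, 1, 90, 1, 15, 1, 0, 4, 78, 1, 84, 1, 90,
   2, 15, 1, 0, 6, 72, 1, 91, 1, 89, 2, 84, 1, 15, 1, 17, 1, 2, 6, 8, 0, 7, 14, 6, 29, 5, 44, 4,
   59, 3, 72, 2, 4, 9, 0, 1, 3, 0, 0, 0, 0, 0, 0, 0, 0, 0, 0, 0, 0, 4, 0, 0, 0, 0, 0, 0, 0, 0, 0,
   0, 0, 1, 2, 0, 2, 0, 0, 2, 2, 0, 1, 0, 0, 2, 0, 2, 0, 0, 1, 0, 2, 2, 0, 1, 0, 2, 2, 0, 0, 1, 1,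
   1, 1335133991160, 2, 296696442480, 85, 86, 86, 505859089428, 85, 87, 86, 15, 420912311659, 23,
   8, 3, 7, 77, 573502320879, 55, 4, 8, 8, 20, 121188377880, 39, 8, 7, 4, 87, 250572616640, 23, 8,
   3, 7, 53, 184586613269, 71, 8, 4, 8, 77, 102975670816, 23, 4, 7, 8, 85, 30975984855, 55, 8, 8,
   3, 86, 17067560628, 71, 8, 4, 8, 87, 121197912701, 71, 8, 8, 4, 79, 280919168, 71, 8, 4, 8, 86,
   87100340931, 7, 0, 8, 3, 79, 57165983760, 55, 8, 8, 3, 53, 14787015844, 23, 4, 8, 7, 53,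
   60293674633, 23, 8, 7, 3, 86, 25773964945, 23, 4, 7, 8, 20, 0, 6, 37, 1, 78, 1, 84, 2, 89, 1,
   90, 2, 15, 1, 0, 6, 2, 1, 92, 1, 59, 1, 84, 2, 90, 1, 15, 1, 0, 6, 59, 1, 92, 1, 89, 1, 84, 2,
   72, 1, 1, 1, 2, 6, 7, 0, 6, 14, 5, 29, 4, 44, 3, 59, 2, 72, 2, 4, 9, 0, 1, 3, 0, 0, 0, 0, 0, 0,
   0, 0, 0, 0, 0, 0, 4, 0, 0, 0, 0, 0, 0, 0, 0, 0, 0, 0, 1, 2, 0, 2, 0, 0, 2, 2, 0, 1, 0, 0, 2, 0,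
   2, 0, 0, 1, 0, 2, 2, 0, 1, 0, 2, 2, 0, 0, 1, 1, 1, 4, 20, 33, 86, 86, 86, 101, 79, 79, 18, 156,
   79, 85, 85, 126, 86, 86, 85, 252, 79, 85, 18, 156, 86, 85, 85, 64, 85, 85, 85, 100, 86, 86, 18,
   252, 86, 79, 85, 252, 86, 85, 18, 126, 85, 18, 18, 101, 79, 18, 18, 101, 86, 79, 79, 34, 79,
   79, 79, 156, 85, 85, 18, 34, 18, 18, 18, 100, 86, 86, 79, 126, 79, 79, 85, 101, 86, 18, 18,
   201, 86, 79, 18, 0]),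
    ([(5, 3), (4, 3), (3, 2), (2, 1), (1, 0), (0, 0)],
     [2, 6, 5, 0, 4, 14, 3, 29, 2, 44, 1, 59, 0, 73, 2, 4, 9, 0, 1, 6, 0, 0, 0, 0, 0, 0, 0, 0, 0,
   0, 0, 0, 4, 0, 0, 0, 0, 0, 1, 2, 0, 0, 1, 2, 1, 2, 0, 2, 0, 0, 4, 0, 0, 1, 2, 1, 0, 0, 0, 0, 0,
   0, 2, 0, 2, 0, 0, 1, 2, 0, 1, 0, 0, 1, 1, 27, 17, 276, 20, 20, 77, 276, 20, 20, 33, 54, 20, 20,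
   79, 54, 20, 79, 33, 27, 16, 16, 20, 168, 33, 33, 77, 54, 16, 33, 77, 444, 20, 33, 77, 276, 20,
   77, 77, 168, 20, 33, 33, 54, 16, 77, 77, 27, 16, 16, 77, 27, 16, 16, 33, 128, 20, 20, 20, 20,
   33, 33, 33, 276, 33, 77, 77, 128, 77, 77, 77, 0]),
    ([(5, 6), (4, 3), (3, 2), (2, 1), (1, 0), (0, 0)],
     [1, 2, 1, 2, 0, 5, 78, 1, 85, 2, 89, 1, 84, 1, 0, 2, 0, 8, 87, 1, 59, 1, 89, 1, 29, 1, 85, 2,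
   84, 1, 72, 1, 0, 1, 2, 6, 6, 0, 5, 14, 4, 29, 3, 44, 2, 59, 1, 76, 2, 4, 9, 0, 1, 3, 0, 0, 0,
   0, 0, 0, 0, 0, 0, 0, 0, 0, 4, 0, 0, 0, 0, 0, 0, 0, 0, 0, 0, 0, 1, 2, 0, 2, 0, 0, 2, 2, 0, 1, 0,
   0, 4, 1, 2, 0, 2, 3, 0, 2, 2, 0, 1, 0, 4, 0, 0, 0, 0, 3, 1, 108, 20, 30, 16, 16, 85, 64, 85,
   85, 85, 138, 3, 85, 85, 3, 3, 16, 16, 138, 79, 79, 85, 3, 3, 3, 16, 114, 79, 16, 85, 141, 3,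
   79, 85, 84, 3, 3, 85, 30, 79, 16, 16, 64, 79, 79, 79, 84, 16, 85, 85, 138, 79, 85, 85, 84, 3,
   79, 79, 33, 3, 79, 16, 10, 16, 16, 16, 87, 3, 16, 85, 84, 79, 79, 16, 3, 3, 3, 79, 10, 3, 3, 3,
   0, 0, 3, 86, 1, 84, 1, 3, 1, 2, 6, 6, 0, 5, 14, 4, 29, 3, 44, 2, 59, 1, 76, 2, 4, 9, 0, 1, 3,
   0, 0, 0, 0, 0, 0, 0, 0, 0, 0, 0, 0, 4, 0, 0, 0, 0, 0, 0, 0, 0, 0, 0, 0, 1, 2, 0, 2, 0, 0, 2, 2,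
   0, 1, 0, 0, 4, 1, 2, 0, 2, 3, 0, 2, 2, 0, 1, 0, 4, 0, 0, 0, 0, 3, 1, 108, 20, 10, 39, 39, 39,
   84, 39, 73, 73, 64, 73, 73, 73, 114, 79, 39, 73, 30, 79, 39, 39, 282, 85, 39, 73, 74, 3, 3, 85,
   498, 85, 79, 73, 282, 85, 79, 39, 111, 3, 3, 79, 138, 79, 73, 73, 138, 79, 79, 73, 84, 79, 79,
   39, 114, 85, 39, 39, 84, 3, 3, 39, 276, 85, 79, 79, 111, 3, 3, 73, 276, 85, 73, 73, 30, 39, 39,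
   73, 64, 79, 79, 79, 0, 0, 7, 17, 1, 29, 1, 0, 1, 89, 1, 87, 1, 84, 2, 86, 1, 0, 7, 78, 1, 28,
   1, 0, 1, 89, 1, 88, 2, 84, 2, 15, 1, 0, 7, 59, 1, 90, 1, 87, 1, 84, 1, 72, 1, 88, 1, 15, 1, 0,
   4, 78, 1, 84, 1, 88, 2, 15, 1, 0, 6, 72, 1, 89, 1, 87, 2, 84, 1, 15, 1, 17, 1, 2, 6, 6, 0, 5,
   14, 4, 29, 3, 44, 2, 59, 1, 76, 2, 4, 9, 0, 1, 3, 0, 0, 0, 0, 0, 0, 0, 0, 0, 0, 0, 0, 4, 0, 0,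
   0, 0, 0, 0, 0, 0, 0, 0, 0, 1, 2, 0, 2, 0, 0, 2, 2, 0, 1, 0, 0, 4, 1, 2, 0, 2, 3, 0, 2, 2, 0, 1,
   0, 4, 0, 0, 0, 0, 3, 1, 108, 20, 84, 3, 3, 85, 64, 73, 73, 73, 84, 3, 73, 73, 114, 85, 16, 73,
   138, 85, 73, 73, 64, 85, 85, 85, 141, 3, 85, 73, 3, 3, 3, 16, 87, 3, 85, 16, 33, 3, 16, 73, 30,
   85, 16, 16, 30, 16, 16, 73, 10, 16, 16, 16, 10, 3, 3, 3, 3, 3, 16, 16, 138, 85, 85, 73, 84, 16,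
   73, 73, 84, 85, 85, 16, 3, 3, 3, 73, 138, 3, 85, 85, 0, 0, 6, 37, 1, 78, 1, 84, 2, 87, 1, 88,
   2, 15, 1, 0, 6, 90, 1, 44, 1, 38, 1, 84, 2, 88, 1, 14, 1, 0, 6, 59, 1, 90, 1, 87, 1, 84, 2, 72,
   1, 1, 1]),
    ([(4, 3), (3, 2), (2, 1), (1, 0), (0, 0)],
     [1, 2, 0, 1, 4, 15, 7, 3198, 0, 3, 87, 1, 84, 1, 1, 1, 4, 2, 7, 3198, 4, 1, 9, 394, 0, 4, 72,
   1, 84, 2, 87, 1, 1, 1, 0, 7, 15, 1, 59, 1, 86, 1, 88, 1, 84, 2, 87, 1, 0, 1, 4, 0, 7, 3198, 0,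
   3, 89, 1, 84, 1, 28, 1, 4, 2, 11, 610, 0, 3, 86, 1, 84, 1, 65, 1, 0, 3, 85, 1, 84, 1, 52, 1, 0,
   8, 78, 1, 84, 2, 28, 1, 88, 1, 86, 1, 87, 1, 59, 1, 15, 1, 0, 4, 89, 1, 72, 1, 84, 2, 28, 1, 0,
   5, 28, 1, 89, 1, 87, 1, 84, 2, 1, 1]),
    ([(5, 3), (4, 3), (3, 1), (2, 4), (1, 0), (0, 0)],
     [2, 6, 5, 0, 4, 14, 3, 32, 2, 43, 1, 59, 0, 73, 2, 4, 9, 0, 1, 7, 0, 0, 0, 0, 0, 0, 0, 0, 0,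
   0, 0, 0, 4, 0, 0, 0, 0, 0, 1, 2, 0, 0, 1, 2, 0, 0, 0, 1, 2, 1, 2, 2, 0, 2, 0, 0, 0, 0, 4, 0, 0,
   0, 0, 0, 0, 0, 0, 0, 4, 0, 4, 0, 0, 3, 0, 54, 20, 138, 2, 65, 80, 69, 17, 17, 80, 96, 2, 17,
   17, 96, 65, 65, 80, 138, 2, 17, 65, 96, 65, 80, 80, 96, 2, 2, 17, 138, 17, 65, 80, 69, 2, 2,
   65, 69, 17, 17, 65, 69, 17, 65, 65, 69, 17, 80, 80, 32, 2, 2, 2, 32, 17, 17, 17, 32, 65, 65,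
   65, 138, 2, 17, 80, 69, 2, 80, 80, 69, 2, 2, 80, 69, 2, 65, 65, 32, 80, 80, 80, 0]),
    ([(5, 5), (4, 3), (3, 1), (2, 4), (1, 0), (0, 0)],
     [2, 6, 5, 0, 4, 14, 3, 32, 2, 43, 1, 59, 0, 75, 2, 4, 9, 0, 1, 3, 0, 0, 0, 0, 0, 0, 0, 0, 0,
   0, 0, 0, 4, 0, 0, 0, 0, 0, 0, 0, 0, 0, 0, 0, 1, 2, 0, 1, 0, 0, 2, 2, 0, 2, 0, 0, 0, 0, 4, 0, 0,
   0, 0, 0, 0, 0, 0, 3, 0, 4, 4, 0, 3, 4, 0, 8, 11, 1, 39, 52, 52, 144, 80, 0, 0, 12, 2, 2, 0,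
   144, 2, 0, 0, 36, 2, 31, 0, 144, 31, 0, 0, 24, 31, 31, 0, 1, 2, 2, 39, 24, 80, 80, 0, 1024, 0,
   0, 0, 1, 80, 31, 31, 0]),
    ([(5, 9), (4, 3), (3, 1), (2, 4), (1, 0), (0, 0)],
     [2, 6, 5, 0, 4, 14, 3, 32, 2, 43, 1, 59, 0, 79, 2, 4, 9, 0, 1, 3, 0, 0, 0, 0, 0, 0, 0, 0, 0,
   0, 0, 0, 4, 0, 0, 0, 0, 0, 0, 0, 0, 0, 0, 0, 1, 2, 0, 1, 0, 0, 2, 2, 0, 2, 0, 0, 0, 0, 4, 0, 0,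
   0, 1, 2, 4, 0, 1, 1, 2, 2, 0, 0, 1, 2, 0, 108, 20, 168, 2, 31, 52, 30, 31, 52, 52, 64, 31, 31,
   31, 138, 31, 29, 29, 138, 2, 29, 29, 10, 52, 52, 52, 192, 2, 31, 31, 84, 2, 2, 52, 84, 29, 29,
   52, 141, 2, 29, 52, 30, 2, 52, 52, 114, 31, 29, 52, 64, 2, 2, 2, 192, 2, 2, 31, 138, 2, 2, 29,
   84, 31, 31, 52, 30, 29, 52, 52, 138, 31, 31, 29, 276, 2, 31, 29, 64, 29, 29, 29, 0]),
    ([(4, 3), (3, 1), (2, 4), (1, 0), (0, 0)],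
     [1, 2, 0, 1, 0, 4, 84, 1, 0, 1, 87, 2, 38, 1, 0, 4, 87, 2, 30, 1, 84, 1, 1, 1, 0, 6, 64, 1,
   2, 1, 86, 1, 87, 2, 84, 1, 1, 1, 4, 2, 9, 394, 0, 4, 84, 2, 2, 1, 87, 2, 1, 1, 4, 1, 7, 3198,
   0, 6, 0, 1, 84, 2, 64, 1, 86, 1, 87, 2, 38, 1, 0, 3, 89, 1, 84, 1, 28, 1, 0, 3, 86, 1, 84, 1,
   64, 1, 4, 0, 7, 3198, 0, 3, 85, 1, 84, 1, 52, 1, 0, 4, 28, 1, 89, 1, 73, 1, 84, 2, 0, 5, 64, 1,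
   86, 1, 85, 1, 84, 2, 52, 1, 0, 6, 17, 1, 89, 1, 30, 1, 85, 1, 84, 2, 1, 1]),
    ([(5, 8), (4, 9), (3, 2), (2, 1), (1, 0), (0, 0)],
     [2, 6, 5, 0, 4, 14, 3, 29, 2, 44, 1, 65, 0, 78, 2, 4, 9, 0, 3, 7, 0, 0, 0, 0, 0, 0, 2, 0, 2,
   0, 0, 1, 2, 0, 1, 0, 0, 2, 0, 0, 0, 0, 0, 0, 0, 2, 2, 2, 0, 1, 0, 2, 1, 1, 0, 2, 0, 0, 0, 1, 2,
   2, 0, 0, 0, 0, 0, 0, 0, 0, 3, 1, 2, 2, 1, 4, 9, 24, 33, 16, 0, 512, 0, 0, 0, 72, 29, 0, 0, 1,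
   33, 60, 60, 6, 16, 60, 0, 6, 16, 16, 0, 24, 33, 60, 0, 1, 20, 29, 29, 1, 20, 16, 16, 0]),
    ([(5, 3), (4, 8), (3, 1), (2, 4), (1, 0), (0, 0)],
     [2, 6, 5, 0, 4, 14, 3, 32, 2, 43, 1, 64, 0, 73, 2, 4, 9, 0, 1, 3, 0, 0, 0, 0, 0, 0, 0, 0, 0,
   0, 0, 0, 4, 0, 0, 0, 0, 0, 0, 0, 0, 0, 0, 0, 1, 2, 0, 1, 0, 0, 2, 2, 0, 2, 0, 0, 0, 0, 4, 0, 0,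
   0, 0, 0, 0, 1, 2, 1, 4, 0, 4, 2, 1, 1, 0, 108, 20, 384, 2, 17, 60, 192, 17, 60, 60, 64, 29, 29,
   29, 138, 2, 29, 29, 192, 29, 60, 60, 192, 29, 29, 60, 192, 2, 60, 60, 138, 2, 2, 29, 138, 29,
   29, 17, 330, 29, 17, 60, 138, 29, 17, 17, 64, 60, 60, 60, 64, 2, 2, 2, 192, 2, 2, 17, 192, 2,
   2, 60, 192, 17, 17, 60, 303, 2, 29, 60, 276, 2, 29, 17, 192, 2, 17, 17, 64, 17, 17, 17, 0]),
    ([(5, 3), (4, 9), (3, 2), (2, 1), (1, 0), (0, 0)],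
     [2, 6, 5, 0, 4, 14, 3, 29, 2, 44, 1, 65, 0, 73, 2, 4, 9, 0, 1, 3, 0, 0, 0, 0, 0, 0, 0, 0, 0,
   0, 0, 0, 4, 0, 0, 0, 0, 0, 0, 0, 0, 0, 0, 0, 1, 2, 0, 2, 0, 0, 2, 2, 0, 1, 0, 0, 2, 0, 2, 1, 2,
   0, 2, 0, 2, 0, 0, 1, 4, 0, 0, 1, 2, 1, 1, 4, 10, 24, 20, 29, 0, 72, 60, 0, 0, 6, 29, 29, 0, 1,
   20, 16, 16, 6, 16, 60, 0, 6, 16, 16, 0, 1, 33, 29, 29, 512, 0, 0, 0, 1, 33, 60, 60, 72, 16, 0,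
   0, 0]),
    ([(4, 1), (3, 2), (2, 8), (1, 0), (0, 0)],
     [1, 2, 0, 1, 4, 34, 20, 400, 4, 14, 36, 394, 4, 2, 26, 7640, 0, 9, 17, 1, 87, 2, 57, 1, 84,
   1, 88, 2, 56, 1, 30, 1, 6, 2, 86, 1, 4, 1, 4, 400, 0, 6, 84, 2, 0, 1, 88, 1, 86, 1, 56, 1, 65,
   1, 0, 6, 50, 1, 84, 2, 88, 1, 56, 1, 85, 1, 0, 1, 0, 3, 89, 1, 84, 1, 28, 1, 0, 3, 84, 1, 85,
   1, 50, 1, 0, 3, 65, 1, 84, 1, 86, 1, 4, 0, 12, 400, 0, 5, 50, 1, 65, 1, 84, 2, 85, 1, 86, 1, 0,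
   5, 87, 1, 89, 1, 31, 1, 84, 2, 2, 1, 0, 5, 87, 1, 34, 2, 89, 1, 84, 2, 71, 1]),
    ([(4, 2), (3, 1), (1, 0), (0, 0)],
     [1, 0, 0, 2, 4, 13, 7, 3198, 4, 12, 7, 3198, 0, 3, 85, 1, 84, 1, 16, 1, 4, 8, 39, 3198, 0, 6,
   64, 1, 16, 1, 86, 1, 84, 2, 85, 1, 1, 1, 4, 4, 23, 3198, 0, 4, 31, 1, 85, 1, 84, 2, 16, 1, 0,
   3, 84, 1, 87, 1, 56, 1, 0, 5, 20, 2, 86, 1, 87, 1, 84, 1, 71, 1, 4, 0, 15, 3198, 0, 7, 16, 1,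
   85, 1, 87, 1, 86, 1, 84, 1, 62, 2, 1, 1, 0, 4, 87, 1, 31, 1, 56, 1, 84, 2, 0, 5, 85, 1, 87, 1,
   56, 1, 16, 1, 84, 2, 0, 5, 84, 2, 87, 1, 86, 1, 62, 2, 1, 1]),
    ([(4, 8), (3, 1), (2, 1), (1, 0), (0, 0)],
     [1, 2, 0, 1, 0, 7, 84, 1, 1, 1, 88, 1, 86, 1, 87, 1, 62, 2, 0, 1, 0, 3, 87, 1, 84, 1, 1, 1,
   4, 36, 7, 3198, 4, 36, 23, 3198, 0, 4, 84, 2, 72, 1, 87, 1, 1, 1, 0, 4, 73, 1, 84, 2, 87, 1, 1,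
   1, 0, 5, 0, 1, 84, 2, 86, 1, 62, 2, 88, 1, 0, 3, 89, 1, 84, 1, 28, 1, 0, 3, 64, 1, 86, 1, 84,
   1, 4, 23, 7, 3198, 4, 23, 23, 3198, 0, 4, 28, 1, 89, 1, 84, 2, 73, 1, 0, 4, 84, 2, 28, 1, 89,
   1, 72, 1, 0, 5, 28, 1, 89, 1, 87, 1, 84, 2, 1, 1]),
    ([(5, 2), (4, 8), (3, 2), (2, 1), (1, 0), (0, 0)],
     [2, 6, 5, 0, 4, 14, 3, 29, 2, 44, 1, 64, 0, 72, 2, 4, 9, 0, 1, 7, 0, 0, 0, 0, 0, 0, 0, 0, 0,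
   0, 0, 0, 4, 0, 0, 0, 0, 0, 2, 0, 2, 1, 1, 0, 1, 2, 0, 2, 0, 0, 0, 2, 1, 0, 2, 0, 2, 0, 2, 0, 0,
   1, 0, 0, 0, 0, 0, 0, 2, 0, 1, 0, 0, 1, 1, 4, 2, 1, 53, 3, 60, 512, 0, 0, 0, 0]),
    ([(4, 8), (3, 2), (2, 1), (1, 0), (0, 0)],
     [1, 2, 0, 1, 0, 7, 84, 1, 72, 1, 59, 1, 88, 1, 86, 1, 85, 1, 0, 1, 0, 6, 85, 1, 88, 1, 86, 1,
   52, 1, 84, 1, 0, 1, 4, 0, 35, 454, 0, 7, 78, 1, 84, 1, 0, 1, 59, 1, 88, 1, 86, 1, 85, 1, 0, 7,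
   72, 1, 52, 1, 84, 2, 88, 1, 86, 1, 85, 1, 0, 1, 0, 6, 85, 1, 59, 1, 86, 1, 88, 1, 84, 2, 0, 1,
   0, 8, 78, 1, 84, 2, 72, 1, 0, 1, 88, 1, 86, 1, 59, 1, 85, 1, 0, 3, 89, 1, 84, 1, 28, 1, 4, 19,
   19, 610, 0, 3, 86, 1, 84, 1, 65, 1, 0, 7, 86, 1, 28, 1, 52, 1, 88, 1, 72, 1, 84, 1, 85, 1, 0,
   7, 78, 1, 84, 2, 28, 1, 88, 1, 86, 1, 59, 1, 85, 1, 0, 4, 89, 1, 72, 1, 84, 2, 28, 1, 0, 5, 28,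
   1, 89, 1, 87, 1, 84, 2, 1, 1]),
    ([(5, 8), (3, 2), (2, 1), (1, 0), (0, 0)],
     [1, 0, 2, 1, 0, 5, 76, 2, 89, 1, 84, 1, 85, 1, 14, 1, 0, 3, 87, 1, 84, 1, 15, 1, 0, 3, 72, 1,
   86, 1, 84, 1, 4, 15, 11, 610, 0, 5, 72, 1, 84, 2, 86, 1, 87, 1, 15, 1, 0, 4, 59, 1, 84, 2, 87,
   1, 15, 1, 0, 4, 72, 1, 86, 1, 59, 1, 84, 2, 0, 3, 88, 1, 84, 1, 28, 1, 4, 20, 19, 610, 4, 7, 7,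
   3198, 0, 7, 72, 1, 28, 1, 88, 1, 86, 1, 87, 1, 84, 1, 15, 1, 0, 4, 88, 1, 84, 2, 59, 1, 28, 1,
   0, 5, 72, 1, 88, 1, 86, 1, 84, 2, 28, 1, 0, 5, 28, 1, 88, 1, 87, 1, 84, 2, 15, 1]),
    ([(4, 8), (2, 1), (1, 0), (0, 0)],
     [1, 2, 1, 0, 0, 3, 84, 1, 87, 1, 0, 1, 4, 3, 7, 3198, 4, 1, 7, 3198, 4, 1, 23, 3198, 0, 4,
   84, 2, 52, 1, 87, 1, 0, 1, 0, 4, 51, 1, 84, 2, 87, 1, 0, 1, 0, 5, 78, 1, 84, 2, 0, 1, 87, 1,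
   85, 1, 0, 3, 88, 1, 84, 1, 14, 1, 0, 3, 78, 1, 84, 1, 85, 1, 4, 0, 7, 3250, 4, 0, 23, 3250, 0,
   4, 88, 1, 84, 2, 45, 1, 14, 1, 0, 4, 88, 1, 84, 2, 14, 1, 44, 1, 0, 4, 88, 1, 43, 1, 84, 2, 14,
   1]),
    ([(5, 2), (4, 0), (2, 8), (1, 0), (0, 0)],
     [1, 2, 1, 0, 0, 3, 84, 1, 88, 1, 0, 1, 0, 5, 87, 1, 20, 2, 88, 1, 84, 1, 71, 1, 4, 28, 26,
   9044, 0, 10, 6, 2, 57, 1, 85, 1, 84, 1, 16, 1, 86, 1, 31, 1, 89, 2, 87, 2, 70, 2, 0, 4, 84, 2,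
   52, 1, 86, 1, 70, 1, 0, 5, 84, 2, 85, 1, 88, 1, 58, 1, 0, 1, 0, 5, 6, 2, 84, 2, 88, 1, 87, 1,
   57, 1, 0, 3, 89, 1, 84, 1, 14, 1, 0, 5, 6, 2, 89, 1, 84, 1, 57, 1, 87, 1, 0, 7, 16, 1, 88, 1,
   84, 1, 31, 1, 85, 1, 56, 1, 87, 1, 0, 7, 17, 1, 2, 1, 89, 1, 84, 1, 74, 2, 85, 1, 87, 1, 0, 9,
   85, 1, 3, 1, 89, 1, 84, 4, 16, 1, 66, 1, 56, 1, 50, 1, 87, 1, 0, 4, 89, 1, 84, 2, 44, 1, 14, 1,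
   0, 8, 87, 1, 20, 2, 89, 1, 84, 4, 43, 1, 85, 1, 56, 1, 80, 1]),
    ([(5, 2), (4, 2), (3, 1), (1, 0), (0, 0)],
     [1, 0, 0, 2, 4, 22, 7, 3198, 4, 39, 42, 394, 0, 3, 84, 1, 2, 1, 85, 1, 4, 17, 18, 394, 0, 6,
   64, 1, 2, 1, 87, 1, 84, 2, 85, 1, 1, 1, 4, 14, 34, 394, 0, 7, 0, 1, 20, 2, 80, 1, 88, 1, 87, 1,
   85, 1, 84, 2, 0, 3, 84, 1, 88, 1, 56, 1, 0, 6, 84, 1, 20, 2, 74, 2, 87, 1, 88, 1, 85, 1, 4, 22,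
   42, 394, 0, 7, 85, 1, 1, 1, 88, 1, 87, 1, 84, 1, 62, 2, 2, 1, 0, 4, 88, 1, 31, 1, 56, 1, 84, 2,
   0, 5, 84, 2, 89, 1, 2, 1, 70, 1, 85, 1, 0, 5, 84, 2, 88, 1, 87, 1, 62, 2, 1, 1]),
    ([(5, 3), (4, 6), (3, 1), (2, 4), (1, 0), (0, 0)],
     [2, 6, 5, 0, 4, 14, 3, 32, 2, 43, 1, 62, 0, 73, 2, 4, 9, 0, 1, 3, 0, 0, 0, 0, 0, 0, 0, 0, 0,
   0, 0, 0, 4, 0, 0, 0, 0, 0, 0, 0, 0, 0, 0, 0, 1, 2, 0, 1, 0, 0, 2, 2, 0, 2, 0, 0, 0, 0, 4, 0, 0,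
   0, 2, 1, 4, 1, 4, 3, 2, 2, 0, 2, 3, 0, 0, 8, 11, 2, 65, 65, 60, 12, 30, 17, 0, 144, 60, 0, 0,
   144, 65, 0, 0, 12, 65, 60, 0, 1024, 0, 0, 0, 1, 65, 60, 60, 12, 30, 30, 0, 1, 65, 30, 30, 24,
   65, 65, 0, 1, 39, 17, 17, 0]),
    ([(5, 9), (4, 8), (3, 1), (2, 4), (1, 0), (0, 0)],
     [2, 6, 5, 0, 4, 14, 3, 32, 2, 43, 1, 64, 0, 79, 2, 4, 9, 1, 3, 7, 0, 0, 4, 2, 1, 1, 0, 0, 0,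
   0, 0, 0, 4, 0, 3, 1, 2, 2, 0, 0, 0, 0, 0, 0, 1, 2, 4, 0, 1, 1, 2, 2, 3, 0, 2, 2, 0, 0, 4, 0, 0,
   0, 0, 0, 0, 0, 0, 0, 4, 0, 3, 0, 0, 4, 0, 108, 17, 327, 2, 52, 52, 192, 2, 2, 60, 192, 2, 2,
   17, 246, 2, 2, 29, 64, 52, 52, 60, 162, 17, 29, 60, 384, 2, 17, 60, 192, 17, 52, 52, 172, 52,
   52, 29, 64, 2, 2, 2, 135, 2, 52, 60, 192, 2, 17, 17, 64, 17, 17, 17, 192, 17, 17, 60, 492, 2,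
   17, 29, 246, 17, 17, 29, 162, 17, 29, 29, 0]),
    ([(5, 2), (4, 6), (3, 1), (1, 0), (0, 0)],
     [1, 0, 0, 2, 0, 4, 64, 1, 84, 1, 14, 1, 86, 2, 4, 41, 7, 3198, 0, 3, 84, 1, 85, 1, 2, 1, 0,
   4, 58, 1, 84, 1, 17, 1, 86, 2, 0, 6, 64, 1, 2, 1, 87, 1, 84, 2, 85, 1, 1, 1, 4, 1, 23, 3198, 0,
   7, 0, 1, 20, 2, 80, 1, 87, 1, 85, 1, 84, 2, 88, 1, 0, 3, 84, 1, 88, 1, 56, 1, 0, 5, 84, 1, 20,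
   2, 88, 1, 87, 1, 71, 1, 4, 0, 26, 608, 0, 7, 85, 1, 1, 1, 88, 1, 87, 1, 84, 1, 62, 2, 2, 1, 0,
   4, 88, 1, 31, 1, 56, 1, 84, 2, 0, 5, 84, 2, 89, 1, 70, 1, 85, 1, 2, 1, 0, 5, 84, 2, 88, 1, 87,
   1, 62, 2, 1, 1]),
    ([(5, 2), (3, 1), (1, 0), (0, 0)],
     [1, 0, 2, 1, 4, 4, 0, 9454, 0, 3, 86, 1, 84, 1, 71, 1, 4, 3, 42, 394, 0, 7, 84, 1, 52, 1, 87,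
   1, 86, 1, 85, 1, 62, 2, 0, 1, 0, 6, 58, 1, 80, 1, 84, 2, 86, 1, 70, 1, 85, 1, 0, 5, 84, 2, 86,
   1, 70, 1, 85, 1, 52, 1, 4, 0, 7, 3198, 0, 3, 87, 1, 84, 1, 28, 1, 4, 11, 19, 9460, 0, 6, 85, 1,
   52, 1, 87, 1, 86, 1, 84, 1, 0, 1, 0, 7, 58, 1, 80, 1, 87, 1, 86, 1, 85, 1, 84, 1, 0, 1, 0, 7,
   64, 1, 0, 1, 52, 1, 86, 1, 84, 2, 85, 1, 87, 1, 0, 4, 58, 1, 87, 1, 84, 2, 28, 1, 0, 6, 87, 1,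
   80, 1, 86, 1, 85, 1, 84, 2, 0, 1]),
    ([(4, 1), (1, 0), (0, 0)],
     [1, 2, 1, 0, 0, 3, 84, 1, 86, 1, 0, 1, 0, 3, 84, 1, 85, 1, 71, 1, 4, 11, 15, 3198, 4, 11, 39,
   3198, 0, 4, 84, 2, 52, 1, 86, 1, 0, 1, 0, 4, 51, 1, 84, 2, 86, 1, 0, 1, 0, 4, 50, 1, 86, 1, 84,
   2, 0, 1, 0, 3, 87, 1, 84, 1, 14, 1, 4, 6, 4, 9460, 4, 0, 15, 3250, 4, 0, 39, 3250, 0, 4, 87, 1,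
   84, 2, 45, 1, 14, 1, 0, 4, 87, 1, 44, 1, 84, 2, 14, 1, 0, 5, 14, 1, 87, 1, 84, 2, 85, 1, 71,
   1]),
    ([(4, 9), (3, 1), (2, 0), (1, 0), (0, 0)],
     [1, 2, 0, 1, 0, 7, 84, 1, 59, 1, 88, 1, 86, 1, 71, 1, 85, 1, 0, 1, 4, 29, 7, 7410, 0, 6, 84,
   1, 52, 1, 88, 1, 86, 1, 85, 1, 0, 1, 0, 7, 79, 1, 59, 1, 88, 1, 86, 1, 84, 1, 85, 1, 0, 1, 0,
   7, 71, 1, 84, 2, 52, 1, 88, 1, 86, 1, 85, 1, 0, 1, 0, 4, 79, 1, 84, 2, 0, 1, 87, 1, 0, 6, 59,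
   1, 88, 1, 86, 1, 84, 2, 85, 1, 0, 1, 0, 3, 89, 1, 84, 1, 28, 1, 0, 5, 63, 1, 86, 1, 84, 1, 85,
   1, 59, 1, 4, 29, 15, 8866, 0, 7, 28, 1, 84, 1, 88, 1, 86, 1, 71, 1, 85, 1, 52, 1, 0, 7, 79, 1,
   59, 1, 86, 1, 28, 1, 84, 2, 85, 1, 88, 1, 0, 6, 28, 1, 52, 1, 86, 1, 84, 2, 85, 1, 88, 1, 0, 4,
   89, 1, 28, 1, 71, 1, 84, 2]),
    ([(4, 9), (3, 1), (1, 0), (0, 0)],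
     [1, 0, 0, 2, 4, 0, 7, 3198, 0, 7, 28, 1, 87, 1, 86, 1, 84, 1, 59, 1, 85, 1, 1, 1, 4, 10, 15,
   3198, 0, 7, 17, 1, 87, 1, 84, 1, 86, 1, 71, 1, 85, 1, 28, 1, 0, 8, 59, 1, 87, 1, 30, 1, 86, 1,
   28, 1, 84, 2, 85, 1, 1, 1, 0, 7, 17, 1, 87, 1, 28, 1, 86, 1, 84, 2, 85, 1, 1, 1, 0, 8, 17, 1,
   87, 1, 30, 1, 86, 1, 28, 1, 71, 1, 85, 1, 84, 2, 0, 6, 84, 1, 87, 1, 86, 1, 71, 1, 59, 1, 85,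
   1, 0, 7, 59, 1, 84, 1, 86, 1, 34, 2, 87, 1, 85, 1, 71, 1, 0, 6, 84, 1, 17, 1, 87, 1, 86, 1, 85,
   1, 1, 1, 0, 7, 30, 1, 59, 1, 87, 1, 86, 1, 84, 1, 85, 1, 1, 1, 0, 6, 84, 2, 17, 1, 87, 1, 86,
   1, 85, 1, 71, 1, 0, 7, 59, 1, 87, 1, 30, 1, 86, 1, 71, 1, 85, 1, 84, 2, 0, 6, 59, 1, 87, 1, 86,
   1, 84, 2, 85, 1, 1, 1]),
    ([(4, 3), (3, 2), (2, 2), (1, 1), (0, 0)],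
     [1, 2, 0, 1, 0, 7, 61, 2, 84, 1, 88, 1, 85, 1, 38, 1, 87, 1, 0, 1, 0, 8, 86, 1, 65, 2, 88, 1,
   85, 1, 87, 1, 56, 1, 84, 1, 4, 2, 0, 3, 84, 1, 87, 1, 2, 1, 4, 41, 17, 394, 0, 6, 84, 2, 88, 1,
   57, 1, 2, 1, 87, 1, 1, 1, 0, 9, 65, 2, 84, 2, 0, 1, 88, 1, 85, 1, 56, 1, 38, 1, 87, 1, 86, 1,
   0, 4, 73, 1, 84, 2, 87, 1, 2, 1, 0, 3, 89, 1, 84, 1, 28, 1, 0, 5, 50, 1, 88, 1, 84, 1, 87, 1,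
   32, 2, 0, 3, 65, 1, 84, 1, 86, 1, 0, 7, 14, 1, 89, 1, 44, 1, 88, 1, 85, 1, 84, 1, 1, 1, 0, 4,
   89, 1, 28, 1, 84, 2, 73, 1, 0, 5, 28, 1, 89, 1, 84, 2, 87, 1, 2, 1, 0, 7, 89, 1, 88, 1, 1, 1,
   85, 1, 65, 1, 84, 2, 14, 1]),
    ([(5, 10), (4, 2), (3, 1), (1, 0), (0, 0)],
     [1, 0, 0, 2, 4, 30, 7, 3198, 4, 42, 7, 3198, 0, 3, 84, 1, 86, 1, 16, 1, 4, 27, 22, 610, 0, 6,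
   28, 1, 89, 1, 2, 1, 84, 2, 85, 1, 1, 1, 4, 21, 23, 3198, 0, 4, 31, 1, 84, 2, 86, 1, 16, 1, 0,
   3, 84, 1, 88, 1, 56, 1, 0, 5, 20, 2, 84, 1, 87, 1, 88, 1, 71, 1, 4, 17, 2, 400, 0, 3, 84, 1,
   85, 1, 10, 1, 0, 4, 31, 1, 88, 1, 56, 1, 84, 2, 0, 5, 89, 1, 84, 2, 2, 1, 71, 1, 85, 1, 0, 7,
   1, 1, 58, 1, 87, 1, 88, 1, 84, 2, 85, 1, 52, 1]),
    ([(5, 10), (4, 2), (2, 1), (1, 0), (0, 0)],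
     [1, 2, 1, 0, 0, 3, 84, 1, 88, 1, 0, 1, 4, 43, 7, 3198, 0, 3, 84, 1, 72, 1, 86, 1, 0, 3, 84,
   1, 85, 1, 66, 1, 0, 4, 84, 2, 52, 1, 88, 1, 0, 1, 0, 7, 28, 1, 58, 1, 84, 2, 88, 1, 87, 1, 85,
   1, 1, 1, 0, 7, 28, 1, 84, 2, 88, 1, 72, 1, 87, 1, 85, 1, 15, 1, 0, 3, 89, 1, 84, 1, 14, 1, 0,
   7, 66, 1, 89, 1, 84, 1, 86, 1, 72, 1, 85, 1, 14, 1, 0, 7, 28, 1, 89, 1, 84, 1, 58, 1, 87, 1,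
   85, 1, 1, 1, 4, 18, 23, 3250, 0, 5, 89, 1, 84, 2, 66, 1, 85, 1, 14, 1, 0, 5, 84, 2, 89, 1, 86,
   1, 72, 1, 14, 1, 0, 4, 89, 1, 43, 1, 84, 2, 14, 1]),
    ([(5, 5), (4, 13), (3, 3), (2, 2), (1, 1), (0, 0)],
     [2, 6, 5, 0, 4, 15, 3, 30, 2, 45, 1, 69, 0, 75, 2, 4, 9, 0, 1, 3, 0, 0, 0, 0, 0, 0, 0, 0, 0,
   0, 0, 0, 4, 0, 0, 0, 0, 0, 0, 0, 0, 0, 0, 0, 2, 2, 0, 1, 0, 0, 2, 1, 0, 1, 0, 0, 1, 2, 4, 2, 3,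
   3, 0, 0, 0, 0, 0, 3, 2, 1, 0, 1, 4, 0, 1, 24, 17, 6, 80, 72, 66, 36, 80, 72, 0, 36, 43, 43, 0,
   3, 66, 58, 58, 432, 66, 0, 0, 2, 80, 80, 80, 3, 80, 80, 66, 36, 72, 43, 0, 2, 43, 43, 43, 432,
   80, 0, 0, 36, 72, 72, 0, 3072, 0, 0, 0, 2, 58, 58, 58, 36, 58, 58, 0, 864, 58, 0, 0, 36, 80,
   80, 0, 3, 72, 43, 43, 0]),
    ([(4, 13), (3, 3), (2, 2), (1, 1), (0, 0)],
     [1, 2, 0, 1, 0, 4, 85, 2, 57, 1, 42, 1, 84, 1, 4, 44, 32, 3212, 0, 3, 84, 1, 87, 1, 2, 1, 0,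
   4, 65, 1, 84, 1, 85, 2, 45, 1, 0, 7, 84, 2, 86, 1, 0, 1, 88, 1, 57, 1, 87, 1, 24, 1, 4, 0, 7,
   3198, 0, 9, 73, 1, 50, 1, 85, 2, 44, 1, 88, 1, 24, 1, 84, 4, 87, 1, 0, 1, 0, 3, 89, 1, 84, 1,
   28, 1, 0, 4, 50, 1, 63, 1, 84, 1, 85, 2, 4, 24, 29, 610, 0, 3, 86, 1, 84, 1, 66, 1, 0, 4, 28,
   1, 84, 2, 73, 1, 89, 1, 0, 5, 28, 1, 89, 1, 84, 2, 87, 1, 2, 1, 0, 6, 89, 1, 88, 1, 28, 1, 57,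
   1, 84, 2, 1, 1]),
    ([(3, 3), (2, 2), (1, 1), (0, 0)],
     [1, 0, 2, 1, 0, 7, 73, 1, 85, 1, 87, 1, 84, 1, 57, 1, 18, 2, 86, 1, 4, 28, 28, 9454, 0, 3,
   86, 1, 84, 1, 16, 1, 0, 3, 85, 1, 84, 1, 73, 1, 0, 6, 84, 2, 87, 1, 24, 1, 57, 1, 86, 1, 14, 1,
   0, 4, 85, 1, 84, 2, 57, 1, 73, 1, 0, 5, 85, 1, 73, 1, 84, 2, 86, 1, 16, 1, 4, 4, 30, 3630, 0,
   7, 28, 1, 85, 1, 87, 1, 86, 1, 84, 1, 73, 1, 24, 1, 4, 3, 45, 400, 4, 2, 30, 9460, 0, 6, 28, 1,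
   88, 1, 42, 1, 84, 2, 73, 1, 85, 1, 0, 5, 28, 1, 87, 1, 84, 2, 86, 1, 24, 1, 4, 0, 7, 3198]),
    ([(5, 4), (4, 5), (3, 2), (2, 8), (1, 0), (0, 0)],
     [2, 6, 5, 0, 4, 14, 3, 36, 2, 44, 1, 61, 0, 74, 2, 4, 9, 0, 1, 3, 0, 0, 0, 0, 0, 0, 0, 0, 0,
   0, 0, 0, 4, 0, 0, 0, 0, 0, 0, 0, 0, 0, 0, 0, 1, 2, 0, 2, 0, 0, 2, 2, 0, 1, 0, 0, 0, 0, 0, 0, 0,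
   3, 1, 2, 0, 2, 3, 0, 1, 2, 4, 2, 3, 3, 0, 24, 11, 3072, 0, 0, 0, 72, 3, 53, 0, 432, 57, 0, 0,
   3, 3, 3, 58, 432, 58, 0, 0, 72, 57, 57, 0, 3, 3, 57, 57, 1, 3, 3, 3, 3, 3, 53, 53, 1, 58, 58,
   58, 1, 18, 18, 18, 0]),
    ([(4, 5), (3, 2), (2, 8), (1, 0), (0, 0)],
     [1, 2, 0, 1, 4, 56, 8, 8882, 4, 12, 20, 608, 0, 4, 84, 1, 85, 2, 44, 1, 56, 1, 0, 9, 6, 2,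
   84, 1, 17, 1, 86, 1, 88, 2, 56, 1, 30, 1, 87, 2, 57, 1, 4, 0, 7, 3198, 0, 9, 84, 2, 57, 1, 17,
   1, 86, 1, 88, 2, 56, 1, 30, 1, 87, 1, 0, 1, 0, 5, 6, 2, 88, 1, 56, 1, 87, 1, 84, 2, 0, 5, 89,
   1, 65, 1, 85, 2, 84, 1, 14, 1, 0, 4, 89, 1, 84, 1, 87, 1, 6, 2, 0, 3, 86, 1, 84, 1, 65, 1, 0,
   4, 85, 2, 57, 1, 84, 1, 52, 1, 0, 5, 3, 1, 89, 1, 84, 2, 87, 1, 30, 1, 0, 5, 2, 1, 89, 1, 84,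
   2, 87, 1, 31, 1, 0, 5, 87, 1, 34, 2, 89, 1, 84, 2, 71, 1]),
    ([(4, 9), (3, 2), (2, 8), (1, 0), (0, 0)],
     [1, 2, 0, 1, 0, 5, 84, 1, 88, 1, 61, 2, 85, 1, 0, 1, 4, 26, 36, 608, 0, 3, 84, 1, 85, 1, 44,
   1, 0, 7, 6, 2, 87, 1, 65, 1, 88, 1, 84, 1, 56, 1, 86, 1, 0, 6, 57, 1, 52, 1, 84, 2, 88, 1, 85,
   1, 0, 1, 0, 6, 84, 2, 88, 1, 65, 1, 56, 1, 86, 1, 0, 1, 0, 8, 6, 2, 59, 1, 87, 1, 88, 1, 84, 4,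
   50, 1, 85, 1, 70, 1, 0, 3, 89, 1, 84, 1, 28, 1, 0, 4, 89, 1, 87, 1, 84, 1, 6, 2, 0, 3, 86, 1,
   84, 1, 65, 1, 0, 7, 88, 1, 87, 1, 85, 1, 34, 2, 57, 1, 84, 1, 52, 1, 0, 5, 8, 1, 87, 1, 65, 1,
   86, 1, 84, 2, 0, 6, 89, 1, 87, 1, 34, 2, 84, 2, 85, 1, 44, 1, 0, 5, 87, 1, 34, 2, 89, 1, 84, 2,
   71, 1]),
    ([(3, 2), (2, 8), (1, 0), (0, 0)],
     [1, 0, 2, 1, 4, 44, 7, 3198, 4, 24, 7, 3198, 0, 7, 84, 1, 31, 1, 85, 1, 87, 1, 56, 1, 86, 1,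
   2, 1, 0, 7, 61, 2, 87, 1, 85, 1, 84, 1, 2, 1, 86, 1, 17, 1, 0, 8, 57, 1, 84, 2, 85, 1, 87, 1,
   31, 1, 56, 1, 86, 1, 2, 1, 4, 1, 7, 3198, 0, 7, 2, 1, 17, 1, 70, 1, 85, 1, 84, 2, 88, 1, 86, 1,
   0, 4, 87, 1, 34, 2, 84, 1, 86, 1, 0, 6, 6, 2, 84, 1, 52, 1, 85, 1, 87, 1, 86, 1, 4, 0, 7, 3198,
   0, 7, 57, 1, 86, 1, 85, 1, 87, 1, 31, 1, 84, 1, 2, 1, 0, 5, 17, 1, 87, 1, 84, 2, 86, 1, 30, 1,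
   0, 6, 31, 1, 85, 1, 87, 1, 84, 2, 86, 1, 2, 1, 0, 5, 34, 2, 87, 1, 57, 1, 84, 2, 86, 1]),
    ([(5, 10), (3, 2), (2, 8), (1, 0), (0, 0)],
     [1, 0, 2, 1, 0, 5, 89, 1, 14, 1, 84, 1, 74, 2, 85, 1, 4, 26, 12, 400, 0, 7, 31, 1, 86, 1, 88,
   1, 87, 1, 56, 1, 84, 1, 2, 1, 0, 3, 84, 1, 85, 1, 52, 1, 0, 8, 31, 1, 84, 2, 2, 1, 86, 1, 87,
   1, 88, 1, 57, 1, 56, 1, 0, 4, 84, 2, 57, 1, 85, 1, 52, 1, 0, 7, 17, 1, 88, 1, 86, 1, 87, 1, 56,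
   1, 84, 2, 2, 1, 0, 3, 28, 1, 88, 1, 84, 1, 0, 6, 86, 1, 17, 1, 88, 1, 87, 1, 84, 1, 2, 1, 0, 7,
   88, 1, 87, 1, 84, 1, 34, 2, 57, 1, 85, 1, 52, 1, 0, 7, 31, 1, 86, 1, 84, 1, 87, 1, 88, 1, 57,
   1, 2, 1, 0, 10, 17, 1, 84, 4, 89, 1, 2, 1, 28, 1, 87, 1, 88, 1, 65, 1, 85, 1, 43, 1, 0, 6, 31,
   1, 86, 1, 84, 2, 87, 1, 88, 1, 2, 1, 0, 5, 34, 2, 87, 1, 88, 1, 57, 1, 84, 2]),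
    ([(4, 9), (2, 8), (1, 0), (0, 0)],
     [1, 2, 1, 0, 0, 3, 84, 1, 87, 1, 0, 1, 0, 7, 59, 1, 86, 1, 84, 1, 34, 2, 87, 1, 85, 1, 71, 1,
   4, 2, 7, 3198, 0, 7, 57, 1, 84, 1, 86, 1, 87, 1, 30, 1, 85, 1, 3, 1, 0, 6, 84, 2, 17, 1, 86, 1,
   87, 1, 2, 1, 71, 1, 0, 5, 79, 1, 84, 2, 87, 1, 0, 1, 85, 1, 0, 6, 8, 1, 57, 1, 84, 2, 86, 1,
   87, 1, 0, 1, 0, 3, 88, 1, 84, 1, 14, 1, 0, 5, 6, 2, 88, 1, 86, 1, 84, 1, 57, 1, 0, 3, 84, 1,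
   79, 1, 85, 1, 4, 0, 23, 3250, 0, 7, 3, 1, 88, 1, 84, 2, 86, 1, 30, 1, 85, 1, 57, 1, 0, 6, 88,
   1, 17, 1, 86, 1, 84, 2, 2, 1, 57, 1, 0, 7, 59, 1, 88, 1, 71, 1, 84, 2, 34, 2, 85, 1, 86, 1]),
    ([(4, 2), (1, 1), (0, 0)],
     [1, 2, 1, 0, 4, 12, 0, 3212, 0, 3, 86, 1, 84, 1, 1, 1, 0, 3, 72, 1, 85, 1, 84, 1, 4, 6, 14,
   3630, 0, 5, 84, 2, 72, 1, 86, 1, 85, 1, 1, 1, 0, 4, 84, 2, 86, 1, 45, 1, 1, 1, 0, 4, 72, 1, 45,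
   1, 85, 1, 84, 2, 0, 3, 87, 1, 84, 1, 14, 1, 4, 2, 36, 3628, 4, 0, 42, 9460, 0, 7, 14, 1, 87, 1,
   72, 1, 86, 1, 84, 1, 85, 1, 1, 1, 0, 4, 14, 1, 87, 1, 45, 1, 84, 2, 0, 5, 14, 1, 87, 1, 72, 1,
   85, 1, 84, 2, 0, 5, 14, 1, 87, 1, 86, 1, 84, 2, 1, 1]),
    ([(4, 8), (3, 1), (2, 4), (1, 0), (0, 0)],
     [1, 2, 0, 1, 0, 4, 84, 1, 0, 1, 87, 2, 38, 1, 0, 3, 85, 1, 84, 1, 43, 1, 0, 6, 64, 1, 2, 1,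
   86, 1, 87, 2, 84, 1, 1, 1, 4, 30, 7, 3198, 0, 4, 84, 2, 2, 1, 87, 2, 1, 1, 0, 4, 84, 2, 73, 1,
   43, 1, 85, 1, 0, 6, 0, 1, 84, 2, 64, 1, 86, 1, 87, 2, 38, 1, 0, 3, 89, 1, 84, 1, 28, 1, 0, 3,
   86, 1, 84, 1, 64, 1, 4, 18, 7, 3198, 0, 6, 28, 1, 89, 1, 2, 1, 87, 2, 84, 1, 1, 1, 0, 4, 28, 1,
   89, 1, 73, 1, 84, 2, 0, 6, 28, 1, 64, 1, 86, 1, 87, 2, 84, 2, 10, 1, 0, 5, 89, 1, 28, 1, 85, 1,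
   84, 2, 43, 1]),
    ([(5, 9), (3, 1), (2, 4), (1, 0), (0, 0)],
     [1, 0, 2, 1, 0, 6, 59, 1, 84, 1, 86, 1, 87, 2, 16, 1, 1, 1, 0, 3, 86, 1, 84, 1, 71, 1, 0, 3,
   84, 1, 85, 1, 51, 1, 4, 34, 7, 3198, 0, 5, 84, 2, 86, 1, 87, 2, 16, 1, 1, 1, 0, 6, 30, 1, 84,
   2, 86, 1, 87, 2, 59, 1, 1, 1, 0, 6, 89, 1, 84, 2, 14, 1, 73, 1, 85, 1, 43, 1, 0, 3, 28, 1, 84,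
   1, 88, 1, 4, 19, 7, 3198, 0, 8, 59, 1, 88, 1, 30, 1, 86, 1, 28, 1, 87, 2, 84, 1, 1, 1, 0, 7,
   51, 1, 85, 1, 88, 1, 86, 1, 71, 1, 84, 1, 28, 1, 0, 4, 28, 1, 59, 1, 84, 2, 88, 1, 0, 5, 28, 1,
   84, 2, 51, 1, 85, 1, 88, 1, 0, 5, 88, 1, 86, 1, 71, 1, 84, 2, 28, 1]),
    ([(5, 8), (3, 3), (2, 4), (1, 0), (0, 0)],
     [1, 0, 2, 1, 0, 5, 84, 1, 86, 1, 87, 2, 73, 1, 18, 2, 0, 3, 85, 1, 84, 1, 50, 1, 0, 4, 29, 1,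
   87, 2, 84, 1, 16, 1, 0, 3, 86, 1, 73, 1, 84, 1, 0, 4, 84, 2, 24, 1, 87, 2, 14, 1, 0, 5, 50, 1,
   86, 1, 84, 2, 73, 1, 85, 1, 0, 6, 86, 1, 29, 1, 87, 2, 84, 2, 73, 1, 16, 1, 0, 3, 88, 1, 84, 1,
   28, 1, 0, 8, 28, 1, 86, 1, 16, 1, 88, 1, 87, 2, 84, 1, 73, 1, 29, 1, 0, 7, 50, 1, 86, 1, 88, 1,
   85, 1, 73, 1, 84, 1, 28, 1, 0, 5, 28, 1, 88, 1, 87, 2, 84, 1, 18, 2, 0, 5, 86, 1, 88, 1, 84, 2,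
   73, 1, 28, 1, 0, 6, 28, 1, 16, 1, 88, 1, 87, 2, 84, 2, 29, 1, 0, 5, 28, 1, 88, 1, 85, 1, 84, 2,
   50, 1]),
    ([(4, 8), (2, 4), (1, 0), (0, 0)],
     [1, 2, 1, 0, 0, 3, 84, 1, 87, 1, 0, 1, 4, 2, 7, 3198, 0, 8, 29, 1, 28, 1, 84, 1, 87, 1, 86,
   2, 85, 1, 59, 1, 2, 1, 0, 8, 28, 1, 84, 1, 16, 1, 87, 1, 86, 2, 85, 1, 73, 1, 29, 1, 0, 4, 84,
   2, 52, 1, 87, 1, 0, 1, 0, 4, 84, 2, 87, 1, 0, 1, 51, 1, 0, 5, 78, 1, 84, 2, 0, 1, 87, 1, 85, 1,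
   0, 3, 88, 1, 84, 1, 14, 1, 0, 3, 84, 1, 85, 1, 78, 1, 4, 1, 15, 3250, 4, 0, 7, 3250, 0, 4, 88,
   1, 84, 2, 14, 1, 45, 1, 0, 4, 84, 2, 88, 1, 44, 1, 14, 1, 0, 4, 88, 1, 43, 1, 84, 2, 14, 1]),
    ([(5, 3), (4, 9), (3, 6), (2, 4), (1, 1), (0, 0)],
     [1, 2, 2, 1, 2, 6, 6, 0, 5, 15, 4, 32, 3, 48, 2, 65, 1, 73, 2, 4, 9, 0, 1, 3, 0, 0, 0, 0, 0,
   0, 0, 0, 0, 0, 0, 0, 4, 0, 0, 0, 0, 0, 0, 0, 0, 0, 0, 0, 4, 4, 0, 3, 0, 0, 4, 0, 0, 3, 0, 0, 0,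
   0, 4, 0, 0, 0, 2, 2, 4, 0, 1, 1, 2, 1, 0, 0, 2, 1, 1, 4, 7, 3, 51, 51, 0, 9, 39, 39, 0, 80, 0,
   0, 0, 108, 85, 0, 0, 12, 51, 45, 0, 9, 31, 31, 0, 3, 45, 45, 0, 0, 2, 6, 6, 0, 5, 15, 4, 32, 3,
   48, 2, 65, 1, 73, 2, 4, 9, 0, 1, 3, 0, 0, 0, 0, 0, 0, 0, 0, 0, 0, 0, 0, 4, 0, 0, 0, 0, 0, 0, 0,
   0, 0, 0, 0, 4, 4, 0, 3, 0, 0, 4, 0, 0, 3, 0, 0, 0, 0, 4, 0, 0, 0, 2, 2, 4, 0, 1, 1, 2, 1, 0, 0,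
   2, 1, 1, 4, 7, 3, 43, 43, 0, 80, 0, 0, 0, 9, 39, 39, 0, 108, 85, 0, 0, 12, 43, 46, 0, 3, 46,
   46, 0, 9, 31, 31, 0, 0, 0, 3, 86, 1, 84, 1, 2, 1, 2, 6, 6, 0, 5, 15, 4, 32, 3, 48, 2, 65, 1,
   73, 2, 4, 9, 0, 1, 3, 0, 0, 0, 0, 0, 0, 0, 0, 0, 0, 0, 0, 4, 0, 0, 0, 0, 0, 0, 0, 0, 0, 0, 0,
   4, 4, 0, 3, 0, 0, 4, 0, 0, 3, 0, 0, 0, 0, 4, 0, 0, 0, 2, 2, 4, 0, 1, 1, 2, 1, 0, 0, 2, 1, 1, 4,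
   7, 80, 0, 0, 0, 3, 29, 29, 0, 9, 51, 51, 0, 12, 29, 30, 0, 9, 45, 45, 0, 108, 85, 0, 0, 3, 30,
   30, 0, 0, 0, 8, 84, 2, 15, 1, 38, 1, 85, 1, 88, 2, 30, 1, 86, 1, 0, 1, 0, 7, 87, 2, 84, 2, 15,
   1, 88, 2, 65, 1, 73, 1, 0, 1, 0, 6, 44, 1, 89, 1, 84, 2, 14, 1, 73, 1, 86, 1, 0, 7, 45, 1, 90,
   1, 89, 1, 29, 1, 85, 1, 65, 1, 84, 1, 0, 4, 50, 1, 89, 2, 84, 1, 29, 1, 2, 6, 6, 0, 5, 15, 4,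
   32, 3, 48, 2, 65, 1, 73, 2, 4, 9, 0, 1, 3, 0, 0, 0, 0, 0, 0, 0, 0, 0, 0, 0, 0, 4, 0, 0, 0, 0,
   0, 0, 0, 0, 0, 0, 0, 4, 4, 0, 3, 0, 0, 4, 0, 0, 3, 0, 0, 0, 0, 4, 0, 0, 0, 2, 2, 4, 0, 1, 1, 2,
   1, 0, 0, 2, 1, 1, 4, 8, 12, 43, 46, 0, 18, 43, 85, 0, 12, 43, 43, 0, 108, 85, 0, 0, 3, 46, 46,
   0, 80, 0, 0, 0, 9, 30, 30, 0, 9, 85, 85, 0, 0, 0, 7, 90, 1, 85, 1, 42, 1, 15, 1, 86, 1, 84, 1,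
   30, 1, 0, 8, 28, 1, 84, 2, 90, 1, 89, 1, 88, 2, 65, 1, 73, 1, 29, 1, 0, 5, 78, 1, 89, 1, 24, 1,
   85, 1, 84, 2, 0, 6, 45, 1, 90, 1, 65, 1, 1, 1, 85, 1, 84, 2]),
    ([(5, 3), (4, 9), (2, 4), (1, 1), (0, 0)],
     [1, 2, 1, 0, 4, 42, 32, 3212, 0, 3, 88, 1, 84, 1, 1, 1, 4, 42, 37, 9460, 4, 42, 33, 9044, 0,
   4, 84, 2, 44, 1, 88, 1, 1, 1, 0, 4, 45, 1, 84, 2, 88, 1, 1, 1, 4, 0, 5, 394, 0, 3, 89, 1, 84,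
   1, 14, 1, 4, 42, 36, 3628, 0, 3, 84, 1, 86, 1, 79, 1, 0, 3, 84, 1, 85, 1, 59, 1, 0, 8, 28, 1,
   89, 1, 84, 2, 30, 1, 87, 2, 15, 1, 73, 1, 86, 1, 0, 4, 89, 1, 44, 1, 84, 2, 14, 1, 0, 5, 14, 1,
   89, 1, 88, 1, 84, 2, 1, 1]),
    ([(5, 3), (4, 5), (2, 4), (1, 1), (0, 0)],
     [1, 2, 1, 0, 0, 6, 86, 2, 84, 1, 38, 1, 87, 2, 65, 1, 0, 1, 0, 3, 88, 1, 84, 1, 1, 1, 4, 15,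
   24, 3212, 0, 6, 84, 1, 86, 2, 87, 2, 30, 1, 73, 1, 15, 1, 0, 4, 84, 2, 44, 1, 88, 1, 1, 1, 0,
   4, 86, 2, 84, 2, 79, 1, 70, 1, 0, 7, 84, 2, 2, 1, 86, 2, 87, 2, 65, 1, 73, 1, 15, 1, 0, 3, 89,
   1, 84, 1, 14, 1, 4, 40, 20, 3628, 0, 8, 73, 1, 14, 1, 89, 1, 84, 1, 87, 2, 30, 1, 1, 1, 86, 2,
   0, 3, 84, 1, 85, 1, 59, 1, 0, 8, 89, 1, 84, 2, 30, 1, 86, 2, 87, 2, 15, 1, 73, 1, 14, 1, 0, 4,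
   14, 1, 89, 1, 44, 1, 84, 2, 0, 5, 14, 1, 89, 1, 88, 1, 84, 2, 1, 1]),
    ([(5, 8), (4, 3), (2, 4), (1, 0), (0, 0)],
     [1, 2, 1, 0, 0, 3, 84, 1, 88, 1, 0, 1, 0, 3, 84, 1, 85, 1, 64, 1, 4, 40, 15, 3198, 0, 3, 84,
   1, 73, 1, 86, 1, 0, 4, 84, 2, 64, 1, 85, 1, 44, 1, 0, 5, 73, 1, 84, 2, 64, 1, 85, 1, 86, 1, 0,
   10, 86, 1, 78, 1, 84, 4, 65, 1, 0, 1, 88, 1, 87, 2, 2, 1, 73, 1, 15, 1, 0, 3, 89, 1, 84, 1, 14,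
   1, 4, 37, 7, 3250, 0, 7, 73, 1, 89, 1, 64, 1, 84, 1, 86, 1, 85, 1, 14, 1, 0, 8, 28, 1, 89, 1,
   29, 1, 87, 2, 2, 1, 85, 1, 59, 1, 84, 1, 0, 5, 89, 1, 84, 2, 73, 1, 14, 1, 86, 1, 0, 4, 84, 2,
   89, 1, 44, 1, 14, 1, 0, 5, 89, 1, 64, 1, 84, 2, 85, 1, 14, 1]),
    ([(4, 9), (2, 4), (1, 1), (0, 0)],
     [1, 2, 0, 1, 0, 4, 84, 1, 38, 1, 86, 2, 0, 1, 0, 4, 1, 1, 86, 2, 84, 1, 30, 1, 0, 3, 44, 1,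
   84, 1, 85, 1, 4, 2, 5, 394, 0, 4, 84, 2, 86, 2, 2, 1, 1, 1, 4, 1, 3, 3250, 0, 4, 44, 1, 84, 2,
   73, 1, 85, 1, 0, 3, 88, 1, 84, 1, 28, 1, 4, 64, 3, 3250, 4, 0, 13, 446, 0, 6, 28, 1, 88, 1, 2,
   1, 86, 2, 84, 1, 1, 1, 0, 4, 28, 1, 88, 1, 73, 1, 84, 2, 0, 5, 88, 1, 44, 1, 84, 2, 85, 1, 28,
   1, 0, 6, 88, 1, 1, 1, 28, 1, 86, 2, 84, 2, 30, 1]),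
    ([(4, 2), (3, 8), (2, 5), (1, 4), (0, 0)],
     [1, 2, 0, 1, 0, 4, 84, 1, 37, 1, 87, 2, 0, 1, 0, 3, 86, 1, 84, 1, 57, 1, 4, 28, 34, 446, 0,
   8, 78, 1, 37, 1, 86, 1, 45, 1, 84, 1, 85, 1, 87, 2, 14, 1, 0, 6, 84, 2, 86, 1, 72, 1, 31, 1,
   87, 2, 15, 1, 0, 5, 3, 1, 87, 2, 86, 1, 84, 2, 15, 1, 0, 7, 88, 2, 14, 1, 45, 1, 72, 1, 84, 2,
   87, 2, 29, 1, 0, 3, 89, 1, 84, 1, 28, 1, 4, 15, 19, 9044, 0, 6, 89, 1, 86, 1, 45, 1, 85, 1, 84,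
   1, 14, 1, 0, 7, 89, 1, 86, 1, 66, 1, 72, 1, 85, 1, 84, 1, 14, 1, 0, 7, 78, 1, 89, 1, 86, 1, 45,
   1, 84, 2, 85, 1, 14, 1, 0, 4, 89, 1, 72, 1, 28, 1, 84, 2, 0, 6, 89, 1, 86, 1, 66, 1, 85, 1, 84,
   2, 14, 1]),
    ([(5, 9), (4, 5), (2, 4), (1, 0), (0, 0)],
     [1, 2, 1, 0, 0, 3, 84, 1, 88, 1, 0, 1, 0, 6, 30, 1, 86, 2, 84, 1, 87, 2, 59, 1, 1, 1, 0, 3,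
   84, 1, 85, 1, 65, 1, 0, 6, 73, 1, 30, 1, 84, 1, 87, 2, 15, 1, 86, 2, 0, 8, 84, 2, 30, 1, 87, 2,
   28, 1, 1, 1, 88, 1, 85, 1, 59, 1, 0, 6, 79, 1, 84, 2, 0, 1, 88, 1, 86, 2, 56, 1, 0, 8, 86, 2,
   30, 1, 73, 1, 87, 2, 15, 1, 65, 1, 85, 1, 84, 2, 0, 3, 89, 1, 84, 1, 14, 1, 0, 8, 87, 2, 30, 1,
   89, 1, 84, 1, 28, 1, 15, 1, 85, 1, 73, 1, 0, 8, 86, 2, 89, 1, 87, 2, 84, 1, 30, 1, 73, 1, 14,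
   1, 1, 1, 0, 10, 65, 1, 30, 1, 89, 1, 1, 1, 86, 2, 87, 2, 14, 1, 59, 1, 85, 1, 84, 1, 0, 8, 86,
   2, 30, 1, 89, 1, 73, 1, 87, 2, 15, 1, 84, 2, 14, 1, 0, 5, 89, 1, 84, 2, 65, 1, 85, 1, 14, 1, 0,
   4, 89, 1, 43, 1, 84, 2, 14, 1]),
    ([(4, 2), (2, 5), (1, 4), (0, 0)],
     [1, 2, 1, 0, 0, 6, 84, 1, 29, 1, 87, 2, 66, 1, 86, 2, 0, 1, 0, 6, 28, 1, 87, 2, 84, 1, 58, 1,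
   86, 2, 1, 1, 0, 3, 72, 1, 85, 1, 84, 1, 4, 4, 6, 8004, 0, 9, 87, 2, 84, 4, 80, 1, 64, 1, 72, 1,
   0, 1, 85, 1, 86, 2, 1, 1, 0, 7, 87, 2, 84, 2, 58, 1, 45, 1, 28, 1, 86, 2, 1, 1, 0, 7, 87, 2,
   84, 2, 45, 1, 72, 1, 28, 1, 86, 2, 15, 1, 0, 3, 88, 1, 84, 1, 14, 1, 4, 1, 7, 3198, 4, 0, 2,
   8004, 0, 8, 14, 1, 72, 1, 88, 1, 87, 2, 28, 1, 84, 1, 86, 2, 1, 1, 0, 4, 14, 1, 88, 1, 45, 1,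
   84, 2, 0, 5, 88, 1, 84, 2, 72, 1, 85, 1, 14, 1, 0, 8, 58, 1, 88, 1, 87, 2, 1, 1, 28, 1, 86, 2,
   14, 1, 84, 2]),
    ([(5, 9), (4, 8), (2, 4), (1, 0), (0, 0)],
     [1, 2, 1, 0, 0, 3, 84, 1, 88, 1, 0, 1, 4, 30, 7, 3198, 0, 5, 84, 1, 63, 1, 86, 1, 85, 1, 59,
   1, 0, 7, 84, 1, 88, 1, 28, 1, 86, 1, 73, 1, 85, 1, 51, 1, 0, 7, 84, 2, 59, 1, 88, 1, 28, 1, 86,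
   1, 85, 1, 43, 1, 0, 4, 51, 1, 88, 1, 84, 2, 0, 1, 0, 5, 63, 1, 86, 1, 73, 1, 85, 1, 84, 2, 0,
   3, 89, 1, 84, 1, 14, 1, 0, 6, 89, 1, 84, 1, 86, 1, 73, 1, 85, 1, 28, 1, 4, 30, 15, 3250, 0, 7,
   28, 1, 89, 1, 84, 1, 86, 1, 59, 1, 85, 1, 43, 1, 0, 7, 89, 1, 84, 2, 28, 1, 86, 1, 73, 1, 85,
   1, 51, 1, 0, 6, 28, 1, 89, 1, 84, 2, 86, 1, 85, 1, 59, 1, 0, 4, 89, 1, 43, 1, 84, 2, 14, 1]),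
    ([(3, 8), (2, 10), (1, 4), (0, 0)],
     [1, 0, 2, 1, 4, 69, 0, 9460, 4, 0, 12, 8004, 0, 9, 73, 1, 2, 1, 88, 2, 29, 1, 85, 1, 86, 2,
   84, 1, 70, 1, 18, 2, 0, 4, 14, 1, 87, 2, 84, 1, 38, 1, 0, 4, 56, 1, 84, 2, 86, 1, 24, 1, 4, 3,
   4, 3630, 0, 8, 73, 1, 2, 1, 88, 1, 85, 1, 84, 2, 86, 1, 56, 1, 29, 1, 0, 5, 88, 1, 32, 2, 42,
   1, 86, 1, 84, 1, 0, 3, 78, 1, 84, 1, 85, 1, 0, 4, 87, 2, 30, 1, 84, 1, 15, 1, 0, 7, 45, 1, 2,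
   1, 88, 1, 86, 1, 85, 1, 15, 1, 84, 1, 0, 9, 73, 1, 78, 1, 88, 1, 44, 1, 85, 2, 86, 1, 30, 1,
   84, 2, 15, 1, 0, 5, 78, 1, 85, 1, 86, 1, 84, 2, 24, 1, 0, 9, 73, 1, 24, 1, 88, 1, 44, 1, 85, 1,
   15, 1, 86, 2, 84, 2, 30, 1]),
    ([(4, 1), (1, 4), (0, 0)],
     [1, 0, 0, 2, 4, 10, 7, 7410, 0, 3, 85, 1, 84, 1, 15, 1, 4, 5, 15, 7410, 0, 4, 14, 1, 86, 2,
   84, 1, 66, 1, 0, 4, 30, 1, 84, 2, 85, 1, 15, 1, 0, 4, 31, 1, 84, 2, 85, 1, 15, 1, 4, 2, 15,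
   3198, 0, 3, 87, 1, 84, 1, 70, 1, 0, 4, 86, 2, 16, 1, 84, 1, 57, 1, 0, 4, 86, 2, 84, 1, 58, 1,
   15, 1, 4, 0, 9, 9022, 0, 4, 86, 2, 57, 1, 58, 1, 84, 2, 0, 4, 30, 1, 87, 1, 70, 1, 84, 2, 0, 5,
   87, 1, 84, 2, 15, 1, 70, 1, 85, 1]),
    ([(4, 1), (0, 0)],
     [1, 0, 2, 0, 4, 30, 7, 3198, 4, 30, 4, 9454, 4, 15, 15, 3198, 4, 15, 39, 3198, 4, 0, 7, 3198,
   4, 0, 23, 3198, 0, 4, 84, 2, 36, 1, 85, 1, 14, 1, 0, 3, 86, 1, 42, 1, 84, 1, 0, 3, 84, 1, 36,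
   1, 85, 1, 4, 15, 36, 9454, 4, 15, 12, 9454, 0, 4, 86, 1, 17, 1, 42, 1, 84, 2, 0, 4, 86, 1, 16,
   1, 42, 1, 84, 2, 0, 4, 86, 1, 42, 1, 15, 1, 84, 2]),
    ([(4, 6), (3, 1), (2, 1), (1, 0), (0, 0)],
     [1, 2, 0, 1, 0, 7, 84, 1, 1, 1, 88, 1, 86, 1, 87, 1, 62, 2, 0, 1, 0, 3, 87, 1, 84, 1, 1, 1,
   4, 75, 7, 3198, 4, 75, 23, 3198, 0, 4, 84, 2, 72, 1, 87, 1, 1, 1, 0, 4, 73, 1, 84, 2, 87, 1, 1,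
   1, 0, 5, 0, 1, 84, 2, 86, 1, 62, 2, 88, 1, 0, 5, 64, 1, 89, 1, 85, 2, 84, 1, 14, 1, 0, 3, 64,
   1, 86, 1, 84, 1, 0, 4, 85, 2, 59, 1, 84, 1, 51, 1, 0, 4, 85, 2, 58, 1, 84, 1, 52, 1, 0, 4, 28,
   1, 89, 1, 84, 2, 73, 1, 0, 4, 84, 2, 28, 1, 89, 1, 72, 1, 0, 5, 28, 1, 89, 1, 87, 1, 84, 2, 1,
   1]),
    ([(5, 6), (3, 2), (2, 1), (1, 0), (0, 0)],
     [1, 0, 2, 1, 4, 79, 7, 3198, 0, 3, 87, 1, 84, 1, 15, 1, 0, 3, 72, 1, 86, 1, 84, 1, 4, 54, 7,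
   3198, 0, 5, 72, 1, 84, 2, 86, 1, 87, 1, 15, 1, 0, 4, 59, 1, 84, 2, 87, 1, 15, 1, 0, 4, 72, 1,
   86, 1, 59, 1, 84, 2, 0, 3, 88, 1, 84, 1, 28, 1, 0, 8, 78, 1, 85, 2, 72, 1, 0, 1, 88, 1, 86, 1,
   59, 1, 84, 1, 0, 6, 50, 1, 85, 2, 88, 1, 59, 1, 84, 1, 0, 1, 0, 7, 72, 1, 28, 1, 88, 1, 86, 1,
   87, 1, 84, 1, 15, 1, 0, 4, 88, 1, 84, 2, 59, 1, 28, 1, 0, 5, 72, 1, 88, 1, 86, 1, 84, 2, 28, 1,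
   0, 5, 28, 1, 88, 1, 87, 1, 84, 2, 15, 1]),
    ([(4, 6), (2, 1), (1, 0), (0, 0)],
     [1, 2, 1, 0, 0, 3, 84, 1, 87, 1, 0, 1, 4, 1, 7, 3198, 0, 4, 72, 1, 84, 1, 59, 1, 85, 2, 0, 4,
   84, 1, 58, 1, 73, 1, 85, 2, 0, 4, 84, 2, 52, 1, 87, 1, 0, 1, 0, 4, 51, 1, 84, 2, 87, 1, 0, 1,
   0, 6, 78, 1, 84, 2, 0, 1, 87, 1, 56, 1, 85, 2, 0, 3, 88, 1, 84, 1, 14, 1, 0, 4, 78, 1, 84, 1,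
   85, 2, 56, 1, 4, 0, 7, 3250, 4, 0, 23, 3250, 0, 4, 88, 1, 84, 2, 45, 1, 14, 1, 0, 4, 88, 1, 84,
   2, 14, 1, 44, 1, 0, 4, 88, 1, 43, 1, 84, 2, 14, 1]),
    ([(4, 5), (3, 2), (2, 2), (1, 1), (0, 0)],
     [1, 2, 0, 1, 4, 78, 8, 7424, 0, 7, 86, 1, 65, 1, 88, 1, 87, 1, 57, 1, 84, 1, 4, 2, 0, 3, 84,
   1, 87, 1, 2, 1, 4, 72, 7, 3198, 0, 6, 84, 2, 2, 1, 88, 1, 57, 1, 87, 1, 1, 1, 0, 8, 65, 1, 84,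
   2, 0, 1, 88, 1, 57, 1, 38, 1, 87, 1, 86, 1, 0, 4, 73, 1, 84, 2, 87, 1, 2, 1, 0, 5, 89, 1, 65,
   1, 85, 2, 84, 1, 14, 1, 0, 6, 89, 1, 44, 1, 85, 2, 84, 1, 73, 1, 14, 1, 0, 3, 65, 1, 84, 1, 86,
   1, 0, 8, 14, 1, 89, 1, 44, 1, 88, 1, 85, 2, 57, 1, 84, 1, 1, 1, 0, 6, 65, 1, 89, 1, 14, 1, 85,
   2, 84, 2, 73, 1, 0, 5, 28, 1, 89, 1, 84, 2, 87, 1, 2, 1, 0, 6, 89, 1, 88, 1, 28, 1, 57, 1, 84,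
   2, 1, 1]),
    ([(4, 5), (3, 6), (2, 2), (1, 1), (0, 0)],
     [1, 2, 0, 1, 4, 39, 24, 7424, 0, 8, 0, 1, 86, 2, 65, 1, 88, 1, 87, 1, 57, 1, 84, 1, 24, 1, 0,
   3, 84, 1, 87, 1, 2, 1, 4, 29, 15, 7410, 0, 8, 84, 2, 86, 2, 44, 1, 88, 1, 24, 1, 57, 1, 87, 1,
   0, 1, 0, 10, 65, 1, 73, 1, 84, 2, 0, 1, 88, 1, 85, 2, 57, 2, 38, 1, 87, 1, 86, 2, 0, 4, 73, 1,
   84, 2, 87, 1, 2, 1, 0, 5, 89, 1, 65, 1, 85, 2, 84, 1, 14, 1, 0, 6, 89, 1, 44, 1, 85, 2, 84, 1,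
   73, 1, 14, 1, 0, 6, 65, 1, 85, 2, 57, 1, 73, 1, 84, 1, 86, 2, 0, 5, 86, 2, 44, 1, 85, 2, 84, 1,
   57, 1, 0, 6, 65, 1, 89, 1, 14, 1, 85, 2, 84, 2, 73, 1, 0, 5, 28, 1, 89, 1, 84, 2, 87, 1, 2, 1,
   0, 3, 69, 1, 84, 1, 86, 1]),
    ([(4, 5), (2, 2), (1, 1), (0, 0)],
     [1, 2, 1, 0, 0, 8, 65, 1, 84, 1, 87, 1, 85, 2, 57, 1, 38, 1, 86, 1, 0, 1, 0, 3, 87, 1, 84, 1,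
   1, 1, 4, 1, 7, 3198, 0, 4, 84, 1, 85, 2, 57, 1, 73, 1, 0, 4, 84, 2, 44, 1, 87, 1, 1, 1, 0, 9,
   79, 1, 45, 1, 85, 2, 84, 4, 87, 1, 71, 1, 38, 1, 86, 1, 0, 1, 4, 0, 7, 3198, 0, 3, 88, 1, 84,
   1, 14, 1, 4, 19, 20, 3628, 0, 5, 87, 1, 84, 1, 86, 1, 18, 2, 79, 1, 0, 7, 65, 1, 14, 1, 88, 1,
   87, 1, 84, 1, 86, 1, 4, 2, 0, 4, 88, 1, 84, 2, 45, 1, 14, 1, 0, 4, 88, 1, 44, 1, 84, 2, 14, 1,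
   0, 5, 14, 1, 88, 1, 87, 1, 84, 2, 1, 1]),
    ([(5, 6), (4, 3), (2, 4), (1, 1), (0, 0)],
     [1, 2, 1, 0, 0, 8, 29, 1, 86, 1, 84, 1, 88, 1, 38, 1, 87, 2, 65, 1, 0, 1, 0, 5, 88, 1, 85, 2,
   70, 1, 84, 1, 29, 1, 4, 31, 37, 3630, 0, 3, 84, 1, 73, 1, 86, 1, 0, 6, 84, 2, 85, 2, 44, 1, 88,
   1, 70, 1, 29, 1, 0, 5, 73, 1, 84, 2, 88, 1, 86, 1, 1, 1, 0, 4, 44, 1, 86, 1, 73, 1, 84, 2, 0,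
   3, 89, 1, 84, 1, 14, 1, 4, 28, 12, 3628, 0, 7, 88, 1, 73, 1, 84, 1, 86, 1, 85, 2, 56, 1, 29, 1,
   0, 6, 29, 1, 84, 1, 87, 2, 85, 2, 59, 1, 2, 1, 0, 5, 89, 1, 84, 2, 86, 1, 73, 1, 14, 1, 0, 4,
   89, 1, 44, 1, 84, 2, 14, 1, 0, 5, 14, 1, 89, 1, 88, 1, 84, 2, 1, 1]),
    ([(4, 13), (2, 4), (1, 1), (0, 0)],
     [1, 2, 0, 1, 0, 6, 84, 1, 85, 2, 24, 1, 86, 2, 65, 1, 0, 1, 0, 4, 1, 1, 86, 2, 84, 1, 30, 1,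
   0, 6, 28, 1, 44, 1, 24, 1, 86, 2, 84, 1, 85, 2, 0, 4, 85, 2, 84, 1, 45, 1, 65, 1, 0, 4, 84, 2,
   2, 1, 86, 2, 1, 1, 0, 7, 84, 2, 0, 1, 85, 2, 24, 1, 86, 2, 65, 1, 79, 1, 0, 4, 50, 1, 85, 2,
   42, 1, 84, 2, 0, 3, 88, 1, 84, 1, 28, 1, 0, 6, 28, 1, 50, 1, 88, 1, 42, 1, 84, 1, 85, 2, 4, 0,
   3, 3250, 0, 6, 86, 2, 88, 1, 2, 1, 28, 1, 84, 1, 1, 1, 0, 6, 28, 1, 85, 2, 84, 2, 65, 1, 45, 1,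
   88, 1, 0, 6, 28, 1, 88, 1, 86, 2, 84, 2, 29, 1, 2, 1, 0, 6, 88, 1, 1, 1, 28, 1, 86, 2, 84, 2,
   30, 1]),
    ([(4, 13), (1, 1), (0, 0)],
     [1, 0, 0, 2, 4, 5, 7, 7410, 0, 6, 87, 1, 42, 1, 15, 1, 84, 1, 85, 2, 28, 1, 4, 2, 15, 7410,
   4, 2, 39, 7410, 4, 0, 7, 3198, 4, 0, 23, 3198, 0, 4, 86, 1, 57, 1, 84, 2, 28, 1, 0, 5, 87, 1,
   42, 1, 57, 1, 85, 2, 84, 1, 0, 3, 86, 1, 84, 1, 57, 1, 0, 6, 87, 1, 42, 1, 15, 1, 84, 1, 85, 2,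
   31, 1, 0, 6, 15, 1, 87, 1, 42, 1, 84, 1, 85, 2, 30, 1, 0, 6, 66, 1, 86, 1, 23, 1, 57, 1, 85, 2,
   84, 2, 0, 6, 65, 1, 86, 1, 24, 1, 84, 2, 57, 1, 85, 2, 0, 5, 87, 1, 42, 1, 15, 1, 85, 2, 84,
   2]),
    ([(4, 6), (3, 1), (2, 4), (1, 0), (0, 0)],
     [1, 2, 0, 1, 0, 4, 84, 1, 0, 1, 87, 2, 38, 1, 0, 6, 59, 1, 85, 2, 87, 2, 16, 1, 84, 1, 1, 1,
   0, 6, 64, 1, 2, 1, 86, 1, 87, 2, 84, 1, 1, 1, 4, 44, 7, 3198, 0, 4, 84, 2, 2, 1, 87, 2, 1, 1,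
   0, 7, 85, 2, 16, 1, 59, 1, 84, 2, 87, 2, 73, 1, 1, 1, 0, 6, 0, 1, 84, 2, 64, 1, 86, 1, 87, 2,
   38, 1, 0, 5, 89, 1, 64, 1, 85, 2, 84, 1, 14, 1, 0, 3, 86, 1, 84, 1, 64, 1, 0, 6, 89, 1, 85, 2,
   14, 1, 73, 1, 84, 1, 43, 1, 0, 8, 89, 1, 64, 1, 14, 1, 2, 1, 87, 2, 85, 2, 84, 1, 1, 1, 0, 6,
   85, 2, 89, 1, 64, 1, 14, 1, 73, 1, 84, 2, 0, 6, 28, 1, 64, 1, 86, 1, 87, 2, 84, 2, 10, 1, 0, 5,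
   89, 1, 85, 2, 14, 1, 84, 2, 43, 1]),
    ([(5, 5), (3, 1), (2, 4), (1, 0), (0, 0)],
     [1, 0, 2, 1, 0, 6, 59, 1, 84, 1, 86, 1, 87, 2, 16, 1, 1, 1, 0, 3, 86, 1, 84, 1, 71, 1, 0, 10,
   51, 1, 16, 1, 85, 2, 0, 1, 88, 1, 86, 1, 87, 2, 84, 2, 62, 2, 1, 1, 4, 60, 7, 3198, 0, 5, 84,
   2, 16, 1, 86, 1, 87, 2, 1, 1, 0, 6, 30, 1, 59, 1, 84, 2, 87, 2, 1, 1, 86, 1, 0, 7, 16, 1, 84,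
   2, 59, 1, 85, 2, 87, 2, 73, 1, 1, 1, 0, 5, 79, 1, 0, 1, 85, 2, 84, 1, 88, 1, 0, 4, 85, 2, 73,
   1, 43, 1, 84, 1, 0, 8, 59, 1, 88, 1, 30, 1, 86, 1, 28, 1, 87, 2, 84, 1, 1, 1, 0, 7, 51, 1, 85,
   2, 71, 1, 88, 1, 86, 1, 84, 1, 0, 1, 0, 6, 0, 1, 79, 1, 59, 1, 85, 2, 84, 2, 88, 1, 0, 8, 16,
   1, 84, 2, 28, 1, 64, 1, 86, 1, 87, 2, 1, 1, 88, 1, 0, 5, 88, 1, 86, 1, 71, 1, 84, 2, 28, 1]),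
    ([(4, 5), (2, 4), (1, 0), (0, 0)],
     [1, 2, 1, 0, 0, 3, 84, 1, 87, 1, 0, 1, 0, 6, 30, 1, 59, 1, 85, 2, 86, 2, 1, 1, 84, 1, 4, 1,
   15, 3198, 0, 6, 84, 1, 85, 2, 86, 2, 30, 1, 73, 1, 15, 1, 0, 7, 84, 2, 44, 1, 85, 2, 86, 2, 30,
   1, 59, 1, 1, 1, 0, 6, 73, 1, 84, 2, 85, 2, 86, 2, 30, 1, 1, 1, 0, 4, 50, 1, 84, 2, 87, 1, 0, 1,
   0, 3, 88, 1, 84, 1, 14, 1, 4, 0, 7, 3250, 0, 8, 14, 1, 88, 1, 30, 1, 85, 2, 84, 1, 86, 2, 73,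
   1, 1, 1, 0, 8, 65, 1, 88, 1, 85, 2, 84, 1, 86, 2, 59, 1, 14, 1, 4, 2, 0, 8, 88, 1, 84, 2, 85,
   2, 73, 1, 86, 2, 30, 1, 14, 1, 15, 1, 0, 4, 88, 1, 44, 1, 84, 2, 14, 1, 0, 8, 30, 1, 88, 1, 85,
   2, 1, 1, 86, 2, 59, 1, 14, 1, 84, 2]),
    ([(4, 5), (3, 2), (2, 4), (1, 1), (0, 0)],
     [1, 2, 0, 1, 0, 4, 84, 1, 38, 1, 87, 2, 0, 1, 0, 6, 86, 1, 1, 1, 87, 2, 65, 1, 84, 1, 2, 1,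
   0, 6, 14, 1, 44, 1, 85, 2, 87, 2, 84, 1, 38, 1, 4, 37, 24, 3212, 0, 4, 84, 2, 2, 1, 87, 2, 1,
   1, 0, 6, 84, 2, 0, 1, 38, 1, 87, 2, 65, 1, 86, 1, 0, 7, 14, 1, 44, 1, 85, 2, 87, 2, 84, 2, 73,
   1, 38, 1, 0, 5, 89, 1, 65, 1, 85, 2, 84, 1, 14, 1, 0, 6, 89, 1, 44, 1, 85, 2, 84, 1, 73, 1, 14,
   1, 0, 3, 65, 1, 84, 1, 86, 1, 0, 8, 1, 1, 14, 1, 89, 1, 85, 2, 87, 2, 65, 1, 84, 1, 2, 1, 0, 6,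
   14, 1, 89, 1, 85, 2, 65, 1, 73, 1, 84, 2, 0, 5, 89, 1, 44, 1, 85, 2, 84, 2, 14, 1, 0, 8, 86, 1,
   89, 1, 1, 1, 28, 1, 87, 2, 65, 1, 84, 2, 2, 1]),
    ([(4, 5), (2, 4), (1, 1), (0, 0)],
     [1, 2, 1, 0, 0, 6, 85, 2, 84, 1, 38, 1, 86, 2, 65, 1, 0, 1, 0, 3, 87, 1, 84, 1, 1, 1, 4, 0,
   7, 3198, 0, 6, 84, 1, 85, 2, 86, 2, 30, 1, 73, 1, 15, 1, 0, 4, 84, 2, 44, 1, 87, 1, 1, 1, 0, 4,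
   85, 2, 84, 2, 79, 1, 70, 1, 0, 7, 84, 2, 2, 1, 85, 2, 86, 2, 65, 1, 73, 1, 15, 1, 0, 3, 88, 1,
   84, 1, 14, 1, 4, 2, 20, 3628, 0, 8, 73, 1, 14, 1, 88, 1, 84, 1, 86, 2, 30, 1, 1, 1, 85, 2, 0,
   8, 85, 2, 14, 1, 88, 1, 84, 1, 86, 2, 65, 1, 59, 1, 4, 2, 0, 8, 88, 1, 84, 2, 30, 1, 85, 2, 86,
   2, 15, 1, 73, 1, 14, 1, 0, 4, 14, 1, 88, 1, 44, 1, 84, 2, 0, 5, 14, 1, 88, 1, 87, 1, 84, 2, 1,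
   1]),
    ([(4, 12), (1, 4), (0, 0)],
     [1, 0, 0, 2, 4, 2, 7, 7410, 4, 0, 7, 7410, 0, 6, 28, 1, 86, 2, 16, 1, 85, 2, 84, 1, 24, 1, 0,
   6, 58, 1, 28, 1, 86, 2, 85, 2, 84, 1, 66, 1, 0, 7, 28, 1, 86, 2, 16, 1, 24, 1, 84, 2, 29, 1,
   85, 2, 0, 7, 28, 1, 86, 2, 84, 2, 66, 1, 85, 2, 58, 1, 29, 1, 0, 6, 28, 1, 86, 2, 16, 1, 66, 1,
   85, 2, 84, 2, 0, 3, 84, 1, 87, 1, 70, 1, 0, 5, 86, 2, 16, 1, 85, 2, 84, 1, 66, 1, 0, 4, 86, 2,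
   58, 1, 84, 1, 15, 1, 0, 6, 86, 2, 16, 1, 24, 1, 84, 1, 85, 2, 29, 1, 0, 5, 84, 2, 86, 2, 85, 2,
   58, 1, 66, 1, 0, 5, 84, 2, 86, 2, 16, 1, 85, 2, 24, 1, 0, 6, 86, 2, 29, 1, 58, 1, 84, 2, 85, 2,
   24, 1]),
    ([(5, 3), (3, 1), (2, 4), (1, 0), (0, 0)],
     [1, 0, 2, 1, 0, 6, 59, 1, 84, 1, 86, 1, 87, 2, 16, 1, 1, 1, 0, 3, 86, 1, 84, 1, 71, 1, 0, 6,
   64, 1, 16, 1, 86, 1, 87, 2, 84, 1, 1, 1, 4, 66, 9, 394, 0, 5, 84, 2, 86, 1, 87, 2, 16, 1, 1, 1,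
   0, 6, 59, 1, 86, 1, 84, 2, 1, 1, 87, 2, 30, 1, 4, 50, 7, 3198, 0, 3, 88, 1, 84, 1, 28, 1, 4,
   61, 7, 3198, 0, 7, 79, 1, 59, 1, 88, 1, 86, 1, 85, 1, 84, 1, 0, 1, 0, 6, 85, 1, 51, 1, 88, 1,
   86, 1, 84, 1, 0, 1, 0, 4, 28, 1, 59, 1, 84, 2, 88, 1, 0, 7, 51, 1, 84, 2, 64, 1, 86, 1, 0, 1,
   85, 1, 88, 1, 0, 6, 79, 1, 88, 1, 86, 1, 85, 1, 84, 2, 0, 1]),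
    ([(5, 5), (3, 3), (2, 2), (1, 1), (0, 0)],
     [1, 0, 2, 1, 0, 7, 73, 1, 86, 1, 88, 1, 84, 1, 57, 1, 18, 2, 87, 1, 4, 69, 28, 9454, 0, 3,
   87, 1, 84, 1, 16, 1, 0, 3, 86, 1, 84, 1, 73, 1, 0, 4, 84, 2, 57, 1, 16, 1, 87, 1, 0, 4, 73, 1,
   86, 1, 57, 1, 84, 2, 0, 5, 86, 1, 73, 1, 84, 2, 87, 1, 16, 1, 0, 6, 45, 1, 65, 1, 88, 1, 1, 1,
   85, 2, 84, 1, 0, 7, 28, 1, 86, 1, 88, 1, 87, 1, 84, 1, 73, 1, 24, 1, 4, 65, 37, 400, 0, 6, 45,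
   1, 85, 2, 88, 1, 57, 1, 84, 1, 1, 1, 0, 6, 85, 2, 65, 1, 88, 1, 1, 1, 84, 2, 73, 1, 0, 5, 28,
   1, 88, 1, 84, 2, 87, 1, 24, 1, 4, 41, 7, 3198]),
    ([(5, 5), (3, 6), (2, 2), (1, 1), (0, 0)],
     [1, 0, 2, 1, 0, 8, 50, 1, 86, 2, 88, 1, 84, 1, 57, 1, 38, 1, 87, 1, 0, 1, 4, 67, 44, 9454, 0,
   3, 87, 1, 84, 1, 16, 1, 0, 10, 65, 2, 73, 1, 85, 2, 0, 1, 88, 1, 84, 2, 56, 1, 38, 1, 87, 1,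
   86, 2, 0, 10, 84, 4, 56, 1, 85, 2, 0, 1, 45, 1, 24, 1, 57, 2, 88, 1, 87, 1, 86, 2, 0, 10, 65,
   1, 73, 1, 85, 2, 0, 1, 88, 1, 84, 2, 57, 2, 38, 1, 87, 1, 86, 2, 0, 5, 14, 1, 88, 1, 84, 2, 87,
   1, 38, 1, 0, 6, 45, 1, 65, 1, 88, 1, 1, 1, 85, 2, 84, 1, 0, 3, 88, 1, 84, 1, 29, 1, 4, 67, 37,
   400, 0, 6, 45, 1, 86, 2, 85, 2, 42, 1, 57, 1, 84, 1, 0, 6, 85, 2, 65, 1, 42, 1, 84, 2, 73, 1,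
   86, 2, 0, 5, 28, 1, 88, 1, 84, 2, 87, 1, 24, 1, 0, 10, 65, 2, 84, 2, 85, 2, 0, 1, 88, 1, 45, 1,
   57, 1, 24, 1, 87, 1, 86, 2]),
    ([(3, 6), (2, 2), (1, 1), (0, 0)],
     [1, 2, 0, 1, 4, 2, 24, 7424, 0, 8, 0, 1, 85, 2, 65, 1, 87, 1, 86, 1, 57, 1, 84, 1, 24, 1, 0,
   3, 84, 1, 86, 1, 2, 1, 4, 1, 15, 7410, 0, 8, 84, 2, 85, 2, 44, 1, 87, 1, 24, 1, 57, 1, 86, 1,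
   0, 1, 4, 0, 7, 3198, 0, 4, 73, 1, 84, 2, 86, 1, 2, 1, 0, 3, 88, 1, 84, 1, 28, 1, 0, 5, 50, 1,
   87, 1, 84, 1, 86, 1, 32, 2, 0, 4, 65, 1, 45, 1, 84, 1, 85, 2, 0, 8, 44, 1, 85, 2, 28, 1, 87, 1,
   86, 1, 57, 1, 84, 1, 24, 1, 0, 4, 88, 1, 28, 1, 84, 2, 73, 1, 0, 5, 28, 1, 88, 1, 84, 2, 86, 1,
   2, 1, 0, 3, 69, 1, 84, 1, 85, 1]),
    ([(3, 5), (2, 10), (1, 4), (0, 0)],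
     [1, 0, 2, 1, 0, 8, 73, 1, 85, 2, 88, 1, 16, 1, 84, 1, 86, 1, 70, 1, 1, 1, 0, 6, 79, 1, 85, 2,
   86, 1, 70, 1, 24, 1, 84, 1, 4, 25, 2, 9454, 0, 6, 85, 2, 1, 1, 87, 2, 16, 1, 73, 1, 84, 1, 0,
   8, 85, 2, 88, 1, 84, 2, 16, 1, 45, 1, 86, 1, 70, 1, 1, 1, 0, 8, 73, 1, 85, 2, 88, 1, 84, 2, 86,
   1, 30, 1, 70, 1, 1, 1, 0, 7, 85, 2, 51, 1, 87, 2, 16, 1, 84, 2, 70, 1, 29, 1, 0, 4, 87, 2, 24,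
   1, 84, 1, 28, 1, 0, 4, 87, 2, 16, 1, 29, 1, 84, 1, 0, 8, 73, 1, 85, 2, 87, 2, 30, 1, 24, 1, 86,
   1, 84, 1, 1, 1, 0, 3, 86, 1, 24, 1, 84, 1, 0, 9, 85, 2, 29, 1, 87, 4, 38, 1, 63, 1, 16, 1, 79,
   1, 84, 4, 0, 1, 0, 6, 87, 2, 16, 1, 24, 1, 86, 1, 84, 2, 29, 1, 0, 7, 85, 2, 79, 1, 87, 2, 24,
   2, 86, 1, 84, 2, 0, 1]),
    ([(5, 4), (3, 2), (2, 8), (1, 0), (0, 0)],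
     [1, 0, 2, 1, 4, 85, 7, 3198, 4, 66, 4, 400, 0, 7, 84, 1, 31, 1, 86, 1, 88, 1, 56, 1, 87, 1,
   2, 1, 0, 4, 85, 2, 52, 1, 84, 1, 70, 1, 0, 8, 57, 1, 84, 2, 86, 1, 88, 1, 31, 1, 56, 1, 87, 1,
   2, 1, 4, 42, 7, 3198, 0, 7, 2, 1, 17, 1, 70, 1, 86, 1, 84, 2, 89, 1, 87, 1, 0, 4, 88, 1, 34, 2,
   84, 1, 87, 1, 0, 6, 6, 2, 84, 1, 52, 1, 86, 1, 88, 1, 87, 1, 0, 6, 57, 1, 52, 1, 85, 2, 88, 1,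
   84, 1, 0, 1, 0, 7, 57, 1, 87, 1, 86, 1, 88, 1, 31, 1, 84, 1, 2, 1, 0, 5, 85, 2, 52, 1, 88, 1,
   84, 2, 0, 1, 0, 6, 31, 1, 86, 1, 88, 1, 84, 2, 87, 1, 2, 1, 0, 5, 34, 2, 88, 1, 57, 1, 84, 2,
   87, 1]),
    ([(4, 4), (2, 8), (1, 0), (0, 0)],
     [1, 2, 1, 0, 0, 3, 84, 1, 87, 1, 0, 1, 0, 8, 88, 1, 85, 2, 16, 1, 84, 1, 31, 1, 70, 1, 86, 1,
   71, 1, 0, 8, 57, 1, 85, 2, 84, 1, 87, 1, 31, 1, 56, 1, 86, 1, 2, 1, 4, 42, 23, 3198, 0, 6, 84,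
   2, 80, 1, 85, 2, 87, 1, 0, 1, 56, 1, 0, 4, 84, 2, 51, 1, 87, 1, 0, 1, 0, 6, 8, 1, 57, 1, 84, 2,
   87, 1, 0, 1, 86, 1, 0, 3, 88, 1, 84, 1, 14, 1, 0, 5, 88, 1, 84, 1, 6, 2, 86, 1, 57, 1, 4, 0, 7,
   3250, 0, 8, 2, 1, 88, 1, 85, 2, 84, 1, 31, 1, 56, 1, 86, 1, 71, 1, 0, 4, 45, 1, 88, 1, 84, 2,
   14, 1, 0, 8, 2, 1, 88, 1, 85, 2, 84, 2, 57, 1, 31, 1, 56, 1, 86, 1, 0, 5, 20, 2, 88, 1, 84, 2,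
   86, 1, 71, 1]),
    ([(5, 8), (1, 4), (0, 0)],
     [1, 2, 1, 0, 0, 4, 84, 1, 24, 1, 86, 2, 0, 1, 0, 3, 84, 1, 85, 1, 64, 1, 0, 4, 2, 1, 86, 2,
   84, 1, 15, 1, 4, 3, 41, 3266, 0, 5, 84, 2, 29, 1, 86, 2, 85, 1, 2, 1, 0, 6, 84, 2, 86, 2, 16,
   1, 45, 1, 85, 1, 29, 1, 4, 2, 24, 3212, 0, 3, 87, 1, 84, 1, 14, 1, 4, 0, 3, 9044, 0, 8, 16, 1,
   87, 1, 14, 1, 86, 2, 84, 1, 85, 1, 29, 1, 45, 1, 0, 7, 14, 1, 2, 1, 87, 1, 86, 2, 84, 1, 85, 1,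
   29, 1, 0, 4, 14, 1, 87, 1, 45, 1, 84, 2, 0, 6, 14, 1, 87, 1, 86, 2, 2, 1, 84, 2, 15, 1, 0, 5,
   87, 1, 64, 1, 84, 2, 85, 1, 14, 1]),
    ([(4, 4), (0, 0)],
     [1, 0, 0, 2, 0, 4, 14, 1, 85, 2, 84, 1, 66, 1, 0, 4, 15, 1, 85, 2, 84, 1, 58, 1, 0, 4, 85, 2,
   16, 1, 84, 1, 57, 1, 4, 14, 39, 7410, 0, 4, 85, 2, 16, 1, 84, 2, 15, 1, 4, 8, 23, 7410, 4, 8,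
   31, 7410, 0, 3, 84, 1, 86, 1, 70, 1, 4, 0, 4, 454, 4, 0, 10, 454, 0, 4, 56, 1, 85, 2, 84, 1,
   24, 1, 0, 4, 31, 1, 86, 1, 70, 1, 84, 2, 0, 6, 57, 1, 86, 1, 85, 2, 16, 1, 70, 1, 84, 2, 0, 6,
   15, 1, 86, 1, 85, 2, 58, 1, 84, 2, 70, 1]),
    ([(0, 0)],
     [1, 0, 2, 1, 4, 85, 0, 394, 4, 24, 4, 394, 4, 24, 10, 394, 4, 24, 33, 394, 4, 0, 7, 3198, 4,
   0, 23, 3198, 4, 0, 31, 3198, 4, 85, 7, 400, 4, 24, 3, 400, 4, 24, 13, 400, 4, 24, 38, 400, 4,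
   0, 0, 3212, 4, 0, 16, 3212, 4, 0, 24, 3212]),
    ([(4, 4), (0, 4)],
     [1, 2, 1, 1, 0, 6, 86, 2, 84, 1, 85, 2, 24, 1, 74, 2, 70, 1, 0, 6, 86, 2, 85, 2, 71, 1, 74,
   2, 84, 1, 16, 1, 0, 6, 86, 2, 85, 2, 72, 1, 74, 2, 84, 1, 15, 1, 0, 6, 86, 2, 18, 2, 85, 2, 24,
   1, 84, 1, 70, 1, 0, 4, 84, 1, 85, 1, 86, 1, 74, 2, 0, 7, 86, 2, 84, 2, 85, 2, 24, 1, 71, 1, 16,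
   1, 70, 1, 0, 7, 86, 2, 84, 2, 85, 2, 24, 1, 72, 1, 70, 1, 15, 1, 0, 6, 86, 2, 14, 1, 85, 2, 80,
   1, 84, 1, 18, 2, 0, 6, 86, 2, 15, 1, 85, 2, 72, 1, 84, 1, 18, 2, 0, 6, 86, 2, 16, 1, 85, 2, 71,
   1, 84, 1, 18, 2, 0, 6, 86, 2, 85, 2, 80, 1, 74, 2, 84, 1, 14, 1, 0, 4, 86, 1, 85, 1, 84, 1, 18,
   2, 0, 7, 86, 2, 85, 2, 15, 1, 80, 1, 84, 2, 72, 1, 14, 1, 0, 7, 86, 2, 85, 2, 16, 1, 80, 1, 71,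
   1, 84, 2, 14, 1]),
    ([(4, 7), (3, 6), (2, 4), (1, 1), (0, 0)],
     [1, 2, 0, 1, 0, 3, 84, 1, 42, 1, 85, 1, 0, 4, 1, 1, 87, 2, 84, 1, 30, 1, 0, 4, 84, 1, 29, 1,
   87, 2, 2, 1, 4, 99, 7, 3198, 0, 4, 84, 2, 10, 1, 87, 2, 0, 1, 0, 6, 45, 1, 65, 1, 88, 1, 1, 1,
   84, 2, 85, 1, 0, 10, 73, 1, 50, 1, 84, 4, 44, 1, 88, 2, 24, 1, 87, 2, 0, 1, 85, 1, 29, 2, 0, 3,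
   89, 1, 84, 1, 28, 1, 0, 7, 48, 2, 29, 1, 84, 1, 88, 1, 89, 1, 85, 1, 28, 1, 0, 4, 65, 1, 45, 1,
   84, 1, 86, 2, 0, 6, 87, 2, 2, 1, 89, 1, 28, 1, 84, 1, 1, 1, 0, 8, 65, 1, 89, 1, 29, 1, 88, 1,
   45, 1, 84, 2, 85, 1, 28, 1, 0, 6, 84, 2, 89, 1, 29, 1, 87, 2, 2, 1, 28, 1, 0, 7, 28, 1, 89, 1,
   88, 1, 69, 2, 85, 1, 84, 2, 1, 1]),
    ([(4, 9), (3, 6), (2, 4), (1, 1), (0, 0)],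
     [1, 2, 0, 1, 0, 4, 84, 1, 38, 1, 87, 2, 0, 1, 0, 6, 0, 1, 86, 2, 87, 2, 65, 1, 84, 1, 24, 1,
   0, 3, 44, 1, 84, 1, 85, 1, 4, 38, 5, 394, 0, 6, 84, 2, 15, 1, 86, 2, 87, 2, 2, 1, 42, 1, 0, 7,
   84, 2, 0, 1, 86, 2, 87, 2, 65, 1, 73, 1, 24, 1, 0, 4, 44, 1, 84, 2, 73, 1, 85, 1, 0, 3, 89, 1,
   84, 1, 28, 1, 4, 100, 3, 3250, 0, 4, 65, 1, 45, 1, 84, 1, 86, 2, 0, 6, 28, 1, 86, 2, 44, 1, 87,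
   2, 84, 1, 24, 1, 0, 4, 28, 1, 89, 1, 73, 1, 84, 2, 0, 5, 89, 1, 44, 1, 84, 2, 85, 1, 28, 1, 0,
   6, 89, 1, 1, 1, 28, 1, 87, 2, 84, 2, 30, 1]),
    ([(4, 13), (3, 6), (2, 4), (1, 1), (0, 0)],
     [1, 2, 0, 1, 0, 6, 84, 1, 85, 2, 24, 1, 87, 2, 65, 1, 0, 1, 0, 6, 0, 1, 86, 2, 87, 2, 65, 1,
   84, 1, 24, 1, 0, 6, 28, 1, 44, 1, 24, 1, 87, 2, 84, 1, 85, 2, 0, 4, 85, 2, 84, 1, 45, 1, 65, 1,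
   0, 6, 84, 2, 86, 2, 44, 1, 24, 1, 87, 2, 0, 1, 0, 7, 84, 2, 0, 1, 85, 2, 24, 1, 87, 2, 65, 1,
   79, 1, 0, 4, 50, 1, 85, 2, 42, 1, 84, 2, 0, 3, 89, 1, 84, 1, 28, 1, 0, 6, 28, 1, 50, 1, 89, 1,
   42, 1, 84, 1, 85, 2, 0, 4, 65, 1, 45, 1, 84, 1, 86, 2, 0, 6, 87, 2, 89, 1, 2, 1, 28, 1, 84, 1,
   1, 1, 0, 6, 28, 1, 85, 2, 84, 2, 65, 1, 45, 1, 89, 1, 0, 6, 28, 1, 89, 1, 87, 2, 84, 2, 29, 1,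
   2, 1, 0, 6, 89, 1, 1, 1, 28, 1, 87, 2, 84, 2, 30, 1]),
    ([(3, 6), (2, 4), (1, 1), (0, 0)],
     [1, 0, 2, 1, 0, 4, 14, 1, 84, 1, 86, 2, 38, 1, 0, 4, 84, 1, 15, 1, 86, 2, 30, 1, 0, 4, 29, 1,
   86, 2, 84, 1, 16, 1, 0, 4, 85, 2, 44, 1, 73, 1, 84, 1, 0, 4, 84, 2, 24, 1, 86, 2, 14, 1, 0, 7,
   85, 2, 2, 1, 84, 2, 86, 2, 65, 1, 73, 1, 15, 1, 0, 6, 29, 1, 87, 1, 84, 2, 86, 2, 14, 1, 38, 1,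
   4, 2, 7, 3198, 0, 3, 87, 1, 84, 1, 29, 1, 4, 1, 7, 3198, 0, 4, 28, 1, 86, 2, 84, 1, 24, 1, 0,
   4, 29, 1, 87, 1, 84, 2, 65, 1, 0, 6, 29, 1, 84, 2, 87, 1, 28, 1, 86, 2, 24, 1, 4, 0, 7, 3198]),
    ([(3, 5), (2, 4), (1, 4), (0, 0)],
     [1, 0, 2, 1, 0, 6, 51, 1, 85, 2, 38, 1, 84, 1, 86, 2, 0, 1, 0, 6, 85, 2, 30, 1, 45, 1, 86, 2,
   84, 1, 1, 1, 0, 4, 16, 1, 86, 2, 29, 1, 84, 1, 0, 6, 85, 2, 87, 2, 73, 1, 84, 1, 16, 1, 1, 1,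
   0, 6, 85, 2, 84, 2, 16, 1, 45, 1, 86, 2, 1, 1, 0, 8, 51, 1, 85, 4, 84, 2, 87, 2, 0, 1, 45, 1,
   71, 1, 38, 1, 0, 9, 51, 1, 85, 2, 38, 1, 87, 2, 16, 1, 86, 2, 84, 2, 0, 1, 29, 1, 0, 4, 28, 1,
   87, 2, 84, 1, 24, 1, 0, 4, 16, 1, 87, 2, 84, 1, 29, 1, 0, 6, 85, 2, 87, 2, 30, 1, 45, 1, 84, 1,
   1, 1, 0, 4, 28, 1, 86, 2, 84, 1, 24, 1, 0, 4, 87, 2, 84, 2, 30, 1, 29, 1, 0, 7, 24, 1, 87, 2,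
   16, 1, 86, 2, 84, 2, 29, 1, 28, 1, 0, 7, 85, 2, 87, 2, 30, 1, 45, 1, 66, 1, 84, 2, 1, 1]),
    ([(5, 9), (3, 5), (2, 4), (1, 4), (0, 0)],
     [1, 0, 2, 1, 0, 6, 73, 1, 16, 1, 86, 2, 84, 1, 87, 2, 1, 1, 0, 6, 79, 1, 86, 2, 0, 1, 84, 1,
   87, 2, 24, 1, 0, 3, 84, 1, 85, 1, 51, 1, 0, 8, 30, 1, 89, 1, 88, 2, 1, 1, 84, 1, 73, 1, 85, 1,
   14, 1, 0, 9, 1, 1, 14, 1, 89, 1, 87, 2, 16, 1, 84, 4, 45, 1, 85, 1, 57, 1, 0, 8, 30, 1, 88, 2,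
   84, 4, 1, 1, 57, 1, 73, 1, 86, 2, 56, 1, 0, 10, 14, 1, 16, 1, 89, 1, 59, 1, 64, 1, 73, 1, 84,
   4, 87, 2, 85, 1, 1, 1, 0, 8, 28, 1, 30, 1, 89, 1, 88, 2, 1, 1, 45, 1, 85, 1, 84, 1, 0, 8, 28,
   1, 89, 1, 88, 2, 1, 1, 84, 1, 73, 1, 85, 1, 16, 1, 0, 4, 30, 1, 88, 2, 84, 1, 15, 1, 0, 8, 87,
   2, 45, 1, 89, 1, 28, 1, 84, 1, 30, 1, 85, 1, 1, 1, 0, 4, 30, 1, 88, 2, 84, 2, 29, 1, 0, 8, 28,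
   1, 84, 2, 89, 1, 88, 2, 16, 1, 1, 1, 45, 1, 85, 1, 0, 10, 28, 1, 30, 2, 89, 1, 88, 2, 87, 2, 1,
   2, 86, 2, 45, 2, 85, 1, 84, 2]),
    ([(5, 6), (3, 8), (2, 10), (1, 4), (0, 0)],
     [1, 0, 2, 1, 4, 105, 40, 400, 0, 4, 50, 1, 70, 1, 85, 2, 84, 1, 0, 9, 73, 1, 2, 1, 89, 2, 29,
   1, 86, 1, 87, 2, 84, 1, 70, 1, 18, 2, 0, 4, 14, 1, 88, 2, 84, 1, 38, 1, 0, 4, 56, 1, 84, 2, 87,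
   1, 24, 1, 0, 7, 73, 1, 2, 1, 88, 2, 84, 2, 85, 2, 56, 1, 15, 1, 0, 8, 73, 1, 2, 1, 89, 1, 86,
   1, 84, 2, 87, 1, 56, 1, 29, 1, 0, 5, 89, 1, 32, 2, 42, 1, 87, 1, 84, 1, 0, 3, 78, 1, 84, 1, 86,
   1, 0, 4, 88, 2, 30, 1, 84, 1, 15, 1, 0, 7, 45, 1, 2, 1, 89, 1, 87, 1, 86, 1, 15, 1, 84, 1, 0,
   9, 73, 1, 78, 1, 89, 1, 44, 1, 86, 2, 87, 1, 30, 1, 84, 2, 15, 1, 0, 5, 78, 1, 86, 1, 87, 1,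
   84, 2, 24, 1, 0, 9, 73, 1, 24, 1, 89, 1, 44, 1, 86, 1, 15, 1, 87, 2, 84, 2, 30, 1]),
    ([(5, 5), (2, 10), (1, 4), (0, 0)],
     [1, 2, 1, 0, 0, 4, 84, 1, 87, 2, 24, 1, 0, 1, 0, 4, 87, 2, 16, 1, 84, 1, 1, 1, 0, 6, 85, 2,
   15, 1, 87, 2, 84, 1, 30, 1, 70, 1, 4, 6, 33, 3266, 0, 4, 2, 1, 87, 2, 84, 2, 1, 1, 4, 1, 16,
   3212, 0, 9, 73, 1, 85, 2, 84, 2, 87, 2, 24, 1, 15, 1, 86, 1, 30, 1, 70, 1, 0, 3, 88, 1, 84, 1,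
   14, 1, 0, 8, 73, 1, 85, 2, 88, 1, 84, 1, 86, 1, 30, 1, 70, 1, 15, 1, 4, 0, 15, 3198, 0, 8, 59,
   1, 85, 2, 88, 1, 30, 1, 84, 1, 86, 1, 70, 1, 1, 1, 0, 6, 73, 1, 88, 1, 84, 2, 24, 1, 86, 1, 14,
   1, 0, 6, 85, 2, 87, 2, 84, 2, 15, 1, 30, 1, 56, 1, 0, 4, 88, 1, 43, 1, 84, 2, 14, 1]),
    ([(5, 5), (1, 4), (0, 0)],
     [1, 0, 0, 2, 0, 4, 0, 1, 85, 2, 84, 1, 79, 1, 0, 4, 73, 1, 85, 2, 84, 1, 1, 1, 4, 4, 15,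
   7410, 0, 6, 85, 2, 51, 1, 86, 2, 57, 1, 84, 1, 0, 1, 4, 3, 7, 7410, 0, 4, 85, 2, 1, 1, 84, 2,
   3, 1, 0, 7, 14, 1, 85, 2, 86, 2, 45, 1, 71, 1, 30, 1, 84, 2, 0, 3, 84, 1, 87, 1, 70, 1, 0, 4,
   86, 2, 16, 1, 57, 1, 84, 1, 0, 6, 56, 1, 85, 2, 86, 2, 45, 1, 84, 1, 1, 1, 4, 0, 7, 3198, 0, 6,
   85, 2, 51, 1, 86, 2, 70, 1, 57, 1, 84, 2, 0, 4, 30, 1, 87, 1, 70, 1, 84, 2, 0, 6, 70, 1, 87, 1,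
   73, 1, 85, 2, 84, 2, 1, 1]),
    ([(4, 5), (1, 4), (0, 4)],
     [1, 2, 1, 0, 0, 6, 84, 1, 86, 2, 85, 2, 57, 1, 38, 1, 0, 1, 0, 6, 86, 2, 85, 2, 84, 1, 30, 1,
   56, 1, 1, 1, 0, 4, 15, 1, 86, 2, 84, 1, 2, 1, 0, 6, 87, 2, 84, 1, 85, 2, 57, 1, 38, 1, 0, 1, 0,
   3, 84, 1, 86, 1, 4, 1, 0, 6, 87, 2, 84, 2, 1, 1, 85, 2, 30, 1, 70, 1, 0, 9, 87, 2, 2, 1, 84, 2,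
   86, 2, 85, 2, 15, 1, 57, 1, 38, 1, 0, 1, 0, 4, 87, 2, 14, 1, 84, 1, 10, 1, 0, 4, 87, 2, 15, 1,
   84, 1, 2, 1, 0, 6, 87, 2, 14, 1, 85, 2, 84, 1, 71, 1, 38, 1, 0, 4, 14, 1, 10, 1, 86, 2, 84, 1,
   0, 3, 87, 1, 84, 1, 18, 1, 0, 7, 87, 2, 2, 1, 10, 1, 86, 2, 15, 1, 84, 2, 14, 1, 0, 8, 87, 2,
   10, 1, 86, 2, 85, 2, 84, 2, 71, 1, 38, 1, 14, 2]),
    ([(4, 5), (0, 4)],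
     [1, 0, 2, 0, 4, 1, 7, 3250, 4, 1, 3, 3250, 0, 4, 85, 2, 84, 1, 30, 1, 56, 1, 0, 4, 86, 2, 52,
   1, 84, 1, 0, 1, 4, 0, 3, 3198, 4, 0, 16, 9454, 0, 7, 86, 2, 52, 1, 85, 2, 84, 2, 30, 1, 56, 1,
   0, 1, 0, 6, 86, 2, 44, 1, 85, 2, 71, 1, 38, 1, 84, 1, 0, 6, 86, 2, 52, 1, 85, 2, 84, 1, 30, 1,
   70, 1, 0, 4, 86, 2, 44, 1, 84, 1, 1, 1, 0, 4, 84, 1, 85, 2, 57, 1, 38, 1, 0, 6, 86, 2, 59, 1,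
   85, 2, 44, 1, 71, 1, 84, 2, 0, 6, 86, 2, 2, 1, 85, 2, 71, 1, 38, 1, 84, 2, 0, 7, 86, 2, 38, 1,
   44, 1, 85, 2, 1, 1, 57, 1, 84, 2]),
    ([(0, 4)],
     [1, 0, 2, 1, 4, 13, 0, 394, 4, 13, 4, 394, 4, 13, 2, 394, 4, 13, 1, 400, 4, 11, 0, 394, 4, 0,
   16, 394, 4, 0, 24, 394, 4, 13, 7, 400, 4, 13, 3, 400, 4, 13, 5, 400, 4, 13, 6, 394, 4, 11, 1,
   400, 4, 0, 18, 394, 4, 0, 28, 394]),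
    ([],
     [1, 2, 0, 0, 4, 13, 7, 3198, 4, 13, 3, 3198, 4, 13, 5, 3198, 4, 13, 6, 3198, 4, 0, 1, 3198,
   4, 0, 18, 3198, 4, 0, 28, 3198, 4, 13, 0, 3198, 4, 13, 4, 3198, 4, 13, 2, 3198, 4, 13, 1, 3198,
   4, 0, 0, 3198, 4, 0, 16, 3198, 4, 0, 24, 3198])
  ]

set_option maxRecDepth 100000 in
/-- The certificate for the contacts `uᵢ, uᵢ + uⱼ`: pairs of the hypotheses of a lemma and the stream
encoding its refutation. -/
def certII : List (List (ℕ × ℕ) × List ℕ) := [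
    ([(4, 7), (2, 2), (1, 1), (0, 0)],
     [1, 2, 2, 2, 0, 3, 85, 1, 0, 1, 84, 1, 0, 7, 66, 1, 85, 1, 87, 1, 86, 1, 84, 1, 23, 1, 43, 1,
   0, 7, 66, 1, 84, 1, 87, 1, 36, 1, 72, 1, 86, 1, 85, 1, 0, 7, 84, 1, 78, 1, 51, 1, 87, 1, 0, 1,
   86, 1, 85, 1, 0, 7, 66, 1, 72, 1, 84, 2, 87, 1, 43, 1, 86, 1, 85, 1, 0, 5, 84, 2, 51, 1, 0, 1,
   86, 1, 85, 1, 0, 5, 78, 1, 84, 2, 87, 1, 0, 1, 85, 1, 0, 7, 66, 1, 88, 1, 87, 1, 36, 1, 23, 1,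
   86, 1, 84, 1, 0, 3, 78, 1, 87, 1, 84, 1, 0, 3, 86, 1, 51, 1, 84, 1, 0, 7, 72, 1, 88, 1, 87, 1,
   84, 1, 43, 1, 66, 1, 86, 1, 0, 5, 84, 2, 78, 1, 87, 1, 51, 1, 86, 1, 0, 7, 66, 1, 88, 1, 84, 2,
   87, 1, 36, 1, 72, 1, 86, 1, 0, 7, 43, 1, 84, 2, 88, 1, 66, 1, 23, 1, 86, 1, 87, 1]),
    ([(5, 0), (4, 10), (3, 0), (2, 2), (1, 1), (0, 0)],
     [2, 6, 5, 0, 4, 15, 3, 30, 2, 42, 1, 66, 0, 70, 2, 4, 9, 0, 1, 3, 0, 0, 0, 0, 0, 0, 0, 0, 0,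
   0, 0, 0, 4, 0, 0, 0, 0, 0, 0, 0, 0, 0, 0, 0, 1, 2, 0, 2, 0, 0, 1, 1, 0, 2, 0, 0, 3, 0, 0, 2, 2,
   2, 1, 0, 1, 0, 0, 2, 2, 0, 2, 1, 1, 0, 1, 1, 4, 12, 48, 48, 0, 20, 0, 0, 0, 3, 73, 73, 0, 12,
   73, 48, 0, 0]),
    ([(5, 2), (4, 10), (3, 0), (2, 2), (1, 1), (0, 0)],
     [1, 2, 2, 2, 2, 6, 6, 0, 5, 15, 4, 30, 3, 42, 2, 66, 1, 72, 2, 4, 9, 0, 3, 6, 0, 0, 0, 0, 0,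
   0, 2, 0, 2, 0, 0, 1, 2, 0, 1, 0, 0, 2, 0, 0, 0, 0, 0, 0, 1, 2, 0, 2, 0, 0, 1, 1, 0, 2, 0, 0, 0,
   0, 0, 0, 0, 0, 2, 0, 1, 1, 1, 0, 2, 0, 2, 1, 1, 0, 1, 4, 7, 48, 48, 48, 0, 2, 44, 85, 77, 1,
   44, 44, 85, 6, 44, 85, 0, 24, 48, 71, 0, 72, 85, 0, 0, 80, 0, 0, 0, 0, 0, 9, 47, 2, 72, 1, 90,
   2, 70, 1, 43, 1, 88, 2, 89, 1, 66, 1, 84, 1, 0, 9, 76, 2, 43, 1, 90, 2, 42, 1, 89, 2, 88, 1,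
   72, 1, 66, 1, 84, 1, 0, 3, 84, 1, 86, 1, 3, 1, 0, 9, 43, 1, 90, 2, 42, 1, 89, 1, 70, 1, 88, 1,
   72, 1, 66, 1, 84, 2, 0, 6, 45, 1, 84, 2, 90, 1, 70, 1, 88, 1, 43, 1, 0, 5, 76, 2, 90, 1, 42, 1,
   89, 1, 84, 2, 0, 3, 84, 1, 87, 1, 35, 1, 0, 3, 84, 1, 89, 1, 78, 1, 0, 3, 84, 1, 85, 1, 23, 1,
   0, 7, 84, 1, 90, 1, 89, 1, 88, 1, 72, 1, 66, 1, 43, 1, 0, 8, 3, 1, 78, 1, 85, 1, 84, 4, 87, 1,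
   86, 2, 38, 1, 63, 1, 0, 7, 90, 1, 66, 1, 89, 1, 36, 1, 72, 1, 84, 2, 88, 1, 0, 5, 84, 2, 38, 1,
   43, 1, 87, 1, 88, 1]),
    ([(5, 6), (4, 10), (3, 0), (2, 2), (1, 1), (0, 0)],
     [1, 2, 2, 2, 2, 6, 6, 0, 5, 15, 4, 30, 3, 42, 2, 66, 1, 76, 2, 4, 9, 0, 1, 6, 0, 0, 0, 0, 0,
   0, 0, 0, 0, 0, 0, 0, 4, 0, 0, 0, 0, 0, 5, 0, 1, 2, 2, 4, 4, 2, 2, 0, 1, 3, 1, 1, 0, 2, 0, 0, 0,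
   0, 0, 0, 0, 0, 3, 0, 3, 0, 0, 4, 3, 0, 0, 0, 0, 4, 1, 4, 6, 12, 44, 44, 0, 18, 44, 85, 0, 72,
   85, 0, 0, 1, 44, 44, 85, 80, 0, 0, 0, 12, 73, 85, 0, 0, 0, 9, 47, 2, 72, 1, 90, 2, 70, 1, 43,
   1, 88, 2, 89, 1, 66, 1, 84, 1, 0, 9, 76, 2, 43, 1, 90, 2, 42, 1, 89, 2, 88, 1, 72, 1, 66, 1,
   84, 1, 0, 3, 84, 1, 86, 1, 3, 1, 0, 9, 43, 1, 90, 2, 42, 1, 89, 1, 70, 1, 88, 1, 72, 1, 66, 1,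
   84, 2, 0, 6, 84, 2, 85, 2, 70, 1, 15, 1, 3, 1, 86, 1, 0, 5, 76, 2, 90, 1, 42, 1, 89, 1, 84, 2,
   0, 3, 84, 1, 87, 1, 35, 1, 0, 3, 84, 1, 89, 1, 78, 1, 0, 5, 84, 1, 43, 1, 87, 1, 45, 1, 88, 1,
   0, 7, 84, 1, 90, 1, 89, 1, 88, 1, 72, 1, 66, 1, 43, 1, 0, 8, 78, 1, 88, 1, 84, 4, 87, 1, 86, 1,
   9, 1, 45, 1, 63, 1, 0, 7, 90, 1, 66, 1, 89, 1, 36, 1, 72, 1, 84, 2, 88, 1, 0, 7, 84, 4, 85, 4,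
   43, 1, 0, 2, 87, 2, 57, 1, 78, 1]),
    ([(5, 8), (4, 10), (3, 0), (2, 2), (1, 1), (0, 0)],
     [1, 2, 2, 2, 0, 5, 90, 1, 85, 1, 76, 2, 42, 1, 84, 1, 0, 7, 72, 1, 90, 1, 85, 1, 43, 1, 84,
   1, 88, 1, 3, 1, 0, 10, 89, 1, 42, 1, 36, 1, 85, 1, 76, 2, 66, 1, 90, 2, 72, 1, 88, 1, 84, 1, 0,
   3, 84, 1, 86, 1, 3, 1, 0, 9, 84, 2, 42, 1, 36, 1, 85, 2, 76, 2, 66, 1, 90, 2, 72, 1, 88, 1, 0,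
   6, 45, 1, 85, 2, 84, 4, 86, 1, 73, 1, 15, 2, 0, 5, 42, 1, 76, 2, 90, 1, 89, 1, 84, 2, 0, 3, 84,
   1, 87, 1, 35, 1, 0, 3, 84, 1, 89, 1, 78, 1, 0, 7, 84, 1, 85, 1, 45, 1, 87, 1, 36, 1, 88, 1, 15,
   1, 0, 7, 90, 1, 72, 1, 85, 1, 84, 1, 36, 1, 66, 1, 88, 1, 0, 8, 9, 1, 45, 1, 84, 4, 63, 1, 87,
   1, 86, 1, 78, 1, 88, 1, 0, 7, 84, 2, 72, 1, 66, 1, 36, 1, 89, 1, 88, 1, 90, 1, 0, 9, 90, 1, 66,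
   1, 85, 1, 84, 4, 87, 1, 43, 1, 35, 1, 88, 1, 23, 1]),
    ([(4, 10), (3, 0), (2, 2), (1, 1), (0, 0)],
     [1, 2, 0, 2, 4, 3, 7, 3198, 0, 4, 84, 1, 88, 2, 57, 1, 43, 1, 4, 2, 7, 3198, 0, 8, 3, 2, 76,
   2, 58, 1, 84, 2, 86, 1, 85, 1, 43, 1, 87, 2, 0, 10, 84, 2, 43, 1, 89, 2, 42, 1, 88, 2, 70, 1,
   87, 1, 72, 1, 66, 1, 23, 1, 0, 9, 73, 1, 43, 2, 89, 2, 88, 2, 70, 2, 87, 2, 84, 4, 66, 1, 45,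
   1, 4, 1, 7, 3198, 0, 3, 89, 1, 84, 1, 35, 1, 4, 0, 7, 3198, 0, 3, 87, 1, 9, 1, 84, 1, 0, 7, 38,
   1, 84, 1, 89, 1, 88, 1, 43, 1, 72, 1, 87, 1, 0, 10, 89, 1, 78, 1, 58, 1, 84, 4, 3, 2, 86, 1,
   85, 1, 35, 1, 87, 2, 43, 1, 0, 9, 66, 1, 89, 2, 42, 1, 88, 1, 84, 2, 36, 1, 72, 1, 87, 1, 23,
   1, 0, 9, 66, 1, 84, 4, 89, 2, 42, 1, 88, 2, 87, 2, 51, 1, 80, 1, 43, 1]),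
    ([(5, 2), (4, 10), (3, 1), (2, 2), (1, 1), (0, 0)],
     [1, 2, 2, 2, 2, 6, 6, 0, 5, 15, 4, 30, 3, 43, 2, 66, 1, 72, 2, 4, 9, 3, 4, 6, 0, 1, 1, 2, 0,
   2, 2, 0, 2, 0, 0, 1, 2, 2, 0, 1, 0, 0, 0, 0, 0, 0, 0, 0, 0, 0, 0, 0, 0, 0, 0, 3, 0, 0, 0, 0, 0,
   0, 0, 0, 0, 0, 0, 2, 1, 0, 1, 0, 0, 2, 2, 0, 1, 0, 1, 1, 7, 12, 43, 77, 0, 6, 77, 85, 0, 20, 0,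
   0, 0, 18, 85, 0, 0, 12, 48, 48, 0, 3, 71, 71, 0, 3, 71, 85, 0, 0, 0, 9, 66, 1, 90, 2, 47, 2,
   70, 1, 43, 1, 88, 2, 84, 1, 72, 1, 89, 1, 0, 9, 42, 1, 90, 2, 66, 1, 72, 1, 76, 2, 43, 1, 84,
   1, 88, 1, 89, 2, 0, 3, 86, 1, 3, 1, 84, 1, 0, 9, 42, 1, 90, 2, 66, 1, 89, 1, 84, 2, 72, 1, 43,
   1, 88, 1, 70, 1, 0, 5, 47, 2, 90, 1, 84, 2, 88, 1, 70, 1, 0, 8, 58, 1, 42, 1, 84, 4, 87, 1, 3,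
   1, 86, 2, 72, 1, 24, 1, 0, 3, 84, 1, 90, 1, 63, 1, 0, 3, 84, 1, 87, 1, 36, 1, 0, 3, 84, 1, 23,
   1, 85, 1, 0, 7, 66, 1, 90, 1, 89, 1, 72, 1, 84, 1, 43, 1, 88, 1, 0, 7, 85, 1, 84, 4, 51, 1, 87,
   1, 86, 1, 78, 1, 63, 1, 0, 7, 84, 2, 90, 1, 66, 1, 72, 1, 36, 1, 88, 1, 89, 1, 0, 7, 84, 2, 90,
   1, 43, 1, 66, 1, 23, 1, 89, 1, 88, 1]),
    ([(5, 6), (4, 10), (3, 1), (2, 2), (1, 1), (0, 0)],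
     [1, 2, 2, 2, 2, 6, 6, 0, 5, 15, 4, 30, 3, 43, 2, 66, 1, 76, 2, 4, 9, 0, 3, 6, 0, 0, 0, 0, 0,
   0, 2, 1, 0, 2, 0, 0, 2, 2, 0, 1, 0, 0, 0, 0, 0, 0, 0, 0, 2, 4, 2, 1, 1, 3, 2, 0, 2, 1, 1, 3, 0,
   0, 0, 0, 0, 0, 1, 1, 3, 2, 0, 4, 1, 1, 0, 2, 0, 4, 1, 8, 9, 144, 85, 0, 0, 24, 73, 85, 0, 1,
   73, 71, 71, 1, 73, 43, 43, 12, 73, 43, 0, 1, 4, 85, 85, 24, 43, 85, 0, 24, 43, 43, 0, 160, 0,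
   0, 0, 0, 0, 9, 70, 1, 90, 2, 47, 2, 72, 1, 43, 1, 88, 2, 84, 1, 66, 1, 89, 1, 0, 9, 42, 1, 90,
   2, 66, 1, 72, 1, 76, 2, 43, 1, 84, 1, 88, 1, 89, 2, 0, 3, 3, 1, 86, 1, 84, 1, 0, 9, 84, 2, 42,
   1, 90, 2, 66, 1, 89, 1, 72, 1, 43, 1, 88, 1, 70, 1, 0, 5, 90, 1, 47, 2, 84, 2, 88, 1, 70, 1, 0,
   8, 3, 1, 42, 1, 84, 4, 87, 1, 72, 1, 86, 2, 58, 1, 24, 1, 0, 7, 66, 1, 84, 1, 90, 1, 36, 1, 23,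
   1, 88, 1, 89, 1, 0, 3, 84, 1, 87, 1, 36, 1, 0, 7, 84, 1, 90, 1, 43, 1, 3, 1, 23, 1, 88, 1, 89,
   1, 0, 7, 66, 1, 90, 1, 89, 1, 72, 1, 84, 1, 43, 1, 88, 1, 0, 6, 84, 4, 51, 2, 87, 1, 78, 1, 88,
   2, 64, 1, 0, 7, 84, 2, 90, 1, 66, 1, 72, 1, 36, 1, 88, 1, 89, 1, 0, 7, 84, 2, 90, 1, 43, 1, 66,
   1, 23, 1, 89, 1, 88, 1]),
    ([(5, 8), (4, 10), (3, 1), (2, 2), (1, 1), (0, 0)],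
     [1, 2, 2, 2, 0, 5, 90, 1, 85, 1, 42, 1, 76, 2, 84, 1, 0, 3, 15, 1, 84, 1, 85, 1, 0, 10, 84,
   1, 42, 1, 90, 2, 85, 2, 87, 1, 76, 2, 36, 2, 72, 1, 88, 1, 66, 1, 0, 3, 3, 1, 86, 1, 84, 1, 0,
   10, 66, 1, 42, 1, 90, 2, 85, 2, 72, 2, 76, 2, 84, 4, 43, 1, 88, 2, 58, 1, 0, 10, 3, 2, 42, 1,
   90, 2, 85, 1, 70, 1, 23, 1, 86, 1, 84, 4, 88, 1, 43, 1, 0, 6, 42, 1, 87, 1, 76, 2, 86, 1, 84,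
   4, 58, 1, 0, 3, 84, 1, 90, 1, 63, 1, 0, 3, 84, 1, 87, 1, 36, 1, 0, 9, 3, 2, 84, 2, 90, 2, 43,
   1, 85, 1, 86, 1, 63, 1, 23, 1, 88, 1, 0, 7, 66, 1, 90, 1, 72, 1, 84, 1, 36, 1, 88, 1, 85, 1, 0,
   8, 73, 1, 84, 4, 90, 1, 87, 1, 51, 1, 86, 1, 35, 1, 63, 1, 0, 8, 84, 2, 72, 1, 90, 1, 85, 1,
   87, 1, 36, 2, 66, 1, 88, 1, 0, 8, 84, 4, 90, 2, 43, 1, 66, 1, 23, 1, 63, 1, 88, 1, 85, 1]),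
    ([(4, 10), (3, 1), (2, 2), (1, 1), (0, 0)],
     [1, 2, 0, 2, 4, 6, 15, 7410, 0, 4, 84, 1, 57, 1, 88, 2, 43, 1, 4, 2, 7, 3198, 0, 7, 3, 1, 43,
   1, 89, 1, 84, 1, 76, 2, 88, 1, 87, 1, 0, 9, 84, 2, 89, 2, 66, 1, 88, 2, 72, 2, 47, 2, 43, 1,
   87, 2, 70, 1, 0, 7, 3, 1, 89, 1, 43, 1, 84, 2, 88, 1, 87, 1, 70, 1, 4, 1, 7, 3198, 0, 3, 89, 1,
   84, 1, 35, 1, 4, 0, 7, 3198, 0, 9, 73, 1, 87, 2, 89, 2, 84, 2, 88, 2, 42, 1, 51, 1, 66, 1, 43,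
   1, 0, 9, 43, 1, 84, 1, 89, 2, 88, 2, 72, 1, 42, 1, 23, 1, 87, 1, 66, 1, 0, 7, 89, 2, 84, 4, 73,
   1, 36, 2, 45, 1, 87, 2, 66, 1, 0, 4, 84, 2, 89, 1, 35, 1, 72, 1, 0, 9, 42, 1, 84, 4, 89, 2, 66,
   1, 88, 2, 51, 1, 80, 1, 43, 1, 87, 2]),
    ([(5, 6), (4, 10), (3, 5), (2, 2), (1, 1), (0, 0)],
     [1, 2, 2, 2, 2, 6, 6, 0, 5, 15, 4, 30, 3, 47, 2, 66, 1, 76, 2, 4, 9, 1, 3, 6, 4, 2, 2, 3, 1,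
   3, 0, 0, 0, 0, 0, 0, 0, 1, 1, 4, 2, 4, 0, 0, 0, 0, 0, 0, 0, 0, 0, 4, 0, 0, 0, 3, 0, 4, 0, 0, 0,
   0, 0, 0, 0, 0, 0, 2, 1, 3, 1, 0, 0, 2, 2, 3, 1, 0, 1, 4, 8, 6, 44, 85, 0, 12, 43, 85, 0, 72,
   85, 0, 0, 80, 0, 0, 0, 12, 43, 43, 0, 12, 44, 43, 0, 12, 44, 44, 0, 1, 44, 44, 85, 0, 0, 9, 47,
   2, 90, 2, 72, 1, 70, 1, 43, 1, 88, 2, 84, 1, 66, 1, 89, 1, 0, 9, 76, 2, 88, 1, 90, 2, 72, 1,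
   89, 2, 43, 1, 84, 1, 66, 1, 42, 1, 0, 3, 3, 1, 84, 1, 86, 1, 0, 9, 84, 2, 88, 1, 90, 2, 72, 1,
   89, 1, 43, 1, 70, 1, 66, 1, 42, 1, 0, 5, 88, 1, 90, 1, 84, 2, 70, 1, 47, 2, 0, 8, 3, 1, 90, 1,
   72, 1, 89, 1, 24, 1, 86, 1, 84, 2, 42, 1, 0, 7, 66, 1, 90, 1, 89, 1, 36, 1, 23, 1, 88, 1, 84,
   1, 0, 7, 72, 1, 90, 1, 84, 1, 89, 1, 36, 1, 3, 1, 88, 1, 0, 3, 88, 1, 51, 1, 84, 1, 0, 7, 66,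
   1, 90, 1, 72, 1, 43, 1, 84, 1, 89, 1, 88, 1, 0, 5, 78, 1, 84, 2, 89, 1, 51, 1, 88, 1, 0, 7, 88,
   1, 90, 1, 72, 1, 89, 1, 36, 1, 66, 1, 84, 2, 0, 7, 43, 1, 84, 2, 90, 1, 66, 1, 23, 1, 88, 1,
   89, 1]),
    ([(5, 8), (4, 10), (3, 5), (2, 2), (1, 1), (0, 0)],
     [1, 2, 2, 2, 0, 5, 90, 1, 85, 1, 76, 2, 42, 1, 84, 1, 0, 3, 15, 1, 84, 1, 85, 1, 0, 10, 84,
   1, 88, 1, 90, 2, 66, 1, 89, 1, 76, 2, 42, 1, 72, 1, 85, 1, 36, 1, 0, 3, 3, 1, 86, 1, 84, 1, 0,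
   9, 84, 2, 88, 1, 90, 2, 66, 1, 76, 2, 42, 1, 72, 1, 85, 2, 36, 1, 0, 5, 3, 1, 84, 2, 86, 1, 15,
   1, 85, 1, 0, 5, 90, 1, 89, 1, 76, 2, 42, 1, 84, 2, 0, 7, 66, 1, 90, 1, 89, 1, 36, 1, 23, 1, 88,
   1, 84, 1, 0, 7, 72, 1, 90, 1, 84, 1, 89, 1, 36, 1, 3, 1, 88, 1, 0, 9, 43, 1, 45, 1, 90, 2, 73,
   1, 88, 1, 23, 1, 84, 2, 63, 1, 85, 1, 0, 8, 66, 1, 90, 1, 72, 1, 87, 2, 43, 1, 84, 2, 35, 1,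
   85, 1, 0, 5, 78, 1, 84, 2, 89, 1, 51, 1, 88, 1, 0, 7, 84, 2, 88, 1, 90, 1, 72, 1, 89, 1, 36, 1,
   66, 1, 0, 8, 66, 1, 84, 4, 90, 2, 63, 1, 43, 1, 23, 1, 88, 1, 85, 1]),
    ([(4, 10), (3, 5), (2, 2), (1, 1), (0, 0)],
     [1, 2, 0, 2, 4, 8, 15, 7410, 0, 9, 66, 1, 70, 1, 89, 2, 47, 2, 88, 2, 43, 1, 87, 2, 84, 1,
   72, 1, 4, 4, 15, 7410, 0, 7, 3, 1, 87, 1, 89, 1, 76, 2, 88, 1, 43, 1, 84, 1, 0, 9, 84, 2, 87,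
   2, 89, 2, 72, 2, 88, 2, 43, 1, 70, 1, 47, 2, 66, 1, 0, 7, 3, 1, 87, 1, 89, 1, 70, 1, 88, 1, 43,
   1, 84, 2, 4, 1, 7, 3198, 0, 8, 36, 1, 89, 2, 42, 1, 88, 1, 66, 1, 23, 1, 87, 1, 84, 1, 4, 0, 7,
   3198, 0, 9, 42, 1, 87, 2, 89, 2, 88, 2, 66, 1, 51, 1, 73, 1, 84, 2, 43, 1, 0, 7, 72, 1, 89, 1,
   87, 1, 88, 1, 38, 1, 84, 1, 43, 1, 0, 7, 45, 1, 89, 2, 84, 4, 73, 1, 36, 2, 66, 1, 87, 2, 0, 4,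
   89, 1, 72, 1, 35, 1, 84, 2, 0, 9, 84, 4, 89, 2, 88, 2, 66, 1, 51, 1, 87, 2, 80, 1, 42, 1, 43,
   1]),
    ([(4, 10), (3, 9), (2, 2), (1, 1), (0, 0)],
     [1, 2, 2, 2, 0, 5, 89, 1, 86, 1, 84, 1, 70, 1, 47, 2, 0, 10, 66, 1, 86, 1, 89, 2, 23, 1, 70,
   1, 43, 1, 87, 1, 84, 1, 88, 1, 47, 2, 0, 3, 86, 1, 30, 1, 84, 1, 0, 3, 3, 1, 85, 1, 84, 1, 0,
   9, 84, 2, 66, 1, 89, 2, 88, 1, 86, 2, 23, 1, 70, 1, 47, 2, 43, 1, 0, 5, 89, 1, 84, 2, 70, 1,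
   47, 2, 87, 1, 0, 5, 3, 1, 86, 1, 85, 1, 30, 1, 84, 2, 0, 7, 66, 1, 84, 1, 89, 1, 23, 1, 36, 1,
   87, 1, 88, 1, 0, 3, 84, 1, 88, 1, 78, 1, 0, 7, 3, 1, 89, 1, 88, 1, 84, 1, 23, 1, 87, 1, 43, 1,
   0, 7, 66, 1, 43, 1, 89, 1, 23, 1, 86, 1, 84, 1, 88, 1, 0, 5, 84, 2, 88, 1, 78, 1, 87, 1, 51, 1,
   0, 8, 66, 1, 72, 1, 89, 2, 88, 1, 86, 1, 84, 4, 63, 1, 36, 1, 0, 7, 84, 2, 89, 1, 88, 1, 23, 1,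
   66, 1, 87, 1, 43, 1]),
    ([(4, 10), (2, 2), (1, 1), (0, 0)],
     [1, 2, 2, 0, 4, 8, 7, 3198, 4, 4, 7, 3198, 0, 4, 86, 2, 72, 1, 84, 1, 58, 1, 0, 7, 3, 1, 86,
   1, 88, 1, 72, 1, 87, 1, 84, 1, 47, 2, 0, 8, 86, 1, 88, 1, 72, 1, 87, 1, 24, 1, 43, 1, 84, 2,
   42, 1, 4, 1, 7, 3198, 0, 7, 3, 1, 86, 1, 88, 1, 72, 1, 87, 1, 84, 2, 42, 1, 0, 3, 88, 1, 21, 1,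
   84, 1, 0, 9, 66, 1, 86, 2, 88, 2, 72, 1, 87, 2, 70, 1, 78, 1, 45, 1, 84, 2, 4, 0, 7, 3198, 0,
   7, 43, 1, 72, 1, 88, 1, 84, 1, 24, 1, 87, 1, 86, 1, 0, 7, 84, 4, 88, 2, 66, 1, 87, 2, 73, 1,
   23, 2, 45, 1, 0, 9, 70, 1, 86, 2, 88, 2, 72, 1, 87, 2, 66, 1, 52, 1, 78, 1, 84, 4, 0, 4, 43, 1,
   84, 2, 88, 1, 21, 1]),
    ([(2, 2), (1, 1), (0, 0)],
     [1, 0, 2, 2, 0, 4, 87, 2, 70, 1, 84, 1, 42, 1, 0, 7, 72, 1, 87, 2, 47, 2, 70, 1, 85, 2, 84,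
   1, 66, 1, 0, 7, 43, 1, 87, 2, 86, 2, 66, 1, 42, 1, 76, 2, 84, 1, 0, 8, 36, 1, 87, 2, 86, 1, 70,
   1, 85, 1, 23, 1, 84, 1, 42, 1, 0, 5, 87, 2, 70, 1, 84, 2, 66, 1, 42, 1, 0, 6, 70, 1, 87, 2, 23,
   1, 84, 2, 85, 1, 42, 1, 0, 6, 70, 1, 87, 2, 86, 1, 36, 1, 84, 2, 42, 1, 4, 14, 7, 3198, 0, 3,
   86, 1, 36, 1, 84, 1, 0, 3, 84, 1, 23, 1, 85, 1, 4, 0, 7, 3198, 0, 5, 84, 2, 86, 1, 36, 1, 23,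
   1, 85, 1, 0, 4, 84, 2, 86, 1, 36, 1, 66, 1, 0, 4, 66, 1, 84, 2, 23, 1, 85, 1]),
    ([(5, 2), (4, 7), (3, 0), (2, 7), (1, 1), (0, 0)],
     [1, 2, 2, 2, 0, 3, 86, 1, 84, 1, 0, 1, 0, 8, 0, 2, 69, 2, 86, 2, 87, 1, 85, 1, 84, 2, 80, 1,
   43, 1, 0, 7, 78, 1, 66, 1, 86, 1, 89, 2, 46, 2, 72, 1, 84, 2, 0, 7, 85, 1, 86, 1, 23, 1, 89, 1,
   78, 1, 84, 1, 0, 1, 0, 6, 84, 2, 66, 1, 86, 1, 43, 1, 2, 1, 89, 1, 0, 8, 85, 1, 86, 2, 65, 1,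
   45, 1, 87, 1, 43, 1, 84, 4, 0, 2, 0, 5, 6, 2, 86, 1, 89, 1, 36, 1, 84, 2, 0, 3, 87, 1, 35, 1,
   84, 1, 0, 3, 89, 1, 78, 1, 84, 1, 0, 3, 84, 1, 85, 1, 23, 1, 2, 6, 6, 0, 5, 15, 4, 35, 3, 42,
   2, 63, 1, 72, 2, 5, 9, 0, 1, 3, 6, 0, 0, 0, 0, 0, 0, 0, 0, 0, 0, 0, 0, 0, 0, 3, 4, 4, 0, 0, 0,
   0, 0, 0, 0, 0, 2, 2, 0, 1, 0, 0, 1, 2, 0, 1, 0, 0, 0, 0, 0, 0, 0, 0, 0, 3, 2, 2, 1, 0, 0, 0, 1,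
   1, 2, 1, 1, 8, 18, 85, 0, 0, 12, 47, 67, 0, 20, 0, 0, 0, 3, 67, 67, 0, 6, 85, 85, 0, 9, 67, 85,
   0, 12, 47, 47, 0, 18, 47, 85, 0, 0, 0, 8, 85, 1, 45, 1, 89, 1, 87, 1, 78, 1, 36, 1, 65, 1, 84,
   4, 0, 9, 66, 1, 78, 1, 86, 1, 84, 4, 89, 2, 87, 1, 52, 1, 72, 1, 35, 2, 0, 8, 2, 1, 84, 4, 23,
   1, 87, 1, 85, 2, 66, 1, 80, 1, 43, 1]),
    ([(5, 2), (4, 7), (3, 1), (2, 7), (1, 1), (0, 0)],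
     [1, 2, 2, 2, 0, 3, 86, 1, 84, 1, 0, 1, 0, 7, 42, 1, 88, 2, 69, 2, 85, 1, 84, 2, 80, 1, 43, 1,
   0, 8, 66, 1, 86, 1, 84, 2, 87, 1, 36, 1, 72, 1, 46, 2, 89, 1, 0, 7, 85, 1, 86, 1, 84, 1, 87, 1,
   36, 1, 23, 1, 0, 1, 0, 6, 86, 1, 43, 1, 84, 2, 66, 1, 2, 1, 89, 1, 0, 6, 85, 2, 86, 1, 84, 4,
   70, 1, 23, 2, 42, 1, 0, 6, 86, 1, 84, 4, 87, 2, 70, 1, 36, 2, 42, 1, 0, 3, 84, 1, 90, 1, 63, 1,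
   0, 3, 87, 1, 36, 1, 84, 1, 0, 3, 85, 1, 23, 1, 84, 1, 2, 6, 6, 0, 5, 15, 4, 35, 3, 43, 2, 63,
   1, 72, 2, 4, 9, 0, 3, 6, 0, 0, 0, 0, 0, 0, 2, 1, 0, 2, 0, 0, 2, 2, 0, 1, 0, 0, 0, 0, 0, 0, 0,
   0, 0, 2, 2, 0, 1, 0, 0, 1, 2, 0, 1, 0, 0, 0, 0, 0, 0, 0, 0, 2, 1, 1, 0, 1, 0, 1, 1, 2, 0, 2, 1,
   1, 8, 18, 85, 0, 0, 12, 47, 67, 0, 20, 0, 0, 0, 18, 47, 85, 0, 3, 67, 67, 0, 9, 67, 85, 0, 12,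
   47, 47, 0, 6, 85, 85, 0, 0, 0, 6, 85, 1, 87, 2, 36, 2, 51, 1, 65, 1, 84, 4, 0, 6, 84, 2, 90, 1,
   2, 1, 36, 1, 66, 1, 89, 1, 0, 6, 57, 1, 90, 1, 84, 2, 43, 1, 63, 1, 89, 1]),
    ([(5, 3), (4, 7), (3, 2), (2, 7), (1, 1), (0, 0)],
     [1, 2, 2, 2, 0, 3, 86, 1, 0, 1, 84, 1, 0, 7, 42, 1, 87, 1, 88, 1, 24, 1, 84, 1, 37, 1, 85, 1,
   0, 7, 78, 1, 85, 1, 84, 1, 89, 1, 0, 1, 24, 1, 86, 1, 0, 8, 78, 1, 84, 2, 87, 1, 89, 2, 73, 1,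
   42, 1, 65, 1, 86, 1, 0, 6, 85, 2, 70, 1, 24, 2, 42, 1, 84, 4, 86, 1, 0, 6, 84, 4, 87, 2, 70, 1,
   42, 1, 37, 2, 86, 1, 0, 6, 78, 2, 89, 2, 70, 1, 42, 1, 84, 4, 86, 1, 0, 9, 78, 1, 90, 1, 87, 1,
   89, 2, 24, 2, 35, 1, 85, 1, 65, 1, 84, 2, 0, 3, 78, 1, 89, 1, 84, 1, 0, 7, 42, 1, 90, 1, 89, 1,
   65, 1, 84, 1, 24, 1, 87, 1, 0, 3, 24, 1, 84, 1, 85, 1, 0, 8, 73, 1, 78, 1, 90, 1, 87, 1, 89, 2,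
   65, 1, 84, 4, 35, 1, 0, 6, 66, 1, 78, 2, 85, 1, 89, 2, 52, 1, 84, 4, 0, 6, 84, 4, 87, 1, 24, 2,
   65, 1, 85, 2, 79, 1]),
    ([(5, 2), (4, 7), (3, 4), (2, 7), (1, 1), (0, 0)],
     [1, 2, 2, 2, 0, 3, 86, 1, 84, 1, 0, 1, 0, 7, 42, 1, 88, 2, 69, 2, 85, 1, 84, 2, 80, 1, 43, 1,
   0, 7, 66, 1, 78, 1, 84, 2, 89, 2, 46, 2, 72, 1, 86, 1, 0, 10, 85, 1, 78, 1, 65, 1, 42, 1, 89,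
   1, 70, 1, 36, 1, 87, 2, 84, 2, 86, 1, 0, 6, 66, 1, 2, 1, 84, 2, 89, 1, 43, 1, 86, 1, 0, 8, 85,
   1, 87, 2, 65, 1, 42, 1, 70, 1, 43, 1, 84, 4, 86, 1, 0, 6, 78, 2, 42, 1, 89, 2, 70, 1, 84, 4,
   86, 1, 0, 3, 90, 1, 63, 1, 84, 1, 0, 3, 78, 1, 89, 1, 84, 1, 0, 5, 85, 1, 87, 2, 84, 2, 65, 1,
   43, 1, 2, 6, 6, 0, 5, 15, 4, 35, 3, 46, 2, 63, 1, 72, 2, 4, 9, 0, 1, 6, 0, 0, 0, 0, 0, 0, 0, 0,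
   0, 0, 0, 0, 4, 0, 0, 0, 0, 0, 0, 0, 0, 4, 0, 0, 0, 2, 2, 3, 1, 0, 0, 1, 2, 0, 1, 0, 0, 0, 0, 0,
   0, 0, 2, 0, 1, 0, 0, 1, 1, 0, 1, 0, 0, 2, 1, 1, 5, 18, 85, 0, 0, 9, 85, 67, 0, 20, 0, 0, 0, 6,
   85, 85, 0, 3, 67, 67, 0, 0, 0, 6, 85, 1, 78, 2, 65, 1, 89, 2, 51, 1, 84, 4, 0, 8, 66, 1, 78, 1,
   90, 1, 84, 4, 89, 2, 72, 1, 52, 1, 35, 1, 0, 6, 57, 1, 84, 2, 90, 1, 89, 1, 63, 1, 43, 1]),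
    ([(5, 3), (4, 7), (3, 4), (2, 7), (1, 1), (0, 0)],
     [1, 2, 2, 2, 0, 3, 86, 1, 84, 1, 0, 1, 0, 8, 42, 1, 87, 2, 88, 1, 43, 1, 37, 1, 84, 1, 24, 1,
   85, 1, 0, 7, 78, 1, 85, 1, 84, 1, 89, 1, 0, 1, 24, 1, 86, 1, 0, 8, 73, 1, 87, 2, 42, 1, 89, 1,
   65, 1, 36, 1, 84, 2, 86, 1, 0, 6, 85, 2, 84, 4, 70, 1, 24, 2, 42, 1, 86, 1, 0, 6, 84, 2, 87, 2,
   0, 1, 43, 1, 37, 1, 86, 1, 0, 6, 78, 2, 84, 4, 89, 2, 70, 1, 42, 1, 86, 1, 0, 3, 90, 1, 63, 1,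
   84, 1, 0, 3, 78, 1, 89, 1, 84, 1, 0, 4, 87, 2, 84, 1, 37, 1, 43, 1, 0, 3, 24, 1, 84, 1, 85, 1,
   0, 7, 87, 2, 89, 1, 73, 1, 65, 1, 36, 1, 84, 4, 77, 1, 0, 6, 66, 1, 78, 2, 84, 4, 89, 2, 52, 1,
   85, 1, 0, 6, 43, 1, 84, 2, 87, 2, 24, 1, 85, 1, 37, 1]),
    ([(5, 2), (4, 7), (2, 7), (1, 1), (0, 0)],
     [1, 2, 2, 0, 4, 4, 7, 3198, 4, 3, 7, 3198, 0, 8, 85, 1, 78, 1, 84, 2, 88, 2, 46, 2, 66, 1, 2,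
   2, 86, 1, 4, 2, 23, 3198, 4, 1, 7, 3198, 4, 0, 23, 3198, 0, 5, 88, 1, 6, 2, 84, 2, 35, 1, 86,
   1, 0, 4, 89, 1, 87, 1, 63, 1, 84, 1, 0, 3, 88, 1, 84, 1, 8, 1, 0, 5, 23, 1, 84, 1, 87, 1, 40,
   2, 85, 1, 0, 5, 87, 1, 89, 1, 84, 1, 63, 1, 46, 2, 0, 9, 78, 1, 65, 1, 45, 1, 88, 2, 66, 1, 84,
   4, 51, 1, 89, 1, 87, 1, 0, 5, 89, 1, 84, 2, 87, 1, 63, 1, 44, 1, 0, 5, 87, 1, 84, 2, 89, 1, 63,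
   1, 43, 1]),
    ([(5, 2), (4, 9), (2, 7), (1, 1), (0, 0)],
     [1, 2, 2, 2, 0, 3, 87, 1, 84, 1, 42, 1, 0, 7, 42, 1, 87, 2, 69, 2, 85, 1, 84, 2, 80, 1, 43,
   1, 0, 3, 84, 1, 2, 1, 86, 1, 0, 7, 87, 1, 88, 1, 23, 1, 78, 1, 84, 1, 85, 1, 42, 1, 0, 6, 2, 1,
   88, 1, 43, 1, 84, 2, 86, 1, 57, 1, 0, 7, 87, 2, 65, 1, 45, 1, 43, 1, 84, 4, 85, 1, 42, 1, 0, 5,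
   87, 1, 88, 1, 84, 2, 78, 1, 42, 1, 0, 3, 89, 1, 63, 1, 84, 1, 0, 3, 88, 1, 78, 1, 84, 1, 0, 3,
   85, 1, 23, 1, 84, 1, 0, 7, 86, 1, 2, 1, 89, 1, 88, 1, 84, 1, 69, 2, 43, 1, 0, 6, 85, 1, 88, 2,
   51, 1, 78, 2, 65, 1, 84, 4, 0, 5, 2, 1, 89, 1, 84, 2, 63, 1, 86, 1, 0, 6, 57, 1, 84, 2, 89, 1,
   88, 1, 63, 1, 43, 1]),
    ([(5, 3), (4, 9), (3, 0), (2, 7), (1, 1), (0, 0)],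
     [1, 2, 2, 2, 0, 3, 88, 1, 84, 1, 42, 1, 0, 7, 69, 2, 43, 1, 85, 1, 88, 2, 79, 1, 84, 2, 42,
   1, 0, 7, 78, 1, 44, 1, 86, 1, 88, 1, 0, 1, 85, 1, 84, 2, 0, 9, 78, 1, 90, 1, 42, 1, 89, 2, 65,
   1, 73, 1, 47, 2, 84, 2, 88, 1, 0, 8, 86, 1, 44, 1, 88, 1, 43, 1, 84, 4, 85, 1, 57, 1, 0, 1, 0,
   8, 3, 1, 42, 1, 90, 1, 89, 1, 84, 2, 65, 1, 43, 1, 88, 1, 0, 5, 78, 1, 89, 1, 84, 2, 42, 1, 88,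
   1, 0, 3, 87, 1, 35, 1, 84, 1, 0, 3, 89, 1, 78, 1, 84, 1, 2, 6, 6, 0, 5, 15, 4, 35, 3, 42, 2,
   65, 1, 73, 2, 4, 9, 0, 1, 3, 0, 0, 0, 0, 0, 0, 0, 0, 0, 0, 0, 0, 4, 0, 0, 0, 0, 0, 0, 0, 0, 0,
   0, 0, 1, 2, 0, 2, 0, 0, 1, 1, 0, 2, 0, 0, 2, 0, 1, 0, 0, 1, 0, 1, 1, 0, 2, 0, 1, 2, 0, 0, 1, 2,
   0, 1, 7, 6, 85, 70, 0, 12, 70, 70, 0, 3, 44, 44, 0, 12, 44, 70, 0, 3, 44, 85, 0, 20, 0, 0, 0,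
   18, 85, 0, 0, 0, 0, 3, 85, 1, 84, 1, 24, 1, 0, 6, 3, 1, 90, 1, 89, 1, 65, 1, 36, 1, 84, 2, 0,
   10, 6, 2, 78, 2, 86, 2, 84, 6, 89, 1, 87, 1, 37, 1, 63, 1, 85, 2, 52, 1, 0, 8, 84, 4, 24, 1,
   65, 1, 85, 2, 87, 1, 43, 1, 3, 1, 79, 1]),
    ([(5, 3), (4, 9), (3, 1), (2, 7), (1, 1), (0, 0)],
     [1, 2, 2, 2, 0, 3, 88, 1, 84, 1, 42, 1, 0, 7, 42, 1, 88, 2, 69, 2, 43, 1, 84, 2, 79, 1, 85,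
   1, 0, 7, 86, 1, 88, 1, 85, 1, 0, 1, 78, 1, 84, 2, 44, 1, 0, 10, 88, 1, 42, 1, 90, 1, 47, 2, 87,
   1, 65, 1, 89, 1, 36, 1, 73, 1, 84, 2, 0, 5, 88, 1, 42, 1, 84, 2, 24, 1, 85, 1, 0, 6, 88, 2, 42,
   1, 47, 2, 84, 4, 65, 1, 79, 1, 0, 8, 88, 1, 42, 1, 78, 1, 87, 1, 0, 1, 59, 1, 86, 1, 84, 4, 0,
   3, 84, 1, 90, 1, 63, 1, 0, 3, 87, 1, 36, 1, 84, 1, 2, 6, 6, 0, 5, 15, 4, 35, 3, 43, 2, 65, 1,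
   73, 2, 4, 9, 0, 3, 4, 0, 0, 0, 0, 0, 0, 2, 1, 0, 2, 0, 0, 2, 2, 0, 1, 0, 0, 0, 0, 0, 0, 0, 0,
   0, 0, 0, 0, 0, 0, 0, 3, 0, 0, 0, 0, 2, 0, 1, 0, 0, 1, 0, 1, 1, 0, 2, 0, 1, 2, 0, 0, 1, 2, 0, 4,
   12, 1, 85, 43, 43, 72, 85, 0, 0, 1, 85, 85, 64, 1, 64, 70, 70, 48, 48, 48, 0, 72, 85, 48, 0,
   30, 85, 64, 0, 24, 85, 85, 0, 48, 64, 48, 0, 1, 43, 48, 48, 12, 43, 43, 0, 80, 0, 0, 0, 0, 0,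
   3, 84, 1, 85, 1, 24, 1, 0, 8, 65, 1, 84, 4, 90, 2, 45, 1, 63, 1, 73, 1, 89, 1, 36, 1, 0, 8, 86,
   1, 31, 1, 84, 4, 87, 1, 24, 1, 63, 1, 78, 1, 85, 2, 0, 8, 43, 1, 90, 1, 65, 1, 84, 2, 89, 1, 3,
   1, 24, 1, 85, 1]),
    ([(5, 3), (4, 9), (3, 2), (2, 7), (1, 1), (0, 0)],
     [1, 2, 2, 2, 0, 3, 88, 1, 42, 1, 84, 1, 0, 7, 42, 1, 87, 1, 88, 1, 24, 1, 84, 1, 37, 1, 85,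
   1, 0, 7, 88, 1, 78, 1, 84, 2, 0, 1, 86, 1, 44, 1, 85, 1, 0, 9, 88, 1, 78, 1, 87, 1, 42, 2, 89,
   2, 84, 2, 73, 1, 65, 1, 90, 1, 0, 5, 88, 1, 84, 2, 42, 1, 24, 1, 85, 1, 0, 6, 88, 2, 65, 1, 87,
   1, 42, 2, 84, 4, 79, 1, 0, 5, 88, 1, 78, 1, 42, 1, 89, 1, 84, 2, 0, 9, 78, 1, 90, 1, 87, 1, 89,
   2, 24, 2, 35, 1, 85, 1, 65, 1, 84, 2, 0, 3, 78, 1, 89, 1, 84, 1, 0, 7, 42, 1, 90, 1, 89, 1, 65,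
   1, 84, 1, 24, 1, 87, 1, 0, 3, 85, 1, 84, 1, 24, 1, 0, 8, 87, 1, 73, 1, 90, 1, 89, 2, 65, 1, 78,
   1, 35, 1, 84, 4, 0, 8, 78, 1, 44, 1, 90, 1, 84, 4, 88, 1, 85, 1, 63, 2, 86, 1, 0, 6, 84, 4, 87,
   1, 24, 2, 65, 1, 85, 2, 79, 1]),
    ([(5, 3), (4, 9), (3, 4), (2, 7), (1, 1), (0, 0)],
     [1, 2, 2, 2, 0, 3, 88, 1, 84, 1, 42, 1, 0, 8, 42, 1, 87, 2, 88, 1, 43, 1, 37, 1, 84, 1, 24,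
   1, 85, 1, 0, 7, 88, 1, 78, 1, 84, 2, 0, 1, 86, 1, 44, 1, 85, 1, 0, 9, 88, 1, 65, 1, 90, 1, 42,
   2, 87, 2, 89, 1, 73, 1, 84, 2, 36, 1, 0, 5, 88, 1, 42, 1, 84, 2, 24, 1, 85, 1, 0, 7, 88, 2, 84,
   4, 42, 2, 87, 2, 43, 1, 79, 1, 65, 1, 0, 9, 88, 1, 78, 1, 84, 4, 42, 1, 87, 2, 0, 1, 59, 1, 86,
   1, 44, 1, 0, 3, 90, 1, 63, 1, 84, 1, 0, 3, 78, 1, 89, 1, 84, 1, 0, 4, 87, 2, 43, 1, 37, 1, 84,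
   1, 0, 3, 85, 1, 84, 1, 24, 1, 0, 8, 73, 1, 90, 1, 89, 2, 51, 1, 35, 1, 78, 1, 65, 1, 84, 4, 0,
   8, 78, 1, 44, 1, 90, 1, 84, 4, 88, 1, 85, 1, 63, 2, 86, 1, 0, 6, 43, 1, 84, 2, 87, 2, 24, 1,
   85, 1, 37, 1]),
    ([(5, 2), (4, 10), (3, 4), (2, 7), (1, 1), (0, 0)],
     [2, 6, 5, 0, 4, 15, 3, 35, 2, 46, 1, 66, 0, 72, 2, 4, 9, 0, 1, 4, 0, 0, 0, 0, 0, 0, 0, 0, 0,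
   0, 0, 0, 4, 0, 0, 0, 0, 0, 0, 0, 0, 4, 0, 0, 0, 0, 0, 0, 0, 0, 0, 3, 0, 4, 0, 0, 0, 1, 1, 0, 2,
   0, 2, 0, 1, 0, 0, 1, 1, 2, 0, 0, 1, 2, 1, 108, 20, 24, 44, 3, 79, 10, 79, 79, 79, 64, 43, 43,
   43, 6, 3, 79, 79, 12, 3, 3, 79, 228, 3, 3, 43, 222, 3, 43, 43, 240, 44, 3, 3, 222, 44, 43, 43,
   84, 43, 43, 79, 147, 3, 43, 79, 120, 44, 43, 79, 228, 44, 44, 43, 240, 44, 44, 3, 12, 44, 44,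
   79, 80, 3, 3, 3, 6, 44, 79, 79, 30, 43, 79, 79, 456, 44, 3, 43, 80, 44, 44, 44, 0]),
    ([(5, 3), (4, 9), (2, 7), (1, 1), (0, 0)],
     [1, 2, 2, 0, 4, 4, 7, 3198, 4, 3, 7, 3198, 4, 2, 7, 3198, 0, 10, 87, 1, 78, 1, 89, 1, 65, 1,
   88, 2, 47, 2, 84, 2, 42, 1, 3, 2, 85, 1, 4, 1, 7, 3198, 4, 0, 23, 3198, 0, 10, 87, 1, 78, 1,
   89, 1, 65, 1, 88, 2, 84, 4, 44, 1, 42, 2, 3, 2, 85, 1, 0, 4, 89, 1, 87, 1, 63, 1, 84, 1, 0, 3,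
   88, 1, 84, 1, 8, 1, 0, 5, 87, 1, 89, 1, 84, 1, 63, 1, 47, 2, 0, 5, 84, 1, 87, 1, 39, 2, 24, 1,
   85, 1, 0, 5, 89, 1, 45, 1, 87, 1, 63, 1, 84, 2, 0, 5, 89, 1, 84, 2, 63, 1, 44, 1, 87, 1, 0, 5,
   43, 1, 84, 2, 89, 1, 63, 1, 87, 1]),
    ([(5, 2), (4, 13), (3, 0), (2, 7), (1, 1), (0, 0)],
     [1, 2, 2, 2, 0, 3, 42, 1, 88, 1, 84, 1, 0, 7, 42, 1, 88, 2, 69, 2, 85, 1, 84, 2, 80, 1, 43,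
   1, 0, 9, 89, 2, 90, 1, 78, 1, 66, 1, 46, 2, 88, 1, 72, 1, 84, 2, 42, 1, 0, 7, 85, 1, 78, 1, 42,
   1, 89, 1, 23, 1, 84, 1, 88, 1, 0, 8, 90, 1, 88, 1, 89, 1, 66, 1, 84, 2, 42, 1, 2, 1, 43, 1, 0,
   7, 85, 1, 42, 1, 45, 1, 65, 1, 43, 1, 84, 4, 88, 2, 0, 5, 78, 1, 42, 1, 89, 1, 84, 2, 88, 1, 0,
   3, 87, 1, 35, 1, 84, 1, 0, 3, 89, 1, 84, 1, 78, 1, 0, 3, 85, 1, 84, 1, 23, 1, 2, 6, 6, 0, 5,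
   15, 4, 35, 3, 42, 2, 69, 1, 72, 2, 4, 9, 0, 1, 3, 0, 0, 0, 0, 0, 0, 0, 0, 0, 0, 0, 0, 4, 0, 0,
   0, 0, 0, 0, 0, 0, 0, 0, 0, 1, 2, 0, 2, 0, 0, 1, 1, 0, 2, 0, 0, 3, 1, 1, 2, 4, 2, 2, 0, 1, 0, 0,
   1, 2, 2, 0, 1, 3, 0, 1, 1, 4, 18, 85, 0, 0, 20, 0, 0, 0, 3, 44, 85, 0, 3, 44, 44, 0, 0, 0, 6,
   85, 1, 78, 2, 89, 2, 65, 1, 51, 1, 84, 4, 0, 9, 66, 1, 90, 1, 36, 1, 84, 4, 89, 1, 87, 1, 72,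
   1, 35, 1, 44, 1, 0, 6, 84, 2, 87, 1, 85, 1, 38, 1, 2, 1, 43, 1]),
    ([(5, 2), (4, 13), (3, 1), (2, 7), (1, 1), (0, 0)],
     [1, 2, 2, 2, 0, 3, 88, 1, 84, 1, 42, 1, 0, 7, 42, 1, 88, 2, 69, 2, 85, 1, 84, 2, 80, 1, 43,
   1, 0, 10, 88, 1, 42, 1, 90, 1, 84, 2, 87, 1, 66, 1, 46, 2, 36, 1, 89, 1, 72, 1, 0, 8, 88, 1,
   86, 2, 65, 1, 78, 1, 0, 1, 45, 1, 85, 1, 84, 2, 0, 8, 88, 1, 42, 1, 90, 1, 43, 1, 84, 2, 66, 1,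
   2, 1, 89, 1, 0, 7, 88, 2, 42, 1, 65, 1, 84, 4, 45, 1, 85, 1, 43, 1, 0, 6, 88, 2, 42, 2, 87, 1,
   78, 1, 64, 1, 84, 4, 0, 3, 84, 1, 90, 1, 63, 1, 0, 5, 86, 2, 87, 1, 78, 1, 63, 1, 84, 2, 0, 3,
   23, 1, 85, 1, 84, 1, 2, 6, 6, 0, 5, 15, 4, 35, 3, 43, 2, 69, 1, 72, 2, 4, 9, 0, 3, 4, 0, 0, 0,
   0, 0, 0, 2, 1, 0, 2, 0, 0, 2, 2, 0, 1, 0, 0, 0, 0, 0, 0, 0, 0, 0, 0, 0, 0, 0, 0, 0, 3, 0, 0, 0,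
   0, 0, 5, 1, 2, 4, 2, 0, 2, 1, 1, 0, 1, 0, 4, 0, 0, 3, 0, 1, 8, 7, 36, 64, 47, 0, 6, 64, 67, 0,
   160, 0, 0, 0, 144, 85, 0, 0, 24, 43, 43, 0, 2, 43, 64, 47, 1, 43, 43, 67, 0, 0, 8, 86, 2, 65,
   1, 87, 1, 78, 1, 63, 1, 51, 1, 85, 1, 84, 4, 0, 8, 72, 1, 44, 1, 90, 2, 84, 4, 63, 1, 36, 1,
   66, 1, 89, 1, 0, 10, 43, 1, 88, 1, 23, 1, 2, 1, 66, 1, 90, 1, 63, 1, 84, 4, 85, 2, 80, 1]),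
    ([(5, 3), (4, 13), (3, 2), (2, 7), (1, 1), (0, 0)],
     [1, 2, 2, 2, 0, 3, 88, 1, 84, 1, 42, 1, 0, 7, 42, 1, 87, 1, 88, 1, 24, 1, 84, 1, 37, 1, 85,
   1, 0, 7, 85, 1, 89, 1, 24, 1, 88, 1, 78, 1, 84, 1, 42, 1, 0, 9, 84, 2, 90, 1, 87, 1, 89, 2, 73,
   1, 88, 1, 78, 1, 65, 1, 42, 2, 0, 5, 85, 1, 24, 1, 88, 1, 84, 2, 42, 1, 0, 6, 84, 4, 87, 1, 79,
   1, 88, 2, 65, 1, 42, 2, 0, 5, 89, 1, 84, 2, 88, 1, 78, 1, 42, 1, 0, 9, 78, 1, 90, 1, 87, 1, 89,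
   2, 24, 2, 35, 1, 85, 1, 65, 1, 84, 2, 0, 3, 89, 1, 84, 1, 78, 1, 0, 7, 42, 1, 90, 1, 89, 1, 65,
   1, 84, 1, 24, 1, 87, 1, 0, 3, 24, 1, 84, 1, 85, 1, 0, 8, 87, 1, 73, 1, 90, 1, 89, 2, 65, 1, 78,
   1, 35, 1, 84, 4, 0, 6, 66, 1, 84, 4, 89, 2, 78, 2, 52, 1, 85, 1, 0, 6, 84, 4, 87, 1, 24, 2, 65,
   1, 85, 2, 79, 1]),
    ([(5, 2), (4, 13), (3, 4), (2, 7), (1, 1), (0, 0)],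
     [2, 6, 5, 0, 4, 15, 3, 35, 2, 46, 1, 69, 0, 72, 2, 4, 9, 0, 1, 4, 0, 0, 0, 0, 0, 0, 0, 0, 0,
   0, 0, 0, 4, 0, 0, 0, 0, 0, 0, 0, 0, 4, 0, 0, 0, 0, 0, 0, 0, 0, 0, 3, 0, 4, 0, 0, 1, 3, 1, 4, 4,
   2, 2, 0, 1, 0, 0, 1, 0, 4, 0, 3, 3, 0, 1, 8, 11, 24, 44, 3, 0, 160, 0, 0, 0, 18, 44, 43, 0, 1,
   44, 43, 43, 24, 43, 43, 0, 1, 43, 43, 67, 144, 3, 0, 0, 1, 44, 44, 43, 1, 44, 43, 67, 24, 44,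
   44, 0, 6, 64, 67, 0, 0]),
    ([(5, 3), (4, 13), (3, 4), (2, 7), (1, 1), (0, 0)],
     [1, 2, 2, 2, 0, 3, 88, 1, 84, 1, 42, 1, 0, 8, 42, 1, 87, 2, 88, 1, 43, 1, 37, 1, 84, 1, 24,
   1, 85, 1, 0, 7, 85, 1, 89, 1, 24, 1, 88, 1, 78, 1, 84, 1, 42, 1, 0, 9, 73, 1, 84, 2, 90, 1, 87,
   2, 89, 1, 36, 1, 88, 1, 65, 1, 42, 2, 0, 5, 85, 1, 24, 1, 88, 1, 84, 2, 42, 1, 0, 8, 3, 1, 84,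
   2, 90, 1, 89, 1, 43, 1, 88, 1, 65, 1, 42, 1, 0, 5, 89, 1, 84, 2, 88, 1, 78, 1, 42, 1, 0, 3, 90,
   1, 63, 1, 84, 1, 0, 3, 89, 1, 84, 1, 78, 1, 0, 4, 87, 2, 84, 1, 37, 1, 43, 1, 0, 3, 24, 1, 84,
   1, 85, 1, 0, 8, 73, 1, 90, 1, 89, 2, 51, 1, 35, 1, 78, 1, 65, 1, 84, 4, 0, 6, 66, 1, 84, 4, 89,
   2, 78, 2, 52, 1, 85, 1, 0, 6, 43, 1, 84, 2, 87, 2, 24, 1, 85, 1, 37, 1]),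
    ([(5, 2), (4, 13), (2, 7), (1, 1), (0, 0)],
     [1, 2, 2, 0, 4, 4, 7, 3198, 4, 3, 7, 3198, 0, 10, 66, 1, 2, 2, 89, 1, 84, 2, 88, 2, 46, 2,
   87, 1, 78, 1, 85, 1, 42, 1, 4, 2, 23, 3198, 4, 1, 7, 3198, 4, 0, 23, 3198, 0, 5, 6, 2, 89, 1,
   88, 1, 84, 2, 42, 1, 0, 4, 89, 1, 87, 1, 63, 1, 84, 1, 0, 3, 8, 1, 88, 1, 84, 1, 0, 8, 87, 1,
   38, 1, 84, 1, 63, 1, 86, 2, 15, 1, 85, 1, 23, 1, 0, 5, 87, 1, 89, 1, 84, 1, 63, 1, 46, 2, 0, 5,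
   89, 1, 45, 1, 87, 1, 63, 1, 84, 2, 0, 5, 89, 1, 84, 2, 87, 1, 63, 1, 44, 1, 0, 5, 87, 1, 84, 2,
   89, 1, 63, 1, 43, 1]),
    ([(5, 2), (2, 7), (1, 1), (0, 0)],
     [1, 0, 2, 2, 0, 4, 86, 1, 88, 1, 84, 1, 42, 1, 0, 5, 88, 1, 86, 1, 84, 1, 69, 2, 42, 1, 0, 7,
   42, 1, 88, 1, 87, 1, 66, 1, 86, 1, 36, 1, 84, 1, 0, 7, 65, 1, 88, 1, 87, 1, 86, 1, 36, 1, 84,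
   1, 42, 1, 0, 5, 88, 1, 66, 1, 86, 1, 84, 2, 42, 1, 0, 5, 84, 2, 88, 1, 86, 1, 65, 1, 42, 1, 0,
   6, 88, 1, 87, 1, 86, 1, 36, 1, 84, 2, 42, 1, 4, 13, 7, 3198, 0, 3, 87, 1, 36, 1, 84, 1, 4, 12,
   7, 3198, 4, 6, 23, 3198, 0, 4, 84, 2, 87, 1, 36, 1, 65, 1, 0, 4, 66, 1, 84, 2, 87, 1, 36, 1, 4,
   0, 7, 3198]),
    ([(5, 8), (2, 7), (1, 1), (0, 0)],
     [1, 2, 2, 2, 0, 3, 86, 1, 84, 1, 42, 1, 0, 3, 15, 1, 84, 1, 85, 1, 0, 9, 66, 1, 88, 1, 72, 1,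
   87, 2, 46, 2, 86, 1, 78, 1, 84, 2, 42, 1, 0, 9, 84, 2, 88, 1, 47, 2, 87, 2, 73, 1, 86, 1, 78,
   1, 65, 1, 42, 1, 0, 8, 66, 1, 88, 1, 85, 1, 52, 1, 86, 1, 72, 1, 84, 4, 42, 2, 0, 8, 3, 1, 84,
   2, 88, 1, 87, 1, 43, 1, 86, 1, 65, 1, 42, 1, 0, 5, 87, 1, 84, 2, 86, 1, 78, 1, 42, 1, 0, 3, 88,
   1, 63, 1, 84, 1, 0, 3, 87, 1, 84, 1, 78, 1, 0, 7, 88, 2, 63, 1, 47, 2, 73, 1, 84, 2, 65, 1, 85,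
   1, 0, 7, 46, 2, 88, 2, 63, 1, 84, 2, 72, 1, 66, 1, 85, 1, 0, 8, 73, 1, 88, 1, 87, 2, 51, 1, 35,
   1, 78, 1, 65, 1, 84, 4, 0, 8, 66, 1, 72, 1, 88, 1, 84, 4, 87, 2, 52, 1, 78, 1, 35, 1, 0, 5, 84,
   2, 88, 1, 63, 1, 15, 1, 85, 1]),
    ([(2, 7), (1, 1), (0, 0)],
     [1, 2, 0, 2, 0, 3, 85, 1, 0, 1, 84, 1, 0, 4, 86, 2, 84, 1, 57, 1, 43, 1, 4, 1, 7, 3198, 4, 1,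
   23, 3198, 0, 9, 85, 2, 80, 1, 43, 1, 42, 1, 86, 2, 84, 4, 23, 1, 66, 1, 2, 1, 0, 9, 79, 1, 85,
   2, 43, 1, 65, 1, 86, 2, 3, 1, 84, 4, 24, 1, 42, 1, 0, 4, 84, 2, 0, 1, 85, 1, 78, 1, 0, 3, 87,
   1, 35, 1, 84, 1, 4, 0, 7, 3198, 0, 7, 87, 2, 86, 2, 69, 2, 73, 1, 84, 1, 42, 1, 43, 1, 0, 7,
   87, 2, 86, 2, 69, 2, 84, 1, 72, 1, 42, 1, 43, 1, 0, 4, 87, 1, 84, 2, 35, 1, 73, 1, 0, 4, 87, 1,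
   72, 1, 84, 2, 35, 1, 0, 6, 35, 1, 84, 2, 87, 1, 86, 2, 57, 1, 43, 1]),
    ([(2, 11), (1, 1), (0, 0)],
     [1, 2, 2, 2, 0, 4, 85, 2, 31, 1, 84, 1, 42, 1, 0, 8, 85, 2, 42, 1, 87, 1, 43, 1, 24, 1, 84,
   1, 65, 1, 86, 1, 0, 8, 24, 1, 2, 1, 87, 1, 85, 2, 86, 1, 36, 1, 84, 1, 42, 1, 0, 8, 84, 1, 87,
   1, 85, 2, 86, 1, 36, 1, 73, 1, 65, 1, 42, 1, 0, 8, 24, 1, 2, 1, 87, 1, 86, 1, 43, 1, 85, 2, 84,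
   2, 42, 1, 0, 8, 84, 2, 87, 1, 85, 2, 86, 1, 43, 1, 73, 1, 65, 1, 42, 1, 0, 6, 84, 2, 85, 2, 86,
   1, 31, 1, 78, 1, 42, 1, 0, 3, 87, 1, 63, 1, 84, 1, 0, 3, 86, 1, 84, 1, 78, 1, 0, 8, 35, 1, 87,
   1, 86, 1, 73, 1, 85, 2, 43, 1, 84, 1, 65, 1, 0, 8, 43, 1, 87, 1, 85, 2, 24, 1, 2, 1, 84, 1, 35,
   1, 86, 1, 0, 8, 73, 1, 87, 1, 86, 2, 51, 1, 35, 1, 78, 1, 65, 1, 84, 4, 0, 8, 66, 1, 72, 1, 87,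
   1, 84, 4, 86, 2, 52, 1, 78, 1, 35, 1, 0, 8, 43, 1, 84, 2, 87, 1, 85, 2, 24, 1, 65, 1, 35, 1,
   86, 1]),
    ([(1, 1), (0, 0)],
     [1, 0, 0, 2, 0, 3, 86, 1, 84, 1, 70, 1, 0, 3, 85, 1, 84, 1, 57, 1, 4, 23, 7, 3198, 4, 23, 23,
   3198, 0, 4, 57, 1, 85, 1, 30, 1, 84, 2, 0, 9, 84, 4, 44, 1, 86, 2, 57, 1, 85, 2, 43, 1, 73, 1,
   70, 1, 65, 1, 0, 4, 70, 1, 86, 1, 36, 1, 84, 2, 4, 1, 7, 3198, 4, 1, 3, 3250, 4, 23, 19, 3250,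
   4, 23, 3, 3250, 4, 0, 7, 3198, 4, 0, 23, 3198, 0, 4, 85, 1, 57, 1, 84, 2, 35, 1]),
    ([(1, 7), (0, 0)],
     [1, 0, 0, 2, 0, 3, 86, 1, 84, 1, 70, 1, 4, 2, 7, 7410, 4, 2, 15, 7410, 4, 2, 39, 7410, 0, 4,
   70, 1, 86, 1, 38, 1, 84, 2, 0, 4, 70, 1, 86, 1, 37, 1, 84, 2, 0, 4, 70, 1, 86, 1, 36, 1, 84, 2,
   0, 3, 84, 1, 63, 1, 85, 1, 4, 2, 0, 7618, 4, 2, 8, 7618, 4, 2, 32, 7618, 0, 4, 84, 2, 31, 1,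
   63, 1, 85, 1, 0, 4, 30, 1, 84, 2, 63, 1, 85, 1, 0, 4, 29, 1, 84, 2, 63, 1, 85, 1]),
    ([(5, 0), (4, 3), (3, 0), (2, 9), (1, 8), (0, 0)],
     [2, 6, 5, 0, 4, 22, 3, 37, 2, 42, 1, 59, 0, 70, 2, 4, 9, 0, 1, 3, 0, 0, 0, 0, 0, 0, 0, 0, 0,
   0, 0, 0, 4, 0, 0, 0, 0, 0, 0, 0, 0, 0, 0, 0, 1, 1, 0, 2, 0, 0, 1, 2, 0, 2, 0, 0, 3, 0, 0, 2, 1,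
   2, 1, 0, 2, 0, 0, 2, 2, 0, 1, 1, 2, 0, 1, 1, 4, 3, 72, 72, 0, 12, 49, 49, 0, 20, 0, 0, 0, 12,
   49, 72, 0, 0]),
    ([(5, 1), (4, 3), (3, 0), (2, 9), (1, 8), (0, 0)],
     [1, 2, 2, 2, 2, 6, 6, 0, 5, 22, 4, 37, 3, 42, 2, 59, 1, 71, 2, 4, 9, 0, 1, 3, 0, 0, 0, 0, 0,
   0, 0, 0, 0, 0, 0, 0, 4, 0, 0, 0, 0, 0, 0, 0, 0, 0, 0, 0, 1, 1, 0, 2, 0, 0, 1, 2, 0, 2, 0, 0, 2,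
   0, 1, 0, 0, 2, 4, 0, 0, 1, 2, 2, 2, 0, 1, 1, 2, 0, 1, 8, 10, 160, 0, 0, 0, 8, 49, 49, 85, 96,
   49, 49, 0, 72, 85, 0, 0, 12, 85, 76, 0, 60, 49, 85, 0, 4, 49, 85, 85, 18, 49, 45, 0, 18, 45,
   76, 0, 9, 45, 45, 0, 0, 0, 3, 89, 1, 84, 1, 71, 1, 0, 3, 88, 1, 84, 1, 44, 1, 2, 6, 6, 0, 5,
   22, 4, 37, 3, 42, 2, 59, 1, 71, 2, 4, 9, 0, 1, 3, 0, 0, 0, 0, 0, 0, 0, 0, 0, 0, 0, 0, 4, 0, 0,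
   0, 0, 0, 0, 0, 0, 0, 0, 0, 1, 1, 0, 2, 0, 0, 1, 2, 0, 2, 0, 0, 2, 0, 1, 0, 0, 2, 4, 0, 0, 1, 2,
   2, 2, 0, 1, 1, 2, 0, 1, 13098240, 2, 4772850, 85, 46, 46, 20203320, 85, 46, 76, 15, 9039045,
   63, 8, 4, 0, 46, 5151990, 31, 8, 0, 4, 46, 2550, 79, 8, 4, 3, 46, 7655784, 31, 8, 4, 8, 85,
   522240, 0, 8, 7, 4, 68, 4100480, 95, 8, 4, 7, 76, 1988560, 0, 8, 3, 8, 46, 5893748, 23, 4, 7,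
   7, 85, 522240, 95, 8, 8, 3, 49, 443416, 95, 8, 4, 7, 85, 1212800, 23, 4, 7, 7, 76, 1023605, 95,
   8, 4, 7, 46, 750720, 0, 8, 3, 8, 76, 2688492, 40, 4, 7, 8, 85, 10672640, 0, 8, 7, 4, 76, 0, 5,
   88, 1, 84, 2, 89, 1, 44, 1, 71, 1, 0, 6, 71, 1, 84, 4, 89, 2, 75, 2, 59, 1, 45, 1, 0, 6, 70, 1,
   90, 1, 22, 1, 84, 2, 85, 1, 42, 1, 0, 3, 87, 1, 35, 1, 84, 1, 0, 3, 22, 1, 84, 1, 85, 1, 0, 7,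
   45, 1, 89, 2, 71, 1, 87, 1, 67, 2, 84, 2, 79, 1, 0, 7, 89, 1, 44, 1, 1, 1, 86, 1, 87, 1, 84, 2,
   80, 1, 0, 7, 84, 4, 59, 1, 87, 1, 79, 1, 85, 1, 45, 1, 63, 1, 0, 8, 44, 1, 64, 1, 86, 2, 87, 1,
   84, 4, 85, 1, 17, 1, 10, 1, 0, 5, 89, 1, 84, 2, 87, 1, 35, 1, 71, 1]),
    ([(5, 3), (4, 3), (3, 0), (2, 9), (1, 8), (0, 0)],
     [2, 6, 5, 0, 4, 22, 3, 37, 2, 42, 1, 59, 0, 73, 2, 4, 9, 0, 1, 6, 0, 0, 0, 0, 0, 0, 0, 0, 0,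
   0, 0, 0, 4, 0, 0, 0, 0, 0, 3, 0, 0, 2, 1, 2, 2, 1, 0, 0, 2, 1, 1, 2, 0, 2, 0, 0, 0, 0, 0, 0, 0,
   0, 1, 0, 2, 0, 0, 2, 1, 0, 1, 0, 0, 2, 1, 108, 20, 37, 45, 45, 45, 222, 49, 45, 45, 618, 49,
   65, 45, 72, 49, 65, 65, 3984, 49, 68, 68, 228, 49, 49, 45, 304, 76, 76, 76, 2472, 49, 68, 65,
   224, 49, 49, 49, 390, 65, 65, 45, 1668, 49, 68, 45, 2796, 68, 45, 76, 390, 45, 45, 76, 336, 68,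
   45, 45, 912, 49, 49, 68, 1236, 68, 68, 45, 1668, 68, 65, 65, 6240, 68, 68, 76, 516, 65, 65, 76,
   1936, 68, 68, 68, 0]),
    ([(5, 5), (4, 3), (3, 0), (2, 9), (1, 8), (0, 0)],
     [3, 4, 3, 0, 0, 0, 0, 0, 0, 0, 3, 2, 6, 6, 0, 5, 22, 4, 37, 3, 42, 2, 59, 1, 75, 2, 4, 9, 0,
   1, 3, 0, 0, 0, 0, 0, 0, 0, 0, 0, 0, 0, 0, 4, 0, 0, 0, 0, 0, 0, 0, 0, 0, 0, 0, 1, 1, 0, 2, 0, 0,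
   1, 2, 0, 2, 0, 0, 1, 0, 1, 2, 1, 4, 0, 0, 0, 0, 0, 4, 2, 0, 1, 1, 2, 0, 1, 3456, 19, 1647, 72,
   85, 85, 540, 49, 85, 85, 108, 65, 45, 85, 162, 65, 45, 45, 396, 65, 45, 72, 504, 49, 72, 85,
   1026, 65, 72, 72, 1192, 72, 72, 72, 1632, 49, 65, 72, 512, 49, 49, 49, 216, 45, 45, 45, 1170,
   72, 72, 85, 184, 65, 65, 65, 243, 45, 85, 85, 4128, 49, 49, 72, 4320, 49, 72, 72, 384, 49, 49,
   65, 459, 85, 85, 85, 702, 45, 72, 85, 0, 2, 6, 6, 0, 5, 22, 4, 37, 3, 42, 2, 59, 1, 75, 2, 4,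
   9, 0, 1, 3, 0, 0, 0, 0, 0, 0, 0, 0, 0, 0, 0, 0, 4, 0, 0, 0, 0, 0, 0, 0, 0, 0, 0, 0, 1, 1, 0, 2,
   0, 0, 1, 2, 0, 2, 0, 0, 1, 0, 1, 2, 1, 4, 0, 0, 0, 0, 0, 4, 2, 0, 1, 1, 2, 0, 1, 3072, 19, 96,
   72, 72, 72, 144, 46, 85, 85, 8, 65, 45, 46, 396, 46, 72, 85, 282, 85, 85, 85, 12, 65, 65, 85,
   135, 65, 85, 85, 608, 49, 65, 72, 144, 45, 45, 45, 384, 46, 46, 72, 180, 65, 72, 72, 179, 65,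
   65, 65, 30, 46, 46, 46, 104, 65, 65, 72, 43, 65, 46, 46, 144, 45, 72, 72, 252, 45, 46, 85, 124,
   65, 45, 45, 192, 46, 72, 72, 0]),
    ([(5, 9), (4, 3), (3, 0), (2, 9), (1, 8), (0, 0)],
     [2, 6, 5, 0, 4, 22, 3, 37, 2, 42, 1, 59, 0, 79, 2, 4, 9, 0, 3, 6, 0, 0, 0, 0, 0, 0, 2, 0, 1,
   0, 0, 2, 2, 0, 2, 0, 0, 1, 0, 0, 0, 0, 0, 0, 1, 1, 0, 2, 0, 0, 1, 2, 0, 2, 0, 0, 0, 0, 0, 0, 0,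
   0, 2, 0, 2, 1, 2, 0, 2, 0, 1, 1, 2, 0, 1, 108, 20, 1104, 76, 76, 65, 255, 65, 46, 72, 336, 76,
   76, 72, 57, 46, 46, 72, 84, 46, 72, 72, 336, 76, 76, 46, 228, 76, 46, 72, 60, 76, 46, 46, 309,
   65, 65, 72, 255, 65, 65, 46, 672, 76, 65, 72, 87, 65, 46, 46, 168, 76, 72, 72, 512, 76, 76, 76,
   564, 76, 65, 46, 242, 65, 65, 65, 37, 72, 72, 72, 888, 76, 65, 65, 10, 46, 46, 46, 168, 65, 72,
   72, 0]),
    ([(4, 3), (3, 0), (2, 9), (1, 8), (0, 0)],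
     [1, 2, 0, 2, 4, 4, 7, 3198, 4, 3, 7, 3198, 0, 3, 84, 1, 2, 1, 87, 1, 4, 2, 7, 3198, 0, 4, 84,
   2, 2, 1, 87, 1, 71, 1, 4, 1, 7, 3198, 0, 9, 73, 1, 88, 2, 45, 1, 0, 2, 44, 2, 86, 2, 59, 1, 87,
   2, 84, 4, 0, 3, 89, 1, 35, 1, 84, 1, 0, 4, 50, 1, 64, 1, 88, 2, 84, 1, 4, 0, 7, 3198, 0, 5, 89,
   1, 17, 1, 84, 1, 85, 1, 4, 2, 0, 4, 73, 1, 89, 1, 35, 1, 84, 2, 0, 5, 2, 1, 89, 1, 87, 1, 35,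
   1, 84, 2, 0, 4, 71, 1, 84, 2, 89, 1, 35, 1]),
    ([(5, 1), (4, 7), (3, 0), (2, 9), (1, 8), (0, 0)],
     [1, 2, 2, 2, 0, 3, 86, 1, 84, 1, 0, 1, 0, 3, 89, 1, 84, 1, 71, 1, 0, 3, 84, 1, 88, 1, 44, 1,
   0, 8, 79, 1, 85, 1, 86, 2, 67, 2, 0, 2, 87, 1, 84, 2, 45, 1, 0, 5, 84, 2, 44, 1, 88, 1, 71, 1,
   89, 1, 0, 9, 79, 1, 45, 1, 86, 2, 67, 2, 0, 2, 87, 1, 84, 4, 71, 1, 89, 2, 0, 5, 85, 1, 86, 1,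
   0, 1, 22, 1, 84, 2, 0, 3, 87, 1, 35, 1, 84, 1, 0, 3, 85, 1, 22, 1, 84, 1, 0, 7, 45, 1, 89, 2,
   79, 1, 87, 1, 67, 2, 84, 2, 71, 1, 0, 9, 89, 2, 44, 1, 80, 1, 71, 1, 87, 1, 84, 2, 88, 1, 16,
   1, 63, 1, 0, 6, 79, 1, 85, 1, 67, 2, 87, 1, 84, 4, 45, 1, 0, 8, 84, 4, 85, 1, 80, 1, 88, 1, 87,
   1, 16, 1, 44, 1, 63, 1, 0, 6, 84, 4, 71, 2, 63, 1, 87, 1, 77, 1, 89, 2]),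
    ([(5, 9), (4, 7), (3, 0), (2, 9), (1, 8), (0, 0)],
     [1, 2, 2, 2, 0, 3, 86, 1, 84, 1, 0, 1, 0, 3, 89, 1, 84, 1, 71, 1, 0, 3, 85, 1, 16, 1, 84, 1,
   2, 6, 6, 0, 5, 22, 4, 37, 3, 42, 2, 63, 1, 79, 2, 4, 9, 0, 3, 6, 0, 0, 0, 0, 0, 0, 2, 0, 1, 0,
   0, 2, 2, 0, 2, 0, 0, 1, 0, 0, 0, 0, 0, 0, 1, 1, 0, 2, 0, 0, 1, 2, 0, 2, 0, 0, 0, 0, 0, 0, 0, 0,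
   2, 0, 2, 1, 1, 0, 2, 0, 1, 1, 1, 0, 1, 2, 8, 3, 46, 46, 0, 18, 49, 85, 0, 24, 49, 49, 0, 36,
   85, 0, 0, 24, 49, 65, 0, 6, 68, 85, 0, 3, 65, 65, 0, 40, 0, 0, 0, 0, 0, 6, 84, 4, 85, 1, 71, 2,
   44, 1, 58, 1, 89, 2, 0, 9, 45, 1, 84, 4, 86, 2, 67, 2, 0, 2, 87, 1, 79, 1, 71, 1, 89, 2, 0, 6,
   85, 1, 86, 1, 84, 2, 37, 1, 64, 1, 3, 1, 0, 3, 87, 1, 35, 1, 84, 1, 0, 5, 89, 1, 87, 1, 64, 1,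
   48, 2, 84, 1, 0, 7, 45, 1, 89, 2, 79, 1, 87, 1, 67, 2, 84, 2, 71, 1, 0, 7, 89, 1, 71, 1, 87, 1,
   84, 1, 16, 1, 35, 1, 85, 1, 0, 6, 45, 1, 87, 1, 37, 1, 64, 1, 84, 2, 89, 1, 0, 6, 85, 2, 77, 1,
   16, 2, 87, 1, 63, 1, 84, 4, 0, 6, 84, 4, 71, 2, 63, 1, 87, 1, 77, 1, 89, 2]),
    ([(5, 10), (4, 7), (3, 0), (2, 9), (1, 8), (0, 0)],
     [1, 2, 2, 2, 0, 7, 42, 1, 2, 1, 86, 1, 85, 1, 88, 1, 84, 2, 71, 1, 0, 3, 89, 1, 84, 1, 71, 1,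
   0, 3, 44, 1, 88, 1, 84, 1, 0, 3, 85, 1, 17, 1, 84, 1, 0, 5, 44, 1, 71, 1, 88, 1, 84, 2, 89, 1,
   0, 6, 85, 1, 84, 4, 71, 2, 59, 1, 45, 1, 89, 2, 0, 5, 85, 1, 44, 1, 84, 2, 88, 1, 17, 1, 0, 3,
   87, 1, 35, 1, 84, 1, 0, 7, 85, 1, 17, 1, 44, 1, 87, 1, 88, 1, 35, 1, 84, 1, 0, 7, 89, 1, 71, 1,
   87, 1, 17, 1, 84, 1, 35, 1, 85, 1, 0, 9, 89, 2, 44, 1, 80, 1, 71, 1, 87, 1, 84, 2, 88, 1, 16,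
   1, 63, 1, 0, 6, 85, 2, 77, 1, 17, 2, 87, 1, 63, 1, 84, 4, 0, 6, 44, 2, 77, 1, 84, 4, 87, 1, 88,
   2, 63, 1, 0, 6, 84, 4, 71, 2, 63, 1, 87, 1, 77, 1, 89, 2]),
    ([(4, 7), (3, 0), (2, 9), (1, 8), (0, 0)],
     [1, 2, 0, 2, 0, 4, 85, 1, 0, 2, 86, 1, 84, 1, 4, 2, 7, 3198, 0, 3, 84, 1, 2, 1, 87, 1, 0, 8,
   48, 2, 85, 1, 84, 1, 0, 2, 86, 2, 64, 1, 79, 1, 88, 2, 0, 4, 84, 2, 2, 1, 87, 1, 71, 1, 0, 5,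
   84, 2, 85, 1, 0, 2, 86, 1, 79, 1, 0, 9, 73, 1, 50, 1, 59, 1, 0, 2, 86, 1, 44, 1, 87, 2, 84, 4,
   88, 2, 0, 4, 85, 1, 86, 1, 35, 2, 84, 1, 0, 4, 50, 1, 64, 1, 84, 1, 88, 2, 4, 1, 7, 3198, 4, 0,
   7, 3198, 0, 7, 45, 1, 84, 2, 86, 1, 37, 1, 64, 1, 16, 1, 88, 2, 0, 8, 84, 4, 77, 1, 87, 2, 44,
   2, 86, 1, 63, 1, 17, 2, 88, 2, 0, 5, 84, 2, 85, 1, 86, 1, 35, 2, 71, 1]),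
    ([(5, 5), (4, 8), (3, 0), (2, 9), (1, 8), (0, 0)],
     [1, 2, 2, 2, 0, 7, 44, 1, 59, 1, 86, 1, 75, 2, 88, 2, 84, 2, 42, 1, 0, 3, 89, 1, 84, 1, 71,
   1, 0, 3, 84, 1, 44, 1, 88, 1, 2, 6, 6, 0, 5, 22, 4, 37, 3, 42, 2, 64, 1, 75, 2, 4, 9, 0, 1, 3,
   0, 0, 0, 0, 0, 0, 0, 0, 0, 0, 0, 0, 4, 0, 0, 0, 0, 0, 0, 0, 0, 0, 0, 0, 1, 1, 0, 2, 0, 0, 1, 2,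
   0, 2, 0, 0, 0, 2, 1, 0, 1, 0, 0, 0, 0, 0, 0, 4, 0, 1, 1, 0, 2, 4, 1, 108, 16, 3, 45, 60, 60,
   39, 80, 45, 60, 54, 60, 60, 85, 81, 80, 80, 85, 120, 80, 80, 60, 33, 80, 45, 45, 161, 80, 80,
   80, 108, 80, 45, 85, 120, 80, 80, 45, 3, 45, 45, 60, 10, 60, 60, 60, 27, 45, 45, 85, 81, 45,
   60, 85, 10, 45, 45, 45, 135, 80, 60, 85, 33, 80, 60, 60, 0, 0, 6, 86, 1, 44, 2, 71, 1, 84, 4,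
   88, 2, 43, 1, 0, 6, 59, 1, 79, 1, 84, 2, 88, 1, 0, 1, 86, 1, 0, 9, 84, 4, 73, 2, 59, 1, 22, 2,
   86, 1, 44, 1, 88, 2, 85, 2, 42, 1, 0, 5, 85, 2, 79, 1, 87, 1, 63, 1, 84, 2, 0, 4, 73, 1, 22, 1,
   84, 1, 85, 2, 0, 9, 45, 1, 89, 2, 71, 1, 0, 2, 59, 1, 87, 2, 84, 2, 85, 2, 79, 2, 0, 7, 89, 1,
   44, 1, 88, 1, 87, 1, 84, 1, 35, 1, 71, 1, 0, 8, 45, 1, 79, 2, 59, 1, 87, 2, 73, 1, 0, 2, 85, 4,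
   84, 4, 0, 5, 84, 2, 90, 1, 88, 1, 63, 1, 44, 1, 0, 6, 89, 2, 84, 4, 87, 1, 63, 1, 77, 1, 71,
   2]),
    ([(5, 9), (4, 8), (3, 0), (2, 9), (1, 8), (0, 0)],
     [1, 2, 2, 2, 0, 7, 44, 1, 59, 1, 86, 1, 75, 2, 88, 2, 84, 2, 42, 1, 0, 3, 89, 1, 84, 1, 71,
   1, 0, 3, 16, 1, 84, 1, 85, 1, 2, 6, 6, 0, 5, 22, 4, 37, 3, 42, 2, 64, 1, 79, 2, 4, 9, 0, 3, 7,
   0, 0, 0, 0, 0, 0, 2, 0, 1, 0, 0, 2, 2, 0, 2, 0, 0, 1, 0, 0, 0, 0, 0, 0, 1, 1, 0, 2, 0, 0, 1, 2,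
   0, 2, 0, 0, 0, 2, 1, 0, 1, 0, 0, 0, 0, 0, 0, 0, 0, 1, 1, 0, 2, 0, 1, 1444716, 9, 6880380, 68,
   76, 85, 480168, 85, 85, 85, 1295492, 49, 68, 85, 1828008, 76, 85, 85, 2405616, 49, 85, 85,
   2049368, 49, 49, 85, 2207790, 68, 85, 85, 9372416, 49, 76, 85, 3517800, 68, 68, 85, 8, 164619,
   15, 4, 8, 8, 68, 73008, 39, 8, 4, 8, 76, 89712, 15, 4, 8, 8, 49, 92043, 55, 8, 3, 8, 49,
   532116, 39, 8, 4, 8, 85, 123552, 15, 4, 8, 8, 76, 529165, 23, 8, 3, 7, 49, 612885, 47, 4, 7, 8,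
   68, 0, 8, 84, 4, 86, 1, 71, 1, 16, 1, 88, 1, 52, 1, 85, 1, 42, 1, 0, 6, 86, 1, 79, 1, 88, 1, 0,
   1, 59, 1, 84, 2, 0, 6, 90, 1, 22, 1, 73, 1, 85, 1, 84, 2, 42, 1, 0, 3, 87, 1, 35, 1, 84, 1, 0,
   7, 48, 2, 90, 2, 73, 1, 64, 1, 85, 1, 63, 1, 84, 2, 0, 7, 45, 1, 89, 2, 71, 1, 87, 1, 67, 2,
   84, 2, 79, 1, 0, 7, 89, 1, 16, 1, 71, 1, 87, 1, 84, 1, 35, 1, 85, 1, 0, 6, 45, 1, 89, 1, 87, 1,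
   64, 1, 37, 1, 84, 2, 0, 5, 90, 1, 63, 1, 85, 1, 16, 1, 84, 2, 0, 6, 89, 2, 84, 4, 87, 1, 63, 1,
   77, 1, 71, 2]),
    ([(4, 8), (3, 0), (2, 9), (1, 8), (0, 0)],
     [1, 2, 0, 2, 0, 8, 44, 1, 85, 1, 0, 2, 86, 1, 59, 1, 87, 2, 84, 2, 75, 2, 4, 4, 36, 7618, 0,
   3, 84, 1, 2, 1, 87, 1, 4, 7, 36, 7618, 0, 9, 84, 4, 44, 1, 86, 1, 71, 1, 85, 1, 4, 2, 87, 2,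
   17, 1, 0, 1, 4, 1, 7, 3198, 0, 9, 73, 1, 59, 1, 0, 2, 86, 1, 85, 1, 78, 1, 87, 2, 84, 4, 44, 1,
   0, 3, 89, 1, 35, 1, 84, 1, 0, 10, 44, 1, 50, 1, 89, 1, 59, 1, 73, 1, 88, 2, 63, 1, 87, 2, 35,
   1, 84, 2, 4, 0, 7, 3198, 0, 7, 87, 1, 85, 1, 89, 1, 84, 1, 35, 1, 22, 1, 4, 2, 0, 4, 89, 1, 84,
   2, 73, 1, 35, 1, 0, 5, 84, 2, 89, 1, 2, 1, 35, 1, 87, 1, 0, 4, 71, 1, 84, 2, 89, 1, 35, 1]),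
    ([(5, 1), (4, 9), (3, 0), (2, 9), (1, 8), (0, 0)],
     [1, 2, 2, 2, 0, 7, 71, 1, 59, 1, 70, 1, 89, 2, 48, 2, 84, 2, 86, 1, 0, 3, 89, 1, 84, 1, 71,
   1, 0, 3, 84, 1, 2, 1, 86, 1, 2, 6, 6, 0, 5, 22, 4, 37, 3, 42, 2, 65, 1, 71, 2, 4, 9, 0, 1, 7,
   0, 0, 0, 0, 0, 0, 0, 0, 0, 0, 0, 0, 4, 0, 0, 0, 0, 0, 0, 1, 2, 0, 1, 0, 1, 0, 1, 2, 2, 0, 1, 2,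
   0, 2, 0, 0, 2, 0, 1, 0, 0, 2, 0, 0, 0, 0, 0, 0, 1, 0, 1, 0, 0, 1, 1, 1, 7, 6, 68, 46, 0, 3, 60,
   85, 0, 3, 60, 60, 0, 12, 68, 68, 0, 6, 49, 60, 0, 18, 85, 0, 0, 20, 0, 0, 0, 0, 0, 6, 84, 4,
   44, 1, 89, 2, 72, 1, 86, 1, 71, 2, 0, 9, 37, 1, 89, 2, 45, 1, 59, 1, 87, 1, 0, 1, 86, 1, 84, 2,
   71, 1, 0, 8, 37, 1, 85, 1, 45, 1, 59, 1, 84, 4, 86, 2, 2, 1, 70, 1, 0, 3, 84, 1, 87, 1, 35, 1,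
   0, 3, 85, 1, 84, 1, 22, 1, 0, 8, 45, 1, 84, 1, 89, 2, 71, 1, 87, 1, 67, 2, 86, 1, 37, 1, 0, 8,
   89, 2, 44, 1, 71, 1, 84, 2, 87, 1, 86, 1, 80, 1, 63, 1, 0, 8, 79, 1, 85, 1, 0, 1, 59, 1, 87, 2,
   35, 1, 45, 1, 84, 4, 0, 7, 85, 1, 44, 1, 84, 4, 87, 1, 86, 1, 80, 1, 63, 1, 0, 5, 84, 2, 89, 1,
   87, 1, 35, 1, 71, 1]),
    ([(5, 10), (4, 9), (3, 0), (2, 9), (1, 8), (0, 0)],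
     [1, 2, 2, 2, 0, 7, 89, 1, 71, 1, 17, 1, 86, 1, 85, 1, 84, 1, 2, 1, 0, 3, 89, 1, 84, 1, 71, 1,
   0, 3, 2, 1, 86, 1, 84, 1, 0, 3, 85, 1, 84, 1, 17, 1, 0, 6, 89, 2, 44, 1, 72, 1, 86, 1, 84, 4,
   71, 2, 0, 6, 89, 2, 59, 1, 85, 1, 84, 4, 45, 1, 71, 2, 0, 9, 89, 2, 44, 2, 63, 1, 85, 2, 87, 1,
   84, 4, 86, 2, 17, 4, 70, 1, 0, 3, 84, 1, 87, 1, 35, 1, 0, 7, 2, 1, 17, 1, 85, 1, 87, 1, 86, 1,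
   35, 1, 84, 1, 0, 7, 89, 1, 84, 1, 85, 1, 87, 1, 35, 1, 17, 1, 71, 1, 0, 8, 89, 2, 44, 1, 71, 1,
   84, 2, 87, 1, 86, 1, 80, 1, 63, 1, 0, 6, 84, 4, 59, 1, 85, 1, 87, 2, 35, 2, 45, 1, 0, 10, 89,
   2, 44, 2, 59, 1, 45, 1, 84, 4, 87, 4, 0, 2, 86, 2, 35, 2, 80, 1, 0, 6, 89, 2, 63, 1, 84, 4, 87,
   1, 77, 1, 71, 2]),
    ([(4, 9), (3, 0), (2, 9), (1, 8), (0, 0)],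
     [1, 2, 0, 2, 0, 8, 88, 2, 48, 2, 59, 1, 86, 2, 0, 2, 85, 1, 84, 1, 71, 1, 4, 1, 7, 3198, 0,
   7, 0, 1, 88, 1, 17, 1, 84, 1, 86, 1, 85, 1, 2, 1, 0, 8, 37, 2, 88, 2, 45, 1, 59, 1, 86, 2, 0,
   2, 85, 2, 84, 1, 0, 8, 84, 2, 2, 1, 88, 1, 17, 1, 86, 1, 0, 1, 85, 1, 71, 1, 0, 9, 37, 2, 84,
   2, 88, 2, 59, 1, 86, 2, 0, 2, 85, 2, 45, 1, 71, 1, 0, 8, 44, 1, 88, 2, 45, 1, 59, 1, 86, 2, 0,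
   2, 85, 1, 84, 2, 0, 3, 84, 1, 35, 1, 89, 1, 0, 9, 45, 1, 59, 1, 88, 2, 84, 1, 86, 2, 35, 1, 85,
   1, 44, 1, 0, 1, 0, 8, 37, 2, 84, 1, 88, 2, 45, 1, 86, 1, 85, 2, 67, 2, 71, 1, 4, 0, 7, 3198, 0,
   8, 88, 2, 45, 1, 59, 1, 86, 1, 63, 1, 85, 2, 37, 2, 84, 2, 0, 8, 2, 2, 17, 2, 63, 1, 84, 4, 86,
   1, 85, 2, 77, 1, 88, 2, 0, 8, 84, 2, 88, 1, 17, 1, 86, 1, 35, 1, 85, 1, 37, 1, 71, 1]),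
    ([(5, 1), (4, 11), (3, 0), (2, 9), (1, 8), (0, 0)],
     [1, 2, 2, 2, 0, 4, 86, 2, 59, 1, 0, 1, 84, 1, 0, 3, 89, 1, 84, 1, 71, 1, 0, 3, 88, 1, 84, 1,
   44, 1, 2, 6, 6, 0, 5, 22, 4, 37, 3, 42, 2, 67, 1, 71, 2, 4, 9, 0, 1, 7, 0, 0, 0, 0, 0, 0, 0, 0,
   0, 0, 0, 0, 4, 0, 0, 0, 0, 0, 1, 0, 2, 0, 3, 1, 0, 1, 1, 2, 4, 2, 1, 2, 0, 2, 0, 0, 2, 0, 1, 0,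
   0, 2, 0, 0, 0, 0, 0, 0, 1, 0, 1, 0, 0, 1, 1, 108, 20, 87, 46, 46, 85, 33, 60, 46, 46, 87, 80,
   80, 85, 120, 60, 60, 46, 255, 80, 85, 85, 10, 46, 46, 46, 10, 80, 80, 80, 33, 80, 80, 60, 120,
   80, 60, 60, 39, 80, 60, 46, 161, 60, 60, 60, 255, 46, 85, 85, 120, 80, 46, 85, 242, 85, 85, 85,
   3, 80, 46, 46, 3, 80, 80, 46, 375, 80, 60, 85, 645, 60, 85, 85, 375, 60, 46, 85, 564, 60, 60,
   85, 0, 0, 5, 88, 1, 84, 2, 89, 1, 44, 1, 71, 1, 0, 6, 59, 1, 71, 1, 84, 4, 89, 2, 75, 2, 45, 1,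
   0, 7, 59, 1, 22, 2, 70, 1, 84, 4, 85, 2, 86, 2, 42, 1, 0, 3, 87, 1, 35, 1, 84, 1, 0, 3, 22, 1,
   84, 1, 85, 1, 0, 7, 45, 1, 89, 2, 71, 1, 87, 1, 67, 2, 84, 2, 79, 1, 0, 7, 89, 1, 44, 1, 88, 1,
   87, 1, 84, 1, 35, 1, 71, 1, 0, 7, 84, 4, 59, 1, 87, 1, 79, 1, 85, 1, 45, 1, 63, 1, 0, 5, 88, 1,
   44, 1, 87, 1, 84, 2, 35, 1, 0, 6, 89, 2, 84, 4, 87, 1, 63, 1, 77, 1, 71, 2]),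
    ([(5, 3), (4, 11), (3, 0), (2, 9), (1, 8), (0, 0)],
     [2, 6, 5, 0, 4, 22, 3, 37, 2, 42, 1, 67, 0, 73, 2, 4, 9, 0, 1, 3, 0, 0, 0, 0, 0, 0, 0, 0, 0,
   0, 0, 0, 4, 0, 0, 0, 0, 0, 0, 0, 0, 0, 0, 0, 1, 1, 0, 2, 0, 0, 1, 2, 0, 2, 0, 0, 0, 0, 0, 0, 3,
   0, 1, 0, 2, 0, 3, 2, 1, 0, 1, 0, 0, 2, 1, 8, 13, 12, 60, 60, 0, 12, 46, 46, 0, 2, 60, 46, 76,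
   1, 65, 60, 46, 18, 65, 46, 0, 144, 49, 0, 0, 2, 60, 60, 76, 592, 0, 0, 0, 72, 65, 0, 0, 1, 65,
   60, 60, 12, 49, 60, 0, 12, 46, 76, 0, 72, 60, 0, 0, 0]),
    ([(5, 5), (4, 11), (3, 0), (2, 9), (1, 8), (0, 0)],
     [2, 6, 5, 0, 4, 22, 3, 37, 2, 42, 1, 67, 0, 75, 2, 4, 9, 0, 1, 3, 0, 0, 0, 0, 0, 0, 0, 0, 0,
   0, 0, 0, 4, 0, 0, 0, 0, 0, 0, 0, 0, 0, 0, 0, 1, 1, 0, 2, 0, 0, 1, 2, 0, 2, 0, 0, 0, 0, 0, 0, 3,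
   0, 0, 0, 0, 0, 0, 4, 0, 0, 3, 0, 4, 4, 1, 108, 20, 141, 60, 46, 72, 87, 65, 46, 46, 276, 60,
   60, 65, 255, 65, 46, 72, 111, 60, 72, 72, 10, 46, 46, 46, 255, 60, 65, 46, 84, 46, 72, 72, 363,
   60, 65, 72, 64, 60, 60, 60, 168, 65, 72, 72, 309, 65, 65, 72, 242, 65, 65, 65, 84, 60, 60, 46,
   30, 60, 46, 46, 255, 65, 65, 46, 138, 60, 60, 72, 57, 46, 46, 72, 390, 60, 65, 65, 37, 72, 72,
   72, 0]),
    ([(5, 10), (4, 11), (3, 0), (2, 9), (1, 8), (0, 0)],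
     [1, 2, 2, 2, 0, 7, 89, 1, 71, 1, 17, 1, 85, 1, 88, 1, 84, 1, 44, 1, 0, 3, 89, 1, 84, 1, 71,
   1, 0, 3, 88, 1, 44, 1, 84, 1, 0, 3, 17, 1, 84, 1, 85, 1, 0, 5, 88, 1, 71, 1, 44, 1, 84, 2, 89,
   1, 0, 6, 59, 1, 45, 1, 71, 2, 89, 2, 85, 1, 84, 4, 0, 6, 88, 2, 59, 1, 44, 2, 84, 4, 85, 1, 45,
   1, 0, 3, 87, 1, 35, 1, 84, 1, 0, 7, 88, 1, 90, 1, 63, 1, 84, 1, 85, 1, 17, 1, 44, 1, 0, 7, 17,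
   1, 85, 1, 87, 1, 35, 1, 84, 1, 71, 1, 89, 1, 0, 7, 89, 1, 44, 1, 88, 1, 87, 1, 84, 1, 35, 1,
   71, 1, 0, 8, 84, 4, 90, 1, 45, 1, 64, 1, 87, 1, 85, 1, 35, 1, 65, 1, 0, 5, 88, 1, 44, 1, 87, 1,
   35, 1, 84, 2, 0, 6, 71, 2, 89, 2, 84, 4, 87, 1, 63, 1, 77, 1]),
    ([(4, 11), (3, 0), (2, 9), (1, 8), (0, 0)],
     [1, 2, 0, 2, 0, 5, 85, 2, 86, 1, 59, 1, 84, 1, 0, 2, 4, 3, 7, 3198, 0, 3, 84, 1, 2, 1, 87, 1,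
   4, 2, 7, 3198, 0, 4, 84, 2, 2, 1, 87, 1, 71, 1, 4, 1, 7, 3198, 0, 9, 73, 1, 88, 2, 45, 1, 0, 2,
   44, 2, 86, 2, 59, 1, 87, 2, 84, 4, 0, 3, 89, 1, 35, 1, 84, 1, 0, 4, 50, 1, 64, 1, 88, 2, 84, 1,
   4, 9, 26, 8866, 4, 0, 7, 3198, 0, 4, 73, 1, 89, 1, 35, 1, 84, 2, 0, 5, 2, 1, 89, 1, 87, 1, 35,
   1, 84, 2, 0, 4, 71, 1, 84, 2, 89, 1, 35, 1]),
    ([(3, 0), (2, 9), (1, 8), (0, 0)],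
     [1, 0, 2, 2, 0, 9, 71, 1, 87, 2, 88, 2, 59, 1, 48, 2, 70, 1, 86, 1, 84, 2, 16, 1, 0, 3, 87,
   1, 84, 1, 29, 1, 0, 3, 16, 1, 84, 1, 86, 1, 4, 15, 7, 3198, 0, 7, 3, 1, 44, 1, 88, 1, 87, 1,
   84, 2, 86, 1, 71, 1, 0, 9, 45, 1, 87, 2, 88, 2, 71, 1, 2, 1, 84, 4, 59, 1, 37, 1, 70, 1, 0, 9,
   73, 1, 42, 1, 88, 2, 59, 1, 44, 1, 84, 4, 1, 1, 86, 2, 22, 1, 4, 11, 7, 3198, 4, 8, 7, 3198, 4,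
   5, 7, 3198, 0, 7, 16, 1, 86, 1, 0, 1, 85, 1, 84, 1, 41, 2, 87, 1, 4, 0, 7, 3198, 0, 6, 16, 1,
   0, 1, 85, 1, 86, 1, 35, 1, 84, 2, 0, 6, 87, 1, 84, 2, 85, 1, 35, 1, 29, 1, 0, 1]),
    ([(5, 1), (4, 3), (3, 2), (2, 9), (1, 8), (0, 0)],
     [1, 2, 2, 2, 2, 6, 6, 0, 5, 22, 4, 37, 3, 44, 2, 59, 1, 71, 2, 4, 9, 0, 1, 4, 0, 0, 0, 0, 0,
   0, 0, 0, 0, 0, 0, 0, 4, 0, 0, 0, 0, 0, 1, 1, 0, 2, 0, 0, 0, 0, 0, 0, 0, 0, 1, 2, 0, 2, 0, 0, 2,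
   0, 1, 0, 0, 2, 2, 1, 0, 0, 2, 2, 0, 1, 1, 0, 2, 0, 1, 4, 14, 36, 85, 0, 0, 3, 85, 85, 71, 36,
   76, 76, 0, 12, 49, 49, 0, 18, 85, 43, 0, 2, 71, 71, 76, 80, 0, 0, 0, 2, 43, 43, 49, 48, 71, 49,
   0, 54, 85, 71, 0, 12, 71, 71, 0, 2, 85, 49, 49, 3, 85, 71, 71, 2, 85, 76, 76, 0, 0, 3, 89, 1,
   84, 1, 71, 1, 0, 3, 88, 1, 84, 1, 44, 1, 2, 6, 6, 0, 5, 22, 4, 37, 3, 44, 2, 59, 1, 71, 2, 4,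
   9, 0, 1, 4, 0, 0, 0, 0, 0, 0, 0, 0, 0, 0, 0, 0, 4, 0, 0, 0, 0, 0, 1, 1, 0, 2, 0, 0, 0, 0, 0, 0,
   0, 0, 1, 2, 0, 2, 0, 0, 2, 0, 1, 0, 0, 2, 2, 1, 0, 0, 2, 2, 0, 1, 1, 0, 2, 0, 1, 4, 14, 36, 85,
   0, 0, 3, 85, 85, 71, 36, 76, 76, 0, 12, 49, 49, 0, 18, 85, 43, 0, 2, 71, 71, 76, 80, 0, 0, 0,
   2, 43, 43, 49, 48, 71, 49, 0, 54, 85, 71, 0, 12, 71, 71, 0, 2, 85, 49, 49, 3, 85, 71, 71, 2,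
   85, 76, 76, 0, 0, 5, 88, 1, 71, 1, 84, 2, 44, 1, 89, 1, 0, 6, 42, 1, 70, 1, 90, 1, 84, 2, 87,
   1, 37, 1, 0, 6, 42, 1, 70, 1, 90, 1, 85, 1, 22, 1, 84, 2, 0, 3, 84, 1, 90, 1, 63, 1, 0, 3, 84,
   1, 85, 1, 22, 1, 0, 3, 84, 1, 87, 1, 37, 1, 0, 3, 86, 1, 84, 1, 10, 1, 0, 6, 22, 2, 79, 1, 87,
   1, 85, 2, 65, 1, 84, 4, 0, 7, 44, 1, 63, 1, 90, 2, 72, 1, 86, 1, 84, 4, 64, 1, 0, 6, 86, 2, 84,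
   4, 87, 1, 65, 1, 79, 1, 10, 2]),
    ([(5, 3), (4, 3), (3, 2), (2, 9), (1, 8), (0, 0)],
     [2, 6, 5, 0, 4, 22, 3, 37, 2, 44, 1, 59, 0, 73, 2, 4, 9, 0, 1, 6, 0, 0, 0, 0, 0, 0, 0, 0, 0,
   0, 0, 0, 4, 0, 0, 0, 0, 0, 1, 1, 0, 2, 0, 0, 2, 1, 0, 0, 2, 1, 0, 0, 0, 2, 2, 1, 0, 0, 0, 0, 0,
   0, 1, 0, 2, 0, 0, 2, 1, 0, 1, 0, 0, 2, 1, 54, 16, 27, 65, 65, 76, 40, 49, 49, 49, 162, 71, 68,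
   68, 147, 49, 71, 71, 67, 71, 71, 71, 67, 65, 65, 65, 147, 71, 65, 65, 174, 49, 49, 71, 201, 49,
   65, 65, 216, 49, 71, 68, 147, 71, 71, 65, 162, 65, 76, 76, 216, 49, 76, 76, 27, 71, 71, 68,
   174, 49, 49, 65, 294, 49, 71, 65, 0]),
    ([(5, 5), (4, 3), (3, 2), (2, 9), (1, 8), (0, 0)],
     [1, 2, 2, 2, 2, 6, 6, 0, 5, 22, 4, 37, 3, 44, 2, 59, 1, 75, 2, 4, 9, 0, 1, 4, 0, 0, 0, 0, 0,
   0, 0, 0, 0, 0, 0, 0, 4, 0, 0, 0, 0, 0, 1, 1, 0, 2, 0, 0, 0, 0, 0, 0, 0, 0, 1, 2, 0, 2, 0, 0, 0,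
   2, 1, 0, 1, 4, 0, 0, 0, 0, 0, 4, 0, 1, 1, 0, 2, 0, 1, 16, 15, 48, 71, 71, 0, 320, 0, 0, 0, 2,
   71, 72, 72, 2, 85, 85, 85, 18, 72, 72, 0, 4, 43, 43, 72, 2, 43, 43, 85, 8, 43, 49, 49, 144, 85,
   0, 0, 48, 71, 49, 0, 36, 49, 72, 0, 2, 71, 71, 85, 24, 85, 49, 0, 1, 85, 72, 72, 4, 85, 49, 49,
   0, 0, 3, 89, 1, 84, 1, 71, 1, 0, 3, 84, 1, 88, 1, 44, 1, 2, 6, 6, 0, 5, 22, 4, 37, 3, 44, 2,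
   59, 1, 75, 2, 4, 9, 0, 1, 4, 0, 0, 0, 0, 0, 0, 0, 0, 0, 0, 0, 0, 4, 0, 0, 0, 0, 0, 1, 1, 0, 2,
   0, 0, 0, 0, 0, 0, 0, 0, 1, 2, 0, 2, 0, 0, 0, 2, 1, 0, 1, 4, 0, 0, 0, 0, 0, 4, 0, 1, 1, 0, 2, 0,
   1, 108, 19, 54, 85, 43, 43, 102, 71, 85, 43, 6, 65, 49, 74, 46, 85, 85, 49, 120, 71, 71, 43,
   33, 71, 71, 85, 96, 71, 85, 74, 109, 71, 85, 85, 33, 71, 43, 43, 10, 85, 85, 43, 24, 85, 43,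
   65, 72, 71, 65, 49, 3, 43, 43, 65, 51, 71, 71, 74, 66, 85, 49, 74, 100, 71, 71, 71, 10, 74, 74,
   74, 10, 43, 43, 43, 33, 85, 65, 65, 0, 0, 5, 89, 1, 44, 1, 84, 2, 88, 1, 71, 1, 0, 6, 90, 1,
   84, 2, 87, 1, 37, 1, 42, 1, 70, 1, 0, 6, 84, 4, 48, 2, 73, 1, 59, 1, 88, 2, 44, 1, 0, 3, 90, 1,
   63, 1, 84, 1, 0, 4, 73, 1, 85, 2, 22, 1, 84, 1, 0, 3, 87, 1, 84, 1, 37, 1, 0, 3, 86, 1, 84, 1,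
   10, 1, 0, 7, 37, 2, 87, 2, 50, 1, 73, 1, 64, 1, 85, 2, 84, 4, 0, 7, 85, 2, 90, 1, 44, 1, 84, 4,
   21, 1, 86, 1, 64, 1, 0, 8, 84, 4, 90, 1, 87, 1, 71, 1, 52, 1, 35, 1, 86, 1, 65, 1]),
    ([(4, 3), (3, 2), (2, 9), (1, 8), (0, 0)],
     [1, 2, 0, 2, 4, 23, 15, 7410, 4, 2, 7, 3198, 0, 3, 84, 1, 2, 1, 87, 1, 4, 1, 7, 3198, 0, 4,
   2, 1, 84, 2, 87, 1, 71, 1, 4, 0, 7, 3198, 0, 9, 0, 1, 88, 2, 59, 1, 21, 1, 50, 1, 73, 1, 87, 2,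
   84, 4, 44, 1, 0, 3, 89, 1, 35, 1, 84, 1, 0, 4, 88, 2, 50, 1, 64, 1, 84, 1, 0, 8, 42, 1, 89, 2,
   85, 1, 86, 1, 64, 1, 84, 2, 37, 2, 75, 2, 0, 8, 4, 2, 22, 1, 89, 2, 2, 1, 85, 1, 84, 1, 42, 1,
   86, 1, 0, 4, 89, 1, 73, 1, 35, 1, 84, 2, 0, 5, 2, 1, 89, 1, 84, 2, 35, 1, 87, 1, 0, 10, 42, 1,
   84, 4, 89, 2, 71, 1, 37, 2, 86, 1, 10, 1, 64, 1, 17, 1, 85, 2]),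
    ([(5, 1), (4, 7), (3, 2), (2, 9), (1, 8), (0, 0)],
     [1, 2, 2, 2, 0, 3, 86, 1, 84, 1, 0, 1, 0, 3, 89, 1, 84, 1, 71, 1, 0, 3, 84, 1, 44, 1, 88, 1,
   0, 7, 87, 1, 86, 1, 84, 1, 22, 1, 85, 1, 37, 1, 0, 1, 0, 5, 71, 1, 89, 1, 84, 2, 44, 1, 88, 1,
   0, 6, 87, 1, 86, 2, 84, 4, 65, 1, 79, 1, 0, 2, 0, 6, 86, 2, 84, 4, 0, 2, 64, 1, 85, 1, 50, 1,
   0, 3, 84, 1, 90, 1, 63, 1, 0, 3, 84, 1, 85, 1, 22, 1, 0, 3, 87, 1, 37, 1, 84, 1, 0, 7, 71, 1,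
   90, 1, 88, 1, 89, 1, 84, 1, 44, 1, 63, 1, 0, 6, 87, 1, 22, 2, 65, 1, 85, 2, 79, 1, 84, 4, 0, 5,
   84, 2, 44, 1, 90, 1, 63, 1, 88, 1, 0, 5, 71, 1, 90, 1, 89, 1, 84, 2, 63, 1]),
    ([(5, 5), (4, 7), (3, 2), (2, 9), (1, 8), (0, 0)],
     [1, 2, 2, 2, 0, 3, 86, 1, 84, 1, 0, 1, 0, 3, 89, 1, 84, 1, 71, 1, 0, 3, 84, 1, 88, 1, 44, 1,
   0, 8, 87, 1, 22, 1, 85, 2, 84, 1, 73, 1, 0, 1, 37, 1, 86, 1, 0, 5, 44, 1, 89, 1, 84, 2, 88, 1,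
   71, 1, 0, 6, 86, 2, 87, 1, 65, 1, 84, 4, 79, 1, 0, 2, 0, 6, 22, 1, 85, 2, 84, 2, 73, 1, 0, 1,
   86, 1, 0, 3, 90, 1, 63, 1, 84, 1, 0, 4, 85, 2, 73, 1, 22, 1, 84, 1, 0, 3, 84, 1, 37, 1, 87, 1,
   0, 7, 89, 1, 90, 1, 88, 1, 71, 1, 84, 1, 63, 1, 44, 1, 0, 6, 87, 1, 22, 1, 85, 2, 84, 2, 73, 1,
   37, 1, 0, 7, 85, 2, 21, 1, 90, 1, 44, 1, 63, 1, 84, 4, 58, 1, 0, 5, 89, 1, 84, 2, 90, 1, 63, 1,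
   71, 1]),
    ([(5, 10), (4, 7), (3, 2), (2, 9), (1, 8), (0, 0)],
     [1, 2, 2, 2, 0, 7, 42, 1, 2, 1, 86, 1, 85, 1, 88, 1, 84, 2, 71, 1, 0, 3, 89, 1, 84, 1, 71, 1,
   0, 3, 88, 1, 44, 1, 84, 1, 0, 3, 17, 1, 84, 1, 85, 1, 0, 5, 88, 1, 89, 1, 44, 1, 71, 1, 84, 2,
   0, 5, 71, 1, 89, 1, 85, 1, 84, 2, 17, 1, 0, 6, 88, 2, 59, 1, 44, 2, 84, 4, 85, 1, 45, 1, 0, 3,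
   84, 1, 90, 1, 63, 1, 0, 7, 88, 1, 90, 1, 63, 1, 84, 1, 85, 1, 17, 1, 44, 1, 0, 7, 71, 1, 90, 1,
   84, 2, 65, 1, 85, 1, 87, 1, 35, 1, 0, 7, 88, 1, 89, 1, 90, 1, 44, 1, 71, 1, 63, 1, 84, 1, 0, 6,
   84, 4, 59, 1, 90, 2, 63, 2, 85, 1, 45, 1, 0, 5, 88, 1, 90, 1, 44, 1, 63, 1, 84, 2, 0, 5, 89, 1,
   90, 1, 84, 2, 63, 1, 71, 1]),
    ([(4, 7), (3, 2), (2, 9), (1, 8), (0, 0)],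
     [1, 2, 0, 2, 4, 22, 15, 7410, 4, 2, 7, 3198, 0, 3, 84, 1, 2, 1, 87, 1, 4, 6, 20, 3250, 0, 4,
   84, 2, 2, 1, 87, 1, 71, 1, 4, 1, 7, 3198, 0, 6, 50, 1, 84, 2, 88, 1, 31, 1, 87, 1, 0, 1, 0, 3,
   89, 1, 35, 1, 84, 1, 0, 4, 50, 1, 88, 2, 64, 1, 84, 1, 4, 22, 26, 8866, 4, 0, 7, 3198, 0, 4,
   89, 1, 84, 2, 73, 1, 35, 1, 0, 7, 84, 2, 89, 1, 87, 1, 88, 1, 63, 1, 44, 1, 17, 1, 0, 4, 84, 2,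
   89, 1, 71, 1, 35, 1]),
    ([(5, 1), (3, 0), (2, 9), (1, 8), (0, 0)],
     [1, 0, 2, 2, 0, 4, 70, 1, 89, 2, 84, 1, 42, 1, 0, 3, 88, 1, 84, 1, 29, 1, 0, 3, 16, 1, 87, 1,
   84, 1, 4, 28, 7, 3198, 0, 7, 87, 1, 89, 1, 84, 2, 88, 1, 3, 1, 44, 1, 71, 1, 0, 9, 84, 4, 70,
   1, 89, 2, 71, 1, 37, 1, 88, 2, 59, 1, 2, 1, 45, 1, 0, 4, 87, 1, 59, 1, 16, 1, 84, 2, 4, 23, 7,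
   3198, 4, 22, 36, 7618, 4, 16, 7, 3198, 0, 7, 16, 1, 87, 1, 0, 1, 86, 1, 84, 1, 41, 2, 88, 1, 4,
   13, 7, 3198, 0, 4, 87, 1, 16, 1, 84, 2, 63, 1, 0, 4, 88, 1, 84, 2, 29, 1, 63, 1]),
    ([(4, 10), (3, 2), (2, 9), (1, 8), (0, 0)],
     [1, 2, 2, 2, 0, 8, 48, 2, 16, 1, 70, 1, 88, 2, 85, 1, 87, 1, 84, 2, 71, 1, 0, 3, 88, 1, 84,
   1, 71, 1, 0, 3, 84, 1, 44, 1, 87, 1, 0, 3, 3, 1, 85, 1, 84, 1, 0, 5, 44, 1, 88, 1, 84, 2, 87,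
   1, 71, 1, 0, 7, 45, 1, 88, 2, 70, 1, 85, 1, 84, 4, 71, 1, 79, 1, 0, 7, 50, 1, 16, 1, 84, 2, 88,
   1, 85, 1, 0, 1, 87, 1, 0, 3, 89, 1, 63, 1, 84, 1, 0, 7, 50, 1, 84, 1, 88, 1, 85, 1, 63, 1, 16,
   1, 87, 1, 0, 7, 79, 1, 85, 1, 86, 1, 63, 1, 84, 2, 29, 1, 88, 1, 0, 7, 88, 1, 44, 1, 89, 1, 87,
   1, 84, 1, 63, 1, 71, 1, 0, 5, 3, 1, 89, 1, 85, 1, 63, 1, 84, 2, 0, 5, 89, 1, 84, 2, 63, 1, 44,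
   1, 87, 1, 0, 5, 84, 2, 89, 1, 88, 1, 63, 1, 71, 1]),
    ([(5, 5), (4, 11), (3, 2), (2, 9), (1, 8), (0, 0)],
     [1, 2, 2, 2, 0, 4, 59, 1, 86, 2, 0, 1, 84, 1, 0, 3, 89, 1, 84, 1, 71, 1, 0, 3, 84, 1, 44, 1,
   88, 1, 2, 6, 6, 0, 5, 22, 4, 37, 3, 44, 2, 67, 1, 75, 2, 4, 9, 0, 1, 4, 0, 0, 0, 0, 0, 0, 0, 0,
   0, 0, 0, 0, 4, 0, 0, 0, 0, 0, 1, 1, 0, 2, 0, 0, 0, 0, 0, 0, 0, 0, 1, 2, 0, 2, 0, 0, 2, 2, 0, 1,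
   3, 0, 0, 0, 0, 0, 0, 4, 1, 1, 3, 2, 4, 4, 1, 4, 8, 12, 71, 71, 0, 72, 85, 0, 0, 12, 71, 74, 0,
   12, 74, 85, 0, 6, 71, 85, 0, 12, 74, 74, 0, 80, 0, 0, 0, 1, 71, 71, 85, 0, 0, 5, 44, 1, 89, 1,
   84, 2, 88, 1, 71, 1, 0, 6, 90, 1, 87, 1, 70, 1, 42, 1, 84, 2, 37, 1, 0, 7, 73, 1, 22, 1, 86, 2,
   84, 2, 59, 1, 85, 2, 0, 1, 0, 3, 90, 1, 63, 1, 84, 1, 0, 4, 73, 1, 85, 2, 22, 1, 84, 1, 0, 3,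
   87, 1, 84, 1, 37, 1, 0, 7, 89, 1, 90, 1, 88, 1, 71, 1, 84, 1, 63, 1, 44, 1, 0, 6, 50, 1, 87, 1,
   89, 1, 37, 1, 64, 1, 84, 2, 0, 7, 84, 4, 90, 1, 21, 1, 58, 1, 85, 2, 63, 1, 44, 1, 0, 5, 89, 1,
   84, 2, 90, 1, 63, 1, 71, 1]),
    ([(5, 5), (4, 10), (3, 2), (2, 9), (1, 8), (0, 0)],
     [1, 2, 2, 2, 0, 8, 48, 2, 16, 1, 70, 1, 89, 2, 86, 1, 88, 1, 84, 2, 71, 1, 0, 3, 89, 1, 84,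
   1, 71, 1, 0, 3, 84, 1, 44, 1, 88, 1, 0, 3, 3, 1, 86, 1, 84, 1, 0, 5, 44, 1, 89, 1, 84, 2, 88,
   1, 71, 1, 0, 7, 45, 1, 89, 2, 70, 1, 86, 1, 84, 4, 71, 1, 79, 1, 0, 7, 50, 1, 16, 1, 84, 2, 89,
   1, 86, 1, 0, 1, 88, 1, 0, 3, 90, 1, 63, 1, 84, 1, 0, 7, 50, 1, 84, 1, 89, 1, 86, 1, 63, 1, 16,
   1, 88, 1, 0, 7, 79, 1, 86, 1, 87, 1, 63, 1, 84, 2, 29, 1, 89, 1, 0, 7, 89, 1, 44, 1, 90, 1, 88,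
   1, 84, 1, 63, 1, 71, 1, 0, 5, 3, 1, 90, 1, 86, 1, 63, 1, 84, 2, 0, 5, 90, 1, 84, 2, 63, 1, 44,
   1, 88, 1, 0, 5, 84, 2, 90, 1, 89, 1, 63, 1, 71, 1]),
    ([(4, 11), (3, 2), (2, 9), (1, 8), (0, 0)],
     [1, 2, 0, 2, 4, 17, 15, 7410, 4, 6, 20, 3250, 0, 3, 87, 1, 2, 1, 84, 1, 4, 9, 20, 3250, 0, 4,
   2, 1, 71, 1, 84, 2, 87, 1, 4, 1, 7, 3198, 0, 9, 73, 1, 50, 1, 59, 1, 0, 1, 21, 1, 88, 2, 87, 2,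
   84, 4, 44, 1, 0, 3, 89, 1, 35, 1, 84, 1, 0, 4, 50, 1, 88, 2, 64, 1, 84, 1, 0, 5, 85, 2, 86, 1,
   64, 1, 84, 1, 37, 2, 4, 0, 20, 3250, 0, 9, 45, 1, 89, 2, 73, 1, 16, 1, 88, 2, 37, 1, 64, 1, 63,
   1, 84, 4, 0, 7, 84, 2, 89, 1, 87, 1, 88, 1, 17, 1, 63, 1, 44, 1, 0, 4, 84, 2, 89, 1, 35, 1, 71,
   1]),
    ([(3, 2), (2, 9), (1, 8), (0, 0)],
     [1, 0, 2, 2, 0, 4, 42, 1, 88, 2, 84, 1, 70, 1, 0, 3, 84, 1, 29, 1, 87, 1, 0, 3, 16, 1, 86, 1,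
   84, 1, 4, 9, 7, 3198, 0, 5, 16, 1, 87, 1, 84, 2, 86, 1, 29, 1, 0, 9, 45, 1, 2, 1, 88, 2, 71, 1,
   37, 1, 87, 2, 59, 1, 70, 1, 84, 4, 0, 9, 22, 1, 44, 1, 88, 2, 59, 1, 1, 1, 73, 1, 86, 2, 84, 4,
   42, 1, 4, 5, 7, 3198, 4, 4, 36, 7618, 4, 25, 42, 9022, 4, 3, 7, 3198, 4, 0, 7, 3198, 0, 4, 63,
   1, 86, 1, 16, 1, 84, 2, 0, 4, 87, 1, 63, 1, 29, 1, 84, 2]),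
    ([(5, 3), (4, 3), (3, 3), (2, 9), (1, 8), (0, 0)],
     [2, 6, 5, 0, 4, 22, 3, 37, 2, 45, 1, 59, 0, 73, 4, 4, 9, 1, 3, 6, 4, 0, 0, 1, 2, 1, 0, 0, 0,
   0, 0, 0, 4, 0, 0, 2, 1, 2, 0, 0, 0, 0, 0, 0, 0, 3, 0, 2, 2, 1, 0, 4, 0, 2, 2, 1, 0, 0, 0, 0, 0,
   0, 0, 0, 4, 1, 2, 2, 0, 0, 3, 1, 2, 2, 1, 108, 12, 108, 65, 65, 76, 108, 71, 68, 68, 54, 71,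
   71, 49, 108, 65, 49, 76, 30, 71, 71, 65, 54, 65, 65, 49, 30, 71, 65, 65, 108, 71, 49, 68, 37,
   65, 65, 65, 108, 65, 76, 76, 37, 71, 71, 71, 108, 71, 71, 68, 0]),
    ([(5, 5), (4, 3), (3, 3), (2, 9), (1, 8), (0, 0)],
     [2, 6, 5, 0, 4, 22, 3, 37, 2, 45, 1, 59, 0, 75, 2, 4, 9, 0, 1, 3, 0, 0, 0, 0, 0, 0, 0, 0, 0,
   0, 0, 0, 4, 0, 0, 0, 0, 0, 0, 0, 0, 0, 0, 0, 1, 1, 0, 2, 0, 0, 1, 2, 0, 2, 0, 0, 1, 0, 1, 2, 1,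
   4, 0, 0, 0, 0, 0, 4, 2, 0, 1, 1, 2, 0, 1, 24, 14, 240, 49, 49, 68, 24, 66, 49, 68, 1, 72, 72,
   72, 112, 49, 49, 49, 48, 66, 49, 49, 264, 0, 0, 0, 24, 66, 66, 49, 24, 43, 43, 68, 6, 66, 66,
   66, 112, 68, 68, 68, 240, 49, 68, 68, 48, 43, 68, 68, 6, 43, 43, 43, 24, 43, 49, 68, 0]),
    ([(4, 3), (3, 3), (2, 9), (1, 8), (0, 0)],
     [1, 2, 0, 2, 4, 35, 15, 7410, 4, 14, 15, 7410, 0, 3, 84, 1, 2, 1, 87, 1, 4, 1, 7, 3198, 0, 4,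
   2, 1, 71, 1, 84, 2, 87, 1, 4, 0, 7, 3198, 0, 8, 0, 2, 88, 2, 59, 1, 86, 1, 50, 2, 73, 1, 87, 2,
   84, 4, 0, 3, 89, 1, 35, 1, 84, 1, 0, 4, 88, 2, 50, 1, 64, 1, 84, 1, 4, 35, 26, 8866, 0, 4, 17,
   2, 85, 1, 84, 1, 86, 1, 0, 4, 89, 1, 73, 1, 35, 1, 84, 2, 0, 5, 2, 1, 89, 1, 84, 2, 35, 1, 87,
   1, 0, 4, 71, 1, 84, 2, 89, 1, 35, 1]),
    ([(5, 3), (3, 0), (2, 9), (1, 8), (0, 0)],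
     [1, 0, 2, 2, 0, 9, 71, 1, 88, 2, 89, 2, 59, 1, 48, 2, 70, 1, 87, 1, 84, 2, 16, 1, 0, 3, 88,
   1, 84, 1, 29, 1, 0, 3, 16, 1, 84, 1, 87, 1, 4, 36, 7, 3198, 0, 7, 3, 1, 44, 1, 89, 1, 88, 1,
   84, 2, 87, 1, 71, 1, 0, 8, 45, 1, 88, 2, 89, 2, 85, 1, 84, 4, 59, 1, 37, 2, 70, 2, 0, 9, 73, 1,
   42, 1, 89, 2, 59, 1, 44, 1, 84, 4, 1, 1, 87, 2, 22, 1, 0, 8, 48, 2, 84, 1, 85, 1, 0, 2, 86, 2,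
   64, 1, 79, 1, 88, 2, 4, 34, 36, 7618, 0, 8, 37, 2, 88, 2, 45, 1, 59, 1, 86, 2, 0, 2, 84, 2, 85,
   1, 0, 7, 88, 2, 85, 1, 0, 2, 86, 2, 84, 1, 16, 2, 45, 1, 4, 21, 7, 3198, 0, 6, 16, 1, 0, 1, 86,
   1, 87, 1, 35, 1, 84, 2, 0, 7, 3, 1, 88, 1, 85, 1, 84, 2, 86, 1, 37, 1, 0, 1]),
    ([(5, 5), (4, 11), (3, 3), (2, 9), (1, 8), (0, 0)],
     [1, 2, 2, 2, 0, 8, 75, 2, 48, 4, 71, 1, 87, 1, 89, 2, 59, 1, 88, 2, 84, 2, 0, 3, 89, 1, 84,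
   1, 71, 1, 0, 3, 84, 1, 44, 1, 88, 1, 3, 4, 0, 0, 0, 0, 0, 0, 0, 0, 7, 3, 4, 0, 0, 0, 0, 0, 0,
   0, 0, 15, 2, 6, 8, 0, 7, 22, 6, 37, 5, 45, 4, 67, 3, 75, 2, 4, 9, 0, 1, 3, 0, 0, 0, 0, 0, 0, 0,
   0, 0, 0, 0, 0, 4, 0, 0, 0, 0, 0, 0, 0, 0, 0, 0, 0, 1, 1, 0, 2, 0, 0, 1, 2, 0, 2, 0, 0, 0, 0, 0,
   0, 3, 0, 0, 0, 0, 0, 0, 4, 0, 0, 3, 0, 4, 4, 1, 72, 20, 24, 80, 80, 60, 108, 80, 60, 60, 423,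
   85, 66, 60, 54, 60, 60, 72, 144, 85, 80, 80, 204, 60, 72, 72, 33, 80, 80, 66, 66, 80, 66, 60,
   333, 85, 85, 85, 306, 85, 66, 66, 126, 66, 60, 60, 56, 72, 72, 72, 396, 85, 80, 66, 47, 66, 66,
   66, 29, 80, 80, 80, 51, 80, 66, 66, 369, 85, 80, 60, 96, 66, 66, 60, 19, 60, 60, 60, 36, 66,
   72, 72, 0, 3, 0, 4, 0, 4, 0, 0, 0, 0, 0, 0, 2, 6, 9, 0, 8, 22, 7, 37, 6, 45, 5, 67, 4, 75, 2,
   4, 9, 0, 1, 3, 0, 0, 0, 0, 0, 0, 0, 0, 0, 0, 0, 0, 4, 0, 0, 0, 0, 0, 0, 0, 0, 0, 0, 0, 1, 1, 0,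
   2, 0, 0, 1, 2, 0, 2, 0, 0, 0, 0, 0, 0, 3, 0, 0, 0, 0, 0, 0, 4, 0, 0, 3, 0, 4, 4, 1, 384, 13,
   25, 64, 64, 64, 12, 72, 85, 85, 13, 72, 72, 72, 15, 64, 64, 72, 48, 64, 74, 85, 60, 64, 85, 85,
   3, 64, 72, 72, 16, 74, 74, 74, 48, 87, 87, 87, 48, 60, 64, 85, 48, 86, 86, 86, 16, 60, 60, 60,
   192, 80, 80, 60, 0, 2, 6, 9, 0, 8, 22, 7, 37, 6, 45, 5, 67, 4, 75, 2, 4, 9, 0, 1, 3, 0, 0, 0,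
   0, 0, 0, 0, 0, 0, 0, 0, 0, 4, 0, 0, 0, 0, 0, 0, 0, 0, 0, 0, 0, 1, 1, 0, 2, 0, 0, 1, 2, 0, 2, 0,
   0, 0, 0, 0, 0, 3, 0, 0, 0, 0, 0, 0, 4, 0, 0, 3, 0, 4, 4, 1, 384, 13, 13, 64, 64, 64, 60, 72,
   85, 85, 3, 64, 64, 72, 15, 64, 72, 72, 12, 64, 85, 85, 48, 86, 86, 86, 16, 74, 74, 74, 48, 60,
   72, 85, 48, 72, 74, 85, 192, 66, 66, 74, 48, 87, 87, 87, 16, 60, 60, 60, 25, 72, 72, 72, 0, 2,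
   6, 7, 0, 6, 22, 5, 37, 4, 45, 3, 67, 2, 75, 2, 4, 9, 0, 1, 3, 0, 0, 0, 0, 0, 0, 0, 0, 0, 0, 0,
   0, 4, 0, 0, 0, 0, 0, 0, 0, 0, 0, 0, 0, 1, 1, 0, 2, 0, 0, 1, 2, 0, 2, 0, 0, 0, 0, 0, 0, 3, 0, 0,
   0, 0, 0, 0, 4, 0, 0, 3, 0, 4, 4, 1, 72, 20, 54, 64, 74, 74, 333, 85, 85, 85, 369, 85, 66, 74,
   51, 80, 80, 66, 36, 80, 64, 64, 144, 85, 66, 66, 126, 80, 74, 74, 56, 64, 64, 64, 47, 80, 80,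
   80, 66, 80, 66, 74, 204, 64, 64, 74, 108, 66, 74, 74, 29, 66, 66, 66, 423, 85, 80, 74, 96, 80,
   80, 74, 396, 85, 80, 66, 24, 66, 66, 74, 306, 85, 80, 80, 33, 80, 66, 66, 19, 74, 74, 74, 0, 0,
   6, 42, 1, 70, 1, 86, 2, 84, 4, 80, 1, 87, 1, 0, 6, 71, 1, 89, 2, 45, 1, 84, 4, 75, 2, 59, 1, 0,
   6, 48, 4, 87, 1, 73, 1, 88, 2, 84, 4, 59, 1, 0, 3, 90, 1, 63, 1, 84, 1, 0, 4, 73, 1, 85, 2, 22,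
   1, 84, 1, 2, 6, 6, 0, 5, 22, 4, 37, 3, 45, 2, 67, 1, 75, 2, 4, 9, 0, 1, 3, 0, 0, 0, 0, 0, 0, 0,
   0, 0, 0, 0, 0, 4, 0, 0, 0, 0, 0, 0, 0, 0, 0, 0, 0, 1, 1, 0, 2, 0, 0, 1, 2, 0, 2, 0, 0, 0, 0, 0,
   0, 3, 0, 0, 0, 0, 0, 0, 4, 0, 0, 3, 0, 4, 4, 1, 32, 14, 84, 64, 64, 0, 12, 72, 72, 0, 2, 80,
   80, 64, 2, 85, 64, 72, 96, 66, 66, 0, 1, 85, 64, 64, 2, 66, 66, 64, 2, 66, 66, 72, 1, 85, 72,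
   72, 2, 80, 80, 72, 288, 85, 0, 0, 640, 0, 0, 0, 96, 80, 72, 0, 96, 85, 64, 0, 0, 0, 5, 80, 1,
   84, 2, 63, 1, 86, 2, 87, 1, 0, 6, 45, 1, 90, 2, 73, 1, 67, 2, 63, 1, 84, 4, 0, 6, 84, 4, 50, 1,
   87, 1, 58, 1, 85, 2, 63, 1, 0, 5, 63, 1, 84, 2, 89, 1, 71, 1, 90, 1]),
    ([(4, 11), (3, 3), (2, 9), (1, 8), (0, 0)],
     [1, 2, 0, 2, 4, 23, 15, 7410, 4, 16, 26, 8866, 0, 3, 87, 1, 2, 1, 84, 1, 4, 3, 20, 3250, 0,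
   4, 2, 1, 84, 2, 87, 1, 71, 1, 4, 0, 7, 3198, 0, 8, 73, 1, 50, 2, 59, 1, 0, 2, 86, 1, 88, 2, 87,
   2, 84, 4, 0, 3, 89, 1, 35, 1, 84, 1, 0, 4, 50, 1, 88, 2, 64, 1, 84, 1, 4, 37, 26, 8866, 0, 5,
   87, 1, 17, 1, 86, 1, 84, 1, 41, 2, 0, 9, 45, 1, 89, 2, 73, 1, 16, 1, 88, 2, 37, 1, 64, 1, 63,
   1, 84, 4, 0, 7, 84, 2, 89, 1, 87, 1, 88, 1, 17, 1, 63, 1, 44, 1, 0, 4, 84, 2, 89, 1, 71, 1, 35,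
   1]),
    ([(3, 3), (2, 9), (1, 8), (0, 0)],
     [1, 0, 2, 2, 0, 4, 42, 1, 88, 2, 84, 1, 70, 1, 0, 3, 84, 1, 29, 1, 87, 1, 0, 3, 16, 1, 86, 1,
   84, 1, 4, 3, 7, 3198, 0, 5, 16, 1, 87, 1, 84, 2, 86, 1, 29, 1, 0, 9, 45, 1, 2, 1, 88, 2, 71, 1,
   37, 1, 87, 2, 59, 1, 70, 1, 84, 4, 0, 8, 22, 2, 88, 2, 59, 1, 85, 1, 73, 1, 86, 2, 84, 4, 42,
   2, 4, 16, 42, 9022, 4, 2, 36, 7618, 4, 36, 42, 9022, 0, 5, 3, 1, 85, 1, 84, 1, 41, 2, 86, 1, 4,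
   0, 7, 3198, 0, 4, 63, 1, 86, 1, 16, 1, 84, 2, 0, 4, 87, 1, 63, 1, 29, 1, 84, 2]),
    ([(5, 5), (3, 0), (2, 9), (1, 8), (0, 0)],
     [1, 0, 2, 2, 0, 9, 71, 1, 88, 2, 89, 2, 59, 1, 48, 2, 70, 1, 87, 1, 84, 2, 16, 1, 0, 3, 88,
   1, 84, 1, 29, 1, 0, 3, 16, 1, 84, 1, 87, 1, 4, 39, 7, 3198, 0, 7, 3, 1, 44, 1, 89, 1, 88, 1,
   84, 2, 87, 1, 71, 1, 0, 9, 45, 1, 88, 2, 89, 2, 71, 1, 2, 1, 84, 4, 59, 1, 37, 1, 70, 1, 0, 9,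
   73, 1, 42, 1, 89, 2, 59, 1, 44, 1, 84, 4, 1, 1, 87, 2, 22, 1, 0, 5, 85, 2, 84, 1, 0, 2, 86, 1,
   79, 1, 4, 32, 7, 3198, 0, 9, 37, 2, 85, 2, 88, 2, 59, 1, 86, 2, 0, 2, 84, 2, 45, 1, 71, 1, 0,
   7, 16, 1, 87, 1, 0, 1, 86, 1, 84, 1, 41, 2, 88, 1, 4, 24, 7, 3198, 0, 4, 16, 1, 63, 1, 87, 1,
   84, 2, 0, 6, 88, 1, 84, 2, 86, 1, 35, 1, 29, 1, 0, 1]),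
    ([(4, 10), (3, 6), (2, 9), (1, 8), (0, 0)],
     [1, 2, 2, 2, 0, 8, 48, 2, 16, 1, 70, 1, 88, 2, 85, 1, 87, 1, 84, 2, 71, 1, 0, 3, 88, 1, 84,
   1, 71, 1, 0, 3, 84, 1, 44, 1, 87, 1, 0, 3, 3, 1, 85, 1, 84, 1, 0, 5, 44, 1, 88, 1, 84, 2, 87,
   1, 71, 1, 0, 7, 45, 1, 88, 2, 70, 1, 85, 1, 84, 4, 71, 1, 79, 1, 0, 7, 50, 1, 84, 2, 88, 1, 85,
   1, 0, 1, 16, 1, 87, 1, 0, 3, 89, 1, 63, 1, 84, 1, 0, 7, 50, 1, 84, 1, 88, 1, 85, 1, 63, 1, 16,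
   1, 87, 1, 0, 7, 3, 1, 85, 1, 89, 1, 63, 1, 84, 1, 71, 1, 88, 1, 0, 7, 88, 1, 44, 1, 89, 1, 87,
   1, 84, 1, 63, 1, 71, 1, 0, 5, 3, 1, 89, 1, 85, 1, 63, 1, 84, 2, 0, 5, 89, 1, 84, 2, 63, 1, 44,
   1, 87, 1, 0, 7, 35, 1, 84, 4, 57, 1, 63, 1, 86, 2, 89, 1, 71, 1]),
    ([(5, 5), (4, 11), (3, 6), (2, 9), (1, 8), (0, 0)],
     [2, 6, 5, 0, 4, 22, 3, 37, 2, 48, 1, 67, 0, 75, 1, 4, 9, 0, 1, 3, 0, 0, 0, 0, 0, 0, 0, 0, 0,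
   0, 0, 0, 2, 0, 0, 0, 0, 0, 0, 0, 0, 0, 0, 0, 1, 1, 0, 2, 0, 0, 1, 0, 0, 2, 0, 0, 0, 0, 0, 0, 1,
   0, 0, 0, 0, 0, 0, 2, 0, 0, 1, 0, 2, 2, 1, 216, 14, 27, 60, 60, 65, 27, 60, 60, 66, 54, 60, 65,
   65, 108, 66, 66, 74, 81, 66, 74, 74, 74, 66, 66, 66, 60, 65, 65, 66, 108, 65, 65, 46, 54, 60,
   66, 66, 74, 65, 65, 65, 81, 65, 74, 74, 60, 65, 66, 66, 81, 65, 46, 46, 81, 66, 46, 46, 0]),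
    ([(5, 5), (4, 10), (3, 6), (2, 9), (1, 8), (0, 0)],
     [1, 2, 2, 2, 0, 8, 48, 2, 16, 1, 70, 1, 89, 2, 86, 1, 88, 1, 84, 2, 71, 1, 0, 3, 89, 1, 84,
   1, 71, 1, 0, 3, 84, 1, 44, 1, 88, 1, 0, 3, 3, 1, 86, 1, 84, 1, 0, 5, 44, 1, 89, 1, 84, 2, 88,
   1, 71, 1, 0, 7, 45, 1, 89, 2, 70, 1, 86, 1, 84, 4, 71, 1, 79, 1, 0, 7, 50, 1, 84, 2, 89, 1, 86,
   1, 0, 1, 16, 1, 88, 1, 0, 3, 90, 1, 63, 1, 84, 1, 0, 7, 50, 1, 84, 1, 89, 1, 86, 1, 63, 1, 16,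
   1, 88, 1, 0, 7, 3, 1, 86, 1, 90, 1, 63, 1, 84, 1, 71, 1, 89, 1, 0, 7, 89, 1, 44, 1, 90, 1, 88,
   1, 84, 1, 63, 1, 71, 1, 0, 5, 3, 1, 90, 1, 86, 1, 63, 1, 84, 2, 0, 5, 90, 1, 84, 2, 63, 1, 44,
   1, 88, 1, 0, 7, 35, 1, 84, 4, 57, 1, 63, 1, 87, 2, 90, 1, 71, 1]),
    ([(4, 11), (3, 6), (2, 9), (1, 8), (0, 0)],
     [1, 2, 0, 2, 4, 28, 15, 7410, 4, 14, 15, 7410, 0, 3, 87, 1, 2, 1, 84, 1, 4, 6, 15, 7410, 0,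
   4, 2, 1, 71, 1, 84, 2, 87, 1, 4, 1, 7, 3198, 0, 9, 73, 1, 50, 1, 59, 1, 0, 1, 21, 1, 88, 2, 87,
   2, 84, 4, 44, 1, 0, 3, 89, 1, 35, 1, 84, 1, 0, 4, 50, 1, 88, 2, 64, 1, 84, 1, 4, 28, 26, 8866,
   4, 0, 20, 3250, 0, 9, 45, 1, 89, 2, 73, 1, 16, 1, 88, 2, 37, 1, 64, 1, 63, 1, 84, 4, 0, 7, 84,
   2, 89, 1, 87, 1, 88, 1, 17, 1, 63, 1, 44, 1, 0, 4, 84, 2, 89, 1, 71, 1, 35, 1]),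
    ([(3, 6), (2, 9), (1, 8), (0, 0)],
     [1, 0, 2, 2, 0, 4, 42, 1, 88, 2, 84, 1, 70, 1, 0, 3, 84, 1, 29, 1, 87, 1, 0, 3, 16, 1, 86, 1,
   84, 1, 4, 6, 42, 9022, 0, 5, 16, 1, 87, 1, 84, 2, 86, 1, 29, 1, 0, 9, 45, 1, 2, 1, 88, 2, 71,
   1, 37, 1, 87, 2, 59, 1, 70, 1, 84, 4, 0, 9, 22, 1, 44, 1, 88, 2, 59, 1, 1, 1, 73, 1, 86, 2, 84,
   4, 42, 1, 4, 13, 42, 9022, 4, 4, 36, 7618, 4, 27, 42, 9022, 4, 3, 7, 3198, 4, 0, 7, 3198, 0, 4,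
   63, 1, 86, 1, 16, 1, 84, 2, 0, 4, 87, 1, 63, 1, 29, 1, 84, 2]),
    ([(3, 10), (2, 9), (1, 8), (0, 0)],
     [1, 2, 2, 2, 0, 7, 87, 1, 70, 1, 88, 1, 85, 1, 1, 1, 44, 1, 84, 1, 0, 3, 87, 1, 84, 1, 71, 1,
   0, 3, 84, 1, 44, 1, 86, 1, 0, 3, 85, 1, 31, 1, 84, 1, 0, 5, 87, 1, 84, 2, 86, 1, 44, 1, 71, 1,
   0, 6, 87, 2, 85, 1, 73, 1, 84, 4, 71, 2, 59, 1, 0, 6, 85, 1, 73, 1, 59, 1, 86, 2, 84, 4, 44, 2,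
   0, 3, 84, 1, 88, 1, 63, 1, 0, 7, 88, 1, 85, 1, 31, 1, 44, 1, 63, 1, 84, 1, 86, 1, 0, 7, 87, 1,
   88, 1, 85, 1, 31, 1, 84, 1, 63, 1, 71, 1, 0, 7, 87, 1, 88, 1, 63, 1, 84, 1, 86, 1, 44, 1, 71,
   1, 0, 6, 84, 4, 88, 2, 85, 1, 73, 1, 63, 2, 59, 1, 0, 5, 88, 1, 63, 1, 84, 2, 86, 1, 44, 1, 0,
   5, 87, 1, 88, 1, 63, 1, 84, 2, 71, 1]),
    ([(2, 9), (1, 8), (0, 0)],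
     [1, 2, 2, 0, 4, 28, 7, 3198, 0, 3, 86, 1, 84, 1, 1, 1, 4, 14, 7, 3198, 4, 7, 7, 3198, 0, 4,
   84, 2, 44, 1, 86, 1, 1, 1, 0, 9, 45, 1, 84, 4, 79, 1, 59, 1, 0, 1, 86, 2, 35, 1, 85, 2, 71, 1,
   4, 1, 7, 3198, 0, 3, 87, 1, 21, 1, 84, 1, 4, 28, 20, 3250, 0, 4, 65, 1, 84, 1, 79, 1, 85, 2, 4,
   0, 7, 3198, 0, 9, 45, 1, 87, 2, 22, 1, 29, 1, 65, 1, 73, 1, 85, 2, 63, 1, 84, 4, 0, 4, 84, 2,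
   87, 1, 21, 1, 44, 1, 0, 9, 43, 1, 84, 4, 87, 2, 65, 1, 71, 1, 52, 1, 73, 1, 85, 2, 63, 1]),
    ([(2, 13), (1, 8), (0, 0)],
     [1, 2, 2, 2, 0, 4, 42, 1, 29, 1, 85, 2, 84, 1, 0, 3, 86, 1, 84, 1, 71, 1, 0, 4, 38, 1, 85, 2,
   84, 1, 44, 1, 0, 4, 45, 1, 84, 1, 85, 2, 37, 1, 0, 6, 44, 1, 86, 1, 84, 2, 38, 1, 71, 1, 85, 2,
   0, 9, 79, 1, 45, 1, 65, 1, 42, 1, 71, 1, 86, 1, 84, 4, 29, 1, 85, 4, 0, 4, 50, 1, 85, 2, 84, 2,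
   42, 1, 0, 3, 87, 1, 63, 1, 84, 1, 0, 4, 50, 1, 85, 2, 35, 1, 84, 1, 0, 8, 45, 1, 86, 1, 87, 1,
   37, 1, 63, 1, 85, 2, 84, 1, 71, 1, 0, 8, 71, 1, 86, 1, 87, 1, 38, 1, 63, 1, 84, 1, 85, 2, 44,
   1, 0, 6, 45, 1, 87, 1, 37, 1, 85, 2, 63, 1, 84, 2, 0, 6, 84, 2, 87, 1, 85, 2, 38, 1, 63, 1, 44,
   1, 0, 5, 86, 1, 84, 2, 87, 1, 63, 1, 71, 1]),
    ([(1, 8), (0, 0)],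
     [1, 0, 0, 2, 0, 3, 86, 1, 84, 1, 70, 1, 4, 55, 3, 8866, 4, 77, 29, 8866, 4, 77, 46, 8866, 0,
   4, 86, 1, 70, 1, 84, 2, 38, 1, 0, 4, 86, 1, 70, 1, 84, 2, 37, 1, 0, 5, 86, 1, 85, 1, 64, 1, 84,
   2, 70, 1, 4, 55, 0, 9022, 0, 3, 85, 1, 84, 1, 64, 1, 4, 1, 7, 3198, 4, 1, 23, 3198, 0, 4, 84,
   2, 85, 1, 37, 1, 64, 1, 0, 4, 84, 2, 85, 1, 64, 1, 38, 1, 4, 0, 7, 3198]),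
    ([(2, 12), (1, 11), (0, 0)],
     [1, 2, 2, 2, 0, 6, 86, 2, 45, 1, 72, 1, 85, 2, 84, 1, 1, 1, 0, 6, 86, 2, 38, 1, 85, 2, 84, 1,
   1, 1, 23, 1, 0, 4, 84, 1, 22, 1, 72, 1, 86, 2, 0, 9, 51, 1, 45, 1, 17, 1, 84, 1, 72, 1, 85, 4,
   64, 1, 63, 1, 86, 4, 0, 4, 86, 2, 84, 2, 72, 1, 71, 1, 0, 4, 45, 1, 85, 2, 84, 2, 43, 1, 0, 6,
   45, 1, 84, 2, 72, 1, 85, 2, 64, 1, 86, 2, 0, 3, 87, 1, 63, 1, 84, 1, 0, 8, 45, 1, 87, 1, 84, 1,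
   72, 1, 85, 2, 64, 1, 63, 1, 86, 2, 0, 6, 17, 1, 85, 2, 51, 1, 84, 1, 63, 1, 86, 2, 0, 6, 80, 1,
   86, 2, 84, 1, 30, 1, 85, 2, 63, 1, 0, 10, 51, 1, 45, 2, 87, 2, 59, 1, 84, 4, 72, 1, 85, 4, 64,
   1, 63, 3, 86, 4, 0, 8, 87, 1, 84, 2, 38, 1, 72, 1, 85, 2, 64, 1, 63, 1, 86, 2, 0, 9, 80, 1, 84,
   4, 87, 1, 51, 1, 86, 4, 21, 1, 65, 1, 63, 1, 71, 1]),
    ([(1, 11), (0, 0)],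
     [1, 0, 0, 2, 0, 3, 86, 1, 84, 1, 70, 1, 4, 56, 7, 7410, 4, 56, 15, 7410, 0, 5, 86, 1, 67, 2,
   85, 2, 84, 1, 70, 1, 0, 4, 70, 1, 86, 1, 38, 1, 84, 2, 0, 6, 70, 1, 86, 1, 22, 1, 65, 1, 84, 2,
   85, 2, 0, 6, 70, 1, 86, 1, 23, 1, 64, 1, 84, 2, 85, 2, 0, 4, 85, 2, 63, 1, 17, 1, 84, 1, 0, 4,
   23, 1, 64, 1, 85, 2, 84, 1, 0, 4, 65, 1, 84, 1, 85, 2, 22, 1, 4, 2, 39, 7410, 0, 4, 84, 2, 59,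
   1, 63, 1, 85, 2, 4, 0, 7, 3198, 4, 0, 15, 3198]),
    ([(0, 0)],
     [1, 0, 2, 0, 0, 3, 85, 1, 84, 1, 42, 1, 4, 56, 7, 3198, 4, 56, 15, 3198, 4, 56, 39, 3198, 0,
   4, 42, 1, 85, 1, 84, 2, 24, 1, 0, 4, 42, 1, 85, 1, 84, 2, 23, 1, 0, 4, 42, 1, 85, 1, 84, 2, 22,
   1, 4, 55, 7, 3198, 4, 2, 7, 3198, 4, 2, 15, 3198, 4, 2, 39, 3198, 4, 0, 7, 3198, 4, 0, 23,
   3198, 4, 0, 31, 3198]),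
    ([(1, 5), (0, 4)],
     [1, 0, 0, 2, 0, 8, 86, 4, 57, 1, 71, 1, 85, 4, 43, 1, 59, 2, 72, 2, 84, 2, 0, 8, 86, 4, 80,
   2, 70, 1, 85, 4, 65, 2, 84, 2, 42, 1, 56, 1, 0, 6, 86, 2, 72, 1, 17, 1, 85, 2, 43, 1, 84, 1, 0,
   6, 86, 2, 2, 1, 43, 1, 59, 1, 85, 2, 84, 1, 0, 4, 86, 2, 70, 1, 84, 2, 80, 1, 0, 4, 85, 2, 84,
   2, 65, 1, 56, 1, 0, 6, 86, 2, 85, 2, 43, 1, 59, 1, 84, 2, 72, 1, 4, 2, 0, 8866, 4, 2, 4, 8866,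
   0, 6, 86, 2, 10, 1, 85, 2, 65, 1, 84, 1, 42, 1, 0, 4, 86, 2, 80, 1, 84, 1, 0, 1, 0, 7, 86, 2,
   10, 1, 85, 2, 65, 1, 42, 1, 36, 1, 84, 2, 0, 7, 86, 2, 80, 1, 85, 2, 36, 1, 42, 1, 23, 1, 84,
   2, 0, 6, 86, 2, 85, 2, 80, 1, 65, 1, 42, 1, 84, 2]),
    ([(1, 11), (0, 4)],
     [1, 2, 2, 2, 0, 4, 17, 1, 70, 1, 84, 1, 85, 2, 0, 4, 23, 1, 71, 1, 84, 1, 85, 2, 0, 4, 72, 1,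
   22, 1, 84, 1, 85, 2, 0, 4, 86, 2, 59, 1, 0, 1, 84, 1, 0, 4, 70, 1, 84, 2, 80, 1, 85, 2, 0, 7,
   86, 2, 59, 1, 0, 1, 23, 1, 84, 2, 71, 1, 85, 2, 0, 7, 86, 2, 59, 1, 0, 1, 22, 1, 72, 1, 84, 2,
   85, 2, 0, 4, 86, 2, 10, 1, 63, 1, 84, 1, 0, 4, 86, 2, 2, 1, 84, 1, 64, 1, 0, 4, 86, 2, 1, 1,
   84, 1, 65, 1, 0, 4, 84, 1, 80, 1, 21, 1, 85, 2, 0, 4, 86, 2, 59, 1, 63, 1, 84, 2, 0, 7, 86, 2,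
   72, 1, 10, 1, 84, 2, 22, 1, 63, 1, 85, 2, 0, 7, 86, 2, 84, 2, 1, 1, 21, 1, 80, 1, 65, 1, 85,
   2]),
    ([(0, 4)],
     [1, 0, 2, 0, 0, 4, 85, 2, 10, 1, 84, 1, 42, 1, 0, 4, 85, 2, 43, 1, 84, 1, 2, 1, 0, 4, 85, 2,
   44, 1, 1, 1, 84, 1, 4, 3, 6, 3250, 0, 4, 85, 2, 84, 2, 52, 1, 42, 1, 4, 1, 3, 3198, 4, 1, 13,
   3198, 4, 3, 0, 3250, 4, 3, 4, 3250, 4, 3, 2, 3250, 0, 4, 85, 2, 52, 1, 84, 1, 0, 1, 4, 0, 1,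
   3198, 4, 1, 1, 3198, 4, 1, 9, 3198]),
    ([],
     [1, 2, 0, 0, 4, 3, 7, 3198, 4, 3, 3, 3198, 4, 3, 5, 3198, 4, 3, 6, 3198, 4, 0, 1, 3198, 4, 0,
   18, 3198, 4, 0, 28, 3198, 4, 3, 0, 3198, 4, 3, 4, 3198, 4, 3, 2, 3198, 4, 3, 1, 3198, 4, 0, 0,
   3198, 4, 0, 16, 3198, 4, 0, 24, 3198])
  ]

set_option maxRecDepth 100000 in
theorem checkAll_certI : checkAll contactsI certI [] = true := by decide +kernel

theorem refutedI : Refuted contactsI [] :=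
  checkAll_sound (ls := certI) (env := []) (by simp) checkAll_certI

set_option maxRecDepth 100000 in
theorem checkAll_certII : checkAll contactsII certII [] = true := by decide +kernel

theorem refutedII : Refuted contactsII [] :=
  checkAll_sound (ls := certII) (env := []) (by simp) checkAll_certII

/-! ### Admissible lattices and the penalized determinant -/

/-- The lattice point of `V ℤ³` with coordinates `z`. -/
noncomputable def pt (V : Matrix (Fin 3) (Fin 3) ℝ) (z : Fin 3 → ℤ) : Fin 3 → ℝ :=
  V.mulVec fun i => (z i : ℝ)

/-- Every nonzero point of the lattice `V ℤ³` has `N`-length at least one. -/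
def Admissible (N : (Fin 3 → ℝ) → ℝ) (V : Matrix (Fin 3) (Fin 3) ℝ) : Prop :=
  ∀ z : Fin 3 → ℤ, z ≠ 0 → 1 ≤ N (pt V z)

/-- Norms on `ℝ³`, with the constant `9` in the comparison with the maximum norm. -/
structure IsNorm (N : (Fin 3 → ℝ) → ℝ) : Prop where
  smul : ∀ (c : ℝ) x, N (c • x) = |c| * N x
  add_le : ∀ x y, N (x + y) ≤ N x + N y
  cont : Continuous N
  lower : ∀ x, ‖x‖ ≤ 9 * N x

/-- The unit sphere of `N` contains no segment. -/
def StrictlyConvexNorm (N : (Fin 3 → ℝ) → ℝ) : Prop :=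
  ∀ x y, N x = 1 → N y = 1 → x ≠ y → N (x + y) < 2

theorem IsNorm.nonneg {N : (Fin 3 → ℝ) → ℝ} (hN : IsNorm N) (x : Fin 3 → ℝ) : 0 ≤ N x := by
  have := hN.lower x; have := norm_nonneg x; linarith

theorem IsNorm.neg {N : (Fin 3 → ℝ) → ℝ} (hN : IsNorm N) (x : Fin 3 → ℝ) : N (-x) = N x := by
  have := hN.smul (-1) x; simpa using this

theorem pt_add (V : Matrix (Fin 3) (Fin 3) ℝ) (z w : Fin 3 → ℤ) :
    pt V (z + w) = pt V z + pt V w := by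
  simp only [pt, ← Matrix.mulVec_add]; congr 1; ext i; simp

theorem pt_neg (V : Matrix (Fin 3) (Fin 3) ℝ) (z : Fin 3 → ℤ) : pt V (-z) = -pt V z := by
  simp only [pt, ← Matrix.mulVec_neg]; congr 1; ext i; simp

theorem pt_smul (V : Matrix (Fin 3) (Fin 3) ℝ) (a : ℤ) (z : Fin 3 → ℤ) :
    pt V (a • z) = (a : ℝ) • pt V z := by
  simp only [pt, ← Matrix.mulVec_smul]; congr 1; ext i; simp

theorem pt_injective {V : Matrix (Fin 3) (Fin 3) ℝ} (hV : V.det ≠ 0) {z w : Fin 3 → ℤ}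
    (h : pt V z = pt V w) : z = w := by
  have := (Matrix.mulVec_injective_iff_isUnit.2 ((Matrix.isUnit_iff_isUnit_det V).2
    (isUnit_iff_ne_zero.2 hV))) h
  funext i
  exact_mod_cast congrFun this i

/-- The sum of the squares of the entries. -/
def sqSum (V : Matrix (Fin 3) (Fin 3) ℝ) : ℝ := ∑ i, ∑ j, V i j ^ 2

/-- The determinant, with a penalty for long basis vectors. -/
noncomputable def penalized (μ : ℝ) (V : Matrix (Fin 3) (Fin 3) ℝ) : ℝ :=
  |V.det| * Real.exp (μ * sqSum V)

theorem sqSum_nonneg (V : Matrix (Fin 3) (Fin 3) ℝ) : 0 ≤ sqSum V := by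
  unfold sqSum; positivity

theorem sq_le_sqSum (V : Matrix (Fin 3) (Fin 3) ℝ) (i j : Fin 3) : V i j ^ 2 ≤ sqSum V := by
  unfold sqSum
  refine le_trans ?_ (Finset.single_le_sum (f := fun i => ∑ j, V i j ^ 2)
    (fun i _ => by positivity) (Finset.mem_univ i))
  exact Finset.single_le_sum (f := fun j => V i j ^ 2) (fun i _ => by positivity)
    (Finset.mem_univ j)

theorem continuous_sqSum : Continuous sqSum := by
  unfold sqSum; fun_prop

theorem continuous_penalized (μ : ℝ) : Continuous (penalized μ) := by
  unfold penalized
  have := continuous_sqSum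
  have h2 : Continuous fun V : Matrix (Fin 3) (Fin 3) ℝ => V.det := Continuous.matrix_det continuous_id
  fun_prop

theorem isCompact_box (R : ℝ) :
    IsCompact {V : Matrix (Fin 3) (Fin 3) ℝ | ∀ i j, V i j ∈ Set.Icc (-R) R} := by
  have : {V : Matrix (Fin 3) (Fin 3) ℝ | ∀ i j, V i j ∈ Set.Icc (-R) R} =
      Set.pi Set.univ fun _ => Set.pi Set.univ fun _ => Set.Icc (-R) R := by
    ext V
    exact ⟨fun h i _ j _ => h i j, fun h i j => h i trivial j trivial⟩
  rw [this]
  exact isCompact_univ_pi fun _ => isCompact_univ_pi fun _ => isCompact_Icc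

theorem mem_box {V : Matrix (Fin 3) (Fin 3) ℝ} {R : ℝ} (h : sqSum V ≤ R) (i j : Fin 3) :
    V i j ∈ Set.Icc (-(R + 1)) (R + 1) := by
  have := sq_le_sqSum V i j
  constructor <;> nlinarith

theorem continuous_pt (z : Fin 3 → ℤ) : Continuous fun V => pt V z := by
  unfold pt
  exact Continuous.matrix_mulVec continuous_id continuous_const

theorem sqSum_le_of_penalized {μ : ℝ} {V : Matrix (Fin 3) (Fin 3) ℝ} {g : ℝ}
    (hdet : 200 ≤ |V.det|) (hg : penalized μ V ≤ g) : μ * sqSum V ≤ Real.log (g / 200) := by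
  have h0 : 0 < Real.exp (μ * sqSum V) := Real.exp_pos _
  have h1 : Real.exp (μ * sqSum V) ≤ g / 200 := by
    unfold penalized at hg
    rw [le_div_iff₀ (by norm_num)]; nlinarith
  rw [Real.le_log_iff_exp_le (lt_of_lt_of_le h0 h1)]
  exact h1

theorem exists_minimizer {N : (Fin 3 → ℝ) → ℝ} (hN : IsNorm N)
    (hlow : ∀ V, V.det ≠ 0 → Admissible N V → 200 ≤ |V.det|) {μ : ℝ} (hμ : 0 < μ)
    {B : Matrix (Fin 3) (Fin 3) ℝ} (hB : Admissible N B) (hdB : B.det ≠ 0) :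
    ∃ V, Admissible N V ∧ V.det ≠ 0 ∧ penalized μ V ≤ penalized μ B ∧
      ∀ W, Admissible N W → W.det ≠ 0 → penalized μ V ≤ penalized μ W := by
  set K : Set (Matrix (Fin 3) (Fin 3) ℝ) :=
    {V | Admissible N V ∧ 200 ≤ |V.det| ∧ penalized μ V ≤ penalized μ B}
  set R := Real.log (penalized μ B / 200) / μ
  have hdet : Continuous fun V : Matrix (Fin 3) (Fin 3) ℝ => V.det :=
    Continuous.matrix_det continuous_id
  have hclosed : IsClosed K := by
    have h1 : IsClosed {V | Admissible N V} := by
      simp only [Admissible, Set.ofPred_forall]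
      exact isClosed_iInter fun z => isClosed_iInter fun _ =>
        isClosed_le continuous_const (hN.cont.comp (continuous_pt z))
    exact h1.inter ((isClosed_le continuous_const hdet.abs).inter
      (isClosed_le (continuous_penalized μ) continuous_const))
  have hK : IsCompact K := by
    refine (isCompact_box (R + 1)).of_isClosed_subset hclosed fun V hV i j => mem_box ?_ i j
    rw [le_div_iff₀ hμ, mul_comm]
    exact sqSum_le_of_penalized hV.2.1 hV.2.2
  obtain ⟨V, hV, hmin⟩ := hK.exists_isMinOn ⟨B, hB, hlow B hdB hB, le_rfl⟩
    (continuous_penalized μ).continuousOn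
  have hV0 : V.det ≠ 0 := fun h0 => by
    have := hV.2.1
    rw [h0] at this; norm_num at this
  refine ⟨V, hV.1, hV0, hV.2.2, fun W hW hdW => ?_⟩
  rcases le_total (penalized μ W) (penalized μ B) with h | h
  · exact hmin ⟨hW, hlow W hdW hW, h⟩
  · exact hV.2.2.trans h

/-! ### A minimizer has contacts in six classes modulo two -/

theorem IsNorm.exists_support {N : (Fin 3 → ℝ) → ℝ} (hN : IsNorm N) (x : Fin 3 → ℝ) :
    ∃ f : (Fin 3 → ℝ) →ₗ[ℝ] ℝ, f x = N x ∧ ∀ y, f y ≤ N y := by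
  have hN0 : N 0 = 0 := by simpa using hN.smul 0 0
  by_cases hx : x = 0
  · exact ⟨0, by simp [hx, hN0], fun y => by simpa using hN.nonneg y⟩
  obtain ⟨g, hg1, hg2⟩ := exists_extension_of_le_sublinear
    (LinearPMap.mkSpanSingleton (K := ℝ) x (N x) hx) N
    (fun c hc y => by rw [hN.smul, abs_of_pos hc]) hN.add_le (by
      rintro ⟨y, hy⟩
      obtain ⟨c, rfl⟩ := Submodule.mem_span_singleton.1 hy
      refine (LinearPMap.mkSpanSingleton'_apply x (N x) _ c hy).le.trans ?_
      simp only [RingHom.id_apply, smul_eq_mul, hN.smul]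
      exact mul_le_mul_of_nonneg_right (le_abs_self c) (hN.nonneg x))
  refine ⟨g, ?_, hg2⟩
  rw [hg1 ⟨x, Submodule.mem_span_singleton_self x⟩]
  exact LinearPMap.mkSpanSingleton_apply ℝ ℝ hx (N x)

theorem IsNorm.exists_bound {N : (Fin 3 → ℝ) → ℝ} (hN : IsNorm N)
    (A : Matrix (Fin 3) (Fin 3) ℝ) : ∃ M, 0 ≤ M ∧ ∀ y, N (A.mulVec y) ≤ M * N y := by
  have hcol : ∀ j, 0 ≤ N (A.col j) := fun j => hN.nonneg _
  refine ⟨9 * (N (A.col 0) + N (A.col 1) + N (A.col 2)), by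
    have := hcol 0; have := hcol 1; have := hcol 2; positivity, fun y => ?_⟩
  have h1 : A.mulVec y = y 0 • A.col 0 + y 1 • A.col 1 + y 2 • A.col 2 := by
    ext i
    simp [Matrix.mulVec, dotProduct, Fin.sum_univ_three, Matrix.col_apply]
    ring
  have hy : ∀ j, |y j| ≤ 9 * N y := fun j => (norm_le_pi_norm y j).trans (hN.lower y)
  rw [h1]
  refine (hN.add_le _ _).trans ?_
  refine (add_le_add_left (hN.add_le _ _) _).trans ?_
  rw [hN.smul, hN.smul, hN.smul]
  nlinarith [mul_le_mul_of_nonneg_right (hy 0) (hcol 0), mul_le_mul_of_nonneg_right (hy 1) (hcol 1),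
    mul_le_mul_of_nonneg_right (hy 2) (hcol 2)]

theorem finite_short {N : (Fin 3 → ℝ) → ℝ} (hN : IsNorm N) {V : Matrix (Fin 3) (Fin 3) ℝ}
    (hV : V.det ≠ 0) (R : ℝ) : {z : Fin 3 → ℤ | N (pt V z) ≤ R}.Finite := by
  obtain ⟨M, hM, hb⟩ := hN.exists_bound V⁻¹
  have key : ∀ z : Fin 3 → ℤ, N (pt V z) ≤ R → ∀ i, |(z i : ℝ)| ≤ 9 * (M * R) := by
    intro z hz i
    have h1 := hb (pt V z)
    rw [pt, Matrix.mulVec_mulVec, Matrix.nonsing_inv_mul _ (isUnit_iff_ne_zero.2 hV),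
      Matrix.one_mulVec] at h1
    have h2 := (norm_le_pi_norm (fun i => (z i : ℝ)) i).trans (hN.lower _)
    rw [Real.norm_eq_abs] at h2
    have h3 := mul_le_mul_of_nonneg_left hz hM
    exact h2.trans (by gcongr; exact h1.trans h3)
  refine (Set.finite_Icc (fun _ => -⌈9 * (M * R)⌉) (fun _ => ⌈9 * (M * R)⌉)).subset fun z hz => ?_
  have h1 := fun i => abs_le.1 ((key z hz i).trans (Int.le_ceil _))
  exact ⟨fun i => by exact_mod_cast (h1 i).1, fun i => by exact_mod_cast (h1 i).2⟩

/-- Points of an admissible lattice that are not on the unit sphere stay away from it. -/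
theorem exists_gap {N : (Fin 3 → ℝ) → ℝ} (hN : IsNorm N) {V : Matrix (Fin 3) (Fin 3) ℝ}
    (hV : V.det ≠ 0) (hadm : Admissible N V) :
    ∃ δ > 0, ∀ z, z ≠ 0 → N (pt V z) ≠ 1 → 1 + δ ≤ N (pt V z) := by
  set F := {z : Fin 3 → ℤ | N (pt V z) ≤ 2} ∩ {z | z ≠ 0 ∧ N (pt V z) ≠ 1}
  have hF : F.Finite := (finite_short hN hV 2).inter_of_left _
  rcases F.eq_empty_or_nonempty with h0 | h0
  · refine ⟨1, one_pos, fun z hz h1 => ?_⟩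
    by_contra hlt
    have : z ∈ F := ⟨show N (pt V z) ≤ 2 by linarith, hz, h1⟩
    rw [h0] at this; exact this
  · obtain ⟨w, hw, hmin⟩ := Set.exists_min_image F (fun z => N (pt V z)) hF h0
    have hw1 : 1 < N (pt V w) := lt_of_le_of_ne (hadm w hw.2.1) (Ne.symm hw.2.2)
    refine ⟨N (pt V w) - 1, by linarith, fun z hz h1 => ?_⟩
    by_cases h2 : N (pt V z) ≤ 2
    · have := hmin z ⟨h2, hz, h1⟩; linarith
    · have : N (pt V w) ≤ 2 := hw.1
      linarith

/-- The symmetric matrix with the given six entries. -/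
def symMat : (Fin 6 → ℝ) →ₗ[ℝ] Matrix (Fin 3) (Fin 3) ℝ where
  toFun a := !![a 0, a 1, a 2; a 1, a 3, a 4; a 2, a 4, a 5]
  map_add' a b := by ext i j; fin_cases i <;> fin_cases j <;> simp
  map_smul' c a := by ext i j; fin_cases i <;> fin_cases j <;> simp

theorem sqSum_symMat_pos {a : Fin 6 → ℝ} (ha : a ≠ 0) : 0 < sqSum (symMat a) := by
  obtain ⟨i, hi⟩ := Function.ne_iff.1 ha
  have hi' : 0 < a i ^ 2 := by simp at hi; positivity
  have : sqSum (symMat a) =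
    a 0 ^ 2 + 2 * a 1 ^ 2 + 2 * a 2 ^ 2 + a 3 ^ 2 + 2 * a 4 ^ 2 + a 5 ^ 2 := by
    simp [sqSum, symMat, Fin.sum_univ_three]; ring
  rw [this]
  have := sq_nonneg (a 0); have := sq_nonneg (a 1); have := sq_nonneg (a 2)
  have := sq_nonneg (a 3); have := sq_nonneg (a 4); have := sq_nonneg (a 5)
  fin_cases i <;> simp at hi' <;> linarith

theorem sqSum_mul_le (V X : Matrix (Fin 3) (Fin 3) ℝ) : sqSum (V * X) ≤ sqSum V * sqSum X := by
  have h : ∀ i j, (V * X) i j ^ 2 ≤ (∑ k, V i k ^ 2) * ∑ k, X k j ^ 2 := fun i j => by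
    rw [Matrix.mul_apply]
    exact Finset.sum_mul_sq_le_sq_mul_sq _ _ _
  calc sqSum (V * X) ≤ ∑ i, ∑ j, (∑ k, V i k ^ 2) * ∑ k, X k j ^ 2 :=
        Finset.sum_le_sum fun i _ => Finset.sum_le_sum fun j _ => h i j
    _ = sqSum V * sqSum X := by
        unfold sqSum
        rw [Finset.sum_comm (f := fun i j => X i j ^ 2), Finset.sum_mul_sum]

theorem sqSum_add_sub (V Y : Matrix (Fin 3) (Fin 3) ℝ) :
    sqSum (V + Y) + sqSum (V - Y) = 2 * sqSum V + 2 * sqSum Y := by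
  simp [sqSum, Fin.sum_univ_three]; ring

/-- The first-order loss of `det (1 + t X) det (1 - t X)` in `s = t²` exceeds the first-order gain
of the penalty. -/
theorem eventually_det_lt {a : Fin 6 → ℝ} {b : ℝ} (hb : b < sqSum (symMat a)) :
    ∀ᶠ s in nhdsWithin (0 : ℝ) (Set.Ioi 0),
      (1 - s • (symMat a * symMat a)).det * Real.exp (s * b) < 1 := by
  set p := sqSum (symMat a)
  set Y := symMat a * symMat a with hY
  obtain ⟨c, d, hdet⟩ : ∃ c d : ℝ, ∀ s : ℝ, (1 - s • Y).det = 1 - s * p + s ^ 2 * c + s ^ 3 * d := by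
    refine ⟨Y 0 0 * Y 1 1 - Y 0 1 * Y 1 0 + Y 0 0 * Y 2 2 - Y 0 2 * Y 2 0 + Y 1 1 * Y 2 2
      - Y 1 2 * Y 2 1, -Y.det, fun s => ?_⟩
    have hp : p = Y 0 0 + Y 1 1 + Y 2 2 := by
      simp [p, sqSum, hY, symMat, Fin.sum_univ_three]; ring
    rw [hp]
    simp [Matrix.det_fin_three]
    ring
  simp only [hdet]
  have hder : HasDerivAt (fun s : ℝ => (1 - s * p + s ^ 2 * c + s ^ 3 * d) * Real.exp (s * b))
      (b - p) 0 := by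
    have h1 : HasDerivAt (fun s : ℝ => 1 - s * p + s ^ 2 * c + s ^ 3 * d) (-p) 0 := by
      have := ((((hasDerivAt_id' (0 : ℝ)).mul_const p).const_sub 1).fun_add
        (((hasDerivAt_pow 2 (0 : ℝ))).mul_const c)).fun_add ((hasDerivAt_pow 3 (0 : ℝ)).mul_const d)
      exact this.congr_deriv (by simp)
    have h2 : HasDerivAt (fun s : ℝ => Real.exp (s * b)) b 0 := by
      have := ((hasDerivAt_id (0 : ℝ)).mul_const b).exp
      simpa using this
    exact (h1.fun_mul h2).congr_deriv (by simp; ring)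
  have hs := (hasDerivAt_iff_tendsto_slope.1 hder).eventually_lt_const
    (show b - p < 0 by linarith)
  have hs' := hs.filter_mono (nhdsWithin_mono (0 : ℝ) (fun x (hx : x ∈ Set.Ioi 0) => ne_of_gt hx))
  filter_upwards [hs', self_mem_nhdsWithin] with s h1 h2
  have h2' : (0 : ℝ) < s := h2
  rw [slope_def_field] at h1
  simp at h1
  by_contra hge
  have : 0 ≤ ((1 - s * p + s ^ 2 * c + s ^ 3 * d) * Real.exp (s * b) - 1) / s :=
    div_nonneg (by linarith) h2'.le
  linarith

/-- A minimizer of the penalized determinant cannot have all its contacts among five pairs `±z`: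
otherwise there is a symmetric `X ≠ 0` such that `V (1 ± t X)` is admissible for small `t`. -/
theorem five_contacts_false {N : (Fin 3 → ℝ) → ℝ} (hN : IsNorm N) {μ : ℝ} (hμ : 0 < μ)
    {V : Matrix (Fin 3) (Fin 3) ℝ} (hadm : Admissible N V) (hdet : V.det ≠ 0)
    (hmin : ∀ W, Admissible N W → W.det ≠ 0 → penalized μ V ≤ penalized μ W)
    (hμV : μ * sqSum V < 1 / 2) (S : Finset (Fin 3 → ℤ)) (hcard : S.card ≤ 5)
    (hS : ∀ z ∈ S, N (pt V z) = 1) (hall : ∀ z, N (pt V z) = 1 → z ∈ S ∨ -z ∈ S) : False := by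
  choose φ hφ1 hφ2 using fun z : S => hN.exists_support (pt V z)
  let L : (Fin 6 → ℝ) →ₗ[ℝ] (S → ℝ) := LinearMap.pi fun z =>
    φ z ∘ₗ V.mulVecLin ∘ₗ ((Matrix.mulVecBilin ℝ ℝ).flip fun i => (z.1 i : ℝ)) ∘ₗ symMat
  have hker : LinearMap.ker L ≠ ⊥ := by
    apply LinearMap.ker_ne_bot_of_finrank_lt
    simp
    omega
  obtain ⟨a, haL, ha⟩ := Submodule.exists_mem_ne_zero_of_ne_bot hker
  set X := symMat a with hX
  have hL : ∀ z : S, φ z (V.mulVec (X.mulVec fun i => (z.1 i : ℝ))) = 0 := fun z =>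
    congrFun (LinearMap.mem_ker.1 haL) z
  obtain ⟨M, hM, hbM⟩ := hN.exists_bound (V * X * V⁻¹)
  have hM' : ∀ z, N (V.mulVec (X.mulVec fun i => (z i : ℝ))) ≤ M * N (pt V z) := by
    intro z
    have := hbM (pt V z)
    rwa [pt, Matrix.mulVec_mulVec, Matrix.nonsing_inv_mul_cancel_right _ _
      (isUnit_iff_ne_zero.2 hdet), ← Matrix.mulVec_mulVec] at this
  obtain ⟨δ, hδ, hgap⟩ := exists_gap hN hdet hadm
  have hexp : ∀ (τ : ℝ) (z : Fin 3 → ℤ), pt (V * (1 + τ • X)) z =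
      pt V z + τ • V.mulVec (X.mulVec fun i => (z i : ℝ)) := by
    intro τ z
    simp only [pt, Matrix.mul_add, Matrix.mul_one, Matrix.add_mulVec, Matrix.mul_smul,
      Matrix.smul_mulVec, Matrix.mulVec_mulVec]
  have hadm' : ∀ τ : ℝ, |τ| * (M * (1 + δ)) ≤ δ → Admissible N (V * (1 + τ • X)) := by
    intro τ hτ z hz
    have hcontact : ∀ z ∈ S, 1 ≤ N (pt (V * (1 + τ • X)) z) := fun z hz => by
      refine le_trans ?_ (hφ2 ⟨z, hz⟩ _)
      rw [hexp, map_add, map_smul, hφ1, hL ⟨z, hz⟩, hS z hz]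
      simp
    by_cases h1 : N (pt V z) = 1
    · rcases hall z h1 with h | h
      · exact hcontact z h
      · have := hcontact _ h
        rwa [pt_neg, hN.neg] at this
    · have h2 := hgap z hz h1
      have h3 := hM' z
      have h4 : N (pt V z) ≤ N (pt (V * (1 + τ • X)) z) +
          |τ| * N (V.mulVec (X.mulVec fun i => (z i : ℝ))) := by
        have := hN.add_le (pt (V * (1 + τ • X)) z)
          (-(τ • V.mulVec (X.mulVec fun i => (z i : ℝ))))
        rw [hN.neg, hN.smul] at this
        rwa [hexp, add_neg_cancel_right, ← hexp] at this
      have h5 : |τ| * N (V.mulVec (X.mulVec fun i => (z i : ℝ))) ≤ |τ| * (M * N (pt V z)) :=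
        mul_le_mul_of_nonneg_left h3 (abs_nonneg τ)
      -- `N (V z) (1 - |τ| M) ≥ (1 + δ) (1 - |τ| M) ≥ 1`
      have h6 : 0 ≤ 1 - |τ| * M := by
        by_contra hneg
        have := abs_nonneg τ
        nlinarith
      nlinarith
  have hb : 2 * μ * sqSum (V * X) < sqSum X := by
    have h1 := sqSum_mul_le V X
    have h2 := sqSum_symMat_pos ha
    rw [← hX] at h2
    nlinarith
  have hev1 := eventually_det_lt hb
  have hsq : Filter.Tendsto (fun t : ℝ => t ^ 2) (nhdsWithin 0 (Set.Ioi 0))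
      (nhdsWithin 0 (Set.Ioi 0)) := by
    refine tendsto_nhdsWithin_of_tendsto_nhds_of_eventually_within _ ?_ ?_
    · have : Filter.Tendsto (fun t : ℝ => t ^ 2) (nhds 0) (nhds (0 ^ 2)) :=
        (continuous_pow 2).tendsto 0
      simpa using this.mono_left nhdsWithin_le_nhds
    · filter_upwards [self_mem_nhdsWithin] with t ht
      exact pow_pos (Set.mem_Ioi.1 ht) 2
  have hev2 : ∀ᶠ t in nhdsWithin (0 : ℝ) (Set.Ioi 0), |t| * (M * (1 + δ)) < δ := by
    have : Filter.Tendsto (fun t : ℝ => |t| * (M * (1 + δ))) (nhds 0)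
        (nhds (|0| * (M * (1 + δ)))) := (continuous_abs.mul continuous_const).tendsto 0
    refine (this.mono_left nhdsWithin_le_nhds).eventually_lt_const ?_
    simpa using hδ
  have hev3 : ∀ᶠ t in nhdsWithin (0 : ℝ) (Set.Ioi 0), 0 < (1 - t ^ 2 • (X * X)).det := by
    have hc : Continuous fun t : ℝ => (1 - t ^ 2 • (X * X)).det :=
      Continuous.matrix_det (by fun_prop)
    refine ((hc.tendsto 0).mono_left nhdsWithin_le_nhds).eventually_const_lt ?_
    simp
  obtain ⟨t, ht1, ht2, ht3⟩ := ((hsq.eventually hev1).and (hev2.and hev3)).exists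
  have hprod : (1 + t • X).det * (1 + (-t) • X).det = (1 - t ^ 2 • (X * X)).det := by
    rw [← Matrix.det_mul]
    congr 1
    simp only [neg_smul, Matrix.add_mul, Matrix.mul_add, Matrix.one_mul, Matrix.mul_one,
      Matrix.mul_neg, Matrix.smul_mul, Matrix.mul_smul]
    module
  have hne : (1 + t • X).det * (1 + (-t) • X).det ≠ 0 := by rw [hprod]; exact ht3.ne'
  have g1 := hmin _ (hadm' t ht2.le) (by
    rw [Matrix.det_mul]; exact mul_ne_zero hdet (left_ne_zero_of_mul hne))
  have g2 := hmin _ (hadm' (-t) (by rw [abs_neg]; exact ht2.le)) (by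
    rw [Matrix.det_mul]; exact mul_ne_zero hdet (right_ne_zero_of_mul hne))
  have hpos : 0 < penalized μ V := mul_pos (abs_pos.2 hdet) (Real.exp_pos _)
  have g3 := mul_le_mul g1 g2 hpos.le (hpos.le.trans g1)
  have hS2 : sqSum (V * (1 + t • X)) + sqSum (V * (1 + (-t) • X)) =
      2 * sqSum V + 2 * (t ^ 2 * sqSum (V * X)) := by
    have h1 := sqSum_add_sub V (t • (V * X))
    have h2 : sqSum (t • (V * X)) = t ^ 2 * sqSum (V * X) := by
      simp only [sqSum, Matrix.smul_apply, smul_eq_mul, mul_pow, Finset.mul_sum]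
    rw [h2] at h1
    rw [← h1]
    simp [Matrix.mul_add, sub_eq_add_neg]
  have g4 : penalized μ (V * (1 + t • X)) * penalized μ (V * (1 + (-t) • X)) =
      penalized μ V * penalized μ V *
        ((1 - t ^ 2 • (X * X)).det * Real.exp (t ^ 2 * (2 * μ * sqSum (V * X)))) := by
    rw [← abs_of_pos ht3, ← hprod, abs_mul]
    simp only [penalized, Matrix.det_mul, abs_mul]
    have : Real.exp (μ * sqSum (V * (1 + t • X))) * Real.exp (μ * sqSum (V * (1 + (-t) • X))) =
        Real.exp (μ * sqSum V) * Real.exp (μ * sqSum V) *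
          Real.exp (t ^ 2 * (2 * μ * sqSum (V * X))) := by
      rw [← Real.exp_add, ← Real.exp_add, ← Real.exp_add, ← mul_add, hS2]
      congr 1; ring
    linear_combination (|V.det| * |V.det| * |(1 + t • X).det| * |(1 + (-t) • X).det|) * this
  rw [g4] at g3
  have := mul_pos hpos hpos
  nlinarith

section Contacts

/-! ### Arithmetic of contacts -/

theorem pt_mul (V : Matrix (Fin 3) (Fin 3) ℝ) (P : Matrix (Fin 3) (Fin 3) ℤ) (z : Fin 3 → ℤ) :
    pt (V * P.map (Int.cast : ℤ → ℝ)) z = pt V (P.mulVec z) := by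
  simp only [pt, ← Matrix.mulVec_mulVec]
  congr 1
  ext i
  simp [Matrix.mulVec, dotProduct]

theorem pt_mulVec (V : Matrix (Fin 3) (Fin 3) ℝ) (Z : Matrix (Fin 3) (Fin 3) ℤ) (a : Fin 3 → ℤ) :
    pt V (Z.mulVec a) = (a 0 : ℝ) • pt V (Z.col 0) + (a 1 : ℝ) • pt V (Z.col 1) +
      (a 2 : ℝ) • pt V (Z.col 2) := by
  have : Z.mulVec a = a 0 • Z.col 0 + a 1 • Z.col 1 + a 2 • Z.col 2 := by
    ext i
    simp [Matrix.mulVec, dotProduct, Fin.sum_univ_three]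
    ring
  rw [this, pt_add, pt_add, pt_smul, pt_smul, pt_smul]

theorem det_map_cast (P : Matrix (Fin 3) (Fin 3) ℤ) :
    (P.map (Int.cast : ℤ → ℝ)).det = (P.det : ℝ) := by
  have := (Int.castRingHom ℝ).map_det P
  simpa using this.symm

theorem Admissible.mul {N : (Fin 3 → ℝ) → ℝ} {V : Matrix (Fin 3) (Fin 3) ℝ} (h : Admissible N V)
    {P : Matrix (Fin 3) (Fin 3) ℤ} (hP : P.det ≠ 0) :
    Admissible N (V * P.map (Int.cast : ℤ → ℝ)) := by
  intro z hz
  rw [pt_mul]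
  refine h _ fun h0 => hz ?_
  by_contra hz
  exact hP (Matrix.exists_mulVec_eq_zero_iff.1 ⟨z, hz, h0⟩)

theorem hadamard_le (M : Matrix (Fin 3) (Fin 3) ℝ) {R : ℝ}
    (h : ∀ j, M 0 j ^ 2 + M 1 j ^ 2 + M 2 j ^ 2 ≤ R) : M.det ^ 2 ≤ R ^ 3 := by
  have key : M.det ^ 2 ≤ (M 0 0 ^ 2 + M 1 0 ^ 2 + M 2 0 ^ 2) *
      ((M 0 1 ^ 2 + M 1 1 ^ 2 + M 2 1 ^ 2) * (M 0 2 ^ 2 + M 1 2 ^ 2 + M 2 2 ^ 2)) := by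
    set p := M 1 1 * M 2 2 - M 2 1 * M 1 2 with hp
    set q := M 2 1 * M 0 2 - M 0 1 * M 2 2 with hq
    set r := M 0 1 * M 1 2 - M 1 1 * M 0 2 with hr
    have h1 : M.det = M 0 0 * p + M 1 0 * q + M 2 0 * r := by
      rw [Matrix.det_fin_three]; ring
    have h2 : M.det ^ 2 ≤ (M 0 0 ^ 2 + M 1 0 ^ 2 + M 2 0 ^ 2) * (p ^ 2 + q ^ 2 + r ^ 2) := by
      rw [h1]
      nlinarith [sq_nonneg (M 0 0 * q - M 1 0 * p), sq_nonneg (M 0 0 * r - M 2 0 * p),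
        sq_nonneg (M 1 0 * r - M 2 0 * q)]
    refine h2.trans (mul_le_mul_of_nonneg_left ?_ (by positivity))
    rw [hp, hq, hr]
    nlinarith [sq_nonneg (M 0 1 * M 0 2 + M 1 1 * M 1 2 + M 2 1 * M 2 2)]
  have h3 := h 0; have h4 := h 1; have h5 := h 2
  have : (0 : ℝ) ≤ M 0 0 ^ 2 + M 1 0 ^ 2 + M 2 0 ^ 2 := by positivity
  have : (0 : ℝ) ≤ M 0 1 ^ 2 + M 1 1 ^ 2 + M 2 1 ^ 2 := by positivity
  have : (0 : ℝ) ≤ M 0 2 ^ 2 + M 1 2 ^ 2 + M 2 2 ^ 2 := by positivity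
  calc M.det ^ 2 ≤ _ := key
    _ ≤ R * (R * R) := by gcongr <;> linarith
    _ = R ^ 3 := by ring

/-- The standing assumptions on a lattice: a strictly convex norm whose unit ball lies in a
Euclidean ball of squared radius `90`, and an admissible lattice of determinant at least `200`. -/
structure Setting (N : (Fin 3 → ℝ) → ℝ) (V : Matrix (Fin 3) (Fin 3) ℝ) : Prop where
  norm : IsNorm N
  strict : StrictlyConvexNorm N
  ball : ∀ x, N x ≤ 1 → x 0 ^ 2 + x 1 ^ 2 + x 2 ^ 2 ≤ 90
  adm : Admissible N V
  det : 200 ≤ |V.det|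

/-- Lattice points on the unit sphere. -/
def Contact (N : (Fin 3 → ℝ) → ℝ) (V : Matrix (Fin 3) (Fin 3) ℝ) (z : Fin 3 → ℤ) : Prop :=
  N (pt V z) = 1

variable {N : (Fin 3 → ℝ) → ℝ} {V : Matrix (Fin 3) (Fin 3) ℝ}

theorem Setting.det_ne (h : Setting N V) : V.det ≠ 0 := by
  have := h.det
  intro h0
  rw [h0] at this
  norm_num at this

theorem Setting.eq_zero (h : Setting N V) {z : Fin 3 → ℤ} (hz : N (pt V z) < 1) : z = 0 := by
  by_contra h0
  exact absurd (h.adm z h0) (not_le.2 hz)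

theorem Setting.neg (h : Setting N V) {z : Fin 3 → ℤ} (hz : Contact N V z) :
    Contact N V (-z) := by
  unfold Contact
  rw [pt_neg, h.norm.neg]
  exact hz

theorem Setting.contact_ne_zero (h : Setting N V) {z : Fin 3 → ℤ} (hz : Contact N V z) :
    z ≠ 0 := by
  rintro rfl
  have h1 : pt V 0 = 0 := by
    have := pt_smul V 0 0
    simpa using this
  have h2 : N 0 = 0 := by simpa using h.norm.smul 0 0
  unfold Contact at hz
  rw [h1, h2] at hz
  norm_num at hz

theorem Setting.contact_odd (h : Setting N V) {z w : Fin 3 → ℤ} (hz : Contact N V z)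
    (hw : z = (2 : ℤ) • w) : False := by
  have h1 := h.norm.smul 2 (pt V w)
  have h2 : pt V z = (2 : ℝ) • pt V w := by rw [hw, pt_smul]; norm_num
  rw [← h2, show N (pt V z) = 1 from hz] at h1
  norm_num at h1
  have : w = 0 := h.eq_zero (by linarith)
  exact h.contact_ne_zero hz (by rw [hw, this]; simp)

/-- By strict convexity, the contacts in a class modulo two are unique up to sign. -/
theorem Setting.contact_congr (h : Setting N V) {z w u : Fin 3 → ℤ} (hz : Contact N V z)
    (hw : Contact N V w) (hu : z = w + (2 : ℤ) • u) : z = w ∨ z = -w := by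
  by_cases hzw : z = w
  · exact Or.inl hzw
  right
  have h1 := h.strict _ _ hz hw fun h0 => hzw (pt_injective h.det_ne h0)
  rw [← pt_add, show z + w = (2 : ℤ) • (u + w) by rw [hu, smul_add, two_smul ℤ w]; abel,
    pt_smul, h.norm.smul] at h1
  norm_num at h1
  have : u + w = 0 := h.eq_zero (by linarith)
  rw [hu, eq_neg_of_add_eq_zero_left this, two_smul]
  abel

/-- Three contacts that are independent modulo two form a basis: the index is odd, it is less than
five by Hadamard's inequality, and index three contradicts strict convexity. -/
theorem Setting.abs_det_eq_one (h : Setting N V) {Z : Matrix (Fin 3) (Fin 3) ℤ}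
    (hc : ∀ j, Contact N V (Z.col j)) (hodd : Odd Z.det) : |Z.det| = 1 := by
  have h1 : (V.det * Z.det) ^ 2 ≤ 90 ^ 3 := by
    have := hadamard_le (V * Z.map (Int.cast : ℤ → ℝ)) (R := 90) (fun j => by
      have h1 := h.ball (pt V (Z.col j)) (hc j).le
      exact h1)
    rwa [Matrix.det_mul, det_map_cast] at this
  have h2 : |Z.det| < 5 := by
    by_contra h5
    push Not at h5
    have h6 : (5 : ℝ) ≤ |(Z.det : ℝ)| := by exact_mod_cast h5
    have h7 := h.det
    have h8 : (1000 : ℝ) ≤ |V.det * Z.det| := by rw [abs_mul]; nlinarith [abs_nonneg V.det]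
    rw [← sq_abs] at h1
    nlinarith
  have hZ0 : Z.det ≠ 0 := by rintro h0; rw [h0] at hodd; exact absurd hodd (by decide)
  by_contra hne
  have h3 : (3 : ℤ) ∣ Z.det := by
    obtain ⟨k, hk⟩ := hodd
    rw [abs_lt] at h2
    have h3 : Z.det = 3 ∨ Z.det = -3 := by
      rcases abs_cases Z.det with ⟨h4, h5⟩ | ⟨h4, h5⟩ <;> omega
    rcases h3 with h3 | h3 <;> rw [h3] <;> decide
  have : Fact (Nat.Prime 3) := ⟨by norm_num⟩
  have h4 : (Z.map (Int.cast : ℤ → ZMod 3)).det = 0 := by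
    have := (Int.castRingHom (ZMod 3)).map_det Z
    rw [(ZMod.intCast_zmod_eq_zero_iff_dvd Z.det 3).2 (by exact_mod_cast h3)|> fun h => (show
      (Int.castRingHom (ZMod 3)) Z.det = 0 from h)] at this
    exact this.symm
  obtain ⟨v, hv0, hv⟩ := Matrix.exists_mulVec_eq_zero_iff.2 h4
  set a : Fin 3 → ℤ := fun i => (v i).valMinAbs with ha
  have ha1 : ∀ i, |a i| ≤ 1 := fun i => by
    have : ∀ x : ZMod 3, |x.valMinAbs| ≤ 1 := by decide
    exact this (v i)
  have ha0 : a ≠ 0 := fun h0 => hv0 (by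
    ext i
    have := congrFun h0 i
    rw [← ZMod.coe_valMinAbs (v i)]
    simp only [ha, Pi.zero_apply] at this
    rw [this]; simp)
  have hdvd : ∀ i, (3 : ℤ) ∣ Z.mulVec a i := fun i => by
    have h5 := congrFun hv i
    have h6 : ((Z.mulVec a i : ℤ) : ZMod 3) = 0 := by
      simpa [Matrix.mulVec, dotProduct, ha] using h5
    exact_mod_cast (ZMod.intCast_zmod_eq_zero_iff_dvd _ 3).1 h6
  choose w hw using hdvd
  have hZw : Z.mulVec a = (3 : ℤ) • w := by ext i; simp [hw]
  have hZa : Z.mulVec a ≠ 0 := fun h0 => hZ0 (Matrix.exists_mulVec_eq_zero_iff.1 ⟨a, ha0, h0⟩)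
  have hw0 : w ≠ 0 := by rintro rfl; exact hZa (by simpa using hZw)
  have h5 := congrArg N (pt_mulVec V Z a)
  rw [hZw, pt_smul, h.norm.smul] at h5
  have h6 := h.adm w hw0
  -- the first two summands contribute less than two
  have h7 : N ((a 0 : ℝ) • pt V (Z.col 0) + (a 1 : ℝ) • pt V (Z.col 1)) < 2 := by
    have hs : ∀ j, a j ≠ 0 → Contact N V (a j • Z.col j) := fun j hj => by
      have h8 := ha1 j
      have h9 : a j = 1 ∨ a j = -1 := by rw [abs_le] at h8; omega
      rcases h9 with h9 | h9 <;> rw [h9]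
      · simpa using hc j
      · simpa using h.neg (hc j)
    have hle : ∀ j, N ((a j : ℝ) • pt V (Z.col j)) ≤ 1 := fun j => by
      rw [h.norm.smul, show N (pt V (Z.col j)) = 1 from hc j, mul_one]
      exact_mod_cast ha1 j
    have hz : ∀ j, a j = 0 → N ((a j : ℝ) • pt V (Z.col j)) = 0 := fun j hj => by
      rw [h.norm.smul, hj]; simp
    have h8 := h.norm.add_le ((a 0 : ℝ) • pt V (Z.col 0)) ((a 1 : ℝ) • pt V (Z.col 1))
    by_cases h10 : a 0 = 0
    · have := hz 0 h10; have := hle 1; linarith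
    by_cases h11 : a 1 = 0
    · have := hz 1 h11; have := hle 0; linarith
    rw [← pt_smul, ← pt_smul]
    refine h.strict _ _ (hs 0 h10) (hs 1 h11) fun h12 => hZ0 ?_
    have h13 := pt_injective h.det_ne h12
    refine Matrix.exists_mulVec_eq_zero_iff.1 ⟨![a 0, -a 1, 0], fun h0 => h10 (by
      simpa using congrFun h0 0), ?_⟩
    ext i
    have := congrFun h13 i
    simp [Matrix.mulVec, dotProduct, Fin.sum_univ_three] at this ⊢
    linarith
  have h8 := h.norm.add_le ((a 0 : ℝ) • pt V (Z.col 0) + (a 1 : ℝ) • pt V (Z.col 1))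
    ((a 2 : ℝ) • pt V (Z.col 2))
  have h9 : N ((a 2 : ℝ) • pt V (Z.col 2)) ≤ 1 := by
    rw [h.norm.smul, show N (pt V (Z.col 2)) = 1 from hc 2, mul_one]
    exact_mod_cast ha1 2
  have h10 : |((3 : ℤ) : ℝ)| = 3 := by norm_num
  rw [h10] at h5
  linarith

/-- Reduction modulo two. -/
def cls (z : Fin 3 → ℤ) : Fin 3 → ZMod 2 := fun i => (z i : ZMod 2)

theorem eq_add_two_smul {z w : Fin 3 → ℤ} (h : cls z = cls w) : ∃ u, z = w + (2 : ℤ) • u := by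
  have : ∀ i, ∃ u, z i = w i + 2 * u := fun i => by
    have := (ZMod.intCast_eq_intCast_iff_dvd_sub _ _ 2).1 (congrFun h i).symm
    obtain ⟨u, hu⟩ := this
    exact ⟨u, by push_cast at hu; linarith⟩
  choose u hu using this
  exact ⟨u, by ext i; simp [hu]⟩

/-- All nonzero classes modulo two, except possibly one, contain contacts of a minimizer. -/
theorem Setting.exists_missing_class (h : Setting N V) {μ : ℝ} (hμ : 0 < μ)
    (hmin : ∀ W, Admissible N W → W.det ≠ 0 → penalized μ V ≤ penalized μ W)
    (hμV : μ * sqSum V < 1 / 2) :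
    ∃ m : Fin 3 → ZMod 2, m ≠ 0 ∧ ∀ c, c ≠ 0 → c ≠ m → ∃ z, Contact N V z ∧ cls z = c := by
  classical
  set H : Finset (Fin 3 → ZMod 2) := Finset.univ.filter fun c => ∃ z, Contact N V z ∧ cls z = c
  have h0 : (0 : Fin 3 → ZMod 2) ∉ H := by
    simp only [H, Finset.mem_filter, Finset.mem_univ, true_and]
    rintro ⟨z, hz, hz0⟩
    obtain ⟨u, hu⟩ := eq_add_two_smul (z := z) (w := 0) (by rw [hz0]; ext i; simp [cls])
    exact h.contact_odd hz (by simpa using hu)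
  have hcard : 6 ≤ H.card := by
    by_contra hlt
    have hex : ∀ c : Fin 3 → ZMod 2, ∃ z, c ∈ H → Contact N V z ∧ cls z = c := fun c => by
      by_cases hc : c ∈ H
      · obtain ⟨z, hz⟩ := (Finset.mem_filter.1 hc).2
        exact ⟨z, fun _ => hz⟩
      · exact ⟨0, fun h => absurd h hc⟩
    choose r hr using hex
    refine five_contacts_false h.norm hμ h.adm h.det_ne hmin hμV (H.image r)
      (Finset.card_image_le.trans (by omega)) (fun z hz => ?_) (fun z hz => ?_)
    · obtain ⟨c, hc, rfl⟩ := Finset.mem_image.1 hz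
      exact (hr c hc).1
    · have hc : cls z ∈ H := Finset.mem_filter.2 ⟨Finset.mem_univ _, z, hz, rfl⟩
      obtain ⟨u, hu⟩ := eq_add_two_smul (hr _ hc).2.symm
      rcases h.contact_congr hz (hr _ hc).1 hu with h1 | h1
      · left; rw [h1]; exact Finset.mem_image_of_mem _ (h1 ▸ hc)
      · right
        have : r (cls z) ∈ H.image r := Finset.mem_image_of_mem _ hc
        rwa [show r (cls z) = -z by rw [eq_neg_iff_add_eq_zero, eq_neg_iff_add_eq_zero.1 h1 |>
          fun h => (add_comm _ _).trans h]] at this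
  have hH : ((insert 0 H)ᶜ).card ≤ 1 := by
    rw [Finset.card_compl, Finset.card_insert_of_notMem h0]
    simp
    omega
  have hmem : ∀ c, c ∉ (insert 0 H)ᶜ → c ≠ 0 → ∃ z, Contact N V z ∧ cls z = c := by
    intro c hc hc0
    simp only [Finset.mem_compl, not_not, Finset.mem_insert, hc0, false_or] at hc
    exact (Finset.mem_filter.1 hc).2
  rcases ((insert 0 H)ᶜ).eq_empty_or_nonempty with he | ⟨m, hm⟩
  · exact ⟨1, by decide, fun c hc _ => hmem c (by simp [he]) hc⟩
  · refine ⟨m, ?_, fun c hc hcm => hmem c (fun h1 => hcm ?_) hc⟩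
    · rintro rfl
      simp at hm
    · exact Finset.card_le_one.1 hH _ h1 _ hm

/-! ### The two contact patterns -/

/-- Integer triples as functions. -/
def vec (z : Z3) : Fin 3 → ℤ := ![z.1, z.2.1, z.2.2]

theorem vec_neg (z : Z3) : vec (-z) = -vec z := by
  ext i; fin_cases i <;> simp [vec]

/-- The matrix with the given columns. -/
def cols (t : Z33) : Matrix (Fin 3) (Fin 3) ℤ :=
  (Matrix.of ![vec t.1, vec t.2.1, vec t.2.2]).transpose

theorem det_cols (t : Z33) : (cols t).det = detZ t := by
  rw [cols, Matrix.det_transpose, Matrix.det_fin_three]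
  simp [vec, detZ]
  ring

/-- Membership up to sign. -/
def signedMem (z : Z3) (L : List Z3) : Bool := memB z L || memB (-z) L

/-- Every triple from `L` with odd determinant is unimodular. -/
def oddUnimodular (L : List Z3) : Bool :=
  L.all fun a => L.all fun b => L.all fun c =>
    detZ (a, b, c) % 2 == 0 || detZ (a, b, c) == 1 || detZ (a, b, c) == -1

/-- The triple `t` is unimodular, and it and the vectors `tᵢ + s tⱼ` belong to `L` up to sign. -/
def goodTriple (s : ℤ) (L : List Z3) (t : Z33) : Bool :=
  (detZ t == 1 || detZ t == -1) && signedMem t.1 L && signedMem t.2.1 L && signedMem t.2.2 L &&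
    signedMem (t.1 + s • t.2.1) L && signedMem (t.2.1 + s • t.2.2) L &&
    signedMem (t.1 + s • t.2.2) L

/-- Contacts in the classes of `eᵢ` and `eᵢ + eⱼ`, normalized up to sign. -/
def sixContacts (a b c α β γ : ℤ) : List Z3 :=
  [(1, 0, 0), (0, 1, 0), (0, 0, 1), (1, a, α), (1, β, b), (γ, 1, c)]

/-- Some sign choice in one of five triples is good. -/
def hasGoodTriple (a b c α β γ : ℤ) : Bool :=
  let e1 : Z3 := (1, 0, 0)
  let e2 : Z3 := (0, 1, 0)
  let e3 : Z3 := (0, 0, 1)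
  let L := sixContacts a b c α β γ
  let units : List ℤ := [1, -1]
  units.any fun s => units.any fun σ => units.any fun τ =>
    [(e1, e2, e3), (e3, (1, β, b), (γ, 1, c)), (e2, (1, a, α), (γ, 1, c)),
      (e1, (1, a, α), (1, β, b))].any fun t : Z33 =>
        goodTriple s L (t.1, σ • t.2.1, τ • t.2.2)

theorem hasGoodTriple_of_oddUnimodular : ∀ a ∈ ([1, -1] : List ℤ), ∀ b ∈ ([1, -1] : List ℤ),
    ∀ c ∈ ([1, -1] : List ℤ), ∀ α ∈ ([0, 2, -2] : List ℤ), ∀ β ∈ ([0, 2, -2] : List ℤ),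
    ∀ γ ∈ ([0, 2, -2] : List ℤ), oddUnimodular (sixContacts a b c α β γ) = true →
      hasGoodTriple a b c α β γ = true := by
  decide +kernel

/-- The contacts of the lattice follow the pattern `C`. -/
def HasPattern (N : (Fin 3 → ℝ) → ℝ) (V : Matrix (Fin 3) (Fin 3) ℝ) (C : List Z3) : Prop :=
  ∀ c ∈ C, Contact N V (vec c)

theorem Setting.mul (h : Setting N V) {P : Matrix (Fin 3) (Fin 3) ℤ} (hP : |P.det| = 1) :
    Setting N (V * P.map (Int.cast : ℤ → ℝ)) ∧
      |(V * P.map (Int.cast : ℤ → ℝ)).det| = |V.det| := by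
  have hd : |(V * P.map (Int.cast : ℤ → ℝ)).det| = |V.det| := by
    rw [Matrix.det_mul, abs_mul, det_map_cast, ← Int.cast_abs, hP]
    simp
  exact ⟨⟨h.norm, h.strict, h.ball, h.adm.mul fun h0 => by rw [h0] at hP; norm_num at hP,
    by rw [hd]; exact h.det⟩, hd⟩

theorem Setting.of_signedMem (h : Setting N V) {L : List Z3} (hL : HasPattern N V L) {z : Z3}
    (hz : signedMem z L = true) : Contact N V (vec z) := by
  simp only [signedMem, Bool.or_eq_true, memB_iff] at hz
  rcases hz with hz | hz
  · exact hL z hz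
  · have := h.neg (hL _ hz)
    rwa [vec_neg, neg_neg] at this

theorem Setting.oddUnimodular (h : Setting N V) {L : List Z3} (hL : HasPattern N V L) :
    oddUnimodular L = true := by
  simp only [TruncTetra.oddUnimodular, List.all_eq_true]
  intro a ha b hb c hc
  by_cases h2 : detZ (a, b, c) % 2 = 0
  · simp [h2]
  have h1 := h.abs_det_eq_one (Z := cols (a, b, c)) (fun j => by
    fin_cases j
    · exact hL a ha
    · exact hL b hb
    · exact hL c hc) (by rw [det_cols]; exact Int.odd_iff.2 (by omega))
  rw [det_cols] at h1
  rcases abs_eq (by norm_num) |>.1 h1 with h1 | h1 <;> simp [h1]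

theorem Setting.of_goodTriple (h : Setting N V) {L : List Z3} (hL : HasPattern N V L) {t : Z33}
    {s : ℤ} (hs : s = 1 ∨ s = -1) (ht : goodTriple s L t = true) :
    ∃ W, Admissible N W ∧ |W.det| = |V.det| ∧
      (HasPattern N W contactsI ∨ HasPattern N W contactsII) := by
  simp only [goodTriple, Bool.and_eq_true, Bool.or_eq_true, beq_iff_eq] at ht
  obtain ⟨⟨⟨⟨⟨⟨h0, h1⟩, h2⟩, h3⟩, h4⟩, h5⟩, h6⟩ := ht
  have hP : |(cols t).det| = 1 := by
    rw [det_cols]; rcases h0 with h0 | h0 <;> rw [h0] <;> norm_num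
  obtain ⟨hW, hd⟩ := h.mul hP
  refine ⟨_, hW.adm, hd, ?_⟩
  have key : ∀ c d : Z3, (cols t).mulVec (vec c) = vec d → signedMem d L = true →
      Contact N (V * (cols t).map (Int.cast : ℤ → ℝ)) (vec c) := by
    intro c d hcd hd
    unfold Contact
    rw [pt_mul, hcd]
    exact h.of_signedMem hL hd
  have hv : ∀ a b c : ℤ, (cols t).mulVec (vec (a, b, c)) =
      vec (a • t.1 + b • t.2.1 + c • t.2.2) := by
    intro a b c
    ext i
    fin_cases i <;> simp [cols, vec, Matrix.mulVec, dotProduct, Fin.sum_univ_three] <;> ring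
  rcases hs with rfl | rfl
  · right
    intro c hc
    simp only [contactsII, List.mem_cons, List.not_mem_nil, or_false] at hc
    rcases hc with rfl | rfl | rfl | rfl | rfl | rfl
    · exact key _ _ (hv _ _ _) (by simpa using h1)
    · exact key _ _ (hv _ _ _) (by simpa using h2)
    · exact key _ _ (hv _ _ _) (by simpa using h3)
    · exact key _ _ (hv _ _ _) (by simpa using h4)
    · exact key _ _ (hv _ _ _) (by simpa using h5)
    · exact key _ _ (hv _ _ _) (by simpa using h6)
  · left
    intro c hc
    simp only [contactsI, List.mem_cons, List.not_mem_nil, or_false] at hc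
    rcases hc with rfl | rfl | rfl | rfl | rfl | rfl
    · exact key _ _ (hv _ _ _) (by simpa using h1)
    · exact key _ _ (hv _ _ _) (by simpa using h2)
    · exact key _ _ (hv _ _ _) (by simpa using h3)
    · exact key _ _ (hv _ _ _) (by simpa using h4)
    · exact key _ _ (hv _ _ _) (by simpa using h5)
    · exact key _ _ (hv _ _ _) (by simpa using h6)

/-- If `z` is a contact with two coordinates `±1`, the third one is less than four in absolute
value: otherwise a basis vector would be shorter than one. -/
theorem Setting.abs_lt_four (h : Setting N V) {z x y w : Fin 3 → ℤ} {a b c : ℤ}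
    (hz : Contact N V z) (hx : Contact N V x) (hy : Contact N V y) (hw : Contact N V w)
    (ha : |a| = 1) (hb : |b| = 1) (he : z = a • x + b • y + c • w) : |c| < 4 := by
  by_contra hc
  push Not at hc
  have h1 : pt V (c • w) = pt V z + (pt V (-a • x) + pt V (-b • y)) := by
    rw [← pt_add, ← pt_add, he]
    congr 1
    simp only [neg_smul]
    abel
  have h2 := h.norm.add_le (pt V z) (pt V (-a • x) + pt V (-b • y))
  have h3 := h.norm.add_le (pt V (-a • x)) (pt V (-b • y))
  rw [← h1] at h2
  simp only [pt_smul, h.norm.smul] at h2 h3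
  unfold Contact at hz hx hy hw
  rw [hz, hw] at h2
  rw [hx, hy] at h3
  have h4 : (4 : ℝ) ≤ |(c : ℝ)| := by exact_mod_cast hc
  have h5 : |((-a : ℤ) : ℝ)| = 1 := by push_cast; rw [abs_neg]; exact_mod_cast ha
  have h6 : |((-b : ℤ) : ℝ)| = 1 := by push_cast; rw [abs_neg]; exact_mod_cast hb
  rw [h5, h6] at h3
  linarith

theorem Setting.exists_pattern_of_six (h : Setting N V) {p q r : Z3}
    (h1 : Contact N V (vec (1, 0, 0))) (h2 : Contact N V (vec (0, 1, 0)))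
    (h3 : Contact N V (vec (0, 0, 1))) (hp : Contact N V (vec p)) (hq : Contact N V (vec q))
    (hr : Contact N V (vec r))
    (hp1 : Odd p.1) (hp2 : Odd p.2.1) (hp3 : Even p.2.2)
    (hq1 : Odd q.1) (hq2 : Even q.2.1) (hq3 : Odd q.2.2)
    (hr1 : Even r.1) (hr2 : Odd r.2.1) (hr3 : Odd r.2.2) :
    ∃ W, Admissible N W ∧ |W.det| = |V.det| ∧
      (HasPattern N W contactsI ∨ HasPattern N W contactsII) := by
  have hdet : ∀ x y z : Z3, Contact N V (vec x) → Contact N V (vec y) → Contact N V (vec z) →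
      Odd (detZ (x, y, z)) → |detZ (x, y, z)| = 1 := by
    intro x y z hx hy hz ho
    rw [← det_cols] at ho ⊢
    exact h.abs_det_eq_one (fun j => by fin_cases j <;> assumption) ho
  obtain ⟨p1, p2, p3⟩ := p
  obtain ⟨q1, q2, q3⟩ := q
  obtain ⟨r1, r2, r3⟩ := r
  have ap1 := hdet _ _ _ hp h2 h3 (by simpa [detZ] using hp1)
  have ap2 := hdet _ _ _ h1 hp h3 (by simpa [detZ] using hp2)
  have aq1 := hdet _ _ _ hq h2 h3 (by simpa [detZ] using hq1)
  have aq3 := hdet _ _ _ h1 h2 hq (by simpa [detZ] using hq3)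
  have ar2 := hdet _ _ _ h1 hr h3 (by simpa [detZ] using hr2)
  have ar3 := hdet _ _ _ h1 h2 hr (by simpa [detZ] using hr3)
  simp only [detZ, mul_zero, mul_one, sub_zero, zero_mul, one_mul, add_zero, zero_sub]
    at ap1 ap2 aq1 aq3 ar2 ar3
  have ap3 := h.abs_lt_four (c := p3) hp h1 h2 h3 ap1 ap2 (by
    ext i; fin_cases i <;> simp [vec])
  have aq2 := h.abs_lt_four (c := q2) hq h1 h3 h2 aq1 aq3 (by
    ext i; fin_cases i <;> simp [vec])
  have ar1 := h.abs_lt_four (c := r1) hr h2 h3 h1 ar2 ar3 (by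
    ext i; fin_cases i <;> simp [vec])
  have unit : ∀ {x : ℤ}, |x| = 1 → x = 1 ∨ x = -1 := fun hx => (abs_eq (by norm_num)).1 hx
  have small : ∀ {x : ℤ}, |x| < 4 → Even x → x ∈ ([0, 2, -2] : List ℤ) := by
    intro x hx ⟨k, hk⟩
    rw [abs_lt] at hx
    simp only [List.mem_cons, List.not_mem_nil, or_false]
    omega
  have smallNeg : ∀ {x : ℤ}, x ∈ ([0, 2, -2] : List ℤ) → -x ∈ ([0, 2, -2] : List ℤ) := by
    intro x hx
    simp only [List.mem_cons, List.not_mem_nil, or_false] at hx ⊢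
    omega
  have unitMem : ∀ {x : ℤ}, |x| = 1 → x ∈ ([1, -1] : List ℤ) := fun hx => by
    simpa using unit hx
  have unitNeg : ∀ {x : ℤ}, |x| = 1 → -x ∈ ([1, -1] : List ℤ) := fun hx =>
    unitMem (by rwa [abs_neg])
  have np : ∃ a ∈ ([1, -1] : List ℤ), ∃ α ∈ ([0, 2, -2] : List ℤ),
      Contact N V (vec (1, a, α)) := by
    rcases unit ap1 with rfl | rfl
    · exact ⟨p2, unitMem ap2, p3, small ap3 hp3, hp⟩
    · exact ⟨-p2, unitNeg ap2, -p3, smallNeg (small ap3 hp3), by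
        have := h.neg hp; rwa [← vec_neg] at this⟩
  have nq : ∃ b ∈ ([1, -1] : List ℤ), ∃ β ∈ ([0, 2, -2] : List ℤ),
      Contact N V (vec (1, β, b)) := by
    rcases unit aq1 with rfl | rfl
    · exact ⟨q3, unitMem aq3, q2, small aq2 hq2, hq⟩
    · exact ⟨-q3, unitNeg aq3, -q2, smallNeg (small aq2 hq2), by
        have := h.neg hq; rwa [← vec_neg] at this⟩
  have nr : ∃ c ∈ ([1, -1] : List ℤ), ∃ γ ∈ ([0, 2, -2] : List ℤ),
      Contact N V (vec (γ, 1, c)) := by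
    rcases unit ar2 with rfl | rfl
    · exact ⟨r3, unitMem ar3, r1, small ar1 hr1, hr⟩
    · exact ⟨-r3, unitNeg ar3, -r1, smallNeg (small ar1 hr1), by
        have := h.neg hr; rwa [← vec_neg] at this⟩
  obtain ⟨a, ha, α, hα, hp'⟩ := np
  obtain ⟨b, hb, β, hβ, hq'⟩ := nq
  obtain ⟨c, hc, γ, hγ, hr'⟩ := nr
  have hL : HasPattern N V (sixContacts a b c α β γ) := by
    intro z hz
    simp only [sixContacts, List.mem_cons, List.not_mem_nil, or_false] at hz
    rcases hz with rfl | rfl | rfl | rfl | rfl | rfl <;> assumption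
  have hgood := hasGoodTriple_of_oddUnimodular a ha b hb c hc α hα β hβ γ hγ (h.oddUnimodular hL)
  simp only [hasGoodTriple, List.any_eq_true] at hgood
  obtain ⟨s, hs, σ, -, τ, -, t, -, ht⟩ := hgood
  exact h.of_goodTriple hL (by simpa using hs) ht

set_option synthInstance.maxSize 1000 in
set_option synthInstance.maxHeartbeats 400000 in
theorem exists_independent_classes : ∀ m : Fin 3 → ZMod 2, m ≠ 0 → ∃ c d e : Fin 3 → ZMod 2,
    (c 0 * (d 1 * e 2 - d 2 * e 1) - c 1 * (d 0 * e 2 - d 2 * e 0) +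
      c 2 * (d 0 * e 1 - d 1 * e 0) = 1) ∧
    (c ≠ 0 ∧ c ≠ m) ∧ (d ≠ 0 ∧ d ≠ m) ∧ (e ≠ 0 ∧ e ≠ m) ∧ (c + d ≠ 0 ∧ c + d ≠ m) ∧
    (c + e ≠ 0 ∧ c + e ≠ m) ∧ (d + e ≠ 0 ∧ d + e ≠ m) := by
  decide +kernel

/-- In suitable coordinates a minimizer has one of the two contact patterns. -/
theorem Setting.exists_pattern (h : Setting N V) {μ : ℝ} (hμ : 0 < μ)
    (hmin : ∀ W, Admissible N W → W.det ≠ 0 → penalized μ V ≤ penalized μ W)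
    (hμV : μ * sqSum V < 1 / 2) :
    ∃ W, Admissible N W ∧ |W.det| = |V.det| ∧
      (HasPattern N W contactsI ∨ HasPattern N W contactsII) := by
  obtain ⟨m, hm, hit⟩ := h.exists_missing_class hμ hmin hμV
  obtain ⟨c, d, e, hdet, hc, hd, he, hcd, hce, hde⟩ := exists_independent_classes m hm
  obtain ⟨x, hx, hxc⟩ := hit c hc.1 hc.2
  obtain ⟨y, hy, hyd⟩ := hit d hd.1 hd.2
  obtain ⟨z, hz, hze⟩ := hit e he.1 he.2
  obtain ⟨p, hp, hpc⟩ := hit _ hcd.1 hcd.2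
  obtain ⟨q, hq, hqc⟩ := hit _ hce.1 hce.2
  obtain ⟨r, hr, hrc⟩ := hit _ hde.1 hde.2
  set P : Matrix (Fin 3) (Fin 3) ℤ := (Matrix.of ![x, y, z]).transpose with hPdef
  have hPodd : Odd P.det := by
    rw [← Int.not_even_iff_odd, even_iff_two_dvd]
    intro h0
    have h1 := (ZMod.intCast_zmod_eq_zero_iff_dvd P.det 2).2 (by exact_mod_cast h0)
    rw [hPdef, Matrix.det_transpose, Matrix.det_fin_three] at h1
    rw [← hxc, ← hyd, ← hze] at hdet
    simp only [cls] at hdet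
    have h2 : (1 : ZMod 2) = 0 := by
      rw [← hdet, ← h1]
      simp
      ring
    exact absurd h2 (by decide)
  have hP : |P.det| = 1 := h.abs_det_eq_one (fun j => by fin_cases j <;> assumption) hPodd
  obtain ⟨hW, hWd⟩ := h.mul hP
  have hunit : IsUnit P.det := Int.isUnit_iff_abs_eq.2 hP
  have key : ∀ w u : Fin 3 → ℤ, Contact N V w → P.mulVec u = w →
      Contact N (V * P.map (Int.cast : ℤ → ℝ)) u := by
    intro w u hw huw
    unfold Contact
    rw [pt_mul, huw]
    exact hw
  have hv : ∀ a : Fin 3 → ℤ, P.mulVec a = a 0 • x + a 1 • y + a 2 • z := by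
    intro a
    ext i
    simp [hPdef, Matrix.mulVec, dotProduct, Fin.sum_univ_three]
    ring
  -- a contact congruent to `P v` modulo two has coordinates congruent to `v`
  have lift : ∀ (w v : Fin 3 → ℤ), Contact N V w → cls w = cls (P.mulVec v) →
      ∃ u : Z3, Contact N (V * P.map (Int.cast : ℤ → ℝ)) (vec u) ∧
        ∃ k : Fin 3 → ℤ, u = (v 0 + 2 * k 0, v 1 + 2 * k 1, v 2 + 2 * k 2) := by
    intro w v hw hwv
    obtain ⟨k, hk⟩ := eq_add_two_smul hwv
    refine ⟨_, key w _ hw ?_, P⁻¹.mulVec k, rfl⟩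
    rw [hk, show vec (v 0 + 2 * P⁻¹.mulVec k 0, v 1 + 2 * P⁻¹.mulVec k 1,
      v 2 + 2 * P⁻¹.mulVec k 2) = v + (2 : ℤ) • P⁻¹.mulVec k by
        ext i; fin_cases i <;> simp [vec], Matrix.mulVec_add, Matrix.mulVec_smul,
      Matrix.mulVec_mulVec, Matrix.mul_nonsing_inv _ hunit, Matrix.one_mulVec]
  obtain ⟨p', hp', kp, rfl⟩ := lift p ![1, 1, 0] hp (by
    rw [hpc, hv, ← hxc, ← hyd]; ext i; simp [cls])
  obtain ⟨q', hq', kq, rfl⟩ := lift q ![1, 0, 1] hq (by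
    rw [hqc, hv, ← hxc, ← hze]; ext i; simp [cls])
  obtain ⟨r', hr', kr, rfl⟩ := lift r ![0, 1, 1] hr (by
    rw [hrc, hv, ← hyd, ← hze]; ext i; simp [cls])
  obtain ⟨W, hW1, hW2, hW3⟩ := hW.exists_pattern_of_six
    (key x _ hx (by rw [hv]; simp [vec])) (key y _ hy (by rw [hv]; simp [vec]))
    (key z _ hz (by rw [hv]; simp [vec])) hp' hq' hr'
    (by simp [parity_simps]) (by simp [parity_simps]) (by simp)
    (by simp [parity_simps]) (by simp) (by simp [parity_simps])
    (by simp) (by simp [parity_simps]) (by simp [parity_simps])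
  exact ⟨W, hW1, hW2.trans hWd, hW3⟩

end Contacts

/-! ### The norm of the difference body and its strictly convex perturbations -/

/-- The norm with unit ball `12 · (octahedron) ∩ 9 · (cube)`. -/
noncomputable def nrm (x : Fin 3 → ℝ) : ℝ :=
  max ((|x 0| + |x 1| + |x 2|) / 12) (max |x 0| (max |x 1| |x 2|) / 9)

theorem nrm_le_iff {x : Fin 3 → ℝ} {r : ℝ} : nrm x ≤ r ↔
    |x 0| + |x 1| + |x 2| ≤ 12 * r ∧ |x 0| ≤ 9 * r ∧ |x 1| ≤ 9 * r ∧ |x 2| ≤ 9 * r := by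
  rw [nrm, max_le_iff, div_le_iff₀ (by norm_num), div_le_iff₀ (by norm_num), max_le_iff, max_le_iff,
    mul_comm r 12, mul_comm r 9]

theorem nrm_nonneg (x : Fin 3 → ℝ) : 0 ≤ nrm x :=
  le_trans (by positivity) (le_max_left _ _)

theorem nrm_smul (c : ℝ) (x : Fin 3 → ℝ) : nrm (c • x) = |c| * nrm x := by
  simp only [nrm, Pi.smul_apply, smul_eq_mul, abs_mul]
  rw [mul_max_of_nonneg _ _ (abs_nonneg c), ← mul_max_of_nonneg _ _ (abs_nonneg c),
    ← mul_max_of_nonneg _ _ (abs_nonneg c)]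
  congr 1 <;> ring

theorem nrm_add_le (x y : Fin 3 → ℝ) : nrm (x + y) ≤ nrm x + nrm y := by
  have hx := nrm_le_iff.1 (le_refl (nrm x))
  have hy := nrm_le_iff.1 (le_refl (nrm y))
  have h0 := abs_add_le (x 0) (y 0)
  have h1 := abs_add_le (x 1) (y 1)
  have h2 := abs_add_le (x 2) (y 2)
  rw [nrm_le_iff]
  simp only [Pi.add_apply]
  refine ⟨?_, ?_, ?_, ?_⟩ <;> linarith [hx.1, hx.2.1, hx.2.2.1, hx.2.2.2, hy.1, hy.2.1,
    hy.2.2.1, hy.2.2.2]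

theorem continuous_nrm : Continuous nrm := by
  unfold nrm; fun_prop

theorem norm_le_nrm (x : Fin 3 → ℝ) : ‖x‖ ≤ 9 * nrm x := by
  have hx := nrm_le_iff.1 (le_refl (nrm x))
  refine (pi_norm_le_iff_of_nonneg (by linarith [nrm_nonneg x])).2 fun i => ?_
  fin_cases i
  · exact hx.2.1
  · exact hx.2.2.1
  · exact hx.2.2.2

theorem sq_add_le_of_nrm {x : Fin 3 → ℝ} (h : nrm x ≤ 1) : x 0 ^ 2 + x 1 ^ 2 + x 2 ^ 2 ≤ 90 := by
  obtain ⟨h, h0, h1, h2⟩ := nrm_le_iff.1 h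
  rw [← sq_abs (x 0), ← sq_abs (x 1), ← sq_abs (x 2)]
  have p0 := abs_nonneg (x 0)
  have p1 := abs_nonneg (x 1)
  have p2 := abs_nonneg (x 2)
  generalize |x 0| = a at *
  generalize |x 1| = b at *
  generalize |x 2| = c at *
  -- a coordinate `a ≥ 3` gives `a² + (12 - a)² ≤ 90`
  have key : ∀ a b c : ℝ, 0 ≤ a → 0 ≤ b → 0 ≤ c → a + b + c ≤ 12 → a ≤ 9 → 3 ≤ a →
      a ^ 2 + b ^ 2 + c ^ 2 ≤ 90 := by
    intro a b c ha hb hc hs h9 h3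
    have : b ^ 2 + c ^ 2 ≤ (12 - a) ^ 2 := by nlinarith [mul_nonneg hb hc]
    nlinarith
  by_cases c0 : 3 ≤ a
  · exact key a b c p0 p1 p2 (by linarith) (by linarith) c0
  by_cases c1 : 3 ≤ b
  · linarith [key b a c p1 p0 p2 (by linarith) (by linarith) c1]
  by_cases c2 : 3 ≤ c
  · linarith [key c a b p2 p0 p1 (by linarith) (by linarith) c2]
  push Not at c0 c1 c2
  nlinarith

/-- The strictly convex perturbation of `nrm` by a multiple of the Euclidean norm. -/
noncomputable def nrmE (ε : ℝ) (x : Fin 3 → ℝ) : ℝ := nrm x + ε * ‖WithLp.toLp 2 x‖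

theorem nrm_le_nrmE {ε : ℝ} (hε : 0 ≤ ε) (x : Fin 3 → ℝ) : nrm x ≤ nrmE ε x := by
  have : 0 ≤ ε * ‖WithLp.toLp 2 x‖ := by positivity
  unfold nrmE; linarith

theorem nrmE_le {ε : ℝ} (hε : 0 ≤ ε) (x : Fin 3 → ℝ) : nrmE ε x ≤ (1 + 12 * ε) * nrm x := by
  have h1 : ‖WithLp.toLp 2 x‖ ≤ 12 * nrm x := by
    refine le_trans ?_ (nrm_le_iff.1 (le_refl (nrm x))).1
    rw [EuclideanSpace.norm_eq, Fin.sum_univ_three]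
    refine Real.sqrt_le_iff.2 ⟨by positivity, ?_⟩
    simp only [Real.norm_eq_abs]
    nlinarith [mul_nonneg (abs_nonneg (x 0)) (abs_nonneg (x 1)),
      mul_nonneg (abs_nonneg (x 0)) (abs_nonneg (x 2)),
      mul_nonneg (abs_nonneg (x 1)) (abs_nonneg (x 2))]
  unfold nrmE
  nlinarith

theorem isNorm_nrmE {ε : ℝ} (hε : 0 ≤ ε) : IsNorm (nrmE ε) where
  smul c x := by
    rw [nrmE, nrmE, nrm_smul, WithLp.toLp_smul, norm_smul, Real.norm_eq_abs]; ring
  add_le x y := by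
    have h1 := nrm_add_le x y
    have h2 := norm_add_le (WithLp.toLp 2 x) (WithLp.toLp 2 y)
    rw [← WithLp.toLp_add] at h2
    have h3 := mul_le_mul_of_nonneg_left h2 hε
    unfold nrmE; linarith
  cont := by
    have := continuous_nrm
    unfold nrmE
    have h2 : Continuous fun x : Fin 3 → ℝ => WithLp.toLp 2 x := PiLp.continuous_toLp 2 _
    fun_prop
  lower x := by
    have := norm_le_nrm x; have := nrm_le_nrmE hε x; linarith

theorem strictlyConvex_nrmE {ε : ℝ} (hε : 0 < ε) : StrictlyConvexNorm (nrmE ε) := by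
  intro x y hx hy hxy
  by_contra hlt
  push Not at hlt
  have h1 := nrm_add_le x y
  have h2 := norm_add_le (WithLp.toLp 2 x) (WithLp.toLp 2 y)
  have h3 : ‖WithLp.toLp 2 x + WithLp.toLp 2 y‖ = ‖WithLp.toLp 2 x‖ + ‖WithLp.toLp 2 y‖ := by
    refine le_antisymm h2 ?_
    unfold nrmE at hx hy hlt
    rw [WithLp.toLp_add] at hlt
    have : ε * (‖WithLp.toLp 2 x‖ + ‖WithLp.toLp 2 y‖) ≤
      ε * ‖WithLp.toLp 2 x + WithLp.toLp 2 y‖ := by linarith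
    exact le_of_mul_le_mul_left this hε
  have hx0 : WithLp.toLp 2 x ≠ 0 := by
    intro h0
    have h4 : x = 0 := by simpa using h0
    have := (isNorm_nrmE hε.le).smul 0 0
    rw [h4] at hx
    simp at this
    linarith
  obtain ⟨r, hr, hrx⟩ := (sameRay_iff_norm_add.2 h3).exists_nonneg_left hx0
  have h4 : r • x = y := by
    rw [← WithLp.toLp_smul] at hrx
    exact (WithLp.toLp_injective 2) hrx
  have h5 := (isNorm_nrmE hε.le).smul r x
  rw [h4, hx, hy, abs_of_nonneg hr, mul_one] at h5
  rw [← h5, one_smul] at h4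
  exact hxy h4

/-! ### The lower bound for the determinant -/

theorem pt_smul_mat (c : ℝ) (V : Matrix (Fin 3) (Fin 3) ℝ) (z : Fin 3 → ℤ) :
    pt (c • V) z = c • pt V z := by
  simp [pt, Matrix.smul_mulVec]

/-- A lower bound for the determinants of `nrm`-admissible lattices persists, slightly weakened,
for small perturbations of the norm. -/
theorem low_nrmE (hlow : ∀ V : Matrix (Fin 3) (Fin 3) ℝ, V.det ≠ 0 → Admissible nrm V →
    207 ≤ |V.det|) {ε : ℝ} (hε : 0 ≤ ε) (hε' : ε ≤ 1 / 2000) (V : Matrix (Fin 3) (Fin 3) ℝ)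
    (hV : V.det ≠ 0) (hadm : Admissible (nrmE ε) V) : 200 ≤ |V.det| := by
  have h1 := hlow ((1 + 12 * ε) • V)
    (by rw [Matrix.det_smul]; exact mul_ne_zero (by positivity) hV) (fun z hz => by
      rw [pt_smul_mat, nrm_smul, abs_of_pos (by positivity)]
      exact (hadm z hz).trans (nrmE_le hε _))
  rw [Matrix.det_smul, abs_mul, abs_of_pos (by positivity), Fintype.card_fin] at h1
  have h2 : (1 + 12 * ε) ^ 3 ≤ 1.035 := by
    calc (1 + 12 * ε) ^ 3 ≤ (1 + 12 * (1 / 2000)) ^ 3 := by gcongr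
      _ ≤ 1.035 := by norm_num
  nlinarith [abs_nonneg V.det]

theorem counterexample_of_pattern {C : List Z3} {V : Matrix (Fin 3) (Fin 3) ℝ}
    (hadm : Admissible nrm V) (hC : ∀ c ∈ C, nrm (pt V (vec c)) ≤ 1) (hdet : |V.det| < 304) :
    Counterexample C V := by
  have hpt : ∀ (z : Z3) (i : Fin 3), pt V (vec z) i =
      V i 0 * z.1 + V i 1 * z.2.1 + V i 2 * z.2.2 := by
    intro z i
    simp [pt, vec, Matrix.mulVec, dotProduct, Fin.sum_univ_three]
  refine ⟨fun z hz => ?_, fun c hc f hf => ?_, hdet⟩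
  · have h1 := hadm (vec z) (fun h0 => hz (by
      have h1 := congrFun h0 0; have h2 := congrFun h0 1; have h3 := congrFun h0 2
      simp [vec] at h1 h2 h3
      ext <;> simp [h1, h2, h3]))
    by_contra hcon
    push Not at hcon
    simp only [facets, List.mem_cons, List.not_mem_nil, or_false, forall_eq_or_imp, forall_eq,
      evalLin_geForm, ← hpt] at hcon
    push_cast at hcon
    have h2 : nrm (pt V (vec z)) < 1 := by
      unfold nrm
      refine max_lt ((div_lt_one (by norm_num)).2 ?_) ((div_lt_one (by norm_num)).2
        (max_lt ?_ (max_lt ?_ ?_)))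
      · rcases abs_cases (pt V (vec z) 0) with ⟨e0, -⟩ | ⟨e0, -⟩ <;>
        rcases abs_cases (pt V (vec z) 1) with ⟨e1, -⟩ | ⟨e1, -⟩ <;>
        rcases abs_cases (pt V (vec z) 2) with ⟨e2, -⟩ | ⟨e2, -⟩ <;>
        rw [e0, e1, e2] <;> linarith
      all_goals rw [abs_lt]; constructor <;> linarith
    linarith
  · obtain ⟨h, h0, h1, h2⟩ := nrm_le_iff.1 (hC c hc)
    rw [evalLin_geForm, ← hpt, ← hpt, ← hpt]
    have p0 := le_abs_self (pt V (vec c) 0)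
    have p1 := le_abs_self (pt V (vec c) 1)
    have p2 := le_abs_self (pt V (vec c) 2)
    have q0 := neg_abs_le (pt V (vec c) 0)
    have q1 := neg_abs_le (pt V (vec c) 1)
    have q2 := neg_abs_le (pt V (vec c) 2)
    simp only [facets, List.mem_cons, List.not_mem_nil, or_false] at hf
    rcases hf with rfl | rfl | rfl | rfl | rfl | rfl | rfl | rfl | rfl | rfl | rfl | rfl | rfl | rfl
      <;> push_cast <;> linarith

theorem refuted_of_mem {C : List Z3} (hC : C = contactsI ∨ C = contactsII)
    (V : Matrix (Fin 3) (Fin 3) ℝ) : ¬ Counterexample C V := by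
  intro h
  rcases hC with rfl | rfl
  · exact refutedI V h (by simp)
  · exact refutedII V h (by simp)

/-- A limit of lattices with contact pattern `C`, admissible for norms converging to `nrm`, is a
counterexample of the kind excluded by the certificates. -/
theorem limit_false {C : List Z3} (hC : C = contactsI ∨ C = contactsII) {d : ℝ} (hd : d < 304)
    {ε : ℕ → ℝ} (hε : ∀ n, 0 < ε n) (hlim : Filter.Tendsto ε Filter.atTop (nhds 0))
    {W : ℕ → Matrix (Fin 3) (Fin 3) ℝ} (hadm : ∀ n, Admissible (nrmE (ε n)) (W n))
    (hdet : ∀ n, |(W n).det| ≤ d) (hpat : ∃ᶠ n in Filter.atTop, HasPattern (nrmE (ε n)) (W n) C) :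
    False := by
  set K : Set (Matrix (Fin 3) (Fin 3) ℝ) :=
    {V | (∀ c ∈ C, nrm (pt V (vec c)) ≤ 1) ∧ |V.det| ≤ d}
  have hclosed : IsClosed K := by
    have h1 : IsClosed {V | ∀ c ∈ C, nrm (pt V (vec c)) ≤ 1} := by
      simp only [Set.ofPred_forall]
      exact isClosed_iInter fun c => isClosed_iInter fun _ =>
        isClosed_le (continuous_nrm.comp (continuous_pt _)) continuous_const
    exact h1.inter (isClosed_le (Continuous.matrix_det continuous_id).abs continuous_const)
  have hcompact : IsCompact K := by
    refine (isCompact_box 9).of_isClosed_subset hclosed fun V hV i j => ?_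
    have h1 : ∃ c ∈ C, pt V (vec c) = V.col j := by
      have e : ∀ c ∈ ([(1, 0, 0), (0, 1, 0), (0, 0, 1)] : List Z3), c ∈ C := by
        rcases hC with rfl | rfl <;> decide
      fin_cases j
      · exact ⟨(1, 0, 0), e _ (by simp), by
          ext i; simp [pt, vec, Matrix.mulVec, dotProduct, Fin.sum_univ_three]⟩
      · exact ⟨(0, 1, 0), e _ (by simp), by
          ext i; simp [pt, vec, Matrix.mulVec, dotProduct, Fin.sum_univ_three]⟩
      · exact ⟨(0, 0, 1), e _ (by simp), by
          ext i; simp [pt, vec, Matrix.mulVec, dotProduct, Fin.sum_univ_three]⟩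
    obtain ⟨c, hc, hcj⟩ := h1
    have h2 := norm_le_pi_norm (pt V (vec c)) i
    have h3 := norm_le_nrm (pt V (vec c))
    have h4 := hV.1 c hc
    rw [hcj] at h2 h3 h4
    have h5 : |V i j| ≤ 9 := by
      have : ‖V.col j i‖ = |V i j| := rfl
      linarith
    exact abs_le.1 h5
  obtain ⟨V, hVK, hV⟩ := hcompact.exists_mapClusterPt_of_frequently (hpat.mono fun n hn =>
    (show W n ∈ K from ⟨fun c hc => (nrm_le_nrmE (hε n).le _).trans (hn c hc).le, hdet n⟩))
  refine refuted_of_mem hC V (counterexample_of_pattern (fun z hz => ?_) hVK.1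
    (hVK.2.trans_lt hd))
  refine le_of_forall_lt fun a ha => ?_
  obtain ⟨b, hab, hb⟩ := exists_between ha
  refine hab.trans_le ?_
  have hcl : IsClosed {U : Matrix (Fin 3) (Fin 3) ℝ | b ≤ nrm (pt U z)} :=
    isClosed_le continuous_const (continuous_nrm.comp (continuous_pt z))
  have hev : ∀ᶠ n in Filter.atTop, W n ∈ {U : Matrix (Fin 3) (Fin 3) ℝ | b ≤ nrm (pt U z)} := by
    have h1 : Filter.Tendsto (fun n => (1 + 12 * ε n) * b) Filter.atTop (nhds b) := by
      have : Filter.Tendsto (fun n => (1 + 12 * ε n) * b) Filter.atTop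
          (nhds ((1 + 12 * 0) * b)) := ((hlim.const_mul 12).const_add 1).mul_const b
      simpa using this
    filter_upwards [h1.eventually (gt_mem_nhds hb)] with n hn
    have h2 := (hadm n z hz).trans (nrmE_le (hε n).le _)
    have h3 : 0 < 1 + 12 * ε n := by have := hε n; positivity
    exact le_of_mul_le_mul_left (hn.le.trans h2) h3
  exact isClosed_iff_clusterPt.1 hcl V (ClusterPt.mono hV (Filter.le_principal_iff.2 hev))

/-- The determinant of every nondegenerate `nrm`-admissible lattice is at least `304`. -/
theorem le_det_of_admissible (hlow : ∀ V : Matrix (Fin 3) (Fin 3) ℝ, V.det ≠ 0 →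
    Admissible nrm V → 207 ≤ |V.det|) {B : Matrix (Fin 3) (Fin 3) ℝ} (hB : B.det ≠ 0)
    (hadm : Admissible nrm B) : 304 ≤ |B.det| := by
  by_contra hlt
  push Not at hlt
  obtain ⟨d, hd1, hd2⟩ := exists_between hlt
  obtain ⟨μ, hμd, hμ⟩ : ∃ μ, penalized μ B < d ∧ 0 < μ := by
    have hc : Continuous fun μ => penalized μ B := by unfold penalized; fun_prop
    have h0 : penalized 0 B < d := by simpa [penalized] using hd1
    have h1 := (hc.tendsto 0).eventually (gt_mem_nhds h0)
    have h2 : ∀ᶠ μ in nhdsWithin (0 : ℝ) (Set.Ioi 0), penalized μ B < d ∧ 0 < μ :=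
      (h1.filter_mono nhdsWithin_le_nhds).and (eventually_mem_nhdsWithin)
    exact h2.exists
  have hd0 : 0 < d := (abs_nonneg _).trans_lt hd1
  have hlog : Real.log (d / 200) < 1 / 2 := by
    rw [Real.log_lt_iff_lt_exp (by positivity)]
    have := Real.quadratic_le_exp_of_nonneg (x := 1 / 2) (by norm_num)
    linarith
  set ε : ℕ → ℝ := fun n => 1 / 2000 * (1 / ((n : ℝ) + 1))
  have hε : ∀ n, 0 < ε n := fun n => by positivity
  have hε' : ∀ n, ε n ≤ 1 / 2000 := fun n => by
    have : 1 / ((n : ℝ) + 1) ≤ 1 := by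
      rw [div_le_one (by positivity)]
      have : (0 : ℝ) ≤ n := by positivity
      linarith
    simp only [ε]
    linarith
  have hlim : Filter.Tendsto ε Filter.atTop (nhds 0) := by
    have := (tendsto_one_div_add_atTop_nhds_zero_nat (𝕜 := ℝ)).const_mul (1 / 2000)
    rwa [mul_zero] at this
  have hex : ∀ n, ∃ W, Admissible (nrmE (ε n)) W ∧ |W.det| ≤ d ∧
      (HasPattern (nrmE (ε n)) W contactsI ∨ HasPattern (nrmE (ε n)) W contactsII) := by
    intro n
    have hN := isNorm_nrmE (hε n).le
    have hl := low_nrmE hlow (hε n).le (hε' n)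
    obtain ⟨V, hV, hVd, hVB, hmin⟩ := exists_minimizer hN hl hμ
      (fun z hz => (hadm z hz).trans (nrm_le_nrmE (hε n).le _)) hB
    have hVd' : penalized μ V ≤ d := hVB.trans hμd.le
    have hs : Setting (nrmE (ε n)) V := ⟨hN, strictlyConvex_nrmE (hε n),
      fun x hx => sq_add_le_of_nrm ((nrm_le_nrmE (hε n).le x).trans hx), hV, hl V hVd hV⟩
    obtain ⟨W, hW, hWV, hpat⟩ := hs.exists_pattern hμ hmin
      ((sqSum_le_of_penalized hs.det hVd').trans_lt hlog)
    refine ⟨W, hW, ?_, hpat⟩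
    rw [hWV]
    refine le_trans ?_ hVd'
    have h1 : 1 ≤ Real.exp (μ * sqSum V) :=
      Real.one_le_exp (mul_nonneg hμ.le (sqSum_nonneg V))
    exact le_mul_of_one_le_right (abs_nonneg _) h1
  choose W hW hWd hpat using hex
  rcases Filter.frequently_or_distrib.1 (Filter.Eventually.frequently
    (Filter.Eventually.of_forall (f := Filter.atTop) hpat)) with h | h
  · exact limit_false (Or.inl rfl) hd2 hε hlim hW hWd h
  · exact limit_false (Or.inr rfl) hd2 hε hlim hW hWd h

/-! ### Packing lattices of the truncated tetrahedron -/

theorem mem_truncTetra {x : Fin 3 → ℝ} : x ∈ truncTetra ↔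
    x 0 + x 1 + x 2 ∈ Set.Icc (-3) 5 ∧ -x 0 - x 1 + x 2 ∈ Set.Icc (-3) 5 ∧
    -x 0 + x 1 - x 2 ∈ Set.Icc (-3) 5 ∧ x 0 - x 1 - x 2 ∈ Set.Icc (-3) 5 := by
  rw [truncTetra, Set.mem_inter_iff, Set.mem_smul_set_iff_inv_smul_mem₀ (by norm_num),
    Set.mem_smul_set_iff_inv_smul_mem₀ (by norm_num)]
  simp only [tetra, Set.mem_ofPred_eq, Pi.smul_apply, smul_eq_mul, Set.mem_Icc]
  constructor
  · rintro ⟨⟨h1, h2, h3, h4⟩, h5, h6, h7, h8⟩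
    refine ⟨⟨?_, ?_⟩, ⟨?_, ?_⟩, ⟨?_, ?_⟩, ?_, ?_⟩ <;> linarith
  · rintro ⟨⟨h1, h2⟩, ⟨h3, h4⟩, ⟨h5, h6⟩, h7, h8⟩
    refine ⟨⟨?_, ?_, ?_, ?_⟩, ?_, ?_, ?_, ?_⟩ <;> linarith

/-- The functional with coefficients `a`, `b`, `c`. -/
def functional (a b c : ℝ) : (Fin 3 → ℝ) →ₗ[ℝ] ℝ where
  toFun x := a * x 0 + b * x 1 + c * x 2
  map_add' x y := by simp; ring
  map_smul' r x := by simp; ring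

theorem interior_functional {K : Set (Fin 3 → ℝ)} {a b c l u : ℝ} (ha : a ≠ 0)
    (hK : ∀ x ∈ K, functional a b c x ∈ Set.Icc l u) {x : Fin 3 → ℝ} (hx : x ∈ interior K) :
    functional a b c x ∈ Set.Ioo l u := by
  have hopen : IsOpenMap (functional a b c) :=
    LinearMap.isOpenMap_of_finiteDimensional _ fun r => ⟨![r / a, 0, 0], by
      simp [functional]; field_simp⟩
  rw [← interior_Icc]
  refine interior_maximal ?_ (hopen _ isOpen_interior) ⟨x, hx, rfl⟩
  rintro _ ⟨y, hy, rfl⟩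
  exact hK y (interior_subset hy)

theorem mem_interior_truncTetra {x : Fin 3 → ℝ} : x ∈ interior truncTetra ↔
    x 0 + x 1 + x 2 ∈ Set.Ioo (-3) 5 ∧ -x 0 - x 1 + x 2 ∈ Set.Ioo (-3) 5 ∧
    -x 0 + x 1 - x 2 ∈ Set.Ioo (-3) 5 ∧ x 0 - x 1 - x 2 ∈ Set.Ioo (-3) 5 := by
  constructor
  · intro hx
    have key : ∀ a b c : ℝ, a ≠ 0 →
        (∀ x ∈ truncTetra, a * x 0 + b * x 1 + c * x 2 ∈ Set.Icc (-3 : ℝ) 5) →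
        a * x 0 + b * x 1 + c * x 2 ∈ Set.Ioo (-3 : ℝ) 5 :=
      fun a b c ha h => interior_functional ha h hx
    have h1 := key 1 1 1 (by norm_num) fun x hx => by
      convert (mem_truncTetra.1 hx).1 using 1; ring
    have h2 := key (-1) (-1) 1 (by norm_num) fun x hx => by
      convert (mem_truncTetra.1 hx).2.1 using 1; ring
    have h3 := key (-1) 1 (-1) (by norm_num) fun x hx => by
      convert (mem_truncTetra.1 hx).2.2.1 using 1; ring
    have h4 := key 1 (-1) (-1) (by norm_num) fun x hx => by
      convert (mem_truncTetra.1 hx).2.2.2 using 1; ring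
    refine ⟨?_, ?_, ?_, ?_⟩
    · convert h1 using 1; ring
    · convert h2 using 1; ring
    · convert h3 using 1; ring
    · convert h4 using 1; ring
  · intro hx
    refine mem_interior.2 ⟨{x | x 0 + x 1 + x 2 ∈ Set.Ioo (-3 : ℝ) 5 ∧
      -x 0 - x 1 + x 2 ∈ Set.Ioo (-3 : ℝ) 5 ∧ -x 0 + x 1 - x 2 ∈ Set.Ioo (-3 : ℝ) 5 ∧
      x 0 - x 1 - x 2 ∈ Set.Ioo (-3 : ℝ) 5}, fun y hy => mem_truncTetra.2
      ⟨Set.Ioo_subset_Icc_self hy.1, Set.Ioo_subset_Icc_self hy.2.1,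
        Set.Ioo_subset_Icc_self hy.2.2.1, Set.Ioo_subset_Icc_self hy.2.2.2⟩, ?_, hx⟩
    refine (isOpen_Ioo.preimage (by fun_prop)).inter ((isOpen_Ioo.preimage (by fun_prop)).inter
      ((isOpen_Ioo.preimage (by fun_prop)).inter (isOpen_Ioo.preimage (by fun_prop))))

theorem interior_translate (x : Fin 3 → ℝ) (K : Set (Fin 3 → ℝ)) :
    interior ((x + ·) '' K) = (x + ·) '' interior K :=
  ((Homeomorph.addLeft x).image_interior K).symm

theorem latticeOf_eq (B : Matrix (Fin 3) (Fin 3) ℝ) : latticeOf B = Set.range (pt B) := by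
  ext x
  exact ⟨fun ⟨z, hz⟩ => ⟨z, hz.symm⟩, fun ⟨z, hz⟩ => ⟨z, hz.symm⟩⟩

/-- The difference of two interior points of the truncated tetrahedron is short. -/
theorem nrm_sub_lt {x y : Fin 3 → ℝ} (hx : x ∈ interior truncTetra)
    (hy : y ∈ interior truncTetra) : nrm ((3 / 2 : ℝ) • (x - y)) < 1 := by
  obtain ⟨⟨a1, a2⟩, ⟨a3, a4⟩, ⟨a5, a6⟩, a7, a8⟩ := mem_interior_truncTetra.1 hx
  obtain ⟨⟨b1, b2⟩, ⟨b3, b4⟩, ⟨b5, b6⟩, b7, b8⟩ := mem_interior_truncTetra.1 hy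
  unfold nrm
  simp only [Pi.smul_apply, Pi.sub_apply, smul_eq_mul, abs_mul]
  rw [abs_of_pos (by norm_num : (0 : ℝ) < 3 / 2)]
  have h0 : |x 0 - y 0| < 6 := by rw [abs_lt]; constructor <;> linarith
  have h1 : |x 1 - y 1| < 6 := by rw [abs_lt]; constructor <;> linarith
  have h2 : |x 2 - y 2| < 6 := by rw [abs_lt]; constructor <;> linarith
  refine max_lt ((div_lt_one (by norm_num)).2 ?_) ((div_lt_one (by norm_num)).2
    (max_lt (by linarith) (max_lt (by linarith) (by linarith))))
  rcases abs_cases (x 0 - y 0) with ⟨e0, -⟩ | ⟨e0, -⟩ <;>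
  rcases abs_cases (x 1 - y 1) with ⟨e1, -⟩ | ⟨e1, -⟩ <;>
  rcases abs_cases (x 2 - y 2) with ⟨e2, -⟩ | ⟨e2, -⟩ <;>
  rw [e0, e1, e2] <;> linarith

theorem sum_abs_facets_lt {x y z : ℝ} (hs : |x| + |y| + |z| < 8) (hx : |x| < 6) (hy : |y| < 6)
    (hz : |z| < 6) :
    |x + y + z| + |-x - y + z| + |-x + y - z| + |x - y - z| < 24 := by
  have p0 := le_abs_self x
  have p1 := le_abs_self y
  have p2 := le_abs_self z
  have q0 := neg_abs_le x
  have q1 := neg_abs_le y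
  have q2 := neg_abs_le z
  rcases abs_cases (x + y + z) with ⟨e1, -⟩ | ⟨e1, -⟩ <;>
  rcases abs_cases (-x - y + z) with ⟨e2, -⟩ | ⟨e2, -⟩ <;>
  rcases abs_cases (-x + y - z) with ⟨e3, -⟩ | ⟨e3, -⟩ <;>
  rcases abs_cases (x - y - z) with ⟨e4, -⟩ | ⟨e4, -⟩ <;>
  rw [e1, e2, e3, e4] <;> linarith

/-- Four numbers with sum zero, strictly between prescribed bounds: the point of the segment from
`l` to `u` on which the sum of the coordinates vanishes. -/
theorem exists_sum_zero_between {l u : Fin 4 → ℝ} (h : ∀ i, l i < u i) (hl : ∑ i, l i < 0)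
    (hu : 0 < ∑ i, u i) : ∃ b : Fin 4 → ℝ, (∀ i, l i < b i ∧ b i < u i) ∧ ∑ i, b i = 0 := by
  have hd : 0 < ∑ i, u i - ∑ i, l i := by linarith
  obtain ⟨θ, hθ0, hθ1, hθ⟩ : ∃ θ : ℝ, 0 < θ ∧ θ < 1 ∧
      ∑ i, l i + θ * (∑ i, u i - ∑ i, l i) = 0 := by
    refine ⟨-(∑ i, l i) / (∑ i, u i - ∑ i, l i), div_pos (by linarith) hd,
      (div_lt_one hd).2 (by linarith), ?_⟩
    rw [div_mul_cancel₀ _ hd.ne']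
    ring
  refine ⟨fun i => l i + θ * (u i - l i), fun i => ⟨?_, ?_⟩, ?_⟩
  · have := mul_pos hθ0 (sub_pos.2 (h i))
    linarith
  · have := mul_pos (sub_pos.2 hθ1) (sub_pos.2 (h i))
    linarith
  · rw [Finset.sum_add_distrib, ← Finset.mul_sum, Finset.sum_sub_distrib, hθ]

/-- Every sufficiently short vector `x` is a difference of two interior points. If `aᵢ` are the
values of the four facet functionals at `x`, then the values at the first point have to lie in
`(-3, 5) ∩ (aᵢ - 3, aᵢ + 5)` and to add up to zero. -/
theorem exists_interior_sub {x : Fin 3 → ℝ} (hx : nrm ((3 / 2 : ℝ) • x) < 1) :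
    ∃ q ∈ interior truncTetra, q - x ∈ interior truncTetra := by
  obtain ⟨r, hr, hr1⟩ := exists_between hx
  obtain ⟨h, h0, h1, h2⟩ := nrm_le_iff.1 hr.le
  simp only [Pi.smul_apply, smul_eq_mul, abs_mul,
    abs_of_pos (by norm_num : (0 : ℝ) < 3 / 2)] at h h0 h1 h2
  have h8 : |x 0| + |x 1| + |x 2| < 8 := by linarith
  have hs := sum_abs_facets_lt h8 (by linarith) (by linarith) (by linarith)
  have p0 := le_abs_self (x 0)
  have p1 := le_abs_self (x 1)
  have p2 := le_abs_self (x 2)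
  have q0 := neg_abs_le (x 0)
  have q1 := neg_abs_le (x 1)
  have q2 := neg_abs_le (x 2)
  clear h h0 h1 h2 hr hr1 hx
  obtain ⟨a, ha⟩ : ∃ a : Fin 4 → ℝ, a = ![x 0 + x 1 + x 2, -x 0 - x 1 + x 2, -x 0 + x 1 - x 2,
    x 0 - x 1 - x 2] := ⟨_, rfl⟩
  have a0 : a 0 = x 0 + x 1 + x 2 := by rw [ha]; rfl
  have a1 : a 1 = -x 0 - x 1 + x 2 := by rw [ha]; rfl
  have a2 : a 2 = -x 0 + x 1 - x 2 := by rw [ha]; rfl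
  have a3 : a 3 = x 0 - x 1 - x 2 := by rw [ha]; rfl
  clear ha
  rw [← a0, ← a1, ← a2, ← a3] at hs
  have ha8 : ∀ i, |a i| < 8 := by
    intro i
    rw [abs_lt]
    fin_cases i <;> dsimp only [Fin.zero_eta, Fin.mk_one, Fin.reduceFinMk] <;>
      constructor <;> linarith
  have asum : a 0 + a 1 + a 2 + a 3 = 0 := by linarith
  clear p0 p1 p2 q0 q1 q2 h8
  obtain ⟨b, hb, hb0⟩ := exists_sum_zero_between (l := fun i => -3 + (a i + |a i|) / 2)
    (u := fun i => 5 + (a i - |a i|) / 2) (fun i => by have := ha8 i; linarith)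
    (by rw [Fin.sum_univ_four]; linarith) (by rw [Fin.sum_univ_four]; linarith)
  have hb' : ∀ i, -3 < b i ∧ b i < 5 ∧ -3 < b i - a i ∧ b i - a i < 5 := by
    intro i
    obtain ⟨h1, h2⟩ := hb i
    have p := le_abs_self (a i)
    have q := neg_abs_le (a i)
    refine ⟨?_, ?_, ?_, ?_⟩ <;> linarith
  rw [Fin.sum_univ_four] at hb0
  clear hb ha8 hs asum
  obtain ⟨c1, c2, c3, c4⟩ := hb' 0
  obtain ⟨d1, d2, d3, d4⟩ := hb' 1
  obtain ⟨e1, e2, e3, e4⟩ := hb' 2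
  obtain ⟨f1, f2, f3, f4⟩ := hb' 3
  refine ⟨![(b 0 + b 3) / 2, (b 0 + b 2) / 2, (b 0 + b 1) / 2], ?_, ?_⟩ <;>
    rw [mem_interior_truncTetra] <;>
    simp only [Set.mem_Ioo, Pi.sub_apply, Matrix.cons_val] <;>
    refine ⟨⟨?_, ?_⟩, ⟨?_, ?_⟩, ⟨?_, ?_⟩, ?_, ?_⟩ <;> linarith

theorem isPackingLattice_iff {B : Matrix (Fin 3) (Fin 3) ℝ} (hB : B.det ≠ 0) :
    IsPackingLattice truncTetra (latticeOf B) ↔ Admissible nrm ((3 / 2 : ℝ) • B) := by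
  simp only [IsPackingLattice, interior_translate, latticeOf_eq]
  constructor
  · intro h z hz
    by_contra hlt
    push Not at hlt
    rw [pt_smul_mat] at hlt
    obtain ⟨q, hq1, hq2⟩ := exists_interior_sub hlt
    have h0 : pt B z ≠ pt B 0 := fun h0 => hz (pt_injective hB h0)
    have h00 : pt B 0 = 0 := by
      have := pt_smul B 0 0
      simpa using this
    have m1 : q ∈ (fun v => pt B z + v) '' interior truncTetra := ⟨q - pt B z, hq2, by simp⟩
    have m2 : q ∈ (fun v => pt B 0 + v) '' interior truncTetra := ⟨q, hq1, by simp [h00]⟩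
    exact Set.disjoint_left.1 (h _ ⟨z, rfl⟩ _ ⟨0, rfl⟩ h0) m1 m2
  · rintro h _ ⟨z, rfl⟩ _ ⟨w, rfl⟩ hne
    rw [Set.disjoint_left]
    rintro _ ⟨p, hp, rfl⟩ ⟨q, hq, hpq⟩
    have h1 := nrm_sub_lt hq hp
    have h2 : q - p = pt B (z - w) := by
      rw [sub_eq_add_neg z w, pt_add, pt_neg]
      funext i
      have := congrFun hpq i
      simp only [Pi.add_apply, Pi.sub_apply, Pi.neg_apply] at this ⊢
      linarith
    rw [h2, ← pt_smul_mat] at h1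
    exact absurd (h (z - w) (sub_ne_zero.2 fun h0 => hne (by rw [h0]))) (not_le.2 h1)

theorem det_truncTetraB : truncTetraB.det = 2432 / 27 := by
  rw [truncTetraB, Matrix.det_smul, Matrix.det_transpose, Matrix.det_fin_three]
  simp
  norm_num

theorem admissible_truncTetraB : Admissible nrm ((3 / 2 : ℝ) • truncTetraB) := by
  intro z hz
  by_contra hlt
  push Not at hlt
  obtain ⟨r, hr, hr1⟩ := exists_between hlt
  obtain ⟨h, h0, h1, h2⟩ := nrm_le_iff.1 hr.le
  obtain ⟨a, ha⟩ : ∃ a, a = z 0 := ⟨_, rfl⟩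
  obtain ⟨b, hb⟩ : ∃ a, a = z 1 := ⟨_, rfl⟩
  obtain ⟨c, hc⟩ : ∃ a, a = z 2 := ⟨_, rfl⟩
  have e0 : pt ((3 / 2 : ℝ) • truncTetraB) z 0 = ((2 * (a + 3 * b - 2 * c) : ℤ) : ℝ) := by
    simp [pt, truncTetraB, Matrix.mulVec, dotProduct, Fin.sum_univ_three, ← ha, ← hb, ← hc]
    ring
  have e1 : pt ((3 / 2 : ℝ) • truncTetraB) z 1 = ((2 * (3 * a - 2 * b + c) : ℤ) : ℝ) := by
    simp [pt, truncTetraB, Matrix.mulVec, dotProduct, Fin.sum_univ_three, ← ha, ← hb, ← hc]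
    ring
  have e2 : pt ((3 / 2 : ℝ) • truncTetraB) z 2 = ((2 * (2 * a - b - 3 * c) : ℤ) : ℝ) := by
    simp [pt, truncTetraB, Matrix.mulVec, dotProduct, Fin.sum_univ_three, ← ha, ← hb, ← hc]
    ring
  rw [e0, e1, e2] at h
  rw [e0] at h0
  rw [e1] at h1
  rw [e2] at h2
  have i : |2 * (a + 3 * b - 2 * c)| + |2 * (3 * a - 2 * b + c)| + |2 * (2 * a - b - 3 * c)| <
    12 := by
    have : ((|2 * (a + 3 * b - 2 * c)| + |2 * (3 * a - 2 * b + c)| +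
      |2 * (2 * a - b - 3 * c)| : ℤ) : ℝ) < 12 := by
        rw [Int.cast_add, Int.cast_add, Int.cast_abs, Int.cast_abs, Int.cast_abs]; linarith
    exact_mod_cast this
  have i0 : |2 * (a + 3 * b - 2 * c)| < 9 := by
    have : ((|2 * (a + 3 * b - 2 * c)| : ℤ) : ℝ) < 9 := by rw [Int.cast_abs]; linarith
    exact_mod_cast this
  have i1 : |2 * (3 * a - 2 * b + c)| < 9 := by
    have : ((|2 * (3 * a - 2 * b + c)| : ℤ) : ℝ) < 9 := by rw [Int.cast_abs]; linarith
    exact_mod_cast this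
  have i2 : |2 * (2 * a - b - 3 * c)| < 9 := by
    have : ((|2 * (2 * a - b - 3 * c)| : ℤ) : ℝ) < 9 := by rw [Int.cast_abs]; linarith
    exact_mod_cast this
  have j0 := abs_lt.1 i0
  have j1 := abs_lt.1 i1
  have j2 := abs_lt.1 i2
  have k0 : -3 < a ∧ a < 3 := by omega
  have k1 : -3 < b ∧ b < 3 := by omega
  have k2 : -3 < c ∧ c < 3 := by omega
  have hne : ¬ (a = 0 ∧ b = 0 ∧ c = 0) := by
    rintro ⟨h0, h1, h2⟩
    refine hz (funext fun i => ?_)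
    fin_cases i
    · exact ha.symm.trans h0
    · exact hb.symm.trans h1
    · exact hc.symm.trans h2
  clear h h0 h1 h2 e0 e1 e2 j0 j1 j2 ha hb hc
  obtain ⟨k3, k4⟩ := k0
  obtain ⟨k5, k6⟩ := k1
  obtain ⟨k7, k8⟩ := k2
  revert hne i i0 i1 i2
  interval_cases a <;> interval_cases b <;> interval_cases c <;> decide

/-! ### The volume of the truncated tetrahedron -/

/-- The corner simplex `{u ≥ 0, ∑ u < r}`. -/
def corner (n : ℕ) (r : ℝ) : Set (Fin n → ℝ) := {u | (∀ i, 0 ≤ u i) ∧ ∑ i, u i < r}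

theorem measurableSet_corner (n : ℕ) (r : ℝ) : MeasurableSet (corner n r) := by
  exact (measurableSet_Ici (a := (0 : Fin n → ℝ))).inter
    (measurableSet_lt (f := fun u : Fin n → ℝ => ∑ i, u i) (by fun_prop) measurable_const)

theorem lintegral_pow_sub (n : ℕ) {r : ℝ} (hr : 0 < r) :
    ∫⁻ t in Set.Ico 0 r, ENNReal.ofReal ((r - t) ^ n / n.factorial) =
      ENNReal.ofReal (r ^ (n + 1) / (n + 1).factorial) := by
  rw [← ofReal_integral_eq_lintegral_ofReal]
  · rw [integral_Ico_eq_integral_Ioc, ← intervalIntegral.integral_of_le hr.le,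
      intervalIntegral.integral_div, intervalIntegral.integral_comp_sub_left (fun t => t ^ n) r,
      integral_pow]
    congr 1
    rw [Nat.factorial_succ]
    push_cast
    field_simp
    simp
  · exact ((by fun_prop : Continuous fun t : ℝ => (r - t) ^ n / n.factorial).integrableOn_Icc).mono_set
      Set.Ico_subset_Icc_self
  · filter_upwards [ae_restrict_mem measurableSet_Ico] with t ht
    exact div_nonneg (pow_nonneg (sub_nonneg.2 ht.2.le) _) (by positivity)

theorem volume_corner (n : ℕ) : ∀ {r : ℝ}, 0 < r →
    volume (corner n r) = ENNReal.ofReal (r ^ n / n.factorial) := by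
  induction n with
  | zero =>
    intro r hr
    have : corner 0 r = Set.univ := by
      ext u
      simp [corner, hr]
    rw [this, volume_pi, Measure.pi_univ]
    simp
  | succ n ih =>
    intro r hr
    have hmp := volume_preserving_piFinSuccAbove (fun _ : Fin (n + 1) => ℝ) 0
    have hpre : corner (n + 1) r = MeasurableEquiv.piFinSuccAbove (fun _ : Fin (n + 1) => ℝ) 0 ⁻¹'
        {p : ℝ × (Fin n → ℝ) | 0 ≤ p.1 ∧ p.2 ∈ corner n (r - p.1)} := by
      ext u
      simp only [corner, Set.mem_ofPred_eq, Set.mem_preimage, Fin.forall_fin_succ, Fin.sum_univ_succ,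
        MeasurableEquiv.piFinSuccAbove_apply, Fin.insertNthEquiv_symm_apply, Fin.removeNth_apply, Fin.succAbove_zero, and_assoc,
        lt_sub_iff_add_lt']
    have hmeas : MeasurableSet {p : ℝ × (Fin n → ℝ) | 0 ≤ p.1 ∧ p.2 ∈ corner n (r - p.1)} := by
      exact (measurableSet_le measurable_const measurable_fst).inter
        ((measurable_snd (measurableSet_Ici (a := (0 : Fin n → ℝ)))).inter
          (measurableSet_lt (f := fun p : ℝ × (Fin n → ℝ) => ∑ i, p.2 i)
            (g := fun p => r - p.1) (by fun_prop) (by fun_prop)))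
    rw [hpre, hmp.measure_preimage hmeas.nullMeasurableSet, Measure.volume_eq_prod,
      Measure.prod_apply hmeas, ← lintegral_pow_sub n hr, ← lintegral_indicator measurableSet_Ico]
    refine lintegral_congr fun t => ?_
    by_cases ht : t ∈ Set.Ico 0 r
    · rw [Set.indicator_of_mem ht, ← ih (sub_pos.2 ht.2)]
      congr 1
      ext u
      simp [ht.1]
    · rw [Set.indicator_of_notMem ht]
      convert measure_empty (μ := volume)
      ext u
      simp only [Set.mem_preimage, Set.mem_ofPred_eq, Set.mem_empty_iff_false, iff_false, not_and]
      intro h0 hu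
      have := Finset.sum_nonneg fun i (_ : i ∈ Finset.univ) => hu.1 i
      exact ht ⟨h0, by have := hu.2; linarith⟩

/-- The upper half `∑ s ≥ 12` of the cube `[0, 8]³`. -/
def halfCube : Set (Fin 3 → ℝ) := {s | s ∈ Set.Icc 0 8 ∧ 12 ≤ ∑ i, s i}

theorem volume_reflect (c : Fin 3 → ℝ) (A : Set (Fin 3 → ℝ)) :
    volume ((fun s => c - s) ⁻¹' A) = volume A :=
  MeasurePreserving.measure_preimage_equiv (f := MeasurableEquiv.subLeft c)
    (Measure.measurePreserving_sub_left volume c) A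

theorem measurableSet_halfCube : MeasurableSet halfCube :=
  measurableSet_Icc.inter (measurableSet_le (g := fun s : Fin 3 → ℝ => ∑ i, s i) measurable_const
    (by fun_prop))

theorem volume_hyperplane : volume {s : Fin 3 → ℝ | ∑ i, s i = 12} = 0 := by
  have hne : ∃ s : Fin 3 → ℝ, ¬ ∑ i, s i = 0 := ⟨fun _ => 1, by simp⟩
  have h := Measure.addHaar_submodule (volume : Measure (Fin 3 → ℝ))
    (LinearMap.ker (∑ i, LinearMap.proj i : (Fin 3 → ℝ) →ₗ[ℝ] ℝ)) (by
      intro h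
      have : (fun _ => 1 : Fin 3 → ℝ) ∈ LinearMap.ker (∑ i, LinearMap.proj i : (Fin 3 → ℝ) →ₗ[ℝ] ℝ) := by
        rw [h]; trivial
      simp at this)
  rw [← measure_preimage_add volume (4 : Fin 3 → ℝ)]
  convert h using 2
  ext s
  simp [Fin.sum_univ_three]
  constructor <;> intro h <;> linarith

theorem volume_cube : volume (Set.Icc 0 8 : Set (Fin 3 → ℝ)) = 512 := by
  rw [Real.volume_Icc_pi]
  simp
  norm_num

/-- The reflection `s ↦ 8 - s` interchanges the two halves of the cube. -/
theorem volume_halfCube : volume halfCube = 256 := by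
  have h1 : Set.Icc 0 8 = halfCube ∪ (fun s => 8 - s) ⁻¹' halfCube := by
    ext s
    simp only [halfCube, Set.mem_union, Set.mem_preimage, Set.mem_ofPred_eq, Set.mem_Icc, Pi.le_def,
      Fin.forall_fin_succ, Fin.sum_univ_three]
    simp
    constructor
    · rintro ⟨⟨h1, h2, h3⟩, h4, h5, h6⟩
      rcases le_total 12 (s 0 + s 1 + s 2) with h | h
      · exact Or.inl ⟨⟨⟨h1, h2, h3⟩, h4, h5, h6⟩, h⟩
      · exact Or.inr ⟨⟨⟨h4, h5, h6⟩, h1, h2, h3⟩, by linarith⟩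
    · rintro (⟨h, -⟩ | ⟨⟨⟨h4, h5, h6⟩, h1, h2, h3⟩, -⟩)
      · exact h
      · exact ⟨⟨h1, h2, h3⟩, h4, h5, h6⟩
  have h2 : AEDisjoint volume halfCube ((fun s => 8 - s) ⁻¹' halfCube) := by
    refine measure_mono_null ?_ volume_hyperplane
    rintro s ⟨h1, h2⟩
    have h3 := h1.2
    have h4 := h2.2
    simp only [Fin.sum_univ_three, Set.mem_ofPred_eq, Pi.sub_apply, Pi.ofNat_apply] at h3 h4 ⊢
    linarith
  have h3 := measure_union₀' measurableSet_halfCube.nullMeasurableSet h2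
  rw [← h1, volume_reflect, volume_cube, ← two_mul] at h3
  have h4 : (512 : ENNReal) = 2 * 256 := by norm_num
  rw [h4] at h3
  exact ((ENNReal.mul_right_inj (by norm_num) (by norm_num)).1 h3).symm

/-- The image of the truncated tetrahedron under the slacks of three of its facets. -/
def slackBody : Set (Fin 3 → ℝ) := {s | s ∈ Set.Icc 0 8 ∧ ∑ i, s i ∈ Set.Icc 12 20}

theorem volume_slackBody : volume slackBody = ENNReal.ofReal (736 / 3) := by
  have h1 : slackBody = halfCube \ (fun s => 8 - s) ⁻¹' corner 3 4 := by
    ext s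
    simp only [slackBody, halfCube, corner, Set.mem_sdiff, Set.mem_preimage, Set.mem_ofPred_eq,
      Set.mem_Icc, Pi.le_def, Fin.forall_fin_succ, Fin.sum_univ_three]
    simp
    constructor
    · rintro ⟨⟨h1, h2⟩, h3, h4⟩
      exact ⟨⟨⟨h1, h2⟩, h3⟩, fun _ _ _ => by linarith⟩
    · rintro ⟨⟨⟨h1, h2⟩, h3⟩, h4⟩
      have := h4 h2.1 h2.2.1 h2.2.2
      exact ⟨⟨h1, h2⟩, h3, by linarith⟩
  have h2 : (fun s => 8 - s) ⁻¹' corner 3 4 ⊆ halfCube := by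
    intro s hs
    simp only [halfCube, corner, Set.mem_preimage, Set.mem_ofPred_eq,
      Set.mem_Icc, Pi.le_def, Fin.forall_fin_succ, Fin.sum_univ_three] at hs ⊢
    simp at hs ⊢
    obtain ⟨⟨h1, h2, h3⟩, h4⟩ := hs
    refine ⟨⟨⟨?_, ?_, ?_⟩, h1, h2, h3⟩, ?_⟩ <;> linarith
  rw [h1, measure_sdiff h2, volume_halfCube, volume_reflect, volume_corner 3 (by norm_num)]
  · rw [show (256 : ENNReal) = ENNReal.ofReal 256 by simp, ← ENNReal.ofReal_sub _ (by positivity)]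
    congr 1
    norm_num [Nat.factorial]
  · exact ((measurable_const.sub measurable_id) (measurableSet_corner 3 4)).nullMeasurableSet
  · rw [volume_reflect, volume_corner 3 (by norm_num)]
    exact ENNReal.ofReal_ne_top

/-- The matrix of three of the facet functionals. -/
def facetMat : Matrix (Fin 3) (Fin 3) ℝ := !![1, 1, 1; -1, -1, 1; -1, 1, -1]

theorem volume_truncTetra : volume truncTetra = ENNReal.ofReal (184 / 3) := by
  have hdet : LinearMap.det (Matrix.toLin' facetMat) = -4 := by
    rw [LinearMap.det_toLin', facetMat, Matrix.det_fin_three]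
    simp
    norm_num
  have h1 : truncTetra = Matrix.toLin' facetMat ⁻¹' ((fun s => 5 - s) ⁻¹' slackBody) := by
    ext x
    rw [mem_truncTetra]
    simp only [slackBody, Set.mem_preimage, Set.mem_ofPred_eq, Set.mem_Icc, Pi.le_def,
      Fin.forall_fin_succ, Fin.sum_univ_three, facetMat, Matrix.toLin'_apply]
    simp [dotProduct, Fin.sum_univ_three]
    constructor
    · rintro ⟨⟨h1, h2⟩, ⟨h3, h4⟩, ⟨h5, h6⟩, h7, h8⟩
      refine ⟨⟨⟨?_, ?_, ?_⟩, ?_, ?_, ?_⟩, ?_, ?_⟩ <;> linarith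
    · rintro ⟨⟨⟨h1, h2, h3⟩, h4, h5, h6⟩, h7, h8⟩
      refine ⟨⟨?_, ?_⟩, ⟨?_, ?_⟩, ⟨?_, ?_⟩, ?_, ?_⟩ <;> linarith
  rw [h1, Measure.addHaar_preimage_linearMap _ (by rw [hdet]; norm_num), hdet,
    volume_reflect, volume_slackBody,
    ← ENNReal.ofReal_mul (abs_nonneg _)]
  congr 1
  norm_num

/-! ### The trivial density bound -/

theorem convex_truncTetra : Convex ℝ truncTetra := by
  intro x hx y hy a b ha hb hab
  rw [mem_truncTetra] at *
  simp only [Pi.add_apply, Pi.smul_apply]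
  have key : ∀ {u v w : ℝ}, u ∈ Set.Icc (-3 : ℝ) 5 → v ∈ Set.Icc (-3 : ℝ) 5 →
      w = a • u + b • v → w ∈ Set.Icc (-3 : ℝ) 5 :=
    fun hu hv hw => hw ▸ convex_Icc (-3 : ℝ) 5 hu hv ha hb hab
  exact ⟨key hx.1 hy.1 (by simp only [smul_eq_mul]; ring),
    key hx.2.1 hy.2.1 (by simp only [smul_eq_mul]; ring),
    key hx.2.2.1 hy.2.2.1 (by simp only [smul_eq_mul]; ring),
    key hx.2.2.2 hy.2.2.2 (by simp only [smul_eq_mul]; ring)⟩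

/-- A packing has density at most one: if the body had larger volume than a fundamental domain of
the lattice, two of its lattice translates would overlap. -/
theorem volume_le_of_packing {B : Matrix (Fin 3) (Fin 3) ℝ} (hB : B.det ≠ 0)
    (h : IsPackingLattice truncTetra (latticeOf B)) :
    volume truncTetra ≤ ENNReal.ofReal |B.det| := by
  by_contra! hlt
  have hU : IsUnit B.transpose := by
    rw [Matrix.isUnit_iff_isUnit_det, Matrix.det_transpose]
    exact hB.isUnit
  let b : Module.Basis (Fin 3) ℝ (Fin 3 → ℝ) :=
    basisOfLinearIndependentOfCardEqFinrank (b := B.transpose.row)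
      (Matrix.linearIndependent_rows_iff_isUnit.2 hU) (by simp)
  have hb : ⇑b = B.transpose.row := by simp [b]
  have hvol : volume (ZSpan.fundamentalDomain b) = ENNReal.ofReal |B.det| := by
    rw [ZSpan.volume_fundamentalDomain, hb, ← Matrix.det_transpose B]
    rfl
  have hvolInt : volume (interior truncTetra) = volume truncTetra :=
    measure_interior_of_null_frontier (convex_truncTetra.addHaar_frontier volume)
  rw [← hvol, ← hvolInt] at hlt
  have : Countable (Submodule.span ℤ (Set.range b)).toAddSubgroup :=
    inferInstanceAs (Countable (Submodule.span ℤ (Set.range b)))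
  obtain ⟨x, y, hxy, hdis⟩ := exists_pair_mem_lattice_not_disjoint_vadd
    (ZSpan.isAddFundamentalDomain' b volume) isOpen_interior.measurableSet.nullMeasurableSet hlt
  have hmem : ∀ x ∈ Submodule.span ℤ (Set.range b), x ∈ latticeOf B := by
    intro x hx
    obtain ⟨c, rfl⟩ := (Submodule.mem_span_range_iff_exists_fun ℤ).1 hx
    refine ⟨c, ?_⟩
    funext i
    simp [hb, Matrix.mulVec, dotProduct, Finset.sum_apply, mul_comm]
  refine hdis ?_
  have := h x (hmem _ x.2) y (hmem _ y.2) (fun e => hxy (Subtype.ext e))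
  rwa [interior_translate, interior_translate] at this

theorem det_smul_three (c : ℝ) (V : Matrix (Fin 3) (Fin 3) ℝ) : (c • V).det = c ^ 3 * V.det := by
  rw [Matrix.det_smul, Fintype.card_fin]

theorem low_bound (V : Matrix (Fin 3) (Fin 3) ℝ) (hV : V.det ≠ 0) (hadm : Admissible nrm V) :
    207 ≤ |V.det| := by
  have hd : ((2 / 3 : ℝ) • V).det ≠ 0 := by
    rw [det_smul_three]
    exact mul_ne_zero (by norm_num) hV
  have hp := (isPackingLattice_iff hd).2 (by
    rw [smul_smul]
    norm_num
    exact hadm)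
  have h := volume_le_of_packing hd hp
  rw [volume_truncTetra, ENNReal.ofReal_le_ofReal_iff (abs_nonneg _), det_smul_three, abs_mul,
    abs_of_pos (by norm_num : (0 : ℝ) < (2 / 3) ^ 3)] at h
  linarith

theorem le_det_of_packing {B : Matrix (Fin 3) (Fin 3) ℝ} (hB : B.det ≠ 0)
    (h : IsPackingLattice truncTetra (latticeOf B)) : 2432 / 27 ≤ |B.det| := by
  have hd : ((3 / 2 : ℝ) • B).det ≠ 0 := by
    rw [det_smul_three]
    exact mul_ne_zero (by norm_num) hB
  have h := le_det_of_admissible low_bound hd ((isPackingLattice_iff hB).1 h)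
  rw [det_smul_three, abs_mul, abs_of_pos (by norm_num : (0 : ℝ) < (3 / 2) ^ 3)] at h
  linarith

theorem density_truncTetraB : (volume truncTetra).toReal / |truncTetraB.det| = 207 / 304 := by
  rw [volume_truncTetra, det_truncTetraB, ENNReal.toReal_ofReal (by norm_num),
    abs_of_pos (by norm_num)]
  norm_num

theorem isUnit_truncTetraB : IsUnit truncTetraB.det := by
  rw [det_truncTetraB]
  exact (by norm_num : (2432 / 27 : ℝ) ≠ 0).isUnit

theorem packing_truncTetraB : IsPackingLattice truncTetra (latticeOf truncTetraB) :=
  (isPackingLattice_iff isUnit_truncTetraB.ne_zero).2 admissible_truncTetraB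

end TruncTetra

/-- The lattice packing density of the truncated tetrahedron is `207/304`, attained
by the packing lattice `2·B·ℤ³`. -/
theorem stmt_19 :
    packDensity truncTetra = 207 / 304 ∧
    IsUnit truncTetraB.det ∧
    IsPackingLattice truncTetra (latticeOf truncTetraB) ∧
    (volume truncTetra).toReal / |truncTetraB.det| = 207 / 304 := by
  refine ⟨?_, TruncTetra.isUnit_truncTetraB, TruncTetra.packing_truncTetraB,
    TruncTetra.density_truncTetraB⟩
  refine IsGreatest.csSup_eq ⟨⟨truncTetraB, TruncTetra.isUnit_truncTetraB,
    TruncTetra.packing_truncTetraB, TruncTetra.density_truncTetraB.symm⟩, ?_⟩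
  rintro _ ⟨B, hB, hpack, rfl⟩
  have h := TruncTetra.le_det_of_packing hB.ne_zero hpack
  rw [TruncTetra.volume_truncTetra, ENNReal.toReal_ofReal (by norm_num),
    div_le_div_iff₀ (by linarith) (by norm_num)]
  linarith
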